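/- There exists a universal constant C > 0 such that the following holds. Let n ≥ 2, let K, T ⊆ ℝⁿ be convex bodies in isotropic position, and let X be a random vector distributed uniformly in T. Then E‖X‖_K ≤ C·log²(n+1). -/

import Mathlib

/-!
The proof compares both `K` and `T` with the standard Gaussian vector `Z`, through stochastic
localization in its Gaussian-channel form. For a compactly supported probability measure `m`, let
`θ = s X + √s Z` with `X ∼ m` independent of `Z`; the conditional law of `X` given `θ` is the
tilted measure `exp(⟨θ, x⟩ - s|x|²/2) dm / Z` (`tilt`, with means `Q`). The forward equation `flow`
says that `d/ds E u(s, θ_s) = E (∂ₛ + ½Δ + ⟨a, ∇⟩) u`, where `a` is the barycentre `av`; in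
particular tilted means are martingales (`Lop_Q`), and no stochastic calculus is needed.

*Covariance control.* For the uniform measure on a convex body the Prékopa–Leindler inequality gives
`Cov ≤ 1/s` for all tilts (`SLC_body`), hence Poincaré and variance-decay inequalities
(`var_decay`). Studying almost extremal functions for the norm of `Q_s` on centred functions gives
the improved Lichnerowicz inequality `improved_lichnerowicz`: a `t`-strongly log-concave measure
with covariance at most `α` has spectral gap at least of order `√(t/α)`. Applied to quadratic forms it
bounds the third cumulants (`third_bound`), which are the derivatives of the covariance matrix
`A`. A Grönwall argument for a bounded function of `tr (A - 1)^{2 k}`, `k ∼ log n`, then shows that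
in isotropic position the eigenvalues of `A` stay in `[1/2, 3/2]` up to time of order `1/log² n`,
outside an event whose probability is less than a large power of `1/n` (`Es_hS_le`).

*Gaussian comparison.* Let `q` be the gauge of `K`, approximated from below by log-sum-exp functions
(`fN`, `SubL.exists_fN`), and consider `Gs = E q(a_s + r Z')` for an independent Gaussian `Z'`. Its
derivative in `s` is governed by `|A y|² + 2 r r'|y|²`, so the radius `r(s)` can be chosen to make
`Gs` monotone up to a negligible error. With `τ` of order `1/log² n`:
* `SubL.upper`: with `r² = 1/τ + (9/4)(τ - s)` up to time `τ` and `r² = 1/s` later (where `A ≤ 1/s`),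
  `E_T q ≤ (C/√τ) E q(Z)`, up to an error.
* `SubL.lower`: with `r² = τ/2 - s/4` up to time `τ`, using `A ≥ 1/2`,
  `c √τ E q(Z) ≤ E_K q`, up to an error.

Since `q ≤ 1` on `K`, the two together give `E_T q ≤ C/τ`, which is of order `log² n`.
-/

open MeasureTheory Real Pointwise RealInnerProductSpace
open scoped ENNReal

noncomputable section

/-- A convex body: a compact convex set with non-empty interior. -/
def IsConvexBody {n : ℕ} (K : Set (EuclideanSpace ℝ (Fin n))) : Prop :=
  IsCompact K ∧ Convex ℝ K ∧ (interior K).Nonempty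

/-- The uniform probability measure on a set `K`. -/
def unifOn {n : ℕ} (K : Set (EuclideanSpace ℝ (Fin n))) : Measure (EuclideanSpace ℝ (Fin n)) :=
  (volume K)⁻¹ • volume.restrict K

/-- A probability measure `μ` on `ℝⁿ` is isotropic: its barycenter vanishes and its
covariance matrix is the identity. -/
def IsIsotropicMeasure {n : ℕ} (μ : Measure (EuclideanSpace ℝ (Fin n))) : Prop :=
  (∀ i, ∫ x, x i ∂μ = 0) ∧ ∀ i j, ∫ x, x i * x j ∂μ = if i = j then 1 else 0

/-- A convex body is in isotropic position if the uniform probability measure on it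
is isotropic. -/
def IsIsotropicBody {n : ℕ} (K : Set (EuclideanSpace ℝ (Fin n))) : Prop :=
  IsIsotropicMeasure (unifOn K)

/-- A log-concave density: nonnegative, and multiplicatively convex. This is equivalent to:
`{p > 0}` is convex and `log (1/p)` is convex on it. -/
def IsLogConcaveDensity {n : ℕ} (p : EuclideanSpace ℝ (Fin n) → ℝ) : Prop :=
  (∀ x, 0 ≤ p x) ∧ ∀ x y : EuclideanSpace ℝ (Fin n), ∀ t : ℝ, 0 ≤ t → t ≤ 1 →
    p x ^ t * p y ^ (1 - t) ≤ p (t • x + (1 - t) • y)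

/-- A measure on `ℝⁿ` is log-concave if it has a log-concave density w.r.t. Lebesgue. -/
def IsLogConcaveMeasure {n : ℕ} (μ : Measure (EuclideanSpace ℝ (Fin n))) : Prop :=
  ∃ p : EuclideanSpace ℝ (Fin n) → ℝ, Measurable p ∧ IsLogConcaveDensity p ∧
    μ = volume.withDensity fun x => ENNReal.ofReal (p x)

/-- The standard Gaussian probability measure on `ℝⁿ`. -/
def stdGaussian (n : ℕ) : Measure (EuclideanSpace ℝ (Fin n)) :=
  volume.withDensity fun x => ENNReal.ofReal ((2 * π) ^ (-(n : ℝ) / 2) * Real.exp (-‖x‖ ^ 2 / 2))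

/-- The Poincaré constant of a measure: the least `A ≥ 0` such that
`Var f ≤ A ⬝ E |∇ f|²` for all locally Lipschitz `f`. -/
def poincareConst {n : ℕ} (μ : Measure (EuclideanSpace ℝ (Fin n))) : ℝ :=
  sInf {A : ℝ | 0 ≤ A ∧ ∀ f : EuclideanSpace ℝ (Fin n) → ℝ, LocallyLipschitz f →
    ∫ x, (f x - ∫ y, f y ∂μ) ^ 2 ∂μ ≤ A * ∫ x, ‖gradient f x‖ ^ 2 ∂μ}

/-- The KLS constant `ψₙ`. -/
def KLSConst (n : ℕ) : ℝ :=
  sSup {s : ℝ | ∃ μ : Measure (EuclideanSpace ℝ (Fin n)), IsProbabilityMeasure μ ∧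
    IsLogConcaveMeasure μ ∧ IsIsotropicMeasure μ ∧ s = Real.sqrt (poincareConst μ)}

/-- The Hilbert-Schmidt norm of a matrix. -/
def hsNorm {n : ℕ} (M : Matrix (Fin n) (Fin n) ℝ) : ℝ :=
  Real.sqrt (∑ i, ∑ j, (M i j) ^ 2)

/-- The coefficient `κₙ`, the supremum of `‖E [X₁ (X ⊗ X)]‖_HS` over all isotropic
log-concave random vectors `X` in `ℝⁿ`. -/
def kappaConst (n : ℕ) : ℝ :=
  sSup {s : ℝ | ∃ μ : Measure (EuclideanSpace ℝ (Fin n)), IsProbabilityMeasure μ ∧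
    IsLogConcaveMeasure μ ∧ IsIsotropicMeasure μ ∧ ∃ h : 0 < n,
    s = hsNorm (Matrix.of fun i j => ∫ x, x ⟨0, h⟩ * (x i * x j) ∂μ)}

/-- A gauge function on `ℝⁿ`: non-negative, convex, positively homogeneous. -/
def IsGauge {n : ℕ} (f : EuclideanSpace ℝ (Fin n) → ℝ) : Prop :=
  (∀ x, 0 ≤ f x) ∧ ConvexOn ℝ Set.univ f ∧
    ∀ (c : ℝ), 0 ≤ c → ∀ x, f (c • x) = c * f x

/-- `M(K)`: the mean of the Minkowski functional of `K` over the unit sphere, w.r.t. the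
uniform probability measure on the sphere. -/
def Mparam (n : ℕ) (K : Set (EuclideanSpace ℝ (Fin n))) : ℝ :=
  ∫ x : Metric.sphere (0 : EuclideanSpace ℝ (Fin n)) 1,
    gauge K x ∂(((volume : Measure (EuclideanSpace ℝ (Fin n))).toSphere Set.univ)⁻¹ •
      (volume : Measure (EuclideanSpace ℝ (Fin n))).toSphere)

/-- The polar body. -/
def polarBody {n : ℕ} (K : Set (EuclideanSpace ℝ (Fin n))) : Set (EuclideanSpace ℝ (Fin n)) :=
  {x | ∀ y ∈ K, ⟪x, y⟫ ≤ 1}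

/-- `R(K)`: the maximal Euclidean norm of a point of `K`. -/
def Rparam {n : ℕ} (K : Set (EuclideanSpace ℝ (Fin n))) : ℝ :=
  sSup {r : ℝ | ∃ x ∈ K, r = ‖x‖}

/-- The operator norm `‖A : K → T‖ = sup_{x ≠ 0} ‖Ax‖_T / ‖x‖_K` (Minkowski functionals). -/
def mapNorm {n : ℕ} (K T : Set (EuclideanSpace ℝ (Fin n)))
    (A : Matrix (Fin n) (Fin n) ℝ) : ℝ :=
  sSup {r : ℝ | ∃ x : EuclideanSpace ℝ (Fin n), x ≠ 0 ∧
    r = gauge T (Matrix.toEuclideanLin A x) / gauge K x}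

/-- The ℓ₂ operator norm of a matrix. -/
def matOpNorm {n : ℕ} (M : Matrix (Fin n) (Fin n) ℝ) : ℝ :=
  ‖LinearMap.toContinuousLinearMap (Matrix.toEuclideanLin M)‖

namespace IsoGauge

/-! ### The Prékopa–Leindler inequality for midpoints -/

/-- Brunn–Minkowski on the line, for compact sets. -/
lemma volume_add_volume_le_of_compact {A B C : Set ℝ} (hA : IsCompact A) (hB : IsCompact B)
    (hAn : A.Nonempty) (hBn : B.Nonempty) (hC : ∀ a ∈ A, ∀ b ∈ B, a + b ∈ C) :
    volume A + volume B ≤ volume C := by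
  obtain ⟨a, haA, ha⟩ := hA.exists_isGreatest hAn
  obtain ⟨b, hbB, hb⟩ := hB.exists_isLeast hBn
  have h1 : volume ((fun x => x + b) '' A) = volume A := by
    rw [Set.image_add_right]; exact measure_preimage_add_right _ _ _
  have h2 : volume ((fun x => a + x) '' B) = volume B := by
    rw [Set.image_add_left]; exact measure_preimage_add _ _ _
  have hm : MeasurableSet ((fun x => a + x) '' B) :=
    (hB.image (by fun_prop)).measurableSet
  have h3 := measure_union_add_inter (μ := volume) ((fun x => x + b) '' A) hm
  have h4 : volume ((fun x => x + b) '' A ∩ (fun x => a + x) '' B) = 0 := by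
    refine measure_mono_null (t := {a + b}) ?_ (by simp)
    rintro _ ⟨⟨x, hx, rfl⟩, ⟨y, hy, hxy⟩⟩
    have := ha hx; have := hb hy
    simp only [Set.mem_singleton_iff] at *
    linarith
  rw [h4, h1, h2, add_zero] at h3
  rw [← h3]
  apply measure_mono
  rintro _ (⟨x, hx, rfl⟩ | ⟨x, hx, rfl⟩)
  · exact hC _ hx _ hbB
  · exact hC _ haA _ hx

lemma volume_add_volume_le {A B C : Set ℝ} (hA : MeasurableSet A) (hB : MeasurableSet B)
    (hAn : A.Nonempty) (hBn : B.Nonempty) (hC : ∀ a ∈ A, ∀ b ∈ B, a + b ∈ C) :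
    volume A + volume B ≤ volume C := by
  obtain ⟨a0, ha0⟩ := hAn
  obtain ⟨b0, hb0⟩ := hBn
  have key : ∀ K ⊆ A, IsCompact K → ∀ L ⊆ B, IsCompact L → volume K + volume L ≤ volume C := by
    intro K hK hKc L hL hLc
    have := volume_add_volume_le_of_compact (C := C) (hKc.insert a0) (hLc.insert b0)
      (Set.insert_nonempty _ _) (Set.insert_nonempty _ _) (by
        intro a ha b hb
        apply hC
        · rcases ha with rfl | ha
          exacts [ha0, hK ha]
        · rcases hb with rfl | hb
          exacts [hb0, hL hb])
    exact le_trans (add_le_add (measure_mono (Set.subset_insert _ _))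
      (measure_mono (Set.subset_insert _ _))) this
  have key2 : ∀ L ⊆ B, IsCompact L → volume A + volume L ≤ volume C := by
    intro L hL hLc
    have : volume A ≤ volume C - volume L := by
      rw [hA.measure_eq_iSup_isCompact]
      refine iSup_le fun K => iSup_le fun hK => iSup_le fun hKc => ?_
      exact ENNReal.le_sub_of_add_le_right hLc.measure_lt_top.ne (key K hK hKc L hL hLc)
    by_cases hle : volume L ≤ volume C
    · calc volume A + volume L ≤ volume C - volume L + volume L := by gcongr
        _ = volume C := tsub_add_cancel_of_le hle
    · exact absurd (le_trans (by simp) (key ∅ (by simp) (by simp) L hL hLc)) hle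
  by_cases hAt : volume A = ∞
  · have := key2 ∅ (by simp) (by simp)
    rw [hAt] at this ⊢
    simpa using this
  have : volume B ≤ volume C - volume A := by
    rw [hB.measure_eq_iSup_isCompact]
    refine iSup_le fun K => iSup_le fun hK => iSup_le fun hKc => ?_
    exact ENNReal.le_sub_of_add_le_left hAt (key2 K hK hKc)
  calc volume A + volume B ≤ volume A + (volume C - volume A) := by gcongr
    _ = volume C := add_tsub_cancel_of_le (by simpa using key2 ∅ (by simp) (by simp))

lemma lintegral_layercake_one {f : ℝ → ℝ≥0∞} (hf : Measurable f) (h1 : ∀ x, f x ≤ 1) :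
    ∫⁻ x, f x = ∫⁻ t in Set.Ioi (0 : ℝ), volume {x | ENNReal.ofReal t < f x} := by
  have hne : ∀ x, f x ≠ ∞ := fun x => ne_top_of_le_ne_top ENNReal.one_ne_top (h1 x)
  have := lintegral_eq_lintegral_meas_lt (volume : Measure ℝ) (f := fun x => (f x).toReal)
    (Filter.Eventually.of_forall fun x => ENNReal.toReal_nonneg) hf.ennreal_toReal.aemeasurable
  simp only [ENNReal.ofReal_toReal (hne _)] at this
  rw [this]
  refine setLIntegral_congr_fun measurableSet_Ioi fun t ht => ?_
  congr 1
  ext x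
  simp only [Set.mem_ofPred_eq]
  rw [ENNReal.ofReal_lt_iff_lt_toReal (le_of_lt ht) (hne x)]

/-- On the line, functions of supremum `1` satisfy an additive form of the inequality: integrate
Brunn–Minkowski over the superlevel sets. -/
lemma pl_normalized {f g h : ℝ → ℝ≥0∞} (hf : Measurable f) (hg : Measurable g)
    (hh : Measurable h) (hf1 : ⨆ x, f x = 1) (hg1 : ⨆ x, g x = 1)
    (H : ∀ x y, f x * g y ≤ h ((x + y) / 2) ^ 2) :
    (∫⁻ x, f x) + ∫⁻ x, g x ≤ 2 * ∫⁻ x, h x := by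
  have hfle : ∀ x, f x ≤ 1 := fun x => hf1 ▸ le_iSup f x
  have hgle : ∀ x, g x ≤ 1 := fun x => hg1 ▸ le_iSup g x
  set k : ℝ → ℝ≥0∞ := fun x => min (h x) 1 with hk
  have hkm : Measurable k := hh.min measurable_const
  have hkle : ∀ x, k x ≤ 1 := fun x => min_le_right _ _
  have hI : ∫⁻ x, k x ≤ ∫⁻ x, h x := lintegral_mono fun x => min_le_left _ _
  refine le_trans ?_ (mul_le_mul_right hI 2)
  rw [lintegral_layercake_one hf hfle, lintegral_layercake_one hg hgle,
    lintegral_layercake_one hkm hkle, ← lintegral_const_mul' _ _ (by simp),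
    ← lintegral_add_left']
  · refine setLIntegral_mono' measurableSet_Ioi fun t ht => ?_
    by_cases ht1 : 1 ≤ ENNReal.ofReal t
    · have e1 : {x | ENNReal.ofReal t < f x} = ∅ := by
        ext x; simp [le_trans (hfle x) ht1]
      have e2 : {x | ENNReal.ofReal t < g x} = ∅ := by
        ext x; simp [le_trans (hgle x) ht1]
      simp [e1, e2]
    · push Not at ht1
      have n1 : ({x | ENNReal.ofReal t < f x}).Nonempty := by
        rw [← hf1] at ht1; exact lt_iSup_iff.1 ht1
      have n2 : ({x | ENNReal.ofReal t < g x}).Nonempty := by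
        rw [← hg1] at ht1; exact lt_iSup_iff.1 ht1
      have := volume_add_volume_le (C := (fun x => x / 2) ⁻¹' {x | ENNReal.ofReal t < k x})
        (measurableSet_lt measurable_const hf) (measurableSet_lt measurable_const hg) n1 n2 (by
          intro a ha b hb
          simp only [Set.mem_ofPred_eq, Set.mem_preimage] at *
          refine lt_min ?_ ht1
          by_contra hcon
          push Not at hcon
          have h5 := H a b
          have h6 : h ((a + b) / 2) ^ 2 ≤ ENNReal.ofReal t * ENNReal.ofReal t := by
            rw [sq]; gcongr
          have h7 : ENNReal.ofReal t * ENNReal.ofReal t < f a * g b :=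
            ENNReal.mul_lt_mul ha hb
          exact absurd (h7.trans_le (h5.trans h6)) (lt_irrefl _))
      refine this.trans (le_of_eq ?_)
      have e : (fun x : ℝ => x / 2) ⁻¹' {x | ENNReal.ofReal t < k x}
        = (fun x : ℝ => x * (2⁻¹ : ℝ)) ⁻¹' {x | ENNReal.ofReal t < k x} := by
        simp only [div_eq_mul_inv]
      rw [e, Real.volume_preimage_mul_right (by norm_num)]
      simp
  · have : Antitone fun t : ℝ => volume {x | ENNReal.ofReal t < f x} :=
      fun a b hab => measure_mono fun x (hx : ENNReal.ofReal b < f x) =>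
        lt_of_le_of_lt (ENNReal.ofReal_le_ofReal hab) hx
    exact this.measurable.aemeasurable

lemma ennreal_four_mul_le (x y : ℝ≥0∞) : 4 * (x * y) ≤ (x + y) ^ 2 := by
  by_cases hx : x = ∞
  · simp [hx]
  by_cases hy : y = ∞
  · simp [hy]
  lift x to NNReal using hx
  lift y to NNReal using hy
  norm_cast
  rw [← NNReal.coe_le_coe]
  push_cast
  nlinarith [sq_nonneg ((x : ℝ) - y)]

lemma pl_bounded {f g h : ℝ → ℝ≥0∞} (hf : Measurable f) (hg : Measurable g)
    (hh : Measurable h) (hf1 : ⨆ x, f x ≠ ∞) (hg1 : ⨆ x, g x ≠ ∞)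
    (H : ∀ x y, f x * g y ≤ h ((x + y) / 2) ^ 2) :
    (∫⁻ x, f x) * ∫⁻ x, g x ≤ (∫⁻ x, h x) ^ 2 := by
  set a := ⨆ x, f x with ha
  set b := ⨆ x, g x with hb
  by_cases ha0 : a = 0
  · have : ∀ x, f x = 0 := fun x => le_antisymm ((le_iSup f x).trans ha0.le) bot_le
    simp [this]
  by_cases hb0 : b = 0
  · have : ∀ x, g x = 0 := fun x => le_antisymm ((le_iSup g x).trans hb0.le) bot_le
    simp [this]
  set c : ℝ≥0∞ := (a * b) ^ (1 / 2 : ℝ) with hc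
  have hc2 : c ^ 2 = a * b := by
    rw [hc, ← ENNReal.rpow_natCast, ← ENNReal.rpow_mul]; norm_num
  have hab0 : a * b ≠ 0 := mul_ne_zero ha0 hb0
  have habt : a * b ≠ ∞ := ENNReal.mul_ne_top hf1 hg1
  have hc0 : c ≠ 0 := by intro h; rw [h] at hc2; simp at hc2; tauto
  have hct : c ≠ ∞ := by intro h; rw [h] at hc2; simp at hc2; exact habt hc2.symm
  have key := pl_normalized (f := fun x => a⁻¹ * f x) (g := fun x => b⁻¹ * g x)
    (h := fun x => c⁻¹ * h x) (hf.const_mul _) (hg.const_mul _) (hh.const_mul _)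
    (by rw [← ENNReal.mul_iSup, ← ha, ENNReal.inv_mul_cancel ha0 hf1])
    (by rw [← ENNReal.mul_iSup, ← hb, ENNReal.inv_mul_cancel hb0 hg1]) (by
      intro x y
      calc a⁻¹ * f x * (b⁻¹ * g y) = (a⁻¹ * b⁻¹) * (f x * g y) := by ring
        _ ≤ (a⁻¹ * b⁻¹) * h ((x + y) / 2) ^ 2 := by gcongr; exact H x y
        _ = (c⁻¹ * h ((x + y) / 2)) ^ 2 := by
          rw [mul_pow, ← ENNReal.inv_pow, hc2, ENNReal.mul_inv (Or.inl ha0) (Or.inl hf1)])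
  rw [lintegral_const_mul _ hf, lintegral_const_mul _ hg, lintegral_const_mul _ hh] at key
  set F := ∫⁻ x, f x
  set G := ∫⁻ x, g x
  set I := ∫⁻ x, h x
  have h1 : 4 * ((a⁻¹ * F) * (b⁻¹ * G)) ≤ (2 * (c⁻¹ * I)) ^ 2 :=
    (ennreal_four_mul_le _ _).trans (pow_le_pow_left' key 2)
  have h2 : 4 * ((a⁻¹ * F) * (b⁻¹ * G)) = (4 * (a * b)⁻¹) * (F * G) := by
    rw [ENNReal.mul_inv (Or.inl ha0) (Or.inl hf1)]; ring
  have h3 : (2 * (c⁻¹ * I)) ^ 2 = (4 * (a * b)⁻¹) * I ^ 2 := by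
    rw [mul_pow, mul_pow, ← ENNReal.inv_pow, hc2]; ring
  rw [h2, h3] at h1
  have : (4 : ℝ≥0∞) * (a * b)⁻¹ ≠ 0 := by simp [habt]
  have h4 : (4 : ℝ≥0∞) * (a * b)⁻¹ ≠ ∞ := ENNReal.mul_ne_top (by simp) (by simpa using ⟨ha0, hb0⟩)
  rwa [ENNReal.mul_le_mul_iff_right this h4] at h1

lemma iSup_min_nat (x : ℝ≥0∞) : ⨆ N : ℕ, min x (N : ℝ≥0∞) = x := by
  rw [← inf_iSup_eq]
  simp [ENNReal.iSup_natCast]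

lemma pl_line {f g h : ℝ → ℝ≥0∞} (hf : Measurable f) (hg : Measurable g)
    (hh : Measurable h) (H : ∀ x y, f x * g y ≤ h ((x + y) / 2) ^ 2) :
    (∫⁻ x, f x) * ∫⁻ x, g x ≤ (∫⁻ x, h x) ^ 2 := by
  have rep : ∀ u : ℝ → ℝ≥0∞, Measurable u →
      ∫⁻ x, u x = ⨆ N : ℕ, ∫⁻ x, min (u x) (N : ℝ≥0∞) := by
    intro u hu
    rw [← lintegral_iSup (fun N => hu.min measurable_const)]
    · simp_rw [iSup_min_nat]
    · intro N M hNM x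
      exact min_le_min_left _ (by exact_mod_cast hNM)
  rw [rep f hf, rep g hg, ENNReal.iSup_mul]
  refine iSup_le fun N => ?_
  rw [ENNReal.mul_iSup]
  refine iSup_le fun M => ?_
  refine pl_bounded (hf.min measurable_const) (hg.min measurable_const) hh ?_ ?_ ?_
  · exact ne_top_of_le_ne_top (ENNReal.natCast_ne_top N) (iSup_le fun x => min_le_right _ _)
  · exact ne_top_of_le_ne_top (ENNReal.natCast_ne_top M) (iSup_le fun x => min_le_right _ _)
  · intro x y
    exact (mul_le_mul' (min_le_left _ _) (min_le_left _ _)).trans (H x y)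

lemma lintegral_fin_succ {n : ℕ} {f : (Fin (n + 1) → ℝ) → ℝ≥0∞} (hf : Measurable f) :
    ∫⁻ x, f x = ∫⁻ t : ℝ, ∫⁻ y : Fin n → ℝ, f (Fin.cons t y) := by
  have := (volume_preserving_piFinSuccAbove (fun _ : Fin (n + 1) => ℝ) 0).symm
  rw [← this.lintegral_comp hf, Measure.volume_eq_prod, lintegral_prod]
  · simp [MeasurableEquiv.piFinSuccAbove, Fin.insertNthEquiv, Fin.insertNth_zero']
  · exact (hf.comp (MeasurableEquiv.measurable _)).aemeasurable

lemma measurable_cons {n : ℕ} :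
    Measurable fun p : ℝ × (Fin n → ℝ) => (Fin.cons p.1 p.2 : Fin (n + 1) → ℝ) := by
  refine measurable_pi_lambda _ fun i => ?_
  refine Fin.cases ?_ (fun j => ?_) i
  · simpa using measurable_fst
  · exact (measurable_pi_apply j).comp measurable_snd

/-- Induction on the dimension: the inequality on the line is applied to the first coordinate. -/
lemma pl_pi {n : ℕ} : ∀ {f g h : (Fin n → ℝ) → ℝ≥0∞}, Measurable f → Measurable g →
    Measurable h → (∀ x y, f x * g y ≤ h ((1 / 2 : ℝ) • (x + y)) ^ 2) →
    (∫⁻ x, f x) * ∫⁻ x, g x ≤ (∫⁻ x, h x) ^ 2 := by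
  induction n with
  | zero =>
    intro f g h hf hg hh H
    have e : ∀ u : (Fin 0 → ℝ) → ℝ≥0∞, ∫⁻ x, u x = u default := by
      intro u
      rw [volume_pi, Measure.pi_of_empty _ default, lintegral_dirac]
    rw [e, e, e]
    refine (H default default).trans (le_of_eq ?_)
    congr 2
    exact Subsingleton.elim _ _
  | succ n ih =>
    intro f g h hf hg hh H
    rw [lintegral_fin_succ hf, lintegral_fin_succ hg, lintegral_fin_succ hh]
    refine pl_line ?_ ?_ ?_ ?_
    · exact (hf.comp measurable_cons).lintegral_prod_right'
    · exact (hg.comp measurable_cons).lintegral_prod_right'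
    · exact (hh.comp measurable_cons).lintegral_prod_right'
    · intro s t
      refine ih (hf.comp (measurable_cons.comp (measurable_const.prodMk measurable_id)))
        (hg.comp (measurable_cons.comp (measurable_const.prodMk measurable_id)))
        (hh.comp (measurable_cons.comp (measurable_const.prodMk measurable_id))) ?_
      intro x y
      refine (H _ _).trans (le_of_eq ?_)
      congr 2
      ext i
      refine Fin.cases ?_ (fun j => ?_) i
      · simp; ring
      · simp; ring

/-- The Prékopa–Leindler inequality on Euclidean space, for midpoints. -/
lemma prekopa_leindler {n : ℕ} {f g h : EuclideanSpace ℝ (Fin n) → ℝ≥0∞} (hf : Measurable f)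
    (hg : Measurable g) (hh : Measurable h)
    (H : ∀ x y, f x * g y ≤ h ((1 / 2 : ℝ) • (x + y)) ^ 2) :
    (∫⁻ x, f x) * ∫⁻ x, g x ≤ (∫⁻ x, h x) ^ 2 := by
  have mp := (EuclideanSpace.volume_preserving_symm_measurableEquiv_toLp (Fin n)).symm
  rw [← mp.lintegral_comp hf, ← mp.lintegral_comp hg, ← mp.lintegral_comp hh]
  refine pl_pi (hf.comp mp.measurable) (hg.comp mp.measurable) (hh.comp mp.measurable) ?_
  intro x y
  exact H _ _

end IsoGauge

namespace IsoGauge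

/-! ### The standard Gaussian measure -/

/-- Euclidean space `ℝⁿ`. -/
abbrev E (n : ℕ) := EuclideanSpace ℝ (Fin n)

/-- The standard Gaussian measure on `ℝⁿ`. -/
abbrev γ (n : ℕ) : Measure (E n) := stdGaussian n

/-- The density of the standard Gaussian measure. -/
def gd {n : ℕ} (z : E n) : ℝ := (2 * π) ^ (-(n : ℝ) / 2) * Real.exp (-‖z‖ ^ 2 / 2)

variable {n : ℕ}

lemma gd_pos (z : E n) : 0 < gd z := by unfold gd; positivity

lemma continuous_gd : Continuous (gd : E n → ℝ) := by unfold gd; fun_prop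

lemma integral_γ (f : E n → ℝ) : ∫ z, f z ∂(γ n) = ∫ z, gd z * f z := by
  have h := integral_withDensity_eq_integral_toReal_smul (μ := (volume : Measure (E n)))
    (f := fun z => ENNReal.ofReal (gd z)) (by exact continuous_gd.measurable.ennreal_ofReal)
    (Filter.Eventually.of_forall fun _ => ENNReal.ofReal_lt_top) f
  simp only [ENNReal.toReal_ofReal (gd_pos _).le, smul_eq_mul] at h
  exact h

lemma integrable_γ_iff {f : E n → ℝ} :
    Integrable f (γ n) ↔ Integrable (fun z => gd z * f z) volume := by
  have h := integrable_withDensity_iff_integrable_smul' (μ := (volume : Measure (E n)))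
    (f := fun z => ENNReal.ofReal (gd z)) (by exact continuous_gd.measurable.ennreal_ofReal)
    (Filter.Eventually.of_forall fun _ => ENNReal.ofReal_lt_top) (g := f)
  simp only [ENNReal.toReal_ofReal (gd_pos _).le, smul_eq_mul] at h
  exact h

lemma integrable_exp_neg_mul_sq_norm {b : ℝ} (hb : 0 < b) :
    Integrable (fun z : E n => Real.exp (-b * ‖z‖ ^ 2)) volume := by
  have h := (GaussianFourier.integrable_cexp_neg_mul_sq_norm_add_of_euclideanSpace
    (b := (b : ℂ)) (by simpa using hb) 0 (0 : E n)).norm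
  refine h.congr (Filter.Eventually.of_forall fun z => ?_)
  simp only [Complex.norm_exp]
  congr 1
  simp [← Complex.ofReal_pow]

lemma integrable_exp_norm (c : ℝ) : Integrable (fun z : E n => Real.exp (c * ‖z‖)) (γ n) := by
  rw [integrable_γ_iff]
  have h := (integrable_exp_neg_mul_sq_norm (n := n) (b := 1 / 4) (by norm_num)).const_mul
    ((2 * π) ^ (-(n : ℝ) / 2) * Real.exp (c ^ 2))
  refine h.mono' (by exact (continuous_gd.mul (by fun_prop)).aestronglyMeasurable)
    (Filter.Eventually.of_forall fun z => ?_)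
  rw [Real.norm_of_nonneg (by have := gd_pos z; positivity)]
  unfold gd
  rw [mul_assoc, mul_assoc, ← Real.exp_add, ← Real.exp_add]
  refine mul_le_mul_of_nonneg_left (Real.exp_le_exp.2 ?_) (by positivity)
  nlinarith [sq_nonneg (‖z‖ / 2 - c)]

lemma integrable_γ_of_bound {f : E n → ℝ} (hf : Continuous f) (C c : ℝ)
    (h : ∀ z, |f z| ≤ C * Real.exp (c * ‖z‖)) : Integrable f (γ n) :=
  ((integrable_exp_norm c).const_mul C).mono' hf.aestronglyMeasurable
    (Filter.Eventually.of_forall fun z => h z)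

instance : IsProbabilityMeasure (γ n) := by
  constructor
  have h1 : ∫ z, gd (n := n) z = 1 := by
    unfold gd
    rw [integral_const_mul]
    have := GaussianFourier.integral_rexp_neg_mul_sq_norm (V := E n) (b := 1 / 2) (by norm_num)
    have e : (fun z : E n => Real.exp (-‖z‖ ^ 2 / 2)) =
        fun z => Real.exp (-(1 / 2 : ℝ) * ‖z‖ ^ 2) := by
      ext z; congr 1; ring
    rw [e, this]
    simp only [finrank_euclideanSpace, Fintype.card_fin]
    rw [show π / (1 / 2) = 2 * π by ring, ← Real.rpow_add (by positivity)]
    ring_nf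
    simp
  have h2 : (γ n) Set.univ = ∫⁻ z : E n, ENNReal.ofReal (gd z) := by
    rw [show γ n = volume.withDensity fun z => ENNReal.ofReal (gd z) from rfl]
    simp
  rw [h2, ← ofReal_integral_eq_lintegral_ofReal, h1]
  · simp
  · exact Integrable.of_integral_ne_zero (by rw [h1]; norm_num)
  · exact Filter.Eventually.of_forall fun z => (gd_pos z).le

lemma norm_le_exp (z : E n) : ‖z‖ ≤ Real.exp (1 * ‖z‖) := by
  have := Real.add_one_le_exp ‖z‖; rw [one_mul]; linarith

lemma integrable_norm_γ : Integrable (fun z : E n => ‖z‖) (γ n) :=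
  integrable_γ_of_bound (by fun_prop) 1 1 fun z => by
    rw [abs_of_nonneg (norm_nonneg _), one_mul]; exact norm_le_exp z

lemma integrable_norm_sq_γ : Integrable (fun z : E n => ‖z‖ ^ 2) (γ n) :=
  integrable_γ_of_bound (by fun_prop) 1 2 fun z => by
    rw [abs_of_nonneg (by positivity), one_mul, two_mul, Real.exp_add, sq]
    have := norm_le_exp z
    rw [one_mul] at this
    gcongr

lemma hasLineDerivAt_gd (z v : E n) : HasLineDerivAt ℝ gd (-inner ℝ v z * gd z) z v := by
  unfold HasLineDerivAt
  have h1 : HasDerivAt (fun t : ℝ => z + t • v) v 0 := by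
    simpa using ((hasDerivAt_id (0 : ℝ)).smul_const v).const_add z
  have h2 := h1.norm_sq
  have h3 := ((h2.neg.div_const 2).exp).const_mul ((2 * π) ^ (-(n : ℝ) / 2))
  unfold gd
  convert! h3 using 1
  simp [real_inner_comm]
  ring

/-- Gaussian integration by parts in the direction `v`. -/
lemma gauss_ibp {F F' : E n → ℝ} (v : E n) (hF : Continuous F) (hF' : Continuous F')
    (C c : ℝ) (hFb : ∀ z, |F z| ≤ C * Real.exp (c * ‖z‖))
    (hF'b : ∀ z, |F' z| ≤ C * Real.exp (c * ‖z‖))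
    (hd : ∀ z, HasLineDerivAt ℝ F (F' z) z v) :
    ∫ z, inner ℝ v z * F z ∂(γ n) = ∫ z, F' z ∂(γ n) := by
  rw [integral_γ, integral_γ]
  have i1 : Integrable (fun z => gd z * F' z) (volume : Measure (E n)) :=
    integrable_γ_iff.1 (integrable_γ_of_bound hF' C c hF'b)
  have i2 : Integrable (fun z => gd z * F z) (volume : Measure (E n)) :=
    integrable_γ_iff.1 (integrable_γ_of_bound hF C c hFb)
  have i3 : Integrable (fun z => gd z * (inner ℝ v z * F z)) (volume : Measure (E n)) := by
    refine integrable_γ_iff.1 (integrable_γ_of_bound (by fun_prop) (‖v‖ * C) (c + 1) fun z => ?_)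
    rw [abs_mul, add_mul, Real.exp_add]
    calc |inner ℝ v z| * |F z| ≤ (‖v‖ * Real.exp (1 * ‖z‖)) * (C * Real.exp (c * ‖z‖)) := by
          gcongr
          · exact (abs_real_inner_le_norm v z).trans
              (mul_le_mul_of_nonneg_left (norm_le_exp z) (norm_nonneg _))
          · exact hFb z
      _ = _ := by ring
  have key := integral_bilinear_hasLineDerivAt_right_eq_neg_left_of_integrable
    (μ := (volume : Measure (E n))) (f := gd) (f' := fun z => -inner ℝ v z * gd z) (g := F)
    (g' := F') (v := v) (B := ContinuousLinearMap.mul ℝ ℝ)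
    (by refine i3.neg.congr (Filter.Eventually.of_forall fun z => ?_)
        simp; ring)
    (by simpa using i1) (by simpa using i2) (fun z _ => hasLineDerivAt_gd z v) (fun z _ => hd z)
  simp only [ContinuousLinearMap.mul_apply'] at key
  rw [key, ← integral_neg]
  congr 1; ext z; ring

/-- The Cameron–Martin formula. -/
lemma cameron_martin (F : E n → ℝ) (v : E n) :
    ∫ z, F (z + v) ∂(γ n) = ∫ z, F z * Real.exp (inner ℝ v z - ‖v‖ ^ 2 / 2) ∂(γ n) := by
  rw [integral_γ, integral_γ,
    ← integral_add_right_eq_self (fun z => gd z * (F z * Real.exp (inner ℝ v z - ‖v‖ ^ 2 / 2))) v]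
  congr 1; ext z
  unfold gd
  rw [mul_comm (F (z + v)), ← mul_assoc, mul_assoc _ (Real.exp _) (Real.exp _), ← Real.exp_add]
  congr 3
  rw [norm_add_sq_real, inner_add_right, real_inner_self_eq_norm_sq, real_inner_comm z v]
  ring

lemma exp_const_bound (c : ℝ) (z : E n) : |c| ≤ |c| * Real.exp (0 * ‖z‖) := by simp

lemma integral_inner_γ (v : E n) : ∫ z, inner ℝ v z ∂(γ n) = 0 := by
  have := gauss_ibp (F := fun _ : E n => (1 : ℝ)) (F' := fun _ => 0) v continuous_const
    continuous_const 1 0 (by simp) (by simp) (fun z => by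
      unfold HasLineDerivAt; exact hasDerivAt_const _ _)
  simpa using this

lemma integral_inner_mul_inner_γ (v w : E n) :
    ∫ z, inner ℝ v z * inner ℝ w z ∂(γ n) = inner ℝ w v := by
  have := gauss_ibp (F := fun z : E n => inner ℝ w z) (F' := fun _ => inner ℝ w v) v (by fun_prop)
    continuous_const (‖w‖ * (1 + ‖v‖)) 1 (fun z => ?_) (fun z => ?_) (fun z => by
      unfold HasLineDerivAt
      have h1 : HasDerivAt (fun t : ℝ => z + t • v) v 0 := by
        simpa using ((hasDerivAt_id (0 : ℝ)).smul_const v).const_add z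
      simpa using (HasDerivAt.inner ℝ (hasDerivAt_const (0 : ℝ) w) h1))
  · simpa using this
  · calc |inner ℝ w z| ≤ ‖w‖ * ‖z‖ := abs_real_inner_le_norm _ _
      _ ≤ (‖w‖ * (1 + ‖v‖)) * Real.exp (1 * ‖z‖) := by
        have := norm_le_exp z
        gcongr
        nlinarith [norm_nonneg w, norm_nonneg v, mul_nonneg (norm_nonneg w) (norm_nonneg v)]
  · calc |inner ℝ w v| ≤ ‖w‖ * ‖v‖ * 1 := by simpa using abs_real_inner_le_norm w v
      _ ≤ (‖w‖ * (1 + ‖v‖)) * Real.exp (1 * ‖z‖) := by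
        gcongr
        · linarith
        · exact Real.one_le_exp (by positivity)

lemma integral_norm_sq_γ : ∫ z, ‖z‖ ^ 2 ∂(γ n) = n := by
  have h : ∀ z : E n, ‖z‖ ^ 2 = ∑ i, inner ℝ (EuclideanSpace.single i (1 : ℝ)) z *
      inner ℝ (EuclideanSpace.single i (1 : ℝ)) z := by
    intro z
    rw [EuclideanSpace.norm_sq_eq]
    simp [EuclideanSpace.inner_single_left, sq]
  simp_rw [h]
  rw [integral_finsetSum]
  · simp_rw [integral_inner_mul_inner_γ]
    simp
  · intro i _
    refine Integrable.mono' integrable_norm_sq_γ (by fun_prop)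
      (Filter.Eventually.of_forall fun z => ?_)
    simp only [EuclideanSpace.inner_single_left, map_one, one_mul]
    rw [norm_mul, sq]
    gcongr <;> exact PiLp.norm_apply_le z i

lemma integral_norm_γ_le : ∫ z, ‖z‖ ∂(γ n) ≤ Real.sqrt n := by
  have h0 : 0 ≤ ∫ z, (‖z‖ - ∫ y, ‖y‖ ∂(γ n)) ^ 2 ∂(γ n) := integral_nonneg fun z => sq_nonneg _
  set m := ∫ y, ‖y‖ ∂(γ n) with hm
  have : ∫ z, (‖z‖ - m) ^ 2 ∂(γ n) = n - m ^ 2 := by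
    have e : (fun z : E n => (‖z‖ - m) ^ 2) = fun z => ‖z‖ ^ 2 - (2 * m) * ‖z‖ + m ^ 2 := by
      ext z; ring
    rw [e, integral_add, integral_sub, integral_const_mul, integral_norm_sq_γ, ← hm]
    · simp; ring
    · exact integrable_norm_sq_γ
    · exact integrable_norm_γ.const_mul _
    · exact integrable_norm_sq_γ.sub (integrable_norm_γ.const_mul _)
    · exact integrable_const _
  apply Real.le_sqrt_of_sq_le
  linarith

end IsoGauge

namespace IsoGauge
open scoped Topology
variable {n : ℕ}

/-! ### Exponential tilts of compactly supported measures -/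

/-- A probability measure concentrated on a ball. -/
class CptMeas (m : Measure (E n)) : Prop where
  prob : IsProbabilityMeasure m
  supp : ∃ R : ℝ, 0 < R ∧ ∀ᵐ x ∂m, ‖x‖ ≤ R

attribute [instance] CptMeas.prob

/-- The radius of a centred ball on which `m` is concentrated. -/
def rad (m : Measure (E n)) [CptMeas m] : ℝ := (CptMeas.supp (m := m)).choose

lemma rad_pos (m : Measure (E n)) [CptMeas m] : 0 < rad m :=
  (CptMeas.supp (m := m)).choose_spec.1

lemma ae_norm_le_rad (m : Measure (E n)) [CptMeas m] : ∀ᵐ x ∂m, ‖x‖ ≤ rad m :=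
  (CptMeas.supp (m := m)).choose_spec.2

/-- A bound for a continuous function on the support of `m`. -/
lemma exists_bound (m : Measure (E n)) [CptMeas m] {g : E n → ℝ} (hg : Continuous g) :
    ∃ C, 0 < C ∧ ∀ x, ‖x‖ ≤ rad m → |g x| ≤ C := by
  obtain ⟨C, hC⟩ := (isCompact_closedBall (0 : E n) (rad m)).exists_bound_of_continuousOn
    hg.continuousOn
  exact ⟨max C 1, by positivity, fun x hx =>
    (hC x (by simpa using hx)).trans (le_max_left _ _)⟩

lemma cpt_integrable (m : Measure (E n)) [CptMeas m] {g : E n → ℝ} (hg : Continuous g) :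
    Integrable g m := by
  obtain ⟨C, -, hC⟩ := exists_bound m hg
  exact (integrable_const C).mono' hg.aestronglyMeasurable
    ((ae_norm_le_rad m).mono fun x hx => hC x hx)

/-- The exponent of the tilt. -/
def ex (s : ℝ) (θ x : E n) : ℝ := inner ℝ θ x - s * ‖x‖ ^ 2 / 2

/-- `Zf m g s θ = ∫ g(x) exp(⟨θ,x⟩ - s|x|²/2) dm(x)`. -/
def Zf (m : Measure (E n)) (g : E n → ℝ) (s : ℝ) (θ : E n) : ℝ :=
  ∫ x, g x * Real.exp (ex s θ x) ∂m

/-- `Q m g s θ` is the mean of `g` with respect to the tilted measure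
`exp(⟨θ,x⟩ - s|x|²/2) dm / Z`. -/
def Q (m : Measure (E n)) (g : E n → ℝ) (s : ℝ) (θ : E n) : ℝ :=
  Zf m g s θ / Zf m (fun _ => 1) s θ

/-- The tilted probability measure `exp(⟨θ,x⟩ - s|x|²/2) dm / Z`. -/
def tilt (m : Measure (E n)) (s : ℝ) (θ : E n) : Measure (E n) := m.tilted (ex s θ)

lemma continuous_ex (s : ℝ) (θ : E n) : Continuous (ex s θ) := by unfold ex; fun_prop

variable (m : Measure (E n)) [CptMeas m]

lemma integrable_exp_ex (s : ℝ) (θ : E n) : Integrable (fun x => Real.exp (ex s θ x)) m :=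
  cpt_integrable m (Real.continuous_exp.comp (continuous_ex s θ))

instance (s : ℝ) (θ : E n) : CptMeas (tilt m s θ) where
  prob := isProbabilityMeasure_tilted (integrable_exp_ex m s θ)
  supp := ⟨rad m, rad_pos m, (tilted_absolutelyContinuous m _).ae_le (ae_norm_le_rad m)⟩

lemma ae_tilt_norm_le_rad (s : ℝ) (θ : E n) : ∀ᵐ x ∂(tilt m s θ), ‖x‖ ≤ rad m :=
  (tilted_absolutelyContinuous m _).ae_le (ae_norm_le_rad m)

lemma Z_pos (s : ℝ) (θ : E n) : 0 < Zf m (fun _ => 1) s θ := by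
  unfold Zf
  simp only [one_mul]
  exact integral_exp_pos (integrable_exp_ex m s θ)

lemma Q_eq_integral (g : E n → ℝ) (s : ℝ) (θ : E n) : Q m g s θ = ∫ x, g x ∂(tilt m s θ) := by
  unfold Q tilt Zf
  rw [integral_tilted]
  simp only [smul_eq_mul, one_mul]
  rw [div_eq_mul_inv, mul_comm, ← integral_const_mul]
  congr 1; ext x; ring

lemma Q_zero (g : E n → ℝ) : Q m g 0 0 = ∫ x, g x ∂m := by
  unfold Q Zf ex; simp

lemma tilt_tilt (s t : ℝ) (θ η : E n) :
    tilt (tilt m t η) s θ = tilt m (t + s) (η + θ) := by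
  unfold tilt
  rw [tilted_tilted (integrable_exp_ex m t η)]
  congr 1
  ext x
  simp only [Pi.add_apply, ex, inner_add_left]
  ring

lemma Q_tilt (g : E n → ℝ) (s t : ℝ) (θ η : E n) :
    Q (tilt m t η) g s θ = Q m g (t + s) (η + θ) := by
  rw [Q_eq_integral, Q_eq_integral, tilt_tilt]

lemma Q_add {f g : E n → ℝ} (hf : Continuous f) (hg : Continuous g) (s : ℝ) (θ : E n) :
    Q m (fun x => f x + g x) s θ = Q m f s θ + Q m g s θ := by
  simp only [Q_eq_integral]
  exact integral_add (cpt_integrable _ hf) (cpt_integrable _ hg)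

lemma Q_sub {f g : E n → ℝ} (hf : Continuous f) (hg : Continuous g) (s : ℝ) (θ : E n) :
    Q m (fun x => f x - g x) s θ = Q m f s θ - Q m g s θ := by
  simp only [Q_eq_integral]
  exact integral_sub (cpt_integrable _ hf) (cpt_integrable _ hg)

lemma Q_const_mul (c : ℝ) (g : E n → ℝ) (s : ℝ) (θ : E n) :
    Q m (fun x => c * g x) s θ = c * Q m g s θ := by
  simp only [Q_eq_integral]
  exact integral_const_mul _ _

lemma Q_const (c : ℝ) (s : ℝ) (θ : E n) : Q m (fun _ => c) s θ = c := by
  simp [Q_eq_integral]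

lemma Q_sum {ι : Type*} (T : Finset ι) {f : ι → E n → ℝ} (hf : ∀ i, Continuous (f i))
    (s : ℝ) (θ : E n) :
    Q m (fun x => ∑ i ∈ T, f i x) s θ = ∑ i ∈ T, Q m (f i) s θ := by
  simp only [Q_eq_integral]
  exact integral_finsetSum _ fun i _ => cpt_integrable _ (hf i)

lemma Q_nonneg {g : E n → ℝ} (hg : ∀ x, 0 ≤ g x) (s : ℝ) (θ : E n) : 0 ≤ Q m g s θ := by
  rw [Q_eq_integral]; exact integral_nonneg hg

lemma Q_mono {f g : E n → ℝ} (hf : Continuous f) (hg : Continuous g)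
    (h : ∀ x, ‖x‖ ≤ rad m → f x ≤ g x) (s : ℝ) (θ : E n) : Q m f s θ ≤ Q m g s θ := by
  rw [Q_eq_integral, Q_eq_integral]
  exact integral_mono_ae (cpt_integrable _ hf) (cpt_integrable _ hg)
    ((ae_tilt_norm_le_rad m s θ).mono fun x hx => h x hx)

lemma abs_Q_le {g : E n → ℝ} (hg : Continuous g) {C : ℝ}
    (h : ∀ x, ‖x‖ ≤ rad m → |g x| ≤ C) (s : ℝ) (θ : E n) : |Q m g s θ| ≤ C := by
  rw [abs_le]
  constructor
  · have := Q_mono m (f := fun _ => -C) continuous_const hg (fun x hx => (abs_le.1 (h x hx)).1) s θ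
    rwa [Q_const] at this
  · have := Q_mono m (g := fun _ => C) hg continuous_const (fun x hx => (abs_le.1 (h x hx)).2) s θ
    rwa [Q_const] at this

/-- Cauchy–Schwarz for the tilted measure. -/
lemma Q_cs {f g : E n → ℝ} (hf : Continuous f) (hg : Continuous g) (s : ℝ) (θ : E n) :
    Q m (fun x => f x * g x) s θ ^ 2 ≤ Q m (fun x => f x ^ 2) s θ * Q m (fun x => g x ^ 2) s θ := by
  set a := Q m (fun x => f x ^ 2) s θ with ha
  set b := Q m (fun x => f x * g x) s θ with hb
  set c := Q m (fun x => g x ^ 2) s θ with hc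
  have key : ∀ t : ℝ, 0 ≤ a * (t * t) + (2 * b) * t + c := by
    intro t
    have h0 := Q_nonneg m (g := fun x => (t * f x + g x) ^ 2) (fun x => sq_nonneg _) s θ
    have e : (fun x => (t * f x + g x) ^ 2) =
        fun x => (t ^ 2 * f x ^ 2 + (2 * t) * (f x * g x)) + g x ^ 2 := by
      ext x; ring
    rw [e, Q_add m (by fun_prop) (by fun_prop), Q_add m (by fun_prop) (by fun_prop), Q_const_mul,
      Q_const_mul, ← ha, ← hb, ← hc] at h0
    linarith
  have := discrim_le_zero key
  unfold discrim at this
  nlinarith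

lemma Q_sq_le {f : E n → ℝ} (hf : Continuous f) (s : ℝ) (θ : E n) :
    Q m f s θ ^ 2 ≤ Q m (fun x => f x ^ 2) s θ := by
  have := Q_cs m hf (continuous_const (y := (1 : ℝ))) s θ
  simpa [Q_const] using this

/-! ### Derivatives of tilted means -/

lemma hasFDerivAt_Zf {g : E n → ℝ} (hg : Continuous g) (p : ℝ × E n) :
    HasFDerivAt (fun q : ℝ × E n => Zf m g q.1 q.2)
      (∫ x, (g x * Real.exp (ex p.1 p.2 x)) •
        ((innerSL ℝ x).comp (ContinuousLinearMap.snd ℝ ℝ (E n)) -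
          (‖x‖ ^ 2 / 2) • ContinuousLinearMap.fst ℝ ℝ (E n)) ∂m) p := by
  obtain ⟨C, hC0, hC⟩ := exists_bound m hg
  set R := rad m
  have hR := rad_pos m
  set M : ℝ := C * Real.exp ((‖p‖ + 1) * R + (‖p‖ + 1) * R ^ 2 / 2) * (R + R ^ 2 / 2)
  refine hasFDerivAt_integral_of_dominated_of_fderiv_le (s := Metric.ball p 1) (bound := fun _ => M)
    (F' := fun q x => (g x * Real.exp (ex q.1 q.2 x)) •
        ((innerSL ℝ x).comp (ContinuousLinearMap.snd ℝ ℝ (E n)) -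
          (‖x‖ ^ 2 / 2) • ContinuousLinearMap.fst ℝ ℝ (E n)))
    (Metric.ball_mem_nhds p one_pos) ?_ ?_ ?_ ?_ (integrable_const _) ?_
  · exact Filter.Eventually.of_forall fun q =>
      (hg.mul (Real.continuous_exp.comp (continuous_ex _ _))).aestronglyMeasurable
  · exact cpt_integrable m (hg.mul (Real.continuous_exp.comp (continuous_ex _ _)))
  · refine Continuous.aestronglyMeasurable ?_
    refine (hg.mul (Real.continuous_exp.comp (continuous_ex _ _))).smul ?_
    refine Continuous.sub ?_ (by fun_prop)
    exact ((innerSL ℝ).continuous).clm_comp continuous_const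
  · filter_upwards [ae_norm_le_rad m] with x hx q hq
    have hq1 : ‖q‖ ≤ ‖p‖ + 1 := by
      have : ‖q‖ ≤ ‖p‖ + ‖q - p‖ := by
        have := norm_add_le p (q - p); simpa using this
      rw [Metric.mem_ball, dist_eq_norm] at hq
      linarith
    have h1 : ‖q.1‖ ≤ ‖p‖ + 1 := (norm_fst_le q).trans hq1
    have h2 : ‖q.2‖ ≤ ‖p‖ + 1 := (norm_snd_le q).trans hq1
    rw [norm_smul]
    refine mul_le_mul ?_ ?_ (norm_nonneg _) (by positivity)
    · rw [norm_mul, Real.norm_of_nonneg (Real.exp_pos _).le]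
      refine mul_le_mul (hC x hx) (Real.exp_le_exp.2 ?_) (Real.exp_pos _).le hC0.le
      unfold ex
      have a1 : inner ℝ q.2 x ≤ (‖p‖ + 1) * R :=
        (real_inner_le_norm _ _).trans (mul_le_mul h2 hx (norm_nonneg _) (by positivity))
      have a2 : -q.1 * ‖x‖ ^ 2 ≤ (‖p‖ + 1) * R ^ 2 := by
        refine mul_le_mul ((neg_le_abs _).trans h1) ?_ (by positivity) (by positivity)
        gcongr
      linarith
    · refine (norm_sub_le _ _).trans (add_le_add ?_ ?_)
      · refine (ContinuousLinearMap.opNorm_comp_le _ _).trans ?_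
        rw [innerSL_apply_norm]
        calc ‖x‖ * ‖ContinuousLinearMap.snd ℝ ℝ (E n)‖ ≤ R * 1 := by
              gcongr; exact ContinuousLinearMap.norm_snd_le ..
          _ = R := mul_one _
      · rw [norm_smul, Real.norm_of_nonneg (by positivity)]
        calc ‖x‖ ^ 2 / 2 * ‖ContinuousLinearMap.fst ℝ ℝ (E n)‖ ≤ R ^ 2 / 2 * 1 := by
              gcongr; exact ContinuousLinearMap.norm_fst_le ..
          _ = R ^ 2 / 2 := mul_one _
  · refine Filter.Eventually.of_forall fun x q _ => ?_
    have e1 : HasFDerivAt (fun q : ℝ × E n => ex q.1 q.2 x)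
        ((innerSL ℝ x).comp (ContinuousLinearMap.snd ℝ ℝ (E n)) -
          (‖x‖ ^ 2 / 2) • ContinuousLinearMap.fst ℝ ℝ (E n)) q := by
      have : (fun q : ℝ × E n => ex q.1 q.2 x) = ⇑((innerSL ℝ x).comp
          (ContinuousLinearMap.snd ℝ ℝ (E n)) -
          (‖x‖ ^ 2 / 2) • ContinuousLinearMap.fst ℝ ℝ (E n)) := by
        ext q
        simp [ex, real_inner_comm]
        ring
      rw [this]
      exact ContinuousLinearMap.hasFDerivAt _
    have := (e1.exp).const_mul (g x)
    rwa [smul_smul] at this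

lemma hasDerivAt_Zf {g : E n → ℝ} (hg : Continuous g) {σ : ℝ → ℝ} {θ : ℝ → E n} {σ' r : ℝ}
    {θ' : E n} (hσ : HasDerivAt σ σ' r) (hθ : HasDerivAt θ θ' r) :
    HasDerivAt (fun q => Zf m g (σ q) (θ q))
      (Zf m (fun x => g x * inner ℝ θ' x) (σ r) (θ r) -
        σ' / 2 * Zf m (fun x => g x * ‖x‖ ^ 2) (σ r) (θ r)) r := by
  have h := (hasFDerivAt_Zf m hg (σ r, θ r)).comp_hasDerivAt r (hσ.prodMk hθ)
  convert! h using 1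
  have hcont : ∀ p : ℝ × E n, Continuous fun x : E n => (g x * Real.exp (ex p.1 p.2 x)) •
        ((innerSL ℝ x).comp (ContinuousLinearMap.snd ℝ ℝ (E n)) -
          (‖x‖ ^ 2 / 2) • ContinuousLinearMap.fst ℝ ℝ (E n)) := by
    intro p
    refine (hg.mul (Real.continuous_exp.comp (continuous_ex _ _))).smul ?_
    refine Continuous.sub ?_ (by fun_prop)
    exact ((innerSL ℝ).continuous).clm_comp continuous_const
  rw [ContinuousLinearMap.integral_apply]
  · unfold Zf
    rw [← integral_const_mul, ← integral_sub]
    · congr 1; ext x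
      simp [real_inner_comm]
      ring
    · exact cpt_integrable m ((by fun_prop : Continuous fun x => g x * inner ℝ θ' x).mul
        (Real.continuous_exp.comp (continuous_ex _ _)))
    · exact (cpt_integrable m ((by fun_prop : Continuous fun x => g x * ‖x‖ ^ 2).mul
        (Real.continuous_exp.comp (continuous_ex _ _)))).const_mul _
  · obtain ⟨C, hC⟩ := (isCompact_closedBall (0 : E n) (rad m)).exists_bound_of_continuousOn
      (hcont (σ r, θ r)).continuousOn
    exact (integrable_const C).mono' (hcont _).aestronglyMeasurable
      ((ae_norm_le_rad m).mono fun x hx => hC x (by simpa using hx))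

/-- Covariance of `f` and `g` under the tilted measure. -/
def cv (f g : E n → ℝ) (s : ℝ) (θ : E n) : ℝ :=
  Q m (fun x => f x * g x) s θ - Q m f s θ * Q m g s θ

lemma hasDerivAt_Q {g : E n → ℝ} (hg : Continuous g) {σ : ℝ → ℝ} {θ : ℝ → E n} {σ' r : ℝ}
    {θ' : E n} (hσ : HasDerivAt σ σ' r) (hθ : HasDerivAt θ θ' r) :
    HasDerivAt (fun q => Q m g (σ q) (θ q))
      (cv m g (fun x => inner ℝ θ' x) (σ r) (θ r) -
        σ' / 2 * cv m g (fun x => ‖x‖ ^ 2) (σ r) (θ r)) r := by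
  have hz := Z_pos m (σ r) (θ r)
  have h := (hasDerivAt_Zf m hg hσ hθ).div (hasDerivAt_Zf m (continuous_const (y := (1 : ℝ))) hσ hθ)
    hz.ne'
  convert! h using 1
  unfold cv Q
  simp only [one_mul]
  field_simp
  ring

lemma continuous_Q {g : E n → ℝ} (hg : Continuous g) :
    Continuous fun p : ℝ × E n => Q m g p.1 p.2 := by
  refine Continuous.div ?_ ?_ fun p => (Z_pos m p.1 p.2).ne'
  · exact continuous_iff_continuousAt.2 fun p => (hasFDerivAt_Zf m hg p).continuousAt
  · exact continuous_iff_continuousAt.2 fun p =>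
      (hasFDerivAt_Zf m continuous_const p).continuousAt

end IsoGauge

namespace IsoGauge
open scoped Topology
variable {n : ℕ}

/-! ### Functions of class `C^{1,2}` and the generator of the localization process -/

/-- `u` is of class `C^{1,2}` on `I × ℝⁿ`, with time derivative `ut`, first space derivatives
`Du i` and pure second space derivatives `D2 i`, all of them bounded, and continuous in space.
Joint differentiability is expressed by the chain rule along differentiable curves. -/
structure C12 (I : Set ℝ) (u ut : ℝ → E n → ℝ) (Du D2 : Fin n → ℝ → E n → ℝ) : Prop where
  curve : ∀ (σ : ℝ → ℝ) (θ : ℝ → E n) (σ' : ℝ) (θ' : E n) (r : ℝ), σ r ∈ I → HasDerivAt σ σ' r →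
    HasDerivAt θ θ' r → HasDerivAt (fun q => u (σ q) (θ q))
      (ut (σ r) (θ r) * σ' + ∑ i, Du i (σ r) (θ r) * θ' i) r
  line : ∀ i, ∀ s ∈ I, ∀ θ, HasLineDerivAt ℝ (Du i s) (D2 i s θ) θ (EuclideanSpace.single i 1)
  cont_ut : ∀ s ∈ I, Continuous (ut s)
  cont_Du : ∀ s ∈ I, ∀ i, Continuous (Du i s)
  cont_D2 : ∀ s ∈ I, ∀ i, Continuous (D2 i s)
  bound : ∃ C, ∀ s ∈ I, ∀ θ, |u s θ| ≤ C ∧ |ut s θ| ≤ C ∧ ∀ i, |Du i s θ| ≤ C ∧ |D2 i s θ| ≤ C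

/-- The generator `∂ₛ + ½Δ + ⟨a, ∇⟩`, where `a` is the barycentre of the tilted measure,
evaluated on derivative data. -/
def Lop (m : Measure (E n)) (ut : ℝ → E n → ℝ) (Du D2 : Fin n → ℝ → E n → ℝ) (s : ℝ) (θ : E n) :
    ℝ :=
  ut s θ + (∑ i, D2 i s θ) / 2 + ∑ i, Q m (fun x => x i) s θ * Du i s θ

namespace C12

variable {I : Set ℝ} {u ut v vt : ℝ → E n → ℝ} {Du D2 Dv D2v : Fin n → ℝ → E n → ℝ}

lemma mono {J : Set ℝ} (h : C12 I u ut Du D2) (hJ : J ⊆ I) : C12 J u ut Du D2 where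
  curve σ θ σ' θ' r hr := h.curve σ θ σ' θ' r (hJ hr)
  line i s hs := h.line i s (hJ hs)
  cont_ut s hs := h.cont_ut s (hJ hs)
  cont_Du s hs := h.cont_Du s (hJ hs)
  cont_D2 s hs := h.cont_D2 s (hJ hs)
  bound := by
    obtain ⟨C, hC⟩ := h.bound
    exact ⟨C, fun s hs => hC s (hJ hs)⟩

lemma lineDu (h : C12 I u ut Du D2) {s : ℝ} (hs : s ∈ I) (θ : E n) (i : Fin n) :
    HasLineDerivAt ℝ (u s) (Du i s θ) θ (EuclideanSpace.single i 1) := by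
  have h1 : HasDerivAt (fun t : ℝ => θ + t • EuclideanSpace.single i (1 : ℝ))
      (EuclideanSpace.single i (1 : ℝ)) 0 := by
    simpa using ((hasDerivAt_id (0 : ℝ)).smul_const (EuclideanSpace.single i (1 : ℝ))).const_add θ
  have := h.curve (fun _ => s) _ 0 _ 0 hs (hasDerivAt_const _ _) h1
  unfold HasLineDerivAt
  simpa using this

lemma cont_u (h : C12 I u ut Du D2) {s : ℝ} (hs : s ∈ I) : Continuous (u s) := by
  obtain ⟨C, hC⟩ := h.bound
  have hC0 : 0 ≤ C := (abs_nonneg _).trans (hC s hs 0).1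
  have hl : LipschitzWith (Real.toNNReal (C * ∑ _i : Fin n, 1)) (u s) := by
    refine LipschitzWith.of_dist_le_mul fun x y => ?_
    rw [Real.coe_toNNReal _ (by positivity), dist_eq_norm, dist_eq_norm]
    have hd : ∀ t : ℝ, HasDerivAt (fun t : ℝ => y + t • (x - y)) (x - y) t := by
      intro t
      simpa using ((hasDerivAt_id t).smul_const (x - y)).const_add y
    have key := Convex.norm_image_sub_le_of_norm_hasDerivWithin_le (s := Set.univ) (x := (0 : ℝ))
      (y := 1) (C := C * (∑ _i : Fin n, 1) * ‖x - y‖)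
      (f := fun t => u s (y + t • (x - y)))
      (fun t _ => (h.curve (fun _ => s) _ 0 _ t hs (hasDerivAt_const _ _)
        (hd t)).hasDerivWithinAt) (fun t _ => by
          rw [mul_zero, zero_add]
          refine (norm_sum_le _ _).trans ?_
          rw [Finset.mul_sum, Finset.sum_mul]
          refine Finset.sum_le_sum fun i _ => ?_
          rw [norm_mul, mul_one]
          exact mul_le_mul ((hC s hs _).2.2 i).1 (PiLp.norm_apply_le _ _) (norm_nonneg _) hC0)
        convex_univ (Set.mem_univ _) (Set.mem_univ _)
    simpa using key
  exact hl.continuous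

lemma const (c : ℝ) : C12 I (fun _ (_ : E n) => c) (fun _ _ => 0) (fun _ _ _ => 0)
    (fun _ _ _ => 0) where
  curve σ θ σ' θ' r _ _ _ := by simpa using hasDerivAt_const r c
  line i s _ θ := by unfold HasLineDerivAt; exact hasDerivAt_const _ _
  cont_ut _ _ := continuous_const
  cont_Du _ _ _ := continuous_const
  cont_D2 _ _ _ := continuous_const
  bound := ⟨|c|, fun _ _ _ => ⟨le_rfl, by simp, fun _ => by simp⟩⟩

/-- A function of time alone. -/
lemma time {φ φ' : ℝ → ℝ} (h : ∀ s ∈ I, HasDerivAt φ (φ' s) s) {C : ℝ}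
    (hC : ∀ s ∈ I, |φ s| ≤ C) (hC' : ∀ s ∈ I, |φ' s| ≤ C) :
    C12 I (fun s (_ : E n) => φ s) (fun s _ => φ' s) (fun _ _ _ => 0) (fun _ _ _ => 0) where
  curve σ θ σ' θ' r hr hσ _ := by
    have := (h _ hr).comp r hσ
    simpa [Function.comp_def] using this
  line i s _ θ := by unfold HasLineDerivAt; exact hasDerivAt_const _ _
  cont_ut _ _ := continuous_const
  cont_Du _ _ _ := continuous_const
  cont_D2 _ _ _ := continuous_const
  bound := ⟨C, fun s hs _ => ⟨hC s hs, hC' s hs, fun _ => by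
    simpa using (abs_nonneg _).trans (hC s hs)⟩⟩

lemma add (hu : C12 I u ut Du D2) (hv : C12 I v vt Dv D2v) :
    C12 I (fun s θ => u s θ + v s θ) (fun s θ => ut s θ + vt s θ)
      (fun i s θ => Du i s θ + Dv i s θ) (fun i s θ => D2 i s θ + D2v i s θ) where
  curve σ θ σ' θ' r hr hσ hθ := by
    convert! (hu.curve σ θ σ' θ' r hr hσ hθ).add (hv.curve σ θ σ' θ' r hr hσ hθ) using 1
    simp only [add_mul, Finset.sum_add_distrib]; ring
  line i s hs θ := (hu.line i s hs θ).add (hv.line i s hs θ)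
  cont_ut s hs := (hu.cont_ut s hs).add (hv.cont_ut s hs)
  cont_Du s hs i := (hu.cont_Du s hs i).add (hv.cont_Du s hs i)
  cont_D2 s hs i := (hu.cont_D2 s hs i).add (hv.cont_D2 s hs i)
  bound := by
    obtain ⟨C, hC⟩ := hu.bound
    obtain ⟨D, hD⟩ := hv.bound
    refine ⟨C + D, fun s hs θ => ⟨?_, ?_, fun i => ⟨?_, ?_⟩⟩⟩
    · exact (abs_add_le _ _).trans (add_le_add (hC s hs θ).1 (hD s hs θ).1)
    · exact (abs_add_le _ _).trans (add_le_add (hC s hs θ).2.1 (hD s hs θ).2.1)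
    · exact (abs_add_le _ _).trans (add_le_add ((hC s hs θ).2.2 i).1 ((hD s hs θ).2.2 i).1)
    · exact (abs_add_le _ _).trans (add_le_add ((hC s hs θ).2.2 i).2 ((hD s hs θ).2.2 i).2)

lemma mul (hu : C12 I u ut Du D2) (hv : C12 I v vt Dv D2v) :
    C12 I (fun s θ => u s θ * v s θ) (fun s θ => ut s θ * v s θ + u s θ * vt s θ)
      (fun i s θ => Du i s θ * v s θ + u s θ * Dv i s θ)
      (fun i s θ => D2 i s θ * v s θ + Du i s θ * Dv i s θ +
        (Du i s θ * Dv i s θ + u s θ * D2v i s θ)) where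
  curve σ θ σ' θ' r hr hσ hθ := by
    convert! (hu.curve σ θ σ' θ' r hr hσ hθ).mul (hv.curve σ θ σ' θ' r hr hσ hθ) using 1
    simp only [add_mul, Finset.sum_add_distrib, mul_add, Finset.sum_mul, Finset.mul_sum]
    have e : ∀ i, Du i (σ r) (θ r) * v (σ r) (θ r) * θ' i = Du i (σ r) (θ r) * θ' i * v (σ r) (θ r) :=
      fun i => by ring
    simp only [e, mul_assoc]
    ring
  line i s hs θ := by
    have h1 := (hu.line i s hs θ).mul (hv.lineDu hs θ i)
    have h2 := (hu.lineDu hs θ i).mul (hv.line i s hs θ)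
    have := HasDerivAt.add h1 h2
    unfold HasLineDerivAt
    convert! this using 1
    simp
  cont_ut s hs := ((hu.cont_ut s hs).mul (hv.cont_u hs)).add ((hu.cont_u hs).mul (hv.cont_ut s hs))
  cont_Du s hs i :=
    ((hu.cont_Du s hs i).mul (hv.cont_u hs)).add ((hu.cont_u hs).mul (hv.cont_Du s hs i))
  cont_D2 s hs i :=
    (((hu.cont_D2 s hs i).mul (hv.cont_u hs)).add ((hu.cont_Du s hs i).mul (hv.cont_Du s hs i))).add
    (((hu.cont_Du s hs i).mul (hv.cont_Du s hs i)).add ((hu.cont_u hs).mul (hv.cont_D2 s hs i)))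
  bound := by
    obtain ⟨C, hC⟩ := hu.bound
    obtain ⟨D, hD⟩ := hv.bound
    have aux : ∀ {a b : ℝ}, |a| ≤ C → |b| ≤ D → |a * b| ≤ C * D := fun ha hb => by
      rw [abs_mul]; exact mul_le_mul ha hb (abs_nonneg _) ((abs_nonneg _).trans ha)
    have aux2 : ∀ {a b c d : ℝ}, |a| ≤ c → |b| ≤ d → |a + b| ≤ c + d := fun ha hb =>
      (abs_add_le _ _).trans (add_le_add ha hb)
    refine ⟨C * D + C * D + (C * D + C * D), fun s hs θ => ?_⟩
    obtain ⟨c1, c2, c3⟩ := hC s hs θ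
    obtain ⟨d1, d2, d3⟩ := hD s hs θ
    have h0 : 0 ≤ C * D := (abs_nonneg _).trans (aux c1 d1)
    refine ⟨(aux c1 d1).trans (by linarith), (aux2 (aux c2 d1) (aux c1 d2)).trans (by linarith),
      fun i => ⟨(aux2 (aux (c3 i).1 d1) (aux c1 (d3 i).1)).trans (by linarith), ?_⟩⟩
    exact aux2 (aux2 (aux (c3 i).2 d1) (aux (c3 i).1 (d3 i).1))
      (aux2 (aux (c3 i).1 (d3 i).1) (aux c1 (d3 i).2))

lemma const_mul (c : ℝ) (hu : C12 I u ut Du D2) :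
    C12 I (fun s θ => c * u s θ) (fun s θ => c * ut s θ)
      (fun i s θ => c * Du i s θ) (fun i s θ => c * D2 i s θ) := by
  simpa using (const (I := I) (n := n) c).mul hu

lemma sum {ι : Type*} [DecidableEq ι] (T : Finset ι) {u ut : ι → ℝ → E n → ℝ}
    {Du D2 : ι → Fin n → ℝ → E n → ℝ} (h : ∀ k ∈ T, C12 I (u k) (ut k) (Du k) (D2 k)) :
    C12 I (fun s θ => ∑ k ∈ T, u k s θ) (fun s θ => ∑ k ∈ T, ut k s θ)
      (fun i s θ => ∑ k ∈ T, Du k i s θ) (fun i s θ => ∑ k ∈ T, D2 k i s θ) := by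
  induction T using Finset.induction_on with
  | empty => simpa using const (I := I) (n := n) 0
  | insert a T ha ih =>
    simp only [Finset.sum_insert ha]
    exact (h a (by simp)).add (ih fun k hk => h k (by simp [hk]))

lemma sub (hu : C12 I u ut Du D2) (hv : C12 I v vt Dv D2v) :
    C12 I (fun s θ => u s θ - v s θ) (fun s θ => ut s θ - vt s θ)
      (fun i s θ => Du i s θ - Dv i s θ) (fun i s θ => D2 i s θ - D2v i s θ) := by
  simpa [sub_eq_add_neg] using hu.add (hv.const_mul (-1))

lemma comp (hu : C12 I u ut Du D2) {φ φ' φ'' : ℝ → ℝ} {J : Set ℝ} (hJ : IsCompact J)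
    (huJ : ∀ s ∈ I, ∀ θ, u s θ ∈ J) (h1 : ∀ y ∈ J, HasDerivAt φ (φ' y) y)
    (h2 : ∀ y ∈ J, HasDerivAt φ' (φ'' y) y) (h3 : ContinuousOn φ'' J) :
    C12 I (fun s θ => φ (u s θ)) (fun s θ => φ' (u s θ) * ut s θ)
      (fun i s θ => φ' (u s θ) * Du i s θ)
      (fun i s θ => φ'' (u s θ) * Du i s θ * Du i s θ + φ' (u s θ) * D2 i s θ) where
  curve σ θ σ' θ' r hr hσ hθ := by
    convert! (h1 _ (huJ _ hr (θ r))).comp r (hu.curve σ θ σ' θ' r hr hσ hθ) using 1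
    rw [mul_add, Finset.mul_sum]
    simp only [mul_assoc]
  line i s hs θ := by
    have e := hu.lineDu hs θ i
    unfold HasLineDerivAt at e
    have h4 : HasDerivAt (fun t : ℝ => φ' (u s (θ + t • EuclideanSpace.single i 1)))
        (φ'' (u s θ) * Du i s θ) 0 := by
      have h2' := h2 _ (huJ s hs θ)
      have := HasDerivAt.comp (h₂ := φ') (0 : ℝ) (by simpa using h2') e
      exact this
    have := HasDerivAt.mul h4 (hu.line i s hs θ)
    unfold HasLineDerivAt
    convert! this using 1
    simp
  cont_ut s hs := by
    have : Continuous fun θ => φ' (u s θ) := ContinuousOn.comp_continuous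
      (fun y hy => (h2 y hy).continuousAt.continuousWithinAt) (hu.cont_u hs) (huJ s hs)
    exact this.mul (hu.cont_ut s hs)
  cont_Du s hs i := by
    have : Continuous fun θ => φ' (u s θ) := ContinuousOn.comp_continuous
      (fun y hy => (h2 y hy).continuousAt.continuousWithinAt) (hu.cont_u hs) (huJ s hs)
    exact this.mul (hu.cont_Du s hs i)
  cont_D2 s hs i := by
    have c1 : Continuous fun θ => φ' (u s θ) := ContinuousOn.comp_continuous
      (fun y hy => (h2 y hy).continuousAt.continuousWithinAt) (hu.cont_u hs) (huJ s hs)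
    have c2 : Continuous fun θ => φ'' (u s θ) := h3.comp_continuous (hu.cont_u hs) (huJ s hs)
    exact ((c2.mul (hu.cont_Du s hs i)).mul (hu.cont_Du s hs i)).add (c1.mul (hu.cont_D2 s hs i))
  bound := by
    obtain ⟨C, hC⟩ := hu.bound
    obtain ⟨A, hA⟩ := hJ.exists_bound_of_continuousOn
      (fun y hy => (h1 y hy).continuousAt.continuousWithinAt)
    obtain ⟨B, hB⟩ := hJ.exists_bound_of_continuousOn
      (fun y hy => (h2 y hy).continuousAt.continuousWithinAt)
    obtain ⟨D, hD⟩ := hJ.exists_bound_of_continuousOn h3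
    refine ⟨|A| + |B| * |C| + |D| * |C| * |C|, fun s hs θ => ?_⟩
    obtain ⟨c1, c2, c3⟩ := hC s hs θ
    have a1 : |φ (u s θ)| ≤ |A| := (hA _ (huJ s hs θ)).trans (le_abs_self _)
    have b1 : |φ' (u s θ)| ≤ |B| := (hB _ (huJ s hs θ)).trans (le_abs_self _)
    have d1 : |φ'' (u s θ)| ≤ |D| := (hD _ (huJ s hs θ)).trans (le_abs_self _)
    have hCC := le_abs_self C
    have e1 : 0 ≤ |B| * |C| := by positivity
    have e2 : 0 ≤ |D| * |C| * |C| := by positivity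
    have e3 := abs_nonneg A
    refine ⟨by linarith, ?_, fun i => ⟨?_, ?_⟩⟩
    · rw [abs_mul]
      have := mul_le_mul b1 (c2.trans hCC) (abs_nonneg _) (abs_nonneg _)
      linarith
    · rw [abs_mul]
      have := mul_le_mul b1 ((c3 i).1.trans hCC) (abs_nonneg _) (abs_nonneg _)
      linarith
    · refine (abs_add_le _ _).trans ?_
      rw [abs_mul, abs_mul, abs_mul]
      have := mul_le_mul b1 ((c3 i).2.trans hCC) (abs_nonneg _) (abs_nonneg _)
      have := mul_le_mul (mul_le_mul d1 ((c3 i).1.trans hCC) (abs_nonneg _) (abs_nonneg _))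
        ((c3 i).1.trans hCC) (abs_nonneg _) (by positivity)
      linarith

end C12

variable (m : Measure (E n))

lemma Lop_mul (u ut v vt : ℝ → E n → ℝ) (Du D2 Dv D2v : Fin n → ℝ → E n → ℝ) (s : ℝ) (θ : E n) :
    Lop m (fun s θ => ut s θ * v s θ + u s θ * vt s θ)
      (fun i s θ => Du i s θ * v s θ + u s θ * Dv i s θ)
      (fun i s θ => D2 i s θ * v s θ + Du i s θ * Dv i s θ +
        (Du i s θ * Dv i s θ + u s θ * D2v i s θ)) s θ =
    Lop m ut Du D2 s θ * v s θ + u s θ * Lop m vt Dv D2v s θ + ∑ i, Du i s θ * Dv i s θ := by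
  unfold Lop
  have h1 : ∑ i, (D2 i s θ * v s θ + Du i s θ * Dv i s θ +
      (Du i s θ * Dv i s θ + u s θ * D2v i s θ)) = (∑ i, D2 i s θ) * v s θ +
      2 * (∑ i, Du i s θ * Dv i s θ) + u s θ * ∑ i, D2v i s θ := by
    rw [Finset.sum_mul, Finset.mul_sum, Finset.mul_sum, ← Finset.sum_add_distrib,
      ← Finset.sum_add_distrib]
    exact Finset.sum_congr rfl fun i _ => by ring
  have h2 : ∑ i, Q m (fun x => x i) s θ * (Du i s θ * v s θ + u s θ * Dv i s θ) =
      (∑ i, Q m (fun x => x i) s θ * Du i s θ) * v s θ +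
      u s θ * ∑ i, Q m (fun x => x i) s θ * Dv i s θ := by
    rw [Finset.sum_mul, Finset.mul_sum, ← Finset.sum_add_distrib]
    exact Finset.sum_congr rfl fun i _ => by ring
  rw [h1, h2]
  ring

lemma Lop_add (ut vt : ℝ → E n → ℝ) (Du D2 Dv D2v : Fin n → ℝ → E n → ℝ) (s : ℝ) (θ : E n) :
    Lop m (fun s θ => ut s θ + vt s θ)
      (fun i s θ => Du i s θ + Dv i s θ) (fun i s θ => D2 i s θ + D2v i s θ) s θ =
    Lop m ut Du D2 s θ + Lop m vt Dv D2v s θ := by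
  unfold Lop
  simp only [mul_add, Finset.sum_add_distrib]
  ring

lemma Lop_sub (ut vt : ℝ → E n → ℝ) (Du D2 Dv D2v : Fin n → ℝ → E n → ℝ) (s : ℝ) (θ : E n) :
    Lop m (fun s θ => ut s θ - vt s θ)
      (fun i s θ => Du i s θ - Dv i s θ) (fun i s θ => D2 i s θ - D2v i s θ) s θ =
    Lop m ut Du D2 s θ - Lop m vt Dv D2v s θ := by
  unfold Lop
  simp only [mul_sub, Finset.sum_sub_distrib]
  ring

lemma Lop_const_mul (c : ℝ) (ut : ℝ → E n → ℝ) (Du D2 : Fin n → ℝ → E n → ℝ) (s : ℝ) (θ : E n) :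
    Lop m (fun s θ => c * ut s θ)
      (fun i s θ => c * Du i s θ) (fun i s θ => c * D2 i s θ) s θ =
    c * Lop m ut Du D2 s θ := by
  unfold Lop
  simp only [mul_add, Finset.mul_sum, Finset.sum_div]
  congr 1
  · congr 1; congr 1; ext i; ring
  · congr 1; ext i; ring

lemma Lop_sum {ι : Type*} (T : Finset ι) (ut : ι → ℝ → E n → ℝ)
    (Du D2 : ι → Fin n → ℝ → E n → ℝ) (s : ℝ) (θ : E n) :
    Lop m (fun s θ => ∑ k ∈ T, ut k s θ)
      (fun i s θ => ∑ k ∈ T, Du k i s θ) (fun i s θ => ∑ k ∈ T, D2 k i s θ) s θ =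
    ∑ k ∈ T, Lop m (ut k) (Du k) (D2 k) s θ := by
  unfold Lop
  simp only [Finset.sum_add_distrib, Finset.mul_sum, Finset.sum_div]
  congr 1
  · congr 1
    exact Finset.sum_comm
  · exact Finset.sum_comm

lemma Lop_comp (φ' φ'' : ℝ → ℝ) (u ut : ℝ → E n → ℝ) (Du D2 : Fin n → ℝ → E n → ℝ) (s : ℝ)
    (θ : E n) :
    Lop m (fun s θ => φ' (u s θ) * ut s θ) (fun i s θ => φ' (u s θ) * Du i s θ)
      (fun i s θ => φ'' (u s θ) * Du i s θ * Du i s θ + φ' (u s θ) * D2 i s θ) s θ =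
    φ' (u s θ) * Lop m ut Du D2 s θ + φ'' (u s θ) / 2 * ∑ i, Du i s θ ^ 2 := by
  unfold Lop
  simp only [Finset.sum_add_distrib, mul_add, Finset.mul_sum, Finset.sum_div, add_div]
  have e1 : ∀ i, φ'' (u s θ) * Du i s θ * Du i s θ / 2 = φ'' (u s θ) / 2 * Du i s θ ^ 2 :=
    fun i => by ring
  have e2 : ∀ i, Q m (fun x => x i) s θ * (φ' (u s θ) * Du i s θ) =
    φ' (u s θ) * (Q m (fun x => x i) s θ * Du i s θ) := fun i => by ring
  have e3 : ∀ i, φ' (u s θ) * D2 i s θ / 2 = φ' (u s θ) * (D2 i s θ / 2) := fun i => by ring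
  simp only [e1, e2, e3]
  ring

end IsoGauge

namespace IsoGauge
open scoped Topology
set_option linter.unusedSectionVars false
variable {n : ℕ}

variable (m : Measure (E n)) [CptMeas m]

lemma continuous_coord (i : Fin n) : Continuous fun x : E n => x i := by fun_prop

lemma continuous_Q_right {g : E n → ℝ} (hg : Continuous g) (s : ℝ) :
    Continuous fun θ => Q m g s θ :=
  (continuous_Q m hg).comp (by fun_prop : Continuous fun θ : E n => (s, θ))

lemma continuous_cv {f g : E n → ℝ} (hf : Continuous f) (hg : Continuous g) (s : ℝ) :
    Continuous fun θ => cv m f g s θ :=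
  (continuous_Q_right m (hf.mul hg) s).sub
    ((continuous_Q_right m hf s).mul (continuous_Q_right m hg s))

lemma exists_bound_Q {g : E n → ℝ} (hg : Continuous g) : ∃ C, ∀ s θ, |Q m g s θ| ≤ C := by
  obtain ⟨C, -, hC⟩ := exists_bound m hg
  exact ⟨C, fun s θ => abs_Q_le m hg hC s θ⟩

lemma exists_bound_cv {f g : E n → ℝ} (hf : Continuous f) (hg : Continuous g) :
    ∃ C, ∀ s θ, |cv m f g s θ| ≤ C := by
  obtain ⟨A, hA⟩ := exists_bound_Q m (hf.mul hg)
  obtain ⟨B, hB⟩ := exists_bound_Q m hf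
  obtain ⟨D, hD⟩ := exists_bound_Q m hg
  refine ⟨A + B * D, fun s θ => (abs_sub _ _).trans (add_le_add (hA s θ) ?_)⟩
  rw [abs_mul]
  exact mul_le_mul (hB s θ) (hD s θ) (abs_nonneg _) ((abs_nonneg _).trans (hB s θ))

lemma cv_comm (f g : E n → ℝ) (s : ℝ) (θ : E n) : cv m f g s θ = cv m g f s θ := by
  unfold cv; simp only [mul_comm]

lemma cv_sum_right {ι : Type*} (T : Finset ι) {f : E n → ℝ} {g : ι → E n → ℝ} (c : ι → ℝ)
    (hf : Continuous f) (hg : ∀ i, Continuous (g i)) (s : ℝ) (θ : E n) :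
    cv m f (fun x => ∑ i ∈ T, c i * g i x) s θ = ∑ i ∈ T, c i * cv m f (g i) s θ := by
  unfold cv
  have q1 : ∀ i, Continuous fun x => c i * g i x := fun i => continuous_const.mul (hg i)
  have q2 : ∀ i, Continuous fun x => c i * (f x * g i x) := fun i =>
    continuous_const.mul (hf.mul (hg i))
  rw [Q_sum m T q1]
  have : (fun x => f x * ∑ i ∈ T, c i * g i x) = fun x => ∑ i ∈ T, c i * (f x * g i x) := by
    ext x; rw [Finset.mul_sum]; exact Finset.sum_congr rfl fun i _ => by ring
  rw [this, Q_sum m T q2, Finset.mul_sum,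
    ← Finset.sum_sub_distrib]
  refine Finset.sum_congr rfl fun i _ => ?_
  rw [Q_const_mul, Q_const_mul]; ring

lemma inner_eq_sum (x y : E n) : inner ℝ x y = ∑ i, x i * y i := by
  rw [PiLp.inner_apply]
  exact Finset.sum_congr rfl fun i _ => by simp [mul_comm]

lemma norm_sq_eq_sum (x : E n) : ‖x‖ ^ 2 = ∑ i, x i ^ 2 := by
  rw [EuclideanSpace.norm_sq_eq]; simp

lemma cv_inner {f : E n → ℝ} (hf : Continuous f) (v : E n) (s : ℝ) (θ : E n) :
    cv m f (fun x => inner ℝ v x) s θ = ∑ i, v i * cv m f (fun x => x i) s θ := by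
  simp only [inner_eq_sum]
  exact cv_sum_right m _ _ hf continuous_coord s θ

/-- Tilted means are of class `C^{1,2}`. -/
lemma C12_Q {g : E n → ℝ} (hg : Continuous g) : C12 Set.univ (fun s θ => Q m g s θ)
    (fun s θ => -(1 / 2) * cv m g (fun x => ‖x‖ ^ 2) s θ) (fun i s θ => cv m g (fun x => x i) s θ)
    (fun i s θ => cv m (fun x => g x * x i) (fun x => x i) s θ -
      (cv m g (fun x => x i) s θ * Q m (fun x => x i) s θ +
        Q m g s θ * cv m (fun x => x i) (fun x => x i) s θ)) where
  curve σ θ σ' θ' r _ hσ hθ := by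
    convert! hasDerivAt_Q m hg hσ hθ using 1
    rw [cv_inner m hg]
    have : ∑ i, cv m g (fun x => x i) (σ r) (θ r) * θ' i
      = ∑ i, θ' i * cv m g (fun x => x i) (σ r) (θ r) := by simp only [mul_comm]
    rw [this]; ring
  line i s _ θ := by
    have h1 : HasDerivAt (fun t : ℝ => θ + t • EuclideanSpace.single i (1 : ℝ))
        (EuclideanSpace.single i (1 : ℝ)) 0 := by
      simpa using ((hasDerivAt_id (0 : ℝ)).smul_const (EuclideanSpace.single i (1 : ℝ))).const_add θ
    have hx := continuous_coord (n := n) i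
    have key : ∀ {f : E n → ℝ}, Continuous f → HasDerivAt
        (fun t : ℝ => Q m f s (θ + t • EuclideanSpace.single i (1 : ℝ)))
        (cv m f (fun x => x i) s θ) 0 := by
      intro f hf
      have := hasDerivAt_Q m hf (hasDerivAt_const (0 : ℝ) s) h1
      simpa [EuclideanSpace.inner_single_left] using this
    have := (key (hg.mul hx)).sub ((key hg).mul (key hx))
    unfold HasLineDerivAt
    convert! this using 1
    simp only [zero_smul, add_zero]
    rfl
  cont_ut s _ := continuous_const.mul (continuous_cv m hg (by fun_prop) s)
  cont_Du s _ i := continuous_cv m hg (continuous_coord i) s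
  cont_D2 s _ i := by
    have hx := continuous_coord (n := n) i
    exact (continuous_cv m (hg.mul hx) hx s).sub (((continuous_cv m hg hx s).mul
      (continuous_Q_right m hx s)).add ((continuous_Q_right m hg s).mul (continuous_cv m hx hx s)))
  bound := by
    obtain ⟨A, hA⟩ := exists_bound_Q m hg
    obtain ⟨B, hB⟩ := exists_bound_cv m hg (g := fun x : E n => ‖x‖ ^ 2) (by fun_prop)
    choose C hC using fun i : Fin n => exists_bound_cv m hg (continuous_coord i)
    choose D hD using fun i : Fin n =>
      exists_bound_cv m (f := fun x => g x * x i) (hg.mul (continuous_coord i)) (continuous_coord i)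
    choose F hF using fun i : Fin n => exists_bound_Q m (continuous_coord i)
    choose G hG using fun i : Fin n => exists_bound_cv m (continuous_coord i) (continuous_coord i)
    refine ⟨|A| + |B| + ∑ i, (|C i| + (|D i| + (|C i| * |F i| + |A| * |G i|))), fun s _ θ => ?_⟩
    have hA' := (hA s θ).trans (le_abs_self _)
    have hB' := (hB s θ).trans (le_abs_self _)
    have h0 : 0 ≤ ∑ i, (|C i| + (|D i| + (|C i| * |F i| + |A| * |G i|))) :=
      Finset.sum_nonneg fun i _ => by positivity
    have nA := abs_nonneg A
    have nB := abs_nonneg B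
    refine ⟨by linarith, ?_, fun i => ?_⟩
    · rw [abs_mul]; norm_num; linarith
    · have h1 := Finset.single_le_sum (f := fun i =>
        (|C i| + (|D i| + (|C i| * |F i| + |A| * |G i|)))) (fun i _ => by positivity)
        (Finset.mem_univ i)
      have hC' := (hC i s θ).trans (le_abs_self _)
      have hD' := (hD i s θ).trans (le_abs_self _)
      have hF' := (hF i s θ).trans (le_abs_self _)
      have hG' := (hG i s θ).trans (le_abs_self _)
      have nC := abs_nonneg (C i)
      have e1 := mul_le_mul hC' hF' (abs_nonneg _) (abs_nonneg _)
      have e2 := mul_le_mul hA' hG' (abs_nonneg _) (abs_nonneg _)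
      have n3 : 0 ≤ |D i| + (|C i| * |F i| + |A| * |G i|) := by positivity
      refine ⟨by linarith, (abs_sub _ _).trans ?_⟩
      have := abs_add_le (cv m g (fun x => x i) s θ * Q m (fun x => x i) s θ)
        (Q m g s θ * cv m (fun x => x i) (fun x => x i) s θ)
      rw [abs_mul, abs_mul] at this
      linarith

/-- Tilted means are annihilated by the generator. -/
lemma Lop_Q {g : E n → ℝ} (hg : Continuous g) (s : ℝ) (θ : E n) : Lop m
    (fun s θ => -(1 / 2) * cv m g (fun x => ‖x‖ ^ 2) s θ) (fun i s θ => cv m g (fun x => x i) s θ)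
    (fun i s θ => cv m (fun x => g x * x i) (fun x => x i) s θ -
      (cv m g (fun x => x i) s θ * Q m (fun x => x i) s θ +
        Q m g s θ * cv m (fun x => x i) (fun x => x i) s θ)) s θ = 0 := by
  have h1 : cv m g (fun x => ‖x‖ ^ 2) s θ = ∑ i : Fin n, cv m g (fun x => x i ^ 2) s θ := by
    have := cv_sum_right m (g := fun (i : Fin n) x => x i ^ 2) Finset.univ (fun _ => 1) hg
      (fun i => (continuous_coord i).pow 2) s θ
    simpa [norm_sq_eq_sum] using this
  unfold Lop
  beta_reduce
  rw [h1, Finset.mul_sum, Finset.sum_div, ← Finset.sum_add_distrib, ← Finset.sum_add_distrib]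
  refine Finset.sum_eq_zero fun i _ => ?_
  unfold cv
  have e1 : (fun x : E n => g x * x i * x i) = fun x => g x * x i ^ 2 := by ext; ring
  have e2 : (fun x : E n => x i * x i) = fun x => x i ^ 2 := by ext; ring
  rw [e1, e2]
  ring

/-! ### The law of the localization process -/

/-- Expectation of `φ(s X + √s Z)`, where `X ∼ m` and `Z` is an independent standard Gaussian. -/
def Es (s : ℝ) (φ : E n → ℝ) : ℝ := ∫ p, φ (s • p.1 + √s • p.2) ∂(m.prod (γ n))

/-- Bounded continuous functions. -/
def BC (φ : E n → ℝ) : Prop := Continuous φ ∧ ∃ C, ∀ θ, |φ θ| ≤ C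

namespace BC

variable {φ ψ : E n → ℝ}

lemma add (h : BC φ) (h' : BC ψ) : BC fun θ => φ θ + ψ θ := by
  obtain ⟨hc, C, hC⟩ := h
  obtain ⟨hc', D, hD⟩ := h'
  exact ⟨hc.add hc', C + D, fun θ => (abs_add_le _ _).trans (add_le_add (hC θ) (hD θ))⟩

lemma mul (h : BC φ) (h' : BC ψ) : BC fun θ => φ θ * ψ θ := by
  obtain ⟨hc, C, hC⟩ := h
  obtain ⟨hc', D, hD⟩ := h'
  refine ⟨hc.mul hc', C * D, fun θ => ?_⟩
  rw [abs_mul]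
  exact mul_le_mul (hC θ) (hD θ) (abs_nonneg _) ((abs_nonneg _).trans (hC θ))

lemma const (c : ℝ) : BC fun _ : E n => c := ⟨continuous_const, |c|, fun _ => le_rfl⟩

lemma const_mul (c : ℝ) (h : BC φ) : BC fun θ => c * φ θ := (const c).mul h

lemma sub (h : BC φ) (h' : BC ψ) : BC fun θ => φ θ - ψ θ := by
  simpa [sub_eq_add_neg] using h.add (h'.const_mul (-1))

lemma pow (h : BC φ) (k : ℕ) : BC fun θ => φ θ ^ k := by
  induction k with
  | zero => simpa using const (n := n) 1
  | succ k ih => simpa [pow_succ] using ih.mul h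

lemma sum {ι : Type*} (T : Finset ι) {φ : ι → E n → ℝ} (h : ∀ i ∈ T, BC (φ i)) :
    BC fun θ => ∑ i ∈ T, φ i θ := by
  classical
  induction T using Finset.induction_on with
  | empty => simpa using const (n := n) 0
  | insert a T ha ih =>
    simp only [Finset.sum_insert ha]
    exact (h a (by simp)).add (ih fun k hk => h k (by simp [hk]))

end BC

lemma BC_Q {g : E n → ℝ} (hg : Continuous g) (s : ℝ) : BC fun θ => Q m g s θ := by
  obtain ⟨C, hC⟩ := exists_bound_Q m hg
  exact ⟨continuous_Q_right m hg s, C, hC s⟩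

lemma BC_cv {f g : E n → ℝ} (hf : Continuous f) (hg : Continuous g) (s : ℝ) :
    BC fun θ => cv m f g s θ := by
  obtain ⟨C, hC⟩ := exists_bound_cv m hf hg
  exact ⟨continuous_cv m hf hg s, C, hC s⟩

lemma C12.BC_u {I : Set ℝ} {u ut : ℝ → E n → ℝ} {Du D2 : Fin n → ℝ → E n → ℝ}
    (h : C12 I u ut Du D2) {s : ℝ} (hs : s ∈ I) : BC (u s) := by
  obtain ⟨C, hC⟩ := h.bound
  exact ⟨h.cont_u hs, C, fun θ => (hC s hs θ).1⟩

lemma C12.BC_ut {I : Set ℝ} {u ut : ℝ → E n → ℝ} {Du D2 : Fin n → ℝ → E n → ℝ}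
    (h : C12 I u ut Du D2) {s : ℝ} (hs : s ∈ I) : BC (ut s) := by
  obtain ⟨C, hC⟩ := h.bound
  exact ⟨h.cont_ut s hs, C, fun θ => (hC s hs θ).2.1⟩

lemma C12.BC_Du {I : Set ℝ} {u ut : ℝ → E n → ℝ} {Du D2 : Fin n → ℝ → E n → ℝ}
    (h : C12 I u ut Du D2) {s : ℝ} (hs : s ∈ I) (i : Fin n) : BC (Du i s) := by
  obtain ⟨C, hC⟩ := h.bound
  exact ⟨h.cont_Du s hs i, C, fun θ => ((hC s hs θ).2.2 i).1⟩

lemma C12.BC_D2 {I : Set ℝ} {u ut : ℝ → E n → ℝ} {Du D2 : Fin n → ℝ → E n → ℝ}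
    (h : C12 I u ut Du D2) {s : ℝ} (hs : s ∈ I) (i : Fin n) : BC (D2 i s) := by
  obtain ⟨C, hC⟩ := h.bound
  exact ⟨h.cont_D2 s hs i, C, fun θ => ((hC s hs θ).2.2 i).2⟩

lemma integrable_Es {φ : E n → ℝ} (h : BC φ) (s : ℝ) :
    Integrable (fun p : E n × E n => φ (s • p.1 + √s • p.2)) (m.prod (γ n)) := by
  obtain ⟨hc, C, hC⟩ := h
  exact (integrable_const C).mono' (hc.comp (by fun_prop)).aestronglyMeasurable
    (.of_forall fun p => hC _)

lemma Es_add {φ ψ : E n → ℝ} (h : BC φ) (h' : BC ψ) (s : ℝ) :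
    Es m s (fun θ => φ θ + ψ θ) = Es m s φ + Es m s ψ :=
  integral_add (integrable_Es m h s) (integrable_Es m h' s)

lemma Es_sub {φ ψ : E n → ℝ} (h : BC φ) (h' : BC ψ) (s : ℝ) :
    Es m s (fun θ => φ θ - ψ θ) = Es m s φ - Es m s ψ :=
  integral_sub (integrable_Es m h s) (integrable_Es m h' s)

lemma Es_const_mul (c : ℝ) (φ : E n → ℝ) (s : ℝ) :
    Es m s (fun θ => c * φ θ) = c * Es m s φ :=
  integral_const_mul _ _

lemma Es_const (c : ℝ) (s : ℝ) : Es m s (fun _ => c) = c := by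
  simp [Es]

lemma Es_sum {ι : Type*} (T : Finset ι) {φ : ι → E n → ℝ} (h : ∀ i ∈ T, BC (φ i)) (s : ℝ) :
    Es m s (fun θ => ∑ i ∈ T, φ i θ) = ∑ i ∈ T, Es m s (φ i) :=
  integral_finsetSum _ fun i hi => integrable_Es m (h i hi) s

lemma Es_mono {φ ψ : E n → ℝ} (h : BC φ) (h' : BC ψ) (hle : ∀ θ, φ θ ≤ ψ θ) (s : ℝ) :
    Es m s φ ≤ Es m s ψ :=
  integral_mono (integrable_Es m h s) (integrable_Es m h' s) fun _ => hle _

lemma Es_nonneg {φ : E n → ℝ} (h : ∀ θ, 0 ≤ φ θ) (s : ℝ) : 0 ≤ Es m s φ :=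
  integral_nonneg fun _ => h _

lemma abs_Es_le {φ : E n → ℝ} (h : BC φ) {C : ℝ} (hC : ∀ θ, |φ θ| ≤ C) (s : ℝ) :
    |Es m s φ| ≤ C := by
  rw [abs_le]
  have h1 := Es_mono m (BC.const (-C)) h (fun θ => (abs_le.1 (hC θ)).1) s
  have h2 := Es_mono m h (BC.const C) (fun θ => (abs_le.1 (hC θ)).2) s
  rw [Es_const] at h1 h2
  exact ⟨h1, h2⟩

lemma integrable_weighted {g φ : E n → ℝ} (hg : Continuous g) (h : BC φ) (s : ℝ) :
    Integrable (fun p : E n × E n => g p.1 * φ (s • p.1 + √s • p.2)) (m.prod (γ n)) := by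
  obtain ⟨hc, C, hC⟩ := h
  have h1 : Integrable (fun p : E n × E n => C * |g p.1|) (m.prod (γ n)) :=
    ((cpt_integrable m hg).abs.const_mul C).comp_fst (γ n)
  refine h1.mono' ?_ (.of_forall fun p => ?_)
  · exact ((hg.comp continuous_fst).mul (hc.comp (by fun_prop))).aestronglyMeasurable
  · rw [norm_mul, mul_comm]
    exact mul_le_mul_of_nonneg_right (hC _) (abs_nonneg _)

/-- Cameron–Martin and Fubini. -/
lemma weighted_eq {g φ : E n → ℝ} (hg : Continuous g) (h : BC φ) {s : ℝ} (hs : 0 ≤ s) :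
    ∫ p, g p.1 * φ (s • p.1 + √s • p.2) ∂(m.prod (γ n)) =
      ∫ z, φ (√s • z) * Zf m g s (√s • z) ∂(γ n) := by
  rw [integral_prod _ (integrable_weighted m hg h s)]
  have h1 : ∀ x : E n, ∫ z, g x * φ (s • x + √s • z) ∂(γ n) =
      ∫ z, g x * (φ (√s • z) * Real.exp (ex s (√s • z) x)) ∂(γ n) := by
    intro x
    rw [integral_const_mul, integral_const_mul]
    congr 1
    have := cameron_martin (fun z => φ (√s • z)) (√s • x)
    convert! this using 3 with z z
    · rw [smul_add, smul_smul, Real.mul_self_sqrt hs, add_comm]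
    · congr 2
      unfold ex
      rw [inner_smul_left, inner_smul_left, norm_smul, mul_pow, norm_eq_abs, sq_abs,
        Real.sq_sqrt hs, real_inner_comm]
  simp only [h1]
  rw [integral_integral_swap]
  · congr 1; ext z
    unfold Zf
    rw [← integral_const_mul]
    congr 1; ext x; ring
  · obtain ⟨hc, C, hC⟩ := h
    obtain ⟨A, hA0, hA⟩ := exists_bound m hg
    have hC0 : 0 ≤ C := (abs_nonneg _).trans (hC 0)
    have i1 : Integrable (fun z : E n => A * (C * Real.exp (√s * rad m * ‖z‖))) (γ n) := by
      refine integrable_γ_of_bound (by fun_prop) (A * C) (√s * rad m) fun z => ?_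
      rw [abs_of_nonneg (by positivity), mul_assoc A]
    have i2 := i1.comp_snd m
    refine i2.mono' ?_ ?_
    · have : Continuous fun p : E n × E n => g p.1 * (φ (√s • p.2) * Real.exp (ex s (√s • p.2) p.1)) := by
        unfold ex; fun_prop
      exact this.aestronglyMeasurable
    · have : ∀ᵐ p : E n × E n ∂(m.prod (γ n)), ‖p.1‖ ≤ rad m :=
        Measure.quasiMeasurePreserving_fst.ae (ae_norm_le_rad m)
      filter_upwards [this] with p hp
      simp only [Function.uncurry]
      rw [norm_mul, norm_mul, norm_of_nonneg (Real.exp_pos _).le]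
      refine mul_le_mul (hA _ hp) (mul_le_mul (hC _) ?_ (by positivity) hC0) (by positivity)
        hA0.le
      rw [Real.exp_le_exp]
      unfold ex
      have := real_inner_le_norm (√s • p.2) p.1
      rw [norm_smul, norm_of_nonneg (Real.sqrt_nonneg s)] at this
      have h2 : √s * ‖p.2‖ * ‖p.1‖ ≤ √s * ‖p.2‖ * rad m := by gcongr
      have h3 : 0 ≤ s * ‖p.1‖ ^ 2 / 2 := by positivity
      linarith

/-- Conditional expectation: given `θ = s X + √s Z`, the law of `X` is the tilted measure. -/
lemma Es_Q {g φ : E n → ℝ} (hg : Continuous g) (h : BC φ) {s : ℝ} (hs : 0 ≤ s) :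
    ∫ p, g p.1 * φ (s • p.1 + √s • p.2) ∂(m.prod (γ n)) =
      Es m s (fun θ => Q m g s θ * φ θ) := by
  have h1 := weighted_eq m (g := fun _ => 1) continuous_const ((BC_Q m hg s).mul h) hs
  simp only [one_mul] at h1
  unfold Es
  rw [h1, weighted_eq m hg h hs]
  congr 1; ext z
  have := Z_pos m s (√s • z)
  unfold Q
  field_simp

lemma Es_Q_eq {g : E n → ℝ} (hg : Continuous g) {s : ℝ} (hs : 0 ≤ s) :
    Es m s (fun θ => Q m g s θ) = ∫ x, g x ∂m := by
  have := Es_Q m hg (BC.const 1) hs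
  simp only [mul_one] at this
  rw [← this]
  rw [integral_fun_fst (μ := m) (ν := γ n) g]
  simp

lemma BC_Lop {I : Set ℝ} {u ut : ℝ → E n → ℝ} {Du D2 : Fin n → ℝ → E n → ℝ}
    (h : C12 I u ut Du D2) {s : ℝ} (hs : s ∈ I) : BC (Lop m ut Du D2 s) := by
  unfold Lop
  have := ((h.BC_ut hs).add ((BC.sum Finset.univ fun i _ => h.BC_D2 hs i).const_mul (1 / 2))).add
    (BC.sum Finset.univ fun i _ => (BC_Q m (continuous_coord i) s).mul (h.BC_Du hs i))
  convert! this using 3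
  ring

/-- The Kolmogorov forward equation. -/
lemma flow {I : Set ℝ} {u ut : ℝ → E n → ℝ} {Du D2 : Fin n → ℝ → E n → ℝ}
    (h : C12 I u ut Du D2) {s : ℝ} (hs : 0 < s) (hI : I ∈ 𝓝 s) :
    HasDerivAt (fun r => Es m r (u r)) (Es m s (Lop m ut Du D2 s)) s := by
  obtain ⟨ε, hε0, hε⟩ := Metric.mem_nhds_iff.1 hI
  set δ := min ε (s / 2) with hδ
  have hδ0 : 0 < δ := lt_min hε0 (by linarith)
  have hball : ∀ r ∈ Metric.ball s δ, r ∈ I ∧ s / 2 < r := by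
    intro r hr
    refine ⟨hε (Metric.ball_subset_ball (min_le_left _ _) hr), ?_⟩
    have := Metric.mem_ball.1 hr
    rw [Real.dist_eq] at this
    have := (abs_lt.1 (this.trans_le (min_le_right _ _))).1
    linarith
  have hsI : s ∈ I := mem_of_mem_nhds hI
  obtain ⟨C, hC⟩ := h.bound
  have hC0 : 0 ≤ C := (abs_nonneg _).trans (hC s hsI 0).1
  set F' : ℝ → E n × E n → ℝ := fun r p => ut r (r • p.1 + √r • p.2) * 1 +
    ∑ i, Du i r (r • p.1 + √r • p.2) * (p.1 + (1 / (2 * √r)) • p.2) i with hF'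
  have hcurve : ∀ (p : E n × E n) (r : ℝ), r ∈ Metric.ball s δ →
      HasDerivAt (fun r => u r (r • p.1 + √r • p.2)) (F' r p) r := by
    intro p r hr
    have hr0 : 0 < r := by linarith [(hball r hr).2]
    refine h.curve (fun r => r) (fun r => r • p.1 + √r • p.2) 1 _ r (hball r hr).1
      (hasDerivAt_id r) ?_
    have h1 := (hasDerivAt_id r).smul_const p.1
    have h2 := (Real.hasDerivAt_sqrt hr0.ne').smul_const p.2
    convert! h1.add h2 using 1
    simp
  have key := hasDerivAt_integral_of_dominated_loc_of_deriv_le (μ := m.prod (γ n))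
    (F := fun r p => u r (r • p.1 + √r • p.2)) (F' := F') (x₀ := s) (s := Metric.ball s δ)
    (bound := fun p => C + ∑ _i : Fin n, C * (‖p.1‖ + (1 / √s) * ‖p.2‖))
    (Metric.ball_mem_nhds s hδ0)
    (by
      filter_upwards [hI] with r hr
      exact (integrable_Es m (h.BC_u hr) r).aestronglyMeasurable)
    (integrable_Es m (h.BC_u hsI) s)
    (by
      have c1 := h.cont_ut s hsI
      have c2 := h.cont_Du s hsI
      have : Continuous (F' s) := by
        simp only [hF']
        refine Continuous.add ?_ ?_
        · exact (c1.comp (by fun_prop)).mul continuous_const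
        · refine continuous_finsetSum _ fun i _ => ?_
          exact ((c2 i).comp (by fun_prop)).mul (by fun_prop)
      exact this.aestronglyMeasurable)
    (by
      refine .of_forall fun p r hr => ?_
      obtain ⟨c1, c2, c3⟩ := hC r (hball r hr).1 (r • p.1 + √r • p.2)
      simp only [hF', mul_one]
      refine (norm_add_le _ _).trans (add_le_add c2 ((norm_sum_le _ _).trans ?_))
      refine Finset.sum_le_sum fun i _ => ?_
      rw [norm_mul]
      refine mul_le_mul (c3 i).1 ((PiLp.norm_apply_le _ _).trans ?_) (norm_nonneg _) hC0
      refine (norm_add_le _ _).trans (add_le_add le_rfl ?_)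
      rw [norm_smul, norm_of_nonneg (by positivity)]
      refine mul_le_mul_of_nonneg_right ?_ (norm_nonneg _)
      have h1 : √(s / 4) ≤ √r := Real.sqrt_le_sqrt (by linarith [(hball r hr).2])
      have h2 : √(s / 4) = √s / 2 := by
        rw [Real.sqrt_div hs.le]; norm_num
      have h3 := Real.sqrt_pos.2 hs
      exact one_div_le_one_div_of_le h3 (by linarith))
    (by
      refine (integrable_const C).add (integrable_finsetSum _ fun i _ => ?_)
      have i1 : Integrable (fun p : E n × E n => ‖p.1‖) (m.prod (γ n)) :=
        (cpt_integrable m continuous_norm).comp_fst (γ n)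
      have i2 : Integrable (fun p : E n × E n => ‖p.2‖) (m.prod (γ n)) :=
        integrable_norm_γ.comp_snd m
      exact (i1.add (i2.const_mul _)).const_mul C)
    (.of_forall fun p r hr => hcurve p r hr)
  have hd := key.2
  unfold Es at *
  convert! hd using 1
  -- the two parts of the drift: duality for `X`, integration by parts for `Z`
  have hs' := Real.sqrt_pos.2 hs
  have iD : ∀ i, Integrable (fun p : E n × E n => p.1 i * Du i s (s • p.1 + √s • p.2))
      (m.prod (γ n)) := fun i => integrable_weighted m (continuous_coord i) (h.BC_Du hsI i) s
  have iZ : ∀ i, Integrable (fun p : E n × E n => p.2 i * Du i s (s • p.1 + √s • p.2))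
      (m.prod (γ n)) := fun i => by
    have i2 : Integrable (fun p : E n × E n => ‖p.2‖ * C) (m.prod (γ n)) :=
        (integrable_norm_γ.comp_snd m).mul_const C
    refine i2.mono' ?_ (.of_forall fun p => ?_)
    · have := h.cont_Du s hsI i
      exact (Continuous.mul (by fun_prop) (this.comp (by fun_prop))).aestronglyMeasurable
    · rw [norm_mul]
      exact mul_le_mul (PiLp.norm_apply_le _ _) ((hC s hsI _).2.2 i).1 (norm_nonneg _)
        (norm_nonneg _)
  have eZ : ∀ i, ∫ p, p.2 i * Du i s (s • p.1 + √s • p.2) ∂(m.prod (γ n)) =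
      √s * Es m s (D2 i s) := by
    intro i
    rw [integral_prod _ (iZ i)]
    unfold Es
    rw [integral_prod _ (integrable_Es m (h.BC_D2 hsI i) s), ← integral_const_mul]
    congr 1; ext x
    rw [← integral_const_mul]
    have := gauss_ibp (n := n) (F := fun z => Du i s (s • x + √s • z))
      (F' := fun z => √s * D2 i s (s • x + √s • z)) (EuclideanSpace.single i 1)
      ((h.cont_Du s hsI i).comp (by fun_prop))
      (continuous_const.mul ((h.cont_D2 s hsI i).comp (by fun_prop))) ((1 + √s) * C) 0
      (fun z => by
        have := ((hC s hsI (s • x + √s • z)).2.2 i).1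
        simp only [zero_mul, Real.exp_zero, mul_one]
        nlinarith)
      (fun z => by
        have := ((hC s hsI (s • x + √s • z)).2.2 i).2
        simp only [zero_mul, Real.exp_zero, mul_one]
        rw [abs_mul, abs_of_pos hs']
        nlinarith)
      (fun z => by
        have h1 := h.line i s hsI (s • x + √s • z)
        unfold HasLineDerivAt at h1 ⊢
        have h2 : HasDerivAt (fun t : ℝ => √s * t) √s 0 := by
          simpa using (hasDerivAt_id (0 : ℝ)).const_mul √s
        have h3 := HasDerivAt.comp (0 : ℝ) (by simpa using h1) h2
        convert! h3 using 1
        · ext t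
          simp only [Function.comp_apply]
          congr 1
          rw [smul_add, smul_smul, add_assoc]
        · ring)
    simpa [EuclideanSpace.inner_single_left] using this
  have e1 : ∀ p : E n × E n, F' s p = ut s (s • p.1 + √s • p.2) +
      ∑ i, (p.1 i * Du i s (s • p.1 + √s • p.2) +
        (1 / (2 * √s)) * (p.2 i * Du i s (s • p.1 + √s • p.2))) := by
    intro p
    simp only [hF', mul_one]
    congr 1
    refine Finset.sum_congr rfl fun i _ => ?_
    simp only [PiLp.add_apply, PiLp.smul_apply, smul_eq_mul]; ring
  simp only [e1]
  have iS : ∀ i ∈ Finset.univ, Integrable (fun p : E n × E n =>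
      p.1 i * Du i s (s • p.1 + √s • p.2) +
        (1 / (2 * √s)) * (p.2 i * Du i s (s • p.1 + √s • p.2))) (m.prod (γ n)) :=
    fun i _ => (iD i).add ((iZ i).const_mul _)
  rw [integral_add (integrable_Es m (h.BC_ut hsI) s) (integrable_finsetSum _ iS),
    integral_finsetSum _ iS]
  have e2 : ∀ i, ∫ p, (p.1 i * Du i s (s • p.1 + √s • p.2) +
        (1 / (2 * √s)) * (p.2 i * Du i s (s • p.1 + √s • p.2))) ∂(m.prod (γ n)) =
      Es m s (fun θ => Q m (fun x => x i) s θ * Du i s θ) + Es m s (D2 i s) / 2 := by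
    intro i
    rw [integral_add (iD i) ((iZ i).const_mul _), integral_const_mul, eZ,
      Es_Q m (continuous_coord i) (h.BC_Du hsI i) hs.le]
    congr 1
    field_simp
  rw [Finset.sum_congr rfl fun i _ => e2 i, Finset.sum_add_distrib, ← Finset.sum_div]
  change Es m s (Lop m ut Du D2 s) = Es m s (ut s) + _
  have e3 : Lop m ut Du D2 s = fun θ => (ut s θ + (1 / 2) * (∑ i, D2 i s θ)) +
      ∑ i, Q m (fun x => x i) s θ * Du i s θ := by
    ext θ; unfold Lop; ring
  have b1 := (BC.sum Finset.univ fun i _ => h.BC_D2 hsI i).const_mul (1 / 2)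
  have b2 := BC.sum Finset.univ fun i _ => (BC_Q m (continuous_coord i) s).mul (h.BC_Du hsI i)
  rw [e3, Es_add m ((h.BC_ut hsI).add b1) b2, Es_add m (h.BC_ut hsI) b1, Es_const_mul,
    Es_sum m _ fun i _ => h.BC_D2 hsI i,
    Es_sum m _ fun i _ => (BC_Q m (continuous_coord i) s).mul (h.BC_Du hsI i)]
  ring

end IsoGauge

namespace IsoGauge
open scoped Topology
set_option linter.unusedSectionVars false
variable {n : ℕ}

/-! ### Uniform measures on convex bodies: the covariance bound -/

lemma body_volume {K : Set (E n)} (hK : IsConvexBody K) : volume K ≠ 0 ∧ volume K ≠ ∞ :=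
  ⟨(Measure.measure_pos_of_nonempty_interior _ hK.2.2).ne', hK.1.measure_lt_top.ne⟩

lemma cptMeas_unifOn {K : Set (E n)} (hK : IsConvexBody K) : CptMeas (unifOn K) where
  prob := by
    obtain ⟨h0, h1⟩ := body_volume hK
    refine ⟨?_⟩
    simp [unifOn, ENNReal.inv_mul_cancel h0 h1]
  supp := by
    obtain ⟨R, hR⟩ := hK.1.isBounded.exists_pos_norm_le
    refine ⟨R, hR.1, ?_⟩
    have : ∀ᵐ x ∂(volume.restrict K), ‖x‖ ≤ R :=
      (ae_restrict_mem hK.1.measurableSet).mono fun x hx => hR.2 x hx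
    exact Measure.ae_smul_measure this _

lemma integral_unifOn (K : Set (E n)) (f : E n → ℝ) :
    ∫ x, f x ∂(unifOn K) = (volume K).toReal⁻¹ * ∫ x in K, f x := by
  unfold unifOn
  rw [integral_smul_measure, ENNReal.toReal_inv, smul_eq_mul]

/-- Prékopa–Leindler for a Gaussian-weighted convex set. -/
lemma J_mid {K : Set (E n)} (hK : IsConvexBody K) {τ : ℝ} (hτ : 0 < τ) (p q : E n) :
    (∫ x in K, Real.exp (-τ * ‖x - p‖ ^ 2 / 2)) * (∫ x in K, Real.exp (-τ * ‖x - q‖ ^ 2 / 2)) ≤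
      (∫ x in K, Real.exp (-τ * ‖x - (1 / 2 : ℝ) • (p + q)‖ ^ 2 / 2)) ^ 2 := by
  have hKm := hK.1.measurableSet
  set F : E n → E n → ℝ≥0∞ := fun p => K.indicator fun x =>
    ENNReal.ofReal (Real.exp (-τ * ‖x - p‖ ^ 2 / 2)) with hF
  have hc : ∀ p : E n, Continuous fun x : E n => Real.exp (-τ * ‖x - p‖ ^ 2 / 2) := fun p => by
    fun_prop
  have hm : ∀ p, Measurable (F p) := fun p =>
    (ENNReal.measurable_ofReal.comp (hc p).measurable).indicator hKm
  have key := prekopa_leindler (hm p) (hm q) (hm ((1 / 2 : ℝ) • (p + q))) (by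
    intro x y
    by_cases hx : x ∈ K
    swap
    · simp [hF, hx]
    by_cases hy : y ∈ K
    swap
    · simp [hF, hy]
    have hxy : (1 / 2 : ℝ) • (x + y) ∈ K := by
      rw [smul_add]
      exact hK.2.1 hx hy (by norm_num) (by norm_num) (by norm_num)
    simp only [hF, Set.indicator_of_mem hx, Set.indicator_of_mem hy, Set.indicator_of_mem hxy]
    rw [← ENNReal.ofReal_mul (Real.exp_pos _).le, ← ENNReal.ofReal_pow (Real.exp_pos _).le]
    refine ENNReal.ofReal_le_ofReal ?_
    rw [← Real.exp_add, ← Real.exp_nat_mul]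
    refine Real.exp_le_exp.2 ?_
    have e : (1 / 2 : ℝ) • (x + y) - (1 / 2 : ℝ) • (p + q) = (1 / 2 : ℝ) • ((x - p) + (y - q)) := by
      rw [← smul_sub]; congr 1; abel
    rw [e, norm_smul, mul_pow]
    have pl := parallelogram_law_with_norm ℝ (x - p) (y - q)
    have := sq_nonneg ‖x - p - (y - q)‖
    norm_num
    nlinarith)
  have hintg : ∀ p, ∫⁻ x, F p x = ENNReal.ofReal (∫ x in K, Real.exp (-τ * ‖x - p‖ ^ 2 / 2)) := by
    intro p
    rw [hF, lintegral_indicator hKm, ofReal_integral_eq_lintegral_ofReal]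
    · exact (hc p).continuousOn.integrableOn_compact hK.1
    · exact .of_forall fun x => (Real.exp_pos _).le
  have h0 : ∀ p : E n, 0 ≤ ∫ x in K, Real.exp (-τ * ‖x - p‖ ^ 2 / 2) := fun p =>
    integral_nonneg fun x => (Real.exp_pos _).le
  rw [hintg, hintg, hintg, ← ENNReal.ofReal_mul (h0 _), ← ENNReal.ofReal_pow (h0 _)] at key
  exact (ENNReal.ofReal_le_ofReal_iff (by positivity)).1 key

lemma J_eq {K : Set (E n)} (hK : IsConvexBody K) {τ : ℝ} (hτ : 0 < τ) (θ : E n) :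
    Zf (unifOn K) (fun _ => 1) τ θ = (volume K).toReal⁻¹ * (Real.exp (‖θ‖ ^ 2 / (2 * τ)) *
      ∫ x in K, Real.exp (-τ * ‖x - (1 / τ) • θ‖ ^ 2 / 2)) := by
  unfold Zf
  rw [integral_unifOn, ← integral_const_mul (Real.exp _)]
  congr 2; ext x
  rw [one_mul, ← Real.exp_add]
  congr 1
  unfold ex
  rw [norm_sub_sq_real, inner_smul_right, norm_smul, real_inner_comm, mul_pow, norm_eq_abs, sq_abs]
  field_simp
  ring

/-- Midpoint form of the statement that `log Z - |θ|²/(2τ)` is concave in `θ`. -/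
lemma Z_mid {K : Set (E n)} (hK : IsConvexBody K) {τ : ℝ} (hτ : 0 < τ) (θ v : E n) :
    Zf (unifOn K) (fun _ => 1) τ (θ + v) * Zf (unifOn K) (fun _ => 1) τ (θ - v) ≤
      Real.exp (‖v‖ ^ 2 / τ) * Zf (unifOn K) (fun _ => 1) τ θ ^ 2 := by
  have h := J_mid hK hτ ((1 / τ) • (θ + v)) ((1 / τ) • (θ - v))
  have e : (1 / 2 : ℝ) • ((1 / τ) • (θ + v) + (1 / τ) • (θ - v)) = (1 / τ) • θ := by
    rw [← smul_add, smul_comm, add_add_sub_cancel, ← two_smul ℝ θ, smul_smul (1 / 2 : ℝ)]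
    norm_num
  rw [e] at h
  rw [J_eq hK hτ, J_eq hK hτ, J_eq hK hτ]
  set A := ∫ x in K, Real.exp (-τ * ‖x - (1 / τ) • (θ + v)‖ ^ 2 / 2)
  set B := ∫ x in K, Real.exp (-τ * ‖x - (1 / τ) • (θ - v)‖ ^ 2 / 2)
  set D := ∫ x in K, Real.exp (-τ * ‖x - (1 / τ) • θ‖ ^ 2 / 2)
  set c := (volume K).toReal⁻¹
  have e2 : Real.exp (‖θ + v‖ ^ 2 / (2 * τ)) * Real.exp (‖θ - v‖ ^ 2 / (2 * τ)) =
      Real.exp (‖v‖ ^ 2 / τ) * Real.exp (‖θ‖ ^ 2 / (2 * τ)) ^ 2 := by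
    rw [← Real.exp_add, ← Real.exp_nat_mul, ← Real.exp_add]
    congr 1
    have pl := parallelogram_law_with_norm ℝ θ v
    field_simp
    push_cast
    nlinarith
  calc _ = c ^ 2 * (Real.exp (‖θ + v‖ ^ 2 / (2 * τ)) * Real.exp (‖θ - v‖ ^ 2 / (2 * τ))) * (A * B) := by
        ring
    _ ≤ c ^ 2 * (Real.exp (‖θ + v‖ ^ 2 / (2 * τ)) * Real.exp (‖θ - v‖ ^ 2 / (2 * τ))) * D ^ 2 := by
        gcongr
    _ = _ := by rw [e2]; ring

variable (m : Measure (E n)) [CptMeas m]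

lemma hasDerivAt_line (θ v : E n) (r : ℝ) : HasDerivAt (fun q : ℝ => θ + q • v) v r := by
  simpa using ((hasDerivAt_id r).smul_const v).const_add θ

lemma continuous_inner_left (v : E n) : Continuous fun x : E n => inner ℝ v x := by fun_prop

lemma hasDerivAt_logZ (s : ℝ) (θ v : E n) (r : ℝ) :
    HasDerivAt (fun q : ℝ => Real.log (Zf m (fun _ => 1) s (θ + q • v)))
      (Q m (fun x => inner ℝ v x) s (θ + r • v)) r := by
  have := (hasDerivAt_Zf m (continuous_const (y := (1 : ℝ))) (hasDerivAt_const r s)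
    (hasDerivAt_line θ v r)).log (Z_pos m s (θ + r • v)).ne'
  simpa [Q] using this

lemma hasDerivAt_Q_line {g : E n → ℝ} (hg : Continuous g) (s : ℝ) (θ v : E n) (r : ℝ) :
    HasDerivAt (fun q : ℝ => Q m g s (θ + q • v))
      (cv m g (fun x => inner ℝ v x) s (θ + r • v)) r := by
  have := hasDerivAt_Q m hg (hasDerivAt_const r s) (hasDerivAt_line θ v r)
  simpa using this

/-- Strong log-concavity, in the weak form of a covariance bound for all tilts. -/
def SLC (m : Measure (E n)) (t : ℝ) : Prop := ∀ r, 0 < r → ∀ θ v : E n,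
  cv m (fun x => inner ℝ v x) (fun x => inner ℝ v x) r θ ≤ ‖v‖ ^ 2 / (t + r)

lemma cv_tilt (f g : E n → ℝ) (s t : ℝ) (θ η : E n) :
    cv (tilt m t η) f g s θ = cv m f g (t + s) (η + θ) := by
  unfold cv; rw [Q_tilt, Q_tilt, Q_tilt]

/-- The uniform measure on a convex body has covariance at most `1/r` after every tilt with parameter `r`:
this is the second-order form of `Z_mid`. -/
lemma SLC_body {K : Set (E n)} (hK : IsConvexBody K) : SLC (unifOn K) 0 := by
  intro τ hτ θ v
  haveI := cptMeas_unifOn hK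
  set m := unifOn K
  rw [zero_add]
  set f : ℝ → ℝ := fun r => Real.log (Zf m (fun _ => 1) τ (θ + r • v)) +
    Real.log (Zf m (fun _ => 1) τ (θ + r • (-v))) - r ^ 2 * (‖v‖ ^ 2 / τ) with hf
  have hd : ∀ r, HasDerivAt f (Q m (fun x => inner ℝ v x) τ (θ + r • v) +
      Q m (fun x => inner ℝ (-v) x) τ (θ + r • (-v)) - 2 * r * (‖v‖ ^ 2 / τ)) r := by
    intro r
    have := ((hasDerivAt_logZ m τ θ v r).add (hasDerivAt_logZ m τ θ (-v) r)).sub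
      (((hasDerivAt_id r).pow 2).mul_const (‖v‖ ^ 2 / τ))
    convert! this using 1
    simp
  have hdd : HasDerivAt (deriv f) (2 * cv m (fun x => inner ℝ v x) (fun x => inner ℝ v x) τ θ -
      2 * (‖v‖ ^ 2 / τ)) 0 := by
    have e : deriv f = fun r => Q m (fun x => inner ℝ v x) τ (θ + r • v) +
      Q m (fun x => inner ℝ (-v) x) τ (θ + r • (-v)) - 2 * r * (‖v‖ ^ 2 / τ) := by
      ext r; exact (hd r).deriv
    rw [e]
    have h1 := hasDerivAt_Q_line m (continuous_inner_left v) τ θ v 0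
    have h2 := hasDerivAt_Q_line m (continuous_inner_left (-v)) τ θ (-v) 0
    have h3 := (((hasDerivAt_id (0 : ℝ)).const_mul 2).mul_const (‖v‖ ^ 2 / τ))
    have := (h1.add h2).sub h3
    convert! this using 1
    simp only [zero_smul, add_zero, inner_neg_left]
    have e4 : cv m (fun x => -inner ℝ v x) (fun x => -inner ℝ v x) τ θ =
      cv m (fun x => inner ℝ v x) (fun x => inner ℝ v x) τ θ := by
      have := Q_const_mul m (-1) (fun x => inner ℝ v x) τ θ
      simp only [neg_mul, one_mul] at this
      unfold cv
      simp only [this, neg_mul_neg]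
    rw [e4]; ring
  have hmax : ∀ r, f r ≤ f 0 := by
    intro r
    have := Z_mid hK hτ θ (r • v)
    have h1 := Real.log_le_log (mul_pos (Z_pos m _ _) (Z_pos m _ _)) this
    rw [Real.log_mul (Z_pos m _ _).ne' (Z_pos m _ _).ne', Real.log_mul (Real.exp_pos _).ne'
      (pow_pos (Z_pos m _ _) 2).ne', Real.log_exp, Real.log_pow, norm_smul, mul_pow, norm_eq_abs,
      sq_abs, mul_div_assoc, sub_eq_add_neg, ← smul_neg] at h1
    simp only [hf]
    simp only [zero_smul, add_zero]
    push_cast at h1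
    linarith
  by_contra hcon
  push Not at hcon
  have hpos : deriv (deriv f) 0 > 0 := by rw [hdd.deriv]; linarith
  have h0 : deriv f 0 = 0 := by
    rw [(hd 0).deriv]
    have := Q_const_mul m (-1) (fun x => inner ℝ v x) τ θ
    simp only [neg_mul, one_mul] at this
    simp [this]
  have hmin := isLocalMin_of_deriv_deriv_pos hpos h0 (hd 0).continuousAt
  have hev : f =ᶠ[𝓝 0] fun _ => f 0 := hmin.mono fun r hr => le_antisymm (hmax r) hr
  have : deriv f =ᶠ[𝓝 0] fun _ => 0 := by
    have := hev.deriv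
    simpa using this
  have := this.deriv_eq
  simp only [deriv_const] at this
  linarith

lemma SLC_tilt {t : ℝ} (h : SLC m t) {r : ℝ} (hr : 0 ≤ r) (η : E n) :
    SLC (tilt m r η) (t + r) := by
  intro s hs θ v
  rw [cv_tilt, add_assoc]
  exact h (r + s) (by linarith) _ _

end IsoGauge

namespace IsoGauge
open scoped Topology
set_option linter.unusedSectionVars false
variable {n : ℕ}

variable (m : Measure (E n)) [CptMeas m]

/-! ### Moments of tilted measures -/

lemma Q_shift {f g : E n → ℝ} (hf : Continuous f) (hg : Continuous g) (a b : ℝ) (s : ℝ) (θ : E n) :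
    Q m (fun x => (f x - a) * (g x - b)) s θ =
      cv m f g s θ + (Q m f s θ - a) * (Q m g s θ - b) := by
  have e : (fun x => (f x - a) * (g x - b)) = fun x => (f x * g x + (-b) * f x) +
      ((-a) * g x + a * b) := by ext x; ring
  have c1 : Continuous fun x => (-b) * f x := continuous_const.mul hf
  have c2 : Continuous fun x => (-a) * g x := continuous_const.mul hg
  have c3 : Continuous fun x => f x * g x := hf.mul hg
  have c4 : Continuous fun x => f x * g x + (-b) * f x := c3.add c1
  have c5 : Continuous fun x => (-a) * g x + a * b := c2.add continuous_const
  rw [e, Q_add m c4 c5, Q_add m c3 c1,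
    Q_add m c2 continuous_const, Q_const_mul, Q_const_mul, Q_const]
  unfold cv
  ring

lemma cv_eq {f g : E n → ℝ} (hf : Continuous f) (hg : Continuous g) (s : ℝ) (θ : E n) :
    cv m f g s θ = Q m (fun x => (f x - Q m f s θ) * (g x - Q m g s θ)) s θ := by
  rw [Q_shift m hf hg]; ring

lemma cv_self_nonneg {f : E n → ℝ} (hf : Continuous f) (s : ℝ) (θ : E n) : 0 ≤ cv m f f s θ := by
  rw [cv_eq m hf hf]
  exact Q_nonneg m (fun x => mul_self_nonneg _) s θ

lemma cv_self_le {f : E n → ℝ} (hf : Continuous f) (a : ℝ) (s : ℝ) (θ : E n) :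
    cv m f f s θ ≤ Q m (fun x => (f x - a) ^ 2) s θ := by
  have := Q_shift m hf hf a a s θ
  simp only [← pow_two] at this
  rw [this]
  nlinarith [sq_nonneg (Q m f s θ - a)]

lemma cv_cs {f g : E n → ℝ} (hf : Continuous f) (hg : Continuous g) (s : ℝ) (θ : E n) :
    cv m f g s θ ^ 2 ≤ cv m f f s θ * cv m g g s θ := by
  rw [cv_eq m hf hg, cv_eq m hf hf, cv_eq m hg hg]
  have := Q_cs m (f := fun x => f x - Q m f s θ) (g := fun x => g x - Q m g s θ)
    (hf.sub continuous_const) (hg.sub continuous_const) s θ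
  simpa only [pow_two] using this

lemma cv_add_left {f f' g : E n → ℝ} (hf : Continuous f) (hf' : Continuous f') (hg : Continuous g)
    (s : ℝ) (θ : E n) : cv m (fun x => f x + f' x) g s θ = cv m f g s θ + cv m f' g s θ := by
  unfold cv
  simp only [add_mul]
  rw [Q_add m hf hf', Q_add m (f := fun x => f x * g x) (g := fun x => f' x * g x) (hf.mul hg) (hf'.mul hg)]
  ring

lemma cv_const_left (c : ℝ) (g : E n → ℝ) (s : ℝ) (θ : E n) : cv m (fun _ => c) g s θ = 0 := by
  unfold cv; rw [Q_const_mul, Q_const]; ring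

/-- The barycentre of the tilted measure. -/
def av (s : ℝ) (θ : E n) : E n := WithLp.toLp 2 fun i => Q m (fun x => x i) s θ

lemma Q_inner (v : E n) (s : ℝ) (θ : E n) :
    Q m (fun x => inner ℝ v x) s θ = inner ℝ v (av m s θ) := by
  simp only [inner_eq_sum]
  have q : ∀ i, Continuous fun x : E n => v i * x i := fun i => by fun_prop
  rw [Q_sum m _ q]
  refine Finset.sum_congr rfl fun i _ => ?_
  exact Q_const_mul m _ _ _ _

/-- The covariance of `g` with the identity, `∇Q g`. -/
def wv (g : E n → ℝ) (s : ℝ) (θ : E n) : E n := WithLp.toLp 2 fun i => cv m g (fun x => x i) s θ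

lemma cv_inner_wv {g : E n → ℝ} (hg : Continuous g) (v : E n) (s : ℝ) (θ : E n) :
    cv m g (fun x => inner ℝ v x) s θ = inner ℝ v (wv m g s θ) := by
  rw [cv_inner m hg, inner_eq_sum]; rfl

section bounds

variable {s τ : ℝ} (hτ : 0 < τ)
  (H : ∀ θ v : E n, cv m (fun x => inner ℝ v x) (fun x => inner ℝ v x) s θ ≤ ‖v‖ ^ 2 / τ)
include hτ H

/-- Integrated form of the covariance bound: a quadratic upper bound for the log-partition function. -/
lemma logZ_le (θ v : E n) : Real.log (Zf m (fun _ => 1) s (θ + v)) ≤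
    Real.log (Zf m (fun _ => 1) s θ) + inner ℝ v (av m s θ) + ‖v‖ ^ 2 / (2 * τ) := by
  -- the second derivative of `log Z` along `v` is a variance, hence at most `‖v‖² / τ`
  set b := inner ℝ v (av m s θ) with hb
  have h1 : ∀ q : ℝ, 0 ≤ q → Q m (fun x => inner ℝ v x) s (θ + q • v) ≤ b + q * (‖v‖ ^ 2 / τ) := by
    intro q hq
    have := image_sub_le_mul_sub_of_deriv_le
      (f := fun q : ℝ => Q m (fun x => inner ℝ v x) s (θ + q • v)) (C := ‖v‖ ^ 2 / τ)
      (fun q => (hasDerivAt_Q_line m (continuous_inner_left v) s θ v q).differentiableAt)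
      (fun q => by
        rw [(hasDerivAt_Q_line m (continuous_inner_left v) s θ v q).deriv]
        exact H _ _) hq
    simp only [zero_smul, add_zero, sub_zero, Q_inner m v s θ] at this
    linarith
  have hd : ∀ q : ℝ, HasDerivAt (fun q => Real.log (Zf m (fun _ => 1) s (θ + q • v)) -
      (q * b + q ^ 2 * (‖v‖ ^ 2 / (2 * τ)))) (Q m (fun x => inner ℝ v x) s (θ + q • v) -
      (b + 2 * q * (‖v‖ ^ 2 / (2 * τ)))) q := by
    intro q
    have := (hasDerivAt_logZ m s θ v q).sub (((hasDerivAt_id q).mul_const b).add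
      (((hasDerivAt_id q).pow 2).mul_const (‖v‖ ^ 2 / (2 * τ))))
    convert! this using 1
    simp
  have hanti : AntitoneOn (fun q => Real.log (Zf m (fun _ => 1) s (θ + q • v)) -
      (q * b + q ^ 2 * (‖v‖ ^ 2 / (2 * τ)))) (Set.Ici 0) := by
    refine antitoneOn_of_deriv_nonpos (convex_Ici 0)
      (fun q _ => (hd q).continuousAt.continuousWithinAt)
      (fun q _ => (hd q).differentiableAt.differentiableWithinAt) fun q hq => ?_
    rw [interior_Ici] at hq
    rw [(hd q).deriv]
    have := h1 q (le_of_lt hq)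
    have e : 2 * q * (‖v‖ ^ 2 / (2 * τ)) = q * (‖v‖ ^ 2 / τ) := by field_simp
    rw [e]; linarith
  have := hanti (Set.mem_Ici.2 le_rfl) (Set.mem_Ici.2 zero_le_one) zero_le_one
  simp only [one_smul, zero_smul, add_zero] at this
  linarith

/-- Linear functionals are sub-Gaussian under a tilted measure with covariance at most `1/τ`. -/
lemma Q_exp_le (θ v : E n) : Q m (fun x => Real.exp (inner ℝ v x - inner ℝ v (av m s θ))) s θ ≤
    Real.exp (‖v‖ ^ 2 / (2 * τ)) := by
  have h := logZ_le m hτ H θ v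
  have e : Zf m (fun x => Real.exp (inner ℝ v x - inner ℝ v (av m s θ))) s θ =
      Real.exp (- inner ℝ v (av m s θ)) * Zf m (fun _ => 1) s (θ + v) := by
    unfold Zf
    rw [← integral_const_mul]
    congr 1; ext x
    rw [← Real.exp_add, one_mul, ← Real.exp_add]
    congr 1
    unfold ex
    rw [inner_add_left]; ring
  have hz := Z_pos m s θ
  have hz2 := Z_pos m s (θ + v)
  unfold Q
  rw [e, div_le_iff₀ hz]
  have h2 := Real.exp_le_exp.2 h
  rw [Real.exp_log hz2, Real.exp_add, Real.exp_add, Real.exp_log hz] at h2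
  calc _ ≤ Real.exp (- inner ℝ v (av m s θ)) * (Zf m (fun _ => 1) s θ *
      Real.exp (inner ℝ v (av m s θ)) * Real.exp (‖v‖ ^ 2 / (2 * τ))) := by gcongr
    _ = (Real.exp (- inner ℝ v (av m s θ)) * Real.exp (inner ℝ v (av m s θ))) *
      (Real.exp (‖v‖ ^ 2 / (2 * τ)) * Zf m (fun _ => 1) s θ) := by ring
    _ = _ := by rw [← Real.exp_add]; simp

lemma Q_coord_four (θ : E n) (i : Fin n) :
    Q m (fun x => (x i - av m s θ i) ^ 4) s θ ≤ 80 / τ ^ 2 := by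
  set v : E n := EuclideanSpace.single i √τ with hv
  have hvn : ‖v‖ ^ 2 / (2 * τ) = 1 / 2 := by
    rw [hv, EuclideanSpace.norm_single, norm_eq_abs, sq_abs, Real.sq_sqrt hτ.le]; field_simp
  have h1 := Q_exp_le m hτ H θ v
  have h2 := Q_exp_le m hτ H θ (-v)
  rw [norm_neg] at h2
  rw [hvn] at h1 h2
  have hvx : ∀ x : E n, inner ℝ v x = √τ * x i := fun x => by
    simp [hv, EuclideanSpace.inner_single_left]
  simp only [inner_neg_left, hvx] at h1 h2
  have hpt : ∀ y : ℝ, y ^ 4 ≤ 24 * (Real.exp y + Real.exp (-y)) := by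
    intro y
    have := Real.pow_div_factorial_le_exp |y| (abs_nonneg y) 4
    have e : (Nat.factorial 4 : ℝ) = 24 := by norm_num [Nat.factorial]
    rw [e, div_le_iff₀ (by norm_num), Even.pow_abs (by decide)] at this
    have p1 := Real.exp_pos y
    have p2 := Real.exp_pos (-y)
    rcases abs_cases y with ⟨h, _⟩ | ⟨h, _⟩ <;> rw [h] at this <;> linarith
  have c1 : Continuous fun x : E n => Real.exp (√τ * x i - √τ * av m s θ i) := by fun_prop
  have c2 : Continuous fun x : E n => Real.exp (-(√τ * x i) - -(√τ * av m s θ i)) := by fun_prop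
  have h3 := Q_mono m (f := fun x => τ ^ 2 * (x i - av m s θ i) ^ 4)
    (g := fun x => 24 * (Real.exp (√τ * x i - √τ * av m s θ i) +
      Real.exp (-(√τ * x i) - -(√τ * av m s θ i)))) (by fun_prop)
    (continuous_const.mul (c1.add c2)) (fun x _ => by
      have := hpt (√τ * x i - √τ * av m s θ i)
      rw [← mul_sub, mul_pow, show √τ ^ 4 = (√τ ^ 2) ^ 2 by ring, Real.sq_sqrt hτ.le] at this
      convert this using 4
      all_goals ring_nf) s θ
  rw [Q_const_mul, Q_const_mul, Q_add m c1 c2] at h3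
  have he : Real.exp (1 / 2) ≤ 5 / 3 := by
    have := Real.exp_one_lt_d9
    have e : Real.exp (1 / 2) ^ 2 = Real.exp 1 := by rw [← Real.exp_nat_mul]; norm_num
    nlinarith [Real.exp_pos (1 / 2)]
  rw [le_div_iff₀ (by positivity)]
  linarith

lemma Q_norm_four (θ : E n) : Q m (fun x => ‖x - av m s θ‖ ^ 4) s θ ≤ 80 * n ^ 2 / τ ^ 2 := by
  have h1 := Q_mono m (f := fun x => ‖x - av m s θ‖ ^ 4)
    (g := fun x => n * ∑ i, (x i - av m s θ i) ^ 4) (by fun_prop) (by fun_prop) (fun x _ => by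
      have := sq_sum_le_card_mul_sum_sq (s := Finset.univ) (f := fun i => (x i - av m s θ i) ^ 2)
      have e := norm_sq_eq_sum (x - av m s θ)
      simp only [PiLp.sub_apply] at e
      rw [← e] at this
      simp only [Finset.card_univ, Fintype.card_fin] at this
      calc _ = (‖x - av m s θ‖ ^ 2) ^ 2 := by ring
        _ ≤ _ := this
        _ = _ := by congr 1; exact Finset.sum_congr rfl fun i _ => by ring) s θ
  rw [Q_const_mul, Q_sum m _ (fun i => by fun_prop)] at h1
  refine h1.trans ?_
  have := Finset.sum_le_sum fun i (_ : i ∈ Finset.univ) => Q_coord_four m hτ H θ i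
  calc _ ≤ (n : ℝ) * ∑ _i : Fin n, 80 / τ ^ 2 := by gcongr
    _ = _ := by simp; ring

lemma Q_norm_two (θ : E n) : Q m (fun x => ‖x - av m s θ‖ ^ 2) s θ ≤ n / τ := by
  have e : (fun x : E n => ‖x - av m s θ‖ ^ 2) = fun x => ∑ i, (x i - av m s θ i) ^ 2 := by
    ext x; rw [norm_sq_eq_sum]; simp
  rw [e, Q_sum m _ (fun i => by fun_prop)]
  have : ∀ i : Fin n, Q m (fun x => (x i - av m s θ i) ^ 2) s θ ≤ 1 / τ := by
    intro i
    have h1 := H θ (EuclideanSpace.single i 1)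
    simp only [EuclideanSpace.inner_single_left, EuclideanSpace.norm_single] at h1
    have h2 := cv_eq m (continuous_coord i) (continuous_coord i) s θ
    simp only [← pow_two] at h2
    simp only [map_one, one_mul, norm_one, one_pow] at h1
    calc _ = _ := h2.symm
      _ ≤ _ := h1
  calc _ ≤ ∑ _i : Fin n, 1 / τ := Finset.sum_le_sum fun i _ => this i
    _ = _ := by simp; ring

end bounds

/-- A test function: `g` is differentiable with Lipschitz gradient `G`. -/
def Tst (g : E n → ℝ) (G : E n → E n) : Prop := ∃ Λ : ℝ, 0 ≤ Λ ∧
  (∀ x y, ‖G x - G y‖ ≤ Λ * ‖x - y‖) ∧ ∀ x y, |g y - g x - inner ℝ (G x) (y - x)| ≤ Λ * ‖y - x‖ ^ 2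

namespace Tst

variable {g f : E n → ℝ} {G F : E n → E n}

lemma cont_grad (h : Tst g G) : Continuous G := by
  obtain ⟨Λ, h0, h1, -⟩ := h
  exact (LipschitzWith.of_dist_le_mul (K := Real.toNNReal Λ) fun x y => by
    rw [Real.coe_toNNReal _ h0, dist_eq_norm, dist_eq_norm]; exact h1 x y).continuous

lemma cont (h : Tst g G) : Continuous g := by
  obtain ⟨Λ, h0, -, h2⟩ := h
  refine continuous_iff_continuousAt.2 fun x => ?_
  have h3 : Filter.Tendsto (fun y => ‖G x‖ * ‖y - x‖ + Λ * ‖y - x‖ ^ 2) (𝓝 x) (𝓝 0) := by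
    have : Continuous fun y => ‖G x‖ * ‖y - x‖ + Λ * ‖y - x‖ ^ 2 := by fun_prop
    simpa using this.tendsto x
  rw [ContinuousAt, tendsto_iff_dist_tendsto_zero]
  refine squeeze_zero (fun _ => dist_nonneg) (fun y => ?_) h3
  rw [Real.dist_eq]
  have e : g y - g x = (g y - g x - inner ℝ (G x) (y - x)) + inner ℝ (G x) (y - x) := by ring
  rw [e]
  refine (abs_add_le _ _).trans ?_
  have := abs_real_inner_le_norm (G x) (y - x)
  linarith [h2 x y]

lemma add (h : Tst g G) (h' : Tst f F) : Tst (fun x => g x + f x) (fun x => G x + F x) := by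
  obtain ⟨Λ, h0, h1, h2⟩ := h
  obtain ⟨Λ', h0', h1', h2'⟩ := h'
  refine ⟨Λ + Λ', by positivity, fun x y => ?_, fun x y => ?_⟩
  · have : G x + F x - (G y + F y) = (G x - G y) + (F x - F y) := by abel
    rw [this, add_mul]
    exact (norm_add_le _ _).trans (add_le_add (h1 x y) (h1' x y))
  · have : g y + f y - (g x + f x) - inner ℝ (G x + F x) (y - x) =
      (g y - g x - inner ℝ (G x) (y - x)) + (f y - f x - inner ℝ (F x) (y - x)) := by
      rw [inner_add_left]; ring
    rw [this, add_mul]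
    exact (abs_add_le _ _).trans (add_le_add (h2 x y) (h2' x y))

lemma const_mul (c : ℝ) (h : Tst g G) : Tst (fun x => c * g x) (fun x => c • G x) := by
  obtain ⟨Λ, h0, h1, h2⟩ := h
  refine ⟨|c| * Λ, by positivity, fun x y => ?_, fun x y => ?_⟩
  · rw [← smul_sub, norm_smul, norm_eq_abs, mul_assoc]
    exact mul_le_mul_of_nonneg_left (h1 x y) (abs_nonneg _)
  · have : c * g y - c * g x - inner ℝ (c • G x) (y - x) =
      c * (g y - g x - inner ℝ (G x) (y - x)) := by rw [inner_smul_left]; simp; ring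
    rw [this, abs_mul, mul_assoc]
    exact mul_le_mul_of_nonneg_left (h2 x y) (abs_nonneg _)

lemma linear (v : E n) : Tst (fun x => inner ℝ v x) (fun _ => v) :=
  ⟨0, le_rfl, fun x y => by simp, fun x y => by simp [inner_sub_right]⟩

lemma const (c : ℝ) : Tst (fun _ : E n => c) (fun _ => 0) :=
  ⟨0, le_rfl, fun x y => by simp, fun x y => by simp⟩

end Tst

/-- The gradient estimate: `τ |Cov(g, x)| ≤ √(Q |∇g|²) + O(τ^{-1/2})`. -/
lemma wv_bound {g : E n → ℝ} {G : E n → E n} {Λ : ℝ} (h0 : 0 ≤ Λ)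
    (h1 : ∀ x y, ‖G x - G y‖ ≤ Λ * ‖x - y‖)
    (h2 : ∀ x y, |g y - g x - inner ℝ (G x) (y - x)| ≤ Λ * ‖y - x‖ ^ 2) {s τ : ℝ} (hτ : 0 < τ)
    (H : ∀ θ v : E n, cv m (fun x => inner ℝ v x) (fun x => inner ℝ v x) s θ ≤ ‖v‖ ^ 2 / τ)
    (θ : E n) :
    τ * ‖wv m g s θ‖ ≤ √(Q m (fun x => ‖G x‖ ^ 2) s θ) + 10 * Λ * n / √τ := by
  have hT : Tst g G := ⟨Λ, h0, h1, h2⟩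
  have hg := hT.cont
  have hG := hT.cont_grad
  set a := av m s θ with ha
  set w := wv m g s θ with hw
  have hsτ := Real.sqrt_pos.2 hτ
  have hss := Real.mul_self_sqrt hτ.le
  set ρ : E n → ℝ := fun x => g x - g a - inner ℝ (G a) (x - a) with hρ
  have hρc : Continuous ρ := by simp only [hρ]; fun_prop
  have hww : ‖w‖ ^ 2 = cv m (fun x => inner ℝ (G a) x) (fun x => inner ℝ w x) s θ +
      cv m ρ (fun x => inner ℝ w x) s θ := by
    rw [← real_inner_self_eq_norm_sq, hw, ← cv_inner_wv m hg, ← hw]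
    have e : g = fun x => (inner ℝ (G a) x + ρ x) + (g a - inner ℝ (G a) a) := by
      ext x; simp only [hρ, inner_sub_right]; ring
    have cl := continuous_inner_left (G a)
    have cl2 : Continuous fun x => inner ℝ (G a) x + ρ x := cl.add hρc
    conv_lhs => rw [e]
    rw [cv_add_left m cl2 continuous_const (continuous_inner_left w),
      cv_add_left m cl hρc (continuous_inner_left w), cv_const_left, add_zero]
  have b1 : cv m (fun x => inner ℝ (G a) x) (fun x => inner ℝ w x) s θ ≤ ‖G a‖ * ‖w‖ / τ := by
    refine abs_le_of_sq_le_sq' ?_ (by positivity) |>.2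
    refine (cv_cs m (continuous_inner_left _) (continuous_inner_left _) s θ).trans ?_
    calc _ ≤ ‖G a‖ ^ 2 / τ * (‖w‖ ^ 2 / τ) :=
          mul_le_mul (H _ _) (H _ _) (cv_self_nonneg m (continuous_inner_left _) s θ) (by positivity)
      _ = _ := by field_simp
  have b2 : cv m ρ (fun x => inner ℝ w x) s θ ≤ 9 * Λ * n / τ * (‖w‖ / √τ) := by
    refine abs_le_of_sq_le_sq' ?_ (by positivity) |>.2
    refine (cv_cs m hρc (continuous_inner_left _) s θ).trans ?_
    have h3 : cv m ρ ρ s θ ≤ (9 * Λ * n / τ) ^ 2 := by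
      have e1 := cv_self_le m hρc 0 s θ
      have e2 := Q_mono m (f := fun x => (ρ x - 0) ^ 2) (g := fun x => Λ ^ 2 * ‖x - a‖ ^ 4)
        (by fun_prop) (by fun_prop) (fun x _ => by
          have := h2 a x
          rw [sub_zero, ← sq_abs]
          calc _ ≤ (Λ * ‖x - a‖ ^ 2) ^ 2 := by gcongr
            _ = _ := by ring) s θ
      rw [Q_const_mul] at e2
      have e3 := Q_norm_four m hτ H θ
      calc _ ≤ _ := e1.trans e2
        _ ≤ Λ ^ 2 * (80 * n ^ 2 / τ ^ 2) := by gcongr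
        _ ≤ Λ ^ 2 * (81 * n ^ 2 / τ ^ 2) := by gcongr; norm_num
        _ = _ := by ring
    calc _ ≤ (9 * Λ * n / τ) ^ 2 * (‖w‖ ^ 2 / τ) :=
          mul_le_mul h3 (H _ _) (cv_self_nonneg m (continuous_inner_left _) s θ) (by positivity)
      _ = _ := by rw [mul_pow _ (‖w‖ / √τ), div_pow, div_pow, Real.sq_sqrt hτ.le]
  have b3 : τ * ‖w‖ ≤ ‖G a‖ + 9 * Λ * n / √τ := by
    rcases (norm_nonneg w).eq_or_lt with hz | hz
    · rw [← hz, mul_zero]; positivity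
    · have : ‖w‖ * (τ * ‖w‖) ≤ ‖w‖ * (‖G a‖ + 9 * Λ * n / √τ) := by
        have h5 : ‖w‖ ^ 2 ≤ ‖G a‖ * ‖w‖ / τ + 9 * Λ * n / τ * (‖w‖ / √τ) := by linarith
        calc _ = τ * ‖w‖ ^ 2 := by ring
          _ ≤ τ * (‖G a‖ * ‖w‖ / τ + 9 * Λ * n / τ * (‖w‖ / √τ)) := by gcongr
          _ = _ := by field_simp
      exact le_of_mul_le_mul_left this hz
  have b4 : ‖G a‖ ≤ √(Q m (fun x => ‖G x‖ ^ 2) s θ) + Λ * √(n / τ) := by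
    have e1 := Q_mono m (f := fun _ => ‖G a‖) (g := fun x => ‖G x‖ + Λ * ‖x - a‖) (by fun_prop)
      (by fun_prop) (fun x _ => by
        have := norm_sub_norm_le (G a) (G x)
        have := h1 a x
        rw [norm_sub_rev a x] at this
        linarith) s θ
    rw [Q_const, Q_add m (by fun_prop) (by fun_prop), Q_const_mul] at e1
    have e2 : Q m (fun x => ‖G x‖) s θ ≤ √(Q m (fun x => ‖G x‖ ^ 2) s θ) :=
      Real.le_sqrt_of_sq_le (Q_sq_le m (by fun_prop) s θ)
    have e3 : Q m (fun x => ‖x - a‖) s θ ≤ √(n / τ) :=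
      Real.le_sqrt_of_sq_le ((Q_sq_le m (by fun_prop) s θ).trans (Q_norm_two m hτ H θ))
    have := mul_le_mul_of_nonneg_left e3 h0
    linarith
  have b5 : Λ * √(n / τ) ≤ Λ * n / √τ := by
    rw [Real.sqrt_div (by positivity), mul_div_assoc]
    have : √(n : ℝ) ≤ n := by
      rcases Nat.eq_zero_or_pos n with h | h
      · simp [h]
      · have : (1 : ℝ) ≤ n := by exact_mod_cast h
        rw [Real.sqrt_le_left (by linarith)]
        nlinarith
    gcongr
  calc _ ≤ _ := b3
    _ ≤ √(Q m (fun x => ‖G x‖ ^ 2) s θ) + Λ * n / √τ + 9 * Λ * n / √τ := by linarith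
    _ = _ := by ring

end IsoGauge

namespace IsoGauge
open scoped Topology
set_option linter.unusedSectionVars false
variable {n : ℕ}

variable (m : Measure (E n)) [CptMeas m]

/-! ### The flow of covariances and the Poincaré inequality -/

/-- The joint third cumulant of `f, g, h` under the tilted measure. -/
def c3 (f g h : E n → ℝ) (s : ℝ) (θ : E n) : ℝ :=
  cv m (fun x => f x * g x) h s θ - (cv m f h s θ * Q m g s θ + Q m f s θ * cv m g h s θ)

lemma exists_C12_cv {f g : E n → ℝ} (hf : Continuous f) (hg : Continuous g) :
    ∃ (ut : ℝ → E n → ℝ) (D2 : Fin n → ℝ → E n → ℝ),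
      C12 Set.univ (cv m f g) ut (fun j s θ => c3 m f g (fun x => x j) s θ) D2 ∧
      ∀ s θ, Lop m ut (fun j s θ => c3 m f g (fun x => x j) s θ) D2 s θ =
        - ∑ j, cv m f (fun x => x j) s θ * cv m g (fun x => x j) s θ := by
  have hfg : Continuous fun x => f x * g x := hf.mul hg
  refine ⟨_, _, (C12_Q m hfg).sub ((C12_Q m hf).mul (C12_Q m hg)), fun s θ => ?_⟩
  have h1 := Lop_sub m (fun s θ => -(1 / 2) * cv m (fun x => f x * g x) (fun x => ‖x‖ ^ 2) s θ)
  unfold c3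
  rw [Lop_sub m, Lop_mul m, Lop_Q m hfg, Lop_Q m hf, Lop_Q m hg]
  ring

lemma norm_wv_sq (g : E n → ℝ) (s : ℝ) (θ : E n) :
    ‖wv m g s θ‖ ^ 2 = ∑ i, cv m g (fun x => x i) s θ ^ 2 := norm_sq_eq_sum _

/-- The squared Hilbert–Schmidt norm of the Hessian of `Q g`. -/
def hess2 (g : E n → ℝ) (s : ℝ) (θ : E n) : ℝ :=
  ∑ i, ∑ j, c3 m g (fun x => x i) (fun x => x j) s θ ^ 2

lemma exists_C12_Qsq {g : E n → ℝ} (hg : Continuous g) :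
    ∃ (ut : ℝ → E n → ℝ) (Du D2 : Fin n → ℝ → E n → ℝ),
      C12 Set.univ (fun s θ => Q m g s θ ^ 2) ut Du D2 ∧
      ∀ s θ, Lop m ut Du D2 s θ = ‖wv m g s θ‖ ^ 2 := by
  have h := (C12_Q m hg).mul (C12_Q m hg)
  simp only [← pow_two (Q m g _ _)] at h
  refine ⟨_, _, _, h, fun s θ => ?_⟩
  rw [Lop_mul m, Lop_Q m hg, norm_wv_sq]
  simp only [pow_two]; ring

lemma exists_C12_wsq {g : E n → ℝ} (hg : Continuous g) :
    ∃ (ut : ℝ → E n → ℝ) (Du D2 : Fin n → ℝ → E n → ℝ),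
      C12 Set.univ (fun s θ => ‖wv m g s θ‖ ^ 2) ut Du D2 ∧
      ∀ s θ, Lop m ut Du D2 s θ = hess2 m g s θ -
        2 * cv m (fun x => inner ℝ (wv m g s θ) x) (fun x => inner ℝ (wv m g s θ) x) s θ := by
  have hx : ∀ i, Continuous fun x : E n => x i := fun i => continuous_coord i
  choose ut D2 h1 h2 using fun i => exists_C12_cv m hg (hx i)
  have h := C12.sum (I := Set.univ) Finset.univ fun i _ => (h1 i).mul (h1 i)
  simp only [← pow_two (cv m g _ _ _), ← norm_wv_sq] at h
  refine ⟨_, _, _, h, fun s θ => ?_⟩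
  rw [Lop_sum m]
  simp only [Lop_mul m, h2]
  unfold hess2
  rw [cv_inner m (continuous_inner_left _)]
  have e : ∀ i, cv m (fun x => inner ℝ (wv m g s θ) x) (fun x => x i) s θ =
      ∑ j, wv m g s θ j * cv m (fun x => x i) (fun x => x j) s θ := fun i => by
    rw [cv_comm, cv_inner m (hx i)]
  simp only [e, Finset.mul_sum, Finset.sum_add_distrib, pow_two]
  have e2 : ∀ i, wv m g s θ i = cv m g (fun x => x i) s θ := fun i => rfl
  simp only [e2, Finset.sum_mul, mul_neg, neg_mul, Finset.mul_sum, Finset.sum_neg_distrib]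
  have e3 : ∀ i j, cv m g (fun x => x j) s θ * cv m (fun x => x i) (fun x => x j) s θ *
    cv m g (fun x => x i) s θ = cv m g (fun x => x i) s θ * (cv m g (fun x => x j) s θ * cv m (fun x => x i) (fun x => x j) s θ) :=
    fun i j => by ring
  simp only [e3]
  have e4 : ∀ i j, 2 * (cv m g (fun x => x i) s θ * (cv m g (fun x => x j) s θ * cv m (fun x => x i) (fun x => x j) s θ)) = cv m g (fun x => x i) s θ * (cv m g (fun x => x j) s θ * cv m (fun x => x i) (fun x => x j) s θ) + cv m g (fun x => x i) s θ * (cv m g (fun x => x j) s θ * cv m (fun x => x i) (fun x => x j) s θ) :=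
    fun i j => by ring
  simp only [e4, Finset.sum_add_distrib]
  ring

lemma hess2_nonneg (g : E n → ℝ) (s : ℝ) (θ : E n) : 0 ≤ hess2 m g s θ := by
  unfold hess2; positivity

lemma BC_c3 {f g h : E n → ℝ} (hf : Continuous f) (hg : Continuous g) (hh : Continuous h) (s : ℝ) :
    BC fun θ => c3 m f g h s θ :=
  (BC_cv m (hf.mul hg) hh s).sub (((BC_cv m hf hh s).mul (BC_Q m hg s)).add
    ((BC_Q m hf s).mul (BC_cv m hg hh s)))

lemma BC_hess2 {g : E n → ℝ} (hg : Continuous g) (s : ℝ) : BC fun θ => hess2 m g s θ :=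
  BC.sum _ fun _ _ => BC.sum _ fun _ _ =>
    (BC_c3 m hg (continuous_coord _) (continuous_coord _) s).pow 2

lemma BC_wsq {g : E n → ℝ} (hg : Continuous g) (s : ℝ) : BC fun θ => ‖wv m g s θ‖ ^ 2 := by
  simp only [norm_wv_sq]
  exact BC.sum _ fun _ _ => (BC_cv m hg (continuous_coord _) s).pow 2

/-- The energy `(t+r)² E|w_r|²` along the flow, which increases to `E|∇g|²`. -/
def yfl (g : E n → ℝ) (t r : ℝ) : ℝ := (t + r) ^ 2 * Es m r fun θ => ‖wv m g r θ‖ ^ 2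

/-- The variance captured by `Q_r g` grows at the rate `E|∇Q_r g|²`. -/
lemma hasDerivAt_F {g : E n → ℝ} (hg : Continuous g) {r : ℝ} (hr : 0 < r) :
    HasDerivAt (fun r => Es m r fun θ => Q m g r θ ^ 2) (Es m r fun θ => ‖wv m g r θ‖ ^ 2) r := by
  obtain ⟨ut, Du, D2, h, hL⟩ := exists_C12_Qsq m hg
  have := flow m h hr Filter.univ_mem
  have e : Lop m ut Du D2 r = fun θ => ‖wv m g r θ‖ ^ 2 := funext fun θ => hL r θ
  rwa [e] at this

/-- The energy has derivative at least the Hessian term, since the covariance bound of `SLC` compensates the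
derivative of the weight `(t + r)²`. -/
lemma hasDerivAt_y {t : ℝ} (ht : 0 ≤ t) (H : SLC m t) {g : E n → ℝ} (hg : Continuous g) {r : ℝ}
    (hr : 0 < r) : ∃ y', HasDerivAt (yfl m g t) y' r ∧
      (t + r) ^ 2 * Es m r (fun θ => hess2 m g r θ) ≤ y' := by
  obtain ⟨ut, Du, D2, h, hL⟩ := exists_C12_wsq m hg
  have h1 := flow m h hr Filter.univ_mem
  have h2 : HasDerivAt (fun r => (t + r) ^ 2) (2 * (t + r)) r := by
    convert! ((hasDerivAt_id r).const_add t).pow 2 using 1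
    simp
  refine ⟨_, h2.mul h1, ?_⟩
  have htr : 0 < t + r := by linarith
  have h3 : Es m r (fun θ => hess2 m g r θ - 2 / (t + r) * ‖wv m g r θ‖ ^ 2) ≤
      Es m r (Lop m ut Du D2 r) := by
    refine Es_mono m ((BC_hess2 m hg r).sub ((BC_wsq m hg r).const_mul _)) (BC_Lop m h (Set.mem_univ _))
      (fun θ => ?_) r
    rw [hL]
    have := H r hr θ (wv m g r θ)
    have e : 2 / (t + r) * ‖wv m g r θ‖ ^ 2 = 2 * (‖wv m g r θ‖ ^ 2 / (t + r)) := by ring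
    rw [e]; linarith
  rw [Es_sub m (BC_hess2 m hg r) ((BC_wsq m hg r).const_mul _), Es_const_mul] at h3
  have h4 := mul_le_mul_of_nonneg_left h3 (sq_nonneg (t + r))
  have e : (t + r) ^ 2 * (Es m r (fun θ => hess2 m g r θ) - 2 / (t + r) *
      Es m r (fun θ => ‖wv m g r θ‖ ^ 2)) = (t + r) ^ 2 * Es m r (fun θ => hess2 m g r θ) -
      2 * (t + r) * Es m r (fun θ => ‖wv m g r θ‖ ^ 2) := by
    field_simp
  linarith

/-- A function on `(0,∞)` with nonnegative derivative is monotone. -/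
lemma monotoneOn_of_hasDerivAt {f f' : ℝ → ℝ} {a : ℝ} (h : ∀ r, a < r → HasDerivAt f (f' r) r)
    (h0 : ∀ r, a < r → 0 ≤ f' r) : MonotoneOn f (Set.Ioi a) := by
  refine monotoneOn_of_deriv_nonneg (convex_Ioi a)
    (fun r hr => (h r hr).continuousAt.continuousWithinAt)
    (fun r hr => (h r (by rwa [interior_Ioi] at hr)).differentiableAt.differentiableWithinAt)
    fun r hr => ?_
  rw [interior_Ioi] at hr
  rw [(h r hr).deriv]; exact h0 r hr

lemma y_mono {t : ℝ} (ht : 0 ≤ t) (H : SLC m t) {g : E n → ℝ} (hg : Continuous g) :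
    MonotoneOn (yfl m g t) (Set.Ioi 0) := by
  choose! y' h1 h2 using fun r (hr : 0 < r) => hasDerivAt_y m ht H hg hr
  refine monotoneOn_of_hasDerivAt h1 fun r hr => le_trans ?_ (h2 r hr)
  exact mul_nonneg (sq_nonneg _) (Es_nonneg m (hess2_nonneg m g r) r)

/-- As `r → ∞` the tilted measures concentrate and the energy is asymptotically at most `E|∇g|²`. -/
lemma yfl_le_aux {t : ℝ} (ht : 0 ≤ t) (H : SLC m t) {g : E n → ℝ} {G : E n → E n} {Λ : ℝ}
    (h0 : 0 ≤ Λ) (h1 : ∀ x y, ‖G x - G y‖ ≤ Λ * ‖x - y‖)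
    (h2 : ∀ x y, |g y - g x - inner ℝ (G x) (y - x)| ≤ Λ * ‖y - x‖ ^ 2) : ∃ C, ∀ r, 1 ≤ r →
      yfl m g t r ≤ (∫ x, ‖G x‖ ^ 2 ∂m) + C / √r := by
  have hT : Tst g G := ⟨Λ, h0, h1, h2⟩
  have hg := hT.cont
  have hG := hT.cont_grad
  have hG2 : Continuous fun x => ‖G x‖ ^ 2 := by fun_prop
  obtain ⟨M, hM⟩ := exists_bound_Q m hG2
  have hM0 : 0 ≤ M := (abs_nonneg _).trans (hM 0 0)
  set c := 10 * Λ * n with hc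
  have hc0 : 0 ≤ c := by positivity
  refine ⟨2 * √M * c + c ^ 2, fun r hr => ?_⟩
  have hr0 : 0 < r := by linarith
  have hr1 : 1 ≤ √r := Real.one_le_sqrt.2 hr
  unfold yfl
  rw [← Es_const_mul, ← Es_Q_eq m hG2 hr0.le, ← Es_const m ((2 * √M * c + c ^ 2) / √r) r,
    ← Es_add m (BC_Q m hG2 r) (BC.const _)]
  refine Es_mono m ((BC_wsq m hg r).const_mul _) ((BC_Q m hG2 r).add (BC.const _)) (fun θ => ?_) r
  have hb := wv_bound m h0 h1 h2 (τ := t + r) (by linarith) (fun θ v => H r hr0 θ v) θ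
  have hq0 : 0 ≤ Q m (fun x => ‖G x‖ ^ 2) r θ := Q_nonneg m (fun x => by positivity) r θ
  have hq : √(Q m (fun x => ‖G x‖ ^ 2) r θ) ≤ √M := Real.sqrt_le_sqrt ((le_abs_self _).trans (hM r θ))
  have hcr : 10 * Λ * n / √(t + r) ≤ c / √r := by
    rw [← hc]; gcongr; linarith
  have hcr1 : c / √r ≤ c := div_le_self hc0 hr1
  have hcr0 : 0 ≤ c / √r := by positivity
  set q := √(Q m (fun x => ‖G x‖ ^ 2) r θ) with hqd
  have hqq : q ^ 2 = Q m (fun x => ‖G x‖ ^ 2) r θ := Real.sq_sqrt hq0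
  calc (t + r) ^ 2 * ‖wv m g r θ‖ ^ 2 = ((t + r) * ‖wv m g r θ‖) ^ 2 := by ring
    _ ≤ (q + c / √r) ^ 2 := by
        apply pow_le_pow_left₀ (by positivity); linarith
    _ = q ^ 2 + (2 * q * (c / √r) + (c / √r) * (c / √r)) := by ring
    _ ≤ q ^ 2 + (2 * √M * (c / √r) + c * (c / √r)) := by gcongr
    _ = _ := by rw [hqq]; ring

lemma tendsto_C_sqrt (C : ℝ) : Filter.Tendsto (fun r : ℝ => C / √r) Filter.atTop (𝓝 0) :=
  Filter.Tendsto.const_div_atTop Real.tendsto_sqrt_atTop C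

lemma yfl_le {t : ℝ} (ht : 0 ≤ t) (H : SLC m t) {g : E n → ℝ} {G : E n → E n} (hT : Tst g G)
    {r : ℝ} (hr : 0 < r) : yfl m g t r ≤ ∫ x, ‖G x‖ ^ 2 ∂m := by
  have hg := hT.cont
  obtain ⟨Λ, h0, h1, h2⟩ := hT
  obtain ⟨C, hC⟩ := yfl_le_aux m ht H h0 h1 h2
  have h3 := (tendsto_C_sqrt C).const_add (∫ x, ‖G x‖ ^ 2 ∂m)
  rw [add_zero] at h3
  refine ge_of_tendsto h3 ?_
  filter_upwards [Filter.eventually_ge_atTop (max r 1)] with q hq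
  exact (y_mono m ht H hg hr (hr.trans_le ((le_max_left _ _).trans hq))
    ((le_max_left _ _).trans hq)).trans (hC q ((le_max_right _ _).trans hq))

lemma Es_cv {g : E n → ℝ} (hg : Continuous g) {s : ℝ} (hs : 0 ≤ s) :
    (∫ x, g x ^ 2 ∂m) - (Es m s fun θ => Q m g s θ ^ 2) = Es m s fun θ => cv m g g s θ := by
  have h1 : Continuous fun x => g x * g x := hg.mul hg
  have h2 := Es_Q_eq m h1 hs
  unfold cv
  simp only [pow_two]
  rw [Es_sub m (BC_Q m h1 s) ((BC_Q m hg s).mul (BC_Q m hg s)), h2]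

lemma norm_av_le (r : ℝ) (θ : E n) : ‖av m r θ‖ ≤ rad m := by
  by_contra hcon
  push Not at hcon
  have e1 := Q_inner m (av m r θ) r θ
  have e2 := Q_mono m (f := fun x => inner ℝ (av m r θ) x)
    (g := fun _ => ‖av m r θ‖ * rad m) (by fun_prop) (by fun_prop)
    (fun x hx => (real_inner_le_norm _ _).trans (by gcongr)) r θ
  rw [e1, Q_const, real_inner_self_eq_norm_sq] at e2
  nlinarith [rad_pos m]

/-- A Taylor-type function is Lipschitz near the support. -/
lemma Tst.lip {g : E n → ℝ} {G : E n → E n} (hT : Tst g G) : ∃ L, 0 ≤ L ∧ ∀ x y, ‖x‖ ≤ rad m →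
    ‖y‖ ≤ rad m → |g x - g y| ≤ L * ‖x - y‖ := by
  have hc := hT.cont_grad
  obtain ⟨Λ, h0, h1, h2⟩ := hT
  obtain ⟨B, hB0, hB⟩ := exists_bound m (g := fun x => ‖G x‖) (by fun_prop)
  have hR := rad_pos m
  refine ⟨B + Λ * (2 * rad m), by positivity, fun x y hx hy => ?_⟩
  have e5 := h2 y x
  have e7 : g x - g y = (g x - g y - inner ℝ (G y) (x - y)) + inner ℝ (G y) (x - y) := by ring
  rw [e7]
  refine (abs_add_le _ _).trans ?_
  have e8 := abs_real_inner_le_norm (G y) (x - y)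
  have e9 : ‖G y‖ * ‖x - y‖ ≤ B * ‖x - y‖ := by
    gcongr
    have := hB _ hy
    rwa [abs_of_nonneg (norm_nonneg _)] at this
  have e10 : ‖x - y‖ ≤ 2 * rad m := (norm_sub_le _ _).trans (by linarith)
  have e11 : Λ * ‖x - y‖ ^ 2 ≤ Λ * (2 * rad m) * ‖x - y‖ := by
    rw [pow_two, ← mul_assoc]; gcongr
  linarith

/-- Local variance decay along the flow. -/
lemma var_decay {t : ℝ} (ht : 0 ≤ t) (H : SLC m t) {g : E n → ℝ} {G : E n → E n} (hT : Tst g G)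
    {s : ℝ} (hs : 0 < s) :
    (∫ x, g x ^ 2 ∂m) - (Es m s fun θ => Q m g s θ ^ 2) ≤ (∫ x, ‖G x‖ ^ 2 ∂m) / (t + s) := by
  have hg := hT.cont
  set D := ∫ x, ‖G x‖ ^ 2 ∂m with hD
  set F := fun r => Es m r fun θ => Q m g r θ ^ 2 with hF
  have hmono : MonotoneOn (fun r => - F r - D / (t + r)) (Set.Ioi 0) := by
    refine monotoneOn_of_hasDerivAt (f' := fun r => - (Es m r fun θ => ‖wv m g r θ‖ ^ 2) +
      D / (t + r) ^ 2) (fun r hr => ?_) fun r hr => ?_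
    · have htr : t + r ≠ 0 := by linarith [hr]
      have h1 : HasDerivAt (fun r => D / (t + r)) (- (D / (t + r) ^ 2)) r := by
        have := ((hasDerivAt_id r).const_add t).inv htr
        have := this.const_mul D
        convert! this using 1
        simp; ring
      have := (hasDerivAt_F m hg hr).neg.sub h1
      convert! this using 1
      ring
    · have htr : 0 < t + r := by linarith [hr]
      have := yfl_le m ht H hT hr
      unfold yfl at this
      have h2 : (Es m r fun θ => ‖wv m g r θ‖ ^ 2) ≤ D / (t + r) ^ 2 := by
        rw [le_div_iff₀ (by positivity)]; linarith
      linarith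
  -- the variance tends to zero, as it is `O(1/r)`
  have hlim : ∃ C, ∀ r, 1 ≤ r → (∫ x, g x ^ 2 ∂m) - F r ≤ C / r := by
    obtain ⟨L, hL0, hL⟩ := hT.lip m
    refine ⟨L ^ 2 * n, fun r hr => ?_⟩
    have hr0 : 0 < r := by linarith
    rw [hF]; beta_reduce
    rw [Es_cv m hg hr0.le, ← Es_const m (L ^ 2 * n / r) r]
    refine Es_mono m (BC_cv m hg hg r) (BC.const _) (fun θ => ?_) r
    have hav := norm_av_le m r θ
    have e3 := cv_self_le m hg (g (av m r θ)) r θ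
    have e4 := Q_mono m (f := fun x => (g x - g (av m r θ)) ^ 2)
      (g := fun x => L ^ 2 * ‖x - av m r θ‖ ^ 2) (by fun_prop) (by fun_prop) (fun x hx => by
        have e6 := hL _ _ hx hav
        rw [← sq_abs, ← mul_pow]
        gcongr) r θ
    rw [Q_const_mul] at e4
    have e5 := Q_norm_two m (τ := t + r) (by linarith) (fun θ v => H r hr0 θ v) θ
    calc _ ≤ _ := e3.trans e4
      _ ≤ L ^ 2 * (n / (t + r)) := by gcongr
      _ ≤ L ^ 2 * (n / r) := by gcongr; linarith
      _ = _ := by ring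
  obtain ⟨C, hC⟩ := hlim
  have h3 : Filter.Tendsto (fun r : ℝ => C / r) Filter.atTop (𝓝 0) :=
    Filter.tendsto_id.const_div_atTop C
  have h4 : (∫ x, g x ^ 2 ∂m) - F s - D / (t + s) ≤ 0 := by
    refine ge_of_tendsto h3 ?_
    filter_upwards [Filter.eventually_ge_atTop (max s 1)] with r hr
    have hsr := (le_max_left s 1).trans hr
    have hr0 := hs.trans_le hsr
    have e1 := hmono hs hr0 hsr
    simp only at e1
    have e2 := hC r ((le_max_right _ _).trans hr)
    have e3 : 0 ≤ D / (t + r) := by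
      have : 0 ≤ D := integral_nonneg fun x => by positivity
      have : 0 < t + r := by linarith
      positivity
    linarith
  linarith

end IsoGauge

namespace IsoGauge
open scoped Topology
set_option linter.unusedSectionVars false
variable {n : ℕ}

variable (m : Measure (E n)) [CptMeas m]

lemma continuousAt_Es {u : ℝ → E n → ℝ} {s₀ C : ℝ} (h1 : ∀ᶠ s in 𝓝 s₀, Continuous (u s))
    (h2 : ∀ᶠ s in 𝓝 s₀, ∀ θ, |u s θ| ≤ C)
    (h3 : ∀ θ, ContinuousAt (fun p : ℝ × E n => u p.1 p.2) (s₀, θ)) :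
    ContinuousAt (fun s => Es m s (u s)) s₀ := by
  unfold ContinuousAt Es
  refine tendsto_integral_filter_of_dominated_convergence (fun _ => C) ?_ ?_ (integrable_const _) ?_
  · filter_upwards [h1] with s hs
    exact (hs.comp (by fun_prop)).aestronglyMeasurable
  · filter_upwards [h2] with s hs
    exact .of_forall fun p => hs _
  · refine .of_forall fun p => ?_
    have hc : Continuous fun s : ℝ => (s, s • p.1 + √s • p.2) := by fun_prop
    exact (h3 (s₀ • p.1 + √s₀ • p.2)).tendsto.comp (hc.tendsto s₀)

lemma Es_zero (φ : E n → ℝ) : Es m 0 φ = φ 0 := by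
  unfold Es; simp

lemma continuousAt_F {g : E n → ℝ} (hg : Continuous g) (s : ℝ) :
    ContinuousAt (fun s => Es m s fun θ => Q m g s θ ^ 2) s := by
  obtain ⟨C, hC⟩ := exists_bound_Q m hg
  refine continuousAt_Es m (C := C ^ 2) (.of_forall fun s => (continuous_Q_right m hg s).pow 2)
    (.of_forall fun s θ => ?_) fun θ => ((continuous_Q m hg).pow 2).continuousAt
  rw [abs_pow]
  exact pow_le_pow_left₀ (abs_nonneg _) (hC s θ) 2

/-- The Poincaré inequality (Brascamp–Lieb for `t`-uniformly log-concave measures). -/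
lemma poincare {t : ℝ} (ht : 0 < t) (H : SLC m t) {g : E n → ℝ} {G : E n → E n} (hT : Tst g G) :
    (∫ x, g x ^ 2 ∂m) - (∫ x, g x ∂m) ^ 2 ≤ (∫ x, ‖G x‖ ^ 2 ∂m) / t := by
  have h1 : Filter.Tendsto (fun s => (∫ x, g x ^ 2 ∂m) - (Es m s fun θ => Q m g s θ ^ 2))
      (𝓝[>] 0) (𝓝 ((∫ x, g x ^ 2 ∂m) - (∫ x, g x ∂m) ^ 2)) := by
    have := (continuousAt_F m hT.cont 0).tendsto
    rw [Es_zero, Q_zero] at this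
    exact (this.mono_left nhdsWithin_le_nhds).const_sub _
  have h2 : Filter.Tendsto (fun s : ℝ => (∫ x, ‖G x‖ ^ 2 ∂m) / (t + s)) (𝓝[>] 0)
      (𝓝 ((∫ x, ‖G x‖ ^ 2 ∂m) / t)) := by
    have : ContinuousAt (fun s : ℝ => (∫ x, ‖G x‖ ^ 2 ∂m) / (t + s)) 0 :=
      ContinuousAt.div continuousAt_const (by fun_prop) (by simpa using ht.ne')
    simpa using this.tendsto.mono_left nhdsWithin_le_nhds
  refine le_of_tendsto_of_tendsto h1 h2 ?_
  filter_upwards [self_mem_nhdsWithin] with s hs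
  exact var_decay m ht.le H hT hs

end IsoGauge

namespace IsoGauge
open scoped Topology
set_option linter.unusedSectionVars false
variable {n : ℕ}

/-! ### Gaussian averages -/

/-- Bounded test functions with bounded gradient. -/
def TB (g : E n → ℝ) (G : E n → E n) : Prop :=
  Tst g G ∧ (∃ C, ∀ x, |g x| ≤ C) ∧ ∃ C, ∀ x, ‖G x‖ ≤ C

lemma TB.bc {g : E n → ℝ} {G : E n → E n} (h : TB g G) : BC g := ⟨h.1.cont, h.2.1⟩

lemma TB.bc_coord {g : E n → ℝ} {G : E n → E n} (h : TB g G) (i : Fin n) : BC fun x => G x i := by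
  obtain ⟨C, hC⟩ := h.2.2
  exact ⟨(continuous_coord i).comp h.1.cont_grad, C, fun x => (PiLp.norm_apply_le (G x) i).trans (hC x)⟩

lemma TB.bc_sq {g : E n → ℝ} {G : E n → E n} (h : TB g G) : BC fun x => ‖G x‖ ^ 2 := by
  simp only [norm_sq_eq_sum]
  exact BC.sum _ fun i _ => (h.bc_coord i).pow 2

lemma TB.affine {g : E n → ℝ} {G : E n → E n} (h : TB g G) (a : E n) (c : ℝ) :
    TB (fun z => g (a + c • z)) (fun z => c • G (a + c • z)) := by
  obtain ⟨⟨Λ, h0, h1, h2⟩, ⟨C, hC⟩, ⟨C', hC'⟩⟩ := h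
  refine ⟨⟨c ^ 2 * Λ, by positivity, fun x y => ?_, fun x y => ?_⟩, ⟨C, fun x => hC _⟩,
    ⟨|c| * C', fun x => ?_⟩⟩
  · have e := h1 (a + c • x) (a + c • y)
    rw [add_sub_add_left_eq_sub, ← smul_sub, norm_smul, norm_eq_abs] at e
    rw [← smul_sub, norm_smul, norm_eq_abs, ← sq_abs]
    calc _ ≤ |c| * (Λ * (|c| * ‖x - y‖)) := by gcongr
      _ = _ := by ring
  · have e := h2 (a + c • x) (a + c • y)
    rw [add_sub_add_left_eq_sub, ← smul_sub, norm_smul, norm_eq_abs, mul_pow, sq_abs,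
      inner_smul_right] at e
    rw [inner_smul_left]
    simp only [conj_trivial]
    linarith
  · rw [norm_smul, norm_eq_abs]
    gcongr; exact hC' _

lemma BC.integrable {φ : E n → ℝ} (h : BC φ) (μ : Measure (E n)) [IsProbabilityMeasure μ] :
    Integrable φ μ := by
  obtain ⟨hc, C, hC⟩ := h
  exact (integrable_const C).mono' hc.aestronglyMeasurable (.of_forall hC)

lemma BC.affine {φ : E n → ℝ} (h : BC φ) (a : E n) (c : ℝ) : BC fun z => φ (a + c • z) := by
  obtain ⟨hc, C, hC⟩ := h
  exact ⟨hc.comp (by fun_prop), C, fun _ => hC _⟩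

lemma isub {X : Type*} [MeasurableSpace X] {μ : Measure X} {f g : X → ℝ} (hf : Integrable f μ)
    (hg : Integrable g μ) : Integrable (fun x => f x - g x) μ := hf.sub hg

lemma iadd {X : Type*} [MeasurableSpace X] {μ : Measure X} {f g : X → ℝ} (hf : Integrable f μ)
    (hg : Integrable g μ) : Integrable (fun x => f x + g x) μ := hf.add hg

lemma isConvexBody_ball {R : ℝ} (hR : 0 < R) : IsConvexBody (Metric.closedBall (0 : E n) R) := by
  refine ⟨isCompact_closedBall _ _, convex_closedBall _ _, ⟨0, ?_⟩⟩
  exact Metric.ball_subset_interior_closedBall (Metric.mem_ball_self hR)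

lemma tendsto_ball {f : E n → ℝ} (hf : BC f) :
    Filter.Tendsto (fun R : ℝ => Q (unifOn (Metric.closedBall (0 : E n) R)) f 1 0) Filter.atTop
      (𝓝 (∫ z, f z ∂(γ n))) := by
  have key : ∀ f : E n → ℝ, BC f → Filter.Tendsto (fun R : ℝ => ∫ z in Metric.closedBall (0 : E n) R,
      f z ∂(γ n)) Filter.atTop (𝓝 (∫ z, f z ∂(γ n))) := by
    intro f hf
    have := tendsto_setIntegral_of_monotone (μ := γ n) (f := f)
      (s := fun R : ℝ => Metric.closedBall (0 : E n) R)
      (fun R => Metric.isClosed_closedBall.measurableSet)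
      (fun R R' h => Metric.closedBall_subset_closedBall h) (hf.integrable _).integrableOn
    rwa [Set.eq_univ_of_forall (s := ⋃ R : ℝ, Metric.closedBall (0 : E n) R)
      fun x => Set.mem_iUnion.2 ⟨‖x‖, by simp⟩, setIntegral_univ] at this
  have h1 := (key f hf).div (key (fun _ => 1) (BC.const 1)) (by simp)
  simp only [integral_const, probReal_univ, smul_eq_mul, mul_one, div_one] at h1
  refine h1.congr' ?_
  filter_upwards [Filter.eventually_gt_atTop 0] with R hR
  have h2 : ∀ f : E n → ℝ, ∫ z in Metric.closedBall (0 : E n) R, f z ∂(γ n) =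
      (2 * π) ^ (-(n : ℝ) / 2) * (volume (Metric.closedBall (0 : E n) R)).toReal *
      Zf (unifOn (Metric.closedBall (0 : E n) R)) f 1 0 := by
    intro f
    obtain ⟨v0, v1⟩ := body_volume (isConvexBody_ball (n := n) hR)
    have v2 : (volume (Metric.closedBall (0 : E n) R)).toReal ≠ 0 := ENNReal.toReal_ne_zero.2 ⟨v0, v1⟩
    unfold Zf
    have ms : MeasurableSet (Metric.closedBall (0 : E n) R) := Metric.isClosed_closedBall.measurableSet
    rw [integral_unifOn, mul_assoc, mul_inv_cancel_left₀ v2, ← integral_const_mul,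
      ← integral_indicator ms, ← integral_indicator ms, integral_γ]
    congr 1; ext z
    by_cases hz : z ∈ Metric.closedBall (0 : E n) R
    · simp only [Set.indicator_of_mem hz]
      unfold gd ex
      simp only [inner_zero_left, one_mul, zero_sub]
      ring_nf
    · simp only [Set.indicator_of_notMem hz, mul_zero]
  have h3 := h2 (fun _ => 1)
  simp only [integral_const, smul_eq_mul, mul_one] at h3
  have v0 := (body_volume (isConvexBody_ball (n := n) hR))
  have v2 : (volume (Metric.closedBall (0 : E n) R)).toReal ≠ 0 := ENNReal.toReal_ne_zero.2 ⟨v0.1, v0.2⟩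
  have v3 : (2 * π) ^ (-(n : ℝ) / 2) ≠ 0 := by positivity
  rw [Pi.div_apply]
  beta_reduce
  rw [h2 f, h3]
  unfold Q
  rw [mul_div_mul_left _ _ (mul_ne_zero v3 v2)]

/-- The Gaussian Poincaré inequality, as a limit of truncations of the Gaussian to balls. -/
lemma gauss_poincare {g : E n → ℝ} {G : E n → E n} (h : TB g G) :
    (∫ z, g z ^ 2 ∂(γ n)) - (∫ z, g z ∂(γ n)) ^ 2 ≤ ∫ z, ‖G z‖ ^ 2 ∂(γ n) := by
  refine le_of_tendsto_of_tendsto ((tendsto_ball (h.bc.pow 2)).sub ((tendsto_ball h.bc).pow 2))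
    (tendsto_ball h.bc_sq) ?_
  filter_upwards [Filter.eventually_gt_atTop 0] with R hR
  haveI := cptMeas_unifOn (isConvexBody_ball (n := n) hR)
  have h1 := SLC_tilt (unifOn (Metric.closedBall (0 : E n) R)) (SLC_body (isConvexBody_ball (n := n) hR))
    (r := 1) zero_le_one 0
  rw [zero_add] at h1
  have := poincare _ zero_lt_one h1 h.1
  simpa only [Q_eq_integral, div_one] using this

/-- The vector of Gaussian means of the coordinates of `G`. -/
def gmean (G : E n → E n) : E n := WithLp.toLp 2 fun i => ∫ z, G z i ∂(γ n)

lemma Tst.hasDerivAt {g : E n → ℝ} {G : E n → E n} (h : Tst g G) (x v : E n) :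
    HasLineDerivAt ℝ g (inner ℝ (G x) v) x v := by
  obtain ⟨Λ, h0, -, h2⟩ := h
  unfold HasLineDerivAt
  rw [hasDerivAt_iff_isLittleO]
  refine Asymptotics.IsBigO.trans_isLittleO (g := fun q : ℝ => q ^ 2) ?_ ?_
  · refine Asymptotics.IsBigO.of_bound (Λ * ‖v‖ ^ 2) (.of_forall fun q => ?_)
    have := h2 x (x + q • v)
    simp only [add_sub_cancel_left, inner_smul_right, norm_smul, mul_pow] at this
    simp only [zero_smul, add_zero, sub_zero, smul_eq_mul, norm_pow]
    rw [norm_eq_abs]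
    linarith
  · simp only [sub_zero]
    exact Asymptotics.isLittleO_pow_id one_lt_two

/-- The reverse Gaussian Poincaré inequality. -/
lemma gauss_rev {g : E n → ℝ} {G : E n → E n} (h : TB g G) :
    ‖gmean G‖ ^ 2 ≤ (∫ z, g z ^ 2 ∂(γ n)) - (∫ z, g z ∂(γ n)) ^ 2 := by
  set e := gmean G with he
  set a := ∫ z, g z ∂(γ n) with ha
  have hg := h.1.cont
  have hG := h.1.cont_grad
  obtain ⟨C, hC⟩ := h.2.1
  obtain ⟨C', hC'⟩ := h.2.2
  have h1 : ∫ z, inner ℝ e z * g z ∂(γ n) = ‖e‖ ^ 2 := by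
    rw [gauss_ibp (F' := fun z => inner ℝ (G z) e) e hg (by fun_prop) (max C (C' * ‖e‖)) 0
      (fun z => by simpa using Or.inl (hC z))
      (fun z => by
        have := abs_real_inner_le_norm (G z) e
        have h3 : ‖G z‖ * ‖e‖ ≤ C' * ‖e‖ := by gcongr; exact hC' z
        simpa using Or.inr (this.trans h3))
      (fun z => h.1.hasDerivAt z e)]
    rw [norm_sq_eq_sum]
    simp only [inner_eq_sum]
    rw [integral_finsetSum _ fun i _ => ((h.bc_coord i).integrable _).mul_const _]
    refine Finset.sum_congr rfl fun i _ => ?_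
    rw [integral_mul_const, pow_two]
    rfl
  have ig : Integrable g (γ n) := h.bc.integrable _
  have ig2 : Integrable (fun z => g z ^ 2) (γ n) := (h.bc.pow 2).integrable _
  have ie : Integrable (fun z => inner ℝ e z) (γ n) :=
    (integrable_norm_γ.const_mul ‖e‖).mono' (by fun_prop) (.of_forall fun z => abs_real_inner_le_norm e z)
  have ieg : Integrable (fun z => inner ℝ e z * g z) (γ n) :=
    ie.mul_bdd (c := C) hg.aestronglyMeasurable (.of_forall hC)
  have iee : Integrable (fun z => inner ℝ e z * inner ℝ e z) (γ n) :=
    (integrable_norm_sq_γ.const_mul (‖e‖ ^ 2)).mono' (by fun_prop) (.of_forall fun z => by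
      rw [norm_mul]
      have := abs_real_inner_le_norm e z
      rw [norm_eq_abs]
      calc _ ≤ (‖e‖ * ‖z‖) * (‖e‖ * ‖z‖) := by gcongr
        _ = _ := by ring)
  have h2 : 0 ≤ ∫ z, (g z - a - inner ℝ e z) ^ 2 ∂(γ n) := integral_nonneg fun z => sq_nonneg _
  have h3 : ∀ z, (g z - a - inner ℝ e z) ^ 2 = (g z ^ 2 - (2 * a) * g z + a ^ 2) -
      (2 * (inner ℝ e z * g z) - (2 * a) * inner ℝ e z - inner ℝ e z * inner ℝ e z) :=
    fun z => by ring
  simp only [h3] at h2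
  rw [integral_sub (iadd (isub ig2 (ig.const_mul _)) (integrable_const _))
    (isub (isub (ieg.const_mul _) (ie.const_mul _)) iee),
    integral_add (isub ig2 (ig.const_mul _)) (integrable_const _), integral_sub ig2 (ig.const_mul _),
    integral_sub (isub (ieg.const_mul _) (ie.const_mul _)) iee,
    integral_sub (ieg.const_mul _) (ie.const_mul _), integral_const_mul, integral_const_mul,
    integral_const_mul, h1, integral_inner_γ, integral_inner_mul_inner_γ, integral_const,
    real_inner_self_eq_norm_sq, ← ha] at h2
  simp only [probReal_univ, smul_eq_mul, one_mul] at h2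
  linarith

/-- The Gaussian average `P_s φ (x) = E φ(s x + √s Z)`. -/
def Pg (s : ℝ) (φ : E n → ℝ) (x : E n) : ℝ := ∫ z, φ (s • x + √s • z) ∂(γ n)

/-- Coordinatewise Gaussian average of a vector field. -/
def PgV (s : ℝ) (G : E n → E n) (x : E n) : E n := WithLp.toLp 2 fun i => Pg s (fun θ => G θ i) x

section

variable {φ ψ : E n → ℝ} {G : E n → E n}

lemma Pg_int (h : BC φ) (s : ℝ) (x : E n) : Integrable (fun z => φ (s • x + √s • z)) (γ n) :=
  (h.affine _ _).integrable _

lemma Pg_mono (h : BC φ) (h' : BC ψ) (hle : ∀ θ, φ θ ≤ ψ θ) (s : ℝ) (x : E n) :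
    Pg s φ x ≤ Pg s ψ x := integral_mono (Pg_int h s x) (Pg_int h' s x) fun _ => hle _

lemma Pg_sum {ι : Type*} (T : Finset ι) {f : ι → E n → ℝ} (hf : ∀ i ∈ T, BC (f i)) (s : ℝ) (x : E n) :
    Pg s (fun θ => ∑ i ∈ T, f i θ) x = ∑ i ∈ T, Pg s (f i) x :=
  integral_finsetSum _ fun i hi => Pg_int (hf i hi) s x

lemma Pg_const_mul (c : ℝ) (φ : E n → ℝ) (s : ℝ) (x : E n) :
    Pg s (fun θ => c * φ θ) x = c * Pg s φ x := integral_const_mul _ _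

lemma BC_Pg (h : BC φ) (s : ℝ) : BC (Pg s φ) := by
  obtain ⟨hc, C, hC⟩ := h
  refine ⟨?_, C, fun x => ?_⟩
  · refine continuous_of_dominated (bound := fun _ => C) (fun x => ?_) (fun x => .of_forall fun z => hC _)
      (integrable_const _) (.of_forall fun z => hc.comp (by fun_prop))
    exact (hc.comp (by fun_prop)).aestronglyMeasurable
  · unfold Pg
    have := norm_integral_le_of_norm_le_const (μ := γ n) (f := fun z => φ (s • x + √s • z)) (C := C)
      (.of_forall fun z => hC _)
    simpa using this

lemma Pg_sq_le (h : BC φ) (s : ℝ) (x : E n) : Pg s φ x ^ 2 ≤ Pg s (fun θ => φ θ ^ 2) x := by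
  have h2 : 0 ≤ ∫ z, (φ (s • x + √s • z) - Pg s φ x) ^ 2 ∂(γ n) := integral_nonneg fun z => sq_nonneg _
  have h3 : ∀ z, (φ (s • x + √s • z) - Pg s φ x) ^ 2 = φ (s • x + √s • z) ^ 2 -
      (2 * Pg s φ x) * φ (s • x + √s • z) + Pg s φ x ^ 2 := fun z => by ring
  simp only [h3] at h2
  have i1 := Pg_int (h.pow 2) s x
  have i2 := (Pg_int h s x).const_mul (2 * Pg s φ x)
  rw [integral_add (isub i1 i2) (integrable_const _), integral_sub i1 i2, integral_const_mul,
    integral_const] at h2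
  simp only [probReal_univ, smul_eq_mul, one_mul] at h2
  change 0 ≤ Pg s (fun θ => φ θ ^ 2) x - 2 * Pg s φ x * Pg s φ x + Pg s φ x ^ 2 at h2
  linarith [pow_two (Pg s φ x)]

lemma inner_PgV (h : ∀ i, BC fun θ => G θ i) (s : ℝ) (x v : E n) :
    inner ℝ (PgV s G x) v = Pg s (fun θ => inner ℝ (G θ) v) x := by
  simp only [inner_eq_sum]
  have e : ∀ i (θ : E n), G θ i * v i = v i * G θ i := fun i θ => mul_comm _ _
  simp only [e]
  rw [Pg_sum Finset.univ fun i _ => (h i).const_mul (v i)]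
  refine Finset.sum_congr rfl fun i _ => ?_
  rw [Pg_const_mul, mul_comm]; rfl

lemma norm_PgV_sq_le (h : ∀ i, BC fun θ => G θ i) (s : ℝ) (x : E n) :
    ‖PgV s G x‖ ^ 2 ≤ Pg s (fun θ => ‖G θ‖ ^ 2) x := by
  simp only [norm_sq_eq_sum]
  rw [Pg_sum Finset.univ fun i _ => (h i).pow 2]
  exact Finset.sum_le_sum fun i _ => Pg_sq_le (h i) s x

lemma Tst_Pg (h : TB φ G) {s : ℝ} (hs : 0 ≤ s) : Tst (Pg s φ) (fun x => s • PgV s G x) := by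
  have hb := h.bc
  have hbc := h.bc_coord
  have hG := h.1.cont_grad
  obtain ⟨Λ, h0, h1, h2⟩ := h.1
  have bi : ∀ v, BC fun θ => inner ℝ (G θ) v := fun v => by
    obtain ⟨C, hC⟩ := h.2.2
    refine ⟨by fun_prop, C * ‖v‖, fun θ => (abs_real_inner_le_norm _ _).trans ?_⟩
    gcongr; exact hC θ
  refine ⟨s ^ 2 * Λ, by positivity, fun x y => ?_, fun x y => ?_⟩
  · set d := PgV s G x - PgV s G y with hd
    have e1 : ‖d‖ * ‖d‖ ≤ (Λ * (s * ‖x - y‖)) * ‖d‖ := by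
      rw [← real_inner_self_eq_norm_mul_norm]
      nth_rw 1 [hd]
      rw [inner_sub_left, inner_PgV hbc, inner_PgV hbc]
      unfold Pg
      rw [← integral_sub (Pg_int (bi d) s x) (Pg_int (bi d) s y)]
      have := integral_mono (μ := γ n) ((Pg_int (bi d) s x).sub (Pg_int (bi d) s y))
        (integrable_const ((Λ * (s * ‖x - y‖)) * ‖d‖)) (fun z => ?_)
      · simpa using this
      · simp only [Pi.sub_apply]
        rw [← inner_sub_left]
        refine (real_inner_le_norm _ _).trans ?_
        gcongr
        refine (h1 _ _).trans ?_
        rw [add_sub_add_right_eq_sub, ← smul_sub, norm_smul, norm_of_nonneg hs]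
    have e2 : ‖d‖ ≤ Λ * (s * ‖x - y‖) := by
      rcases (norm_nonneg d).eq_or_lt with hz | hz
      · rw [← hz]; positivity
      · exact le_of_mul_le_mul_right e1 hz
    rw [← smul_sub, norm_smul, norm_of_nonneg hs]
    calc _ ≤ s * (Λ * (s * ‖x - y‖)) := by gcongr
      _ = _ := by ring
  · rw [inner_smul_left, inner_PgV hbc]
    simp only [conj_trivial]
    unfold Pg
    rw [← integral_const_mul, ← integral_sub (Pg_int hb s y) (Pg_int hb s x),
      ← integral_sub (isub (Pg_int hb s y) (Pg_int hb s x)) ((Pg_int (bi (y - x)) s x).const_mul s)]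
    have := norm_integral_le_of_norm_le_const (μ := γ n) (C := s ^ 2 * Λ * ‖y - x‖ ^ 2)
      (f := fun z => φ (s • y + √s • z) - φ (s • x + √s • z) -
        s * inner ℝ (G (s • x + √s • z)) (y - x)) (.of_forall fun z => by
        have := h2 (s • x + √s • z) (s • y + √s • z)
        rw [add_sub_add_right_eq_sub, ← smul_sub, norm_smul, norm_of_nonneg hs, inner_smul_right] at this
        rw [norm_eq_abs]
        linarith)
    simpa using this

lemma Pg_poincare (h : TB φ G) {s : ℝ} (hs : 0 ≤ s) (x : E n) :
    Pg s (fun θ => φ θ ^ 2) x - Pg s φ x ^ 2 ≤ s * Pg s (fun θ => ‖G θ‖ ^ 2) x := by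
  have := gauss_poincare (h.affine (s • x) (√s))
  simp only [norm_smul, mul_pow, norm_eq_abs, sq_abs, Real.sq_sqrt hs] at this
  rw [integral_const_mul] at this
  exact this

lemma Pg_rev (h : TB φ G) {s : ℝ} (hs : 0 ≤ s) (x : E n) :
    s * ‖PgV s G x‖ ^ 2 ≤ Pg s (fun θ => φ θ ^ 2) x - Pg s φ x ^ 2 := by
  have := gauss_rev (h.affine (s • x) (√s))
  have e : gmean (fun z => √s • G (s • x + √s • z)) = √s • PgV s G x := by
    ext i
    simp only [gmean, PgV, Pg, PiLp.smul_apply, smul_eq_mul]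
    exact integral_const_mul _ _
  rw [e, norm_smul, mul_pow, norm_eq_abs, sq_abs, Real.sq_sqrt hs] at this
  exact this

variable (m : Measure (E n)) [CptMeas m]

lemma Es_eq (h : BC φ) (s : ℝ) : Es m s φ = ∫ x, Pg s φ x ∂m := by
  unfold Es Pg
  rw [integral_prod _ (integrable_Es m h s)]

lemma Es_QP {g : E n → ℝ} (hg : Continuous g) (h : BC φ) {s : ℝ} (hs : 0 ≤ s) :
    ∫ x, g x * Pg s φ x ∂m = Es m s (fun θ => Q m g s θ * φ θ) := by
  rw [← Es_Q m hg h hs, integral_prod _ (integrable_weighted m hg h s)]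
  simp only [integral_const_mul]
  rfl

end

end IsoGauge

namespace IsoGauge
open scoped Topology
set_option linter.unusedSectionVars false
variable {n : ℕ}

/-! ### Spatial regularity of the flow -/

lemma norm_le_sum_abs (v : E n) : ‖v‖ ≤ ∑ i, |v i| := by
  refine abs_le_of_sq_le_sq' ?_ (by positivity) |>.2
  rw [norm_sq_eq_sum]
  have := Finset.sum_sq_le_sq_sum_of_nonneg (s := Finset.univ) (f := fun i => |v i|) (fun i _ => abs_nonneg _)
  simpa only [sq_abs] using this

/-- Global Lipschitz continuity of a real function. -/
def Lip (φ : E n → ℝ) : Prop := ∃ L, 0 ≤ L ∧ ∀ x y, |φ x - φ y| ≤ L * ‖x - y‖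

lemma Lip.add {φ ψ : E n → ℝ} (h : Lip φ) (h' : Lip ψ) : Lip fun x => φ x + ψ x := by
  obtain ⟨L, h0, h1⟩ := h
  obtain ⟨L', h0', h1'⟩ := h'
  refine ⟨L + L', by positivity, fun x y => ?_⟩
  have e : φ x + ψ x - (φ y + ψ y) = (φ x - φ y) + (ψ x - ψ y) := by ring
  rw [e, add_mul]
  exact (abs_add_le _ _).trans (add_le_add (h1 x y) (h1' x y))

lemma Lip.sub {φ ψ : E n → ℝ} (h : Lip φ) (h' : Lip ψ) : Lip fun x => φ x - ψ x := by
  obtain ⟨L, h0, h1⟩ := h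
  obtain ⟨L', h0', h1'⟩ := h'
  refine ⟨L + L', by positivity, fun x y => ?_⟩
  have e : φ x - ψ x - (φ y - ψ y) = (φ x - φ y) - (ψ x - ψ y) := by ring
  rw [e, add_mul]
  exact (abs_sub _ _).trans (add_le_add (h1 x y) (h1' x y))

lemma Lip.mul {φ ψ : E n → ℝ} (h : Lip φ) (h' : Lip ψ) (b : BC φ) (b' : BC ψ) :
    Lip fun x => φ x * ψ x := by
  obtain ⟨L, h0, h1⟩ := h
  obtain ⟨L', h0', h1'⟩ := h'
  obtain ⟨-, C, hC⟩ := b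
  obtain ⟨-, C', hC'⟩ := b'
  have c0 : 0 ≤ C := (abs_nonneg _).trans (hC 0)
  have c0' : 0 ≤ C' := (abs_nonneg _).trans (hC' 0)
  refine ⟨C * L' + L * C', by positivity, fun x y => ?_⟩
  have e : φ x * ψ x - φ y * ψ y = φ x * (ψ x - ψ y) + (φ x - φ y) * ψ y := by ring
  rw [e]
  refine (abs_add_le _ _).trans ?_
  rw [abs_mul, abs_mul]
  calc _ ≤ C * (L' * ‖x - y‖) + (L * ‖x - y‖) * C' := by
        gcongr
        · exact hC x
        · exact h1' x y
        · exact h1 x y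
        · exact hC' y
    _ = _ := by ring

lemma C12.lip {I : Set ℝ} {u ut : ℝ → E n → ℝ} {Du D2 : Fin n → ℝ → E n → ℝ}
    (h : C12 I u ut Du D2) {s : ℝ} (hs : s ∈ I) : Lip (u s) := by
  obtain ⟨C, hC⟩ := h.bound
  have hC0 : 0 ≤ C := (abs_nonneg _).trans (hC s hs 0).1
  refine ⟨C * ∑ _i : Fin n, 1, by positivity, fun x y => ?_⟩
  have hd : ∀ t : ℝ, HasDerivAt (fun t : ℝ => y + t • (x - y)) (x - y) t := by
    intro t
    simpa using ((hasDerivAt_id t).smul_const (x - y)).const_add y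
  have key := Convex.norm_image_sub_le_of_norm_hasDerivWithin_le (s := Set.univ) (x := (0 : ℝ))
    (y := 1) (C := C * (∑ _i : Fin n, 1) * ‖x - y‖)
    (f := fun t => u s (y + t • (x - y)))
    (fun t _ => (h.curve (fun _ => s) _ 0 _ t hs (hasDerivAt_const _ _)
      (hd t)).hasDerivWithinAt) (fun t _ => by
        rw [mul_zero, zero_add]
        refine (norm_sum_le _ _).trans ?_
        rw [Finset.mul_sum, Finset.sum_mul]
        refine Finset.sum_le_sum fun i _ => ?_
        rw [norm_mul, mul_one]
        exact mul_le_mul ((hC s hs _).2.2 i).1 (PiLp.norm_apply_le _ _) (norm_nonneg _) hC0)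
      convex_univ (Set.mem_univ _) (Set.mem_univ _)
  simpa using key

lemma C12.TB {I : Set ℝ} {u ut : ℝ → E n → ℝ} {Du D2 : Fin n → ℝ → E n → ℝ}
    (h : C12 I u ut Du D2) {s : ℝ} (hs : s ∈ I) (hL : ∀ i, Lip (Du i s)) :
    TB (u s) (fun θ => WithLp.toLp 2 fun i => Du i s θ) := by
  obtain ⟨C, hC⟩ := h.bound
  choose L hL0 hL1 using hL
  have h1 : ∀ x y : E n, ‖(WithLp.toLp 2 fun i => Du i s x : E n) - WithLp.toLp 2 fun i => Du i s y‖ ≤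
      (∑ i, L i) * ‖x - y‖ := fun x y => by
    refine (norm_le_sum_abs _).trans ?_
    rw [Finset.sum_mul]
    exact Finset.sum_le_sum fun i _ => hL1 i x y
  have hΛ : 0 ≤ ∑ i, L i := Finset.sum_nonneg fun i _ => hL0 i
  refine ⟨⟨∑ i, L i, hΛ, h1, fun x y => ?_⟩, ⟨C, fun x => (hC s hs x).1⟩, ⟨∑ _i : Fin n, C, fun x =>
    (norm_le_sum_abs _).trans (Finset.sum_le_sum fun i _ => ((hC s hs x).2.2 i).1)⟩⟩
  set G : E n → E n := fun θ => WithLp.toLp 2 fun i => Du i s θ with hG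
  have hd : ∀ t : ℝ, HasDerivAt (fun t : ℝ => x + t • (y - x)) (y - x) t := by
    intro t
    simpa using ((hasDerivAt_id t).smul_const (y - x)).const_add x
  have key := Convex.norm_image_sub_le_of_norm_hasDerivWithin_le (s := Set.Icc 0 1) (x := (0 : ℝ))
    (y := 1) (C := (∑ i, L i) * ‖y - x‖ ^ 2)
    (f := fun t => u s (x + t • (y - x)) - t * inner ℝ (G x) (y - x))
    (f' := fun t => inner ℝ (G (x + t • (y - x)) - G x) (y - x))
    (fun t _ => by
      have e1 := h.curve (fun _ => s) _ 0 _ t hs (hasDerivAt_const _ _) (hd t)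
      have e2 := e1.sub ((hasDerivAt_id t).mul_const (inner ℝ (G x) (y - x)))
      refine HasDerivAt.hasDerivWithinAt ?_
      convert! e2 using 1
      rw [inner_sub_left, mul_zero, zero_add, one_mul, inner_eq_sum (G (x + t • (y - x)))])
    (fun t ht => by
      refine (abs_real_inner_le_norm _ _).trans ?_
      have e1 := h1 (x + t • (y - x)) x
      rw [add_sub_cancel_left, norm_smul, norm_of_nonneg ht.1] at e1
      calc _ ≤ ((∑ i, L i) * (t * ‖y - x‖)) * ‖y - x‖ := by gcongr
        _ ≤ ((∑ i, L i) * (1 * ‖y - x‖)) * ‖y - x‖ := by gcongr; exact ht.2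
        _ = _ := by ring)
    (convex_Icc 0 1) (by simp) (by simp)
  simpa [sub_right_comm] using key

variable (m : Measure (E n)) [CptMeas m]

lemma Lip_Q {g : E n → ℝ} (hg : Continuous g) (s : ℝ) : Lip (Q m g s) := (C12_Q m hg).lip (Set.mem_univ s)

lemma Lip_cv {f g : E n → ℝ} (hf : Continuous f) (hg : Continuous g) (s : ℝ) : Lip (cv m f g s) := by
  obtain ⟨ut, D2, h, -⟩ := exists_C12_cv m hf hg
  exact h.lip (Set.mem_univ s)

lemma TB_Q {g : E n → ℝ} (hg : Continuous g) (s : ℝ) : TB (Q m g s) (wv m g s) :=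
  (C12_Q m hg).TB (Set.mem_univ s) fun i => Lip_cv m hg (continuous_coord i) s

lemma TB_cv {f g : E n → ℝ} (hf : Continuous f) (hg : Continuous g) (s : ℝ) :
    TB (cv m f g s) (fun θ => WithLp.toLp 2 fun j => c3 m f g (fun x => x j) s θ) := by
  obtain ⟨ut, D2, h, -⟩ := exists_C12_cv m hf hg
  refine h.TB (Set.mem_univ s) fun i => ?_
  have hfg : Continuous fun x => f x * g x := hf.mul hg
  have ci := continuous_coord (n := n) i
  exact (Lip_cv m hfg ci s).sub (((Lip_cv m hf ci s).mul (Lip_Q m hg s) (BC_cv m hf ci s)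
    (BC_Q m hg s)).add ((Lip_Q m hf s).mul (Lip_cv m hg ci s) (BC_Q m hf s) (BC_cv m hg ci s)))

end IsoGauge

namespace IsoGauge
open scoped Topology
set_option linter.unusedSectionVars false
variable {n : ℕ}
variable (m : Measure (E n)) [CptMeas m]

/-! ### The spectral radius of the localization operator -/

section
variable {f g : E n → ℝ}

lemma I_add (hf : Continuous f) (hg : Continuous g) :
    ∫ x, (f x + g x) ∂m = (∫ x, f x ∂m) + ∫ x, g x ∂m :=
  integral_add (cpt_integrable m hf) (cpt_integrable m hg)

lemma I_sub (hf : Continuous f) (hg : Continuous g) :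
    ∫ x, (f x - g x) ∂m = (∫ x, f x ∂m) - ∫ x, g x ∂m :=
  integral_sub (cpt_integrable m hf) (cpt_integrable m hg)

lemma I_mono (hf : Continuous f) (hg : Continuous g) (h : ∀ x, f x ≤ g x) :
    ∫ x, f x ∂m ≤ ∫ x, g x ∂m :=
  integral_mono (cpt_integrable m hf) (cpt_integrable m hg) h

lemma I_const (c : ℝ) : ∫ _x : E n, c ∂m = c := by
  haveI : IsProbabilityMeasure m := CptMeas.prob
  simp

lemma I_sum {ι : Type*} (T : Finset ι) {f : ι → E n → ℝ} (hf : ∀ i ∈ T, Continuous (f i)) :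
    ∫ x, (∑ i ∈ T, f i x) ∂m = ∑ i ∈ T, ∫ x, f i x ∂m :=
  integral_finsetSum _ fun i hi => cpt_integrable m (hf i hi)

end

/-- `E (Q_s g)²`. -/
def Fq (g : E n → ℝ) (s : ℝ) : ℝ := Es m s fun θ => Q m g s θ ^ 2

/-- The values of `E (Q_s g)²` for centred `g` in the unit ball of `L²(m)`. -/
def Fset (s : ℝ) : Set ℝ := {F | ∃ g : E n → ℝ, Continuous g ∧ ∫ x, g x ∂m = 0 ∧ ∫ x, g x ^ 2 ∂m ≤ 1 ∧
  F = Fq m g s}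

/-- The squared norm of `Q_s` on centred functions. -/
def rho (s : ℝ) : ℝ := sSup (Fset m s)

variable {g : E n → ℝ} {s : ℝ}

lemma Fq_le (hg : Continuous g) (hs : 0 ≤ s) : Fq m g s ≤ ∫ x, g x ^ 2 ∂m := by
  have h1 := Es_cv m hg hs
  have h2 := Es_nonneg m (fun θ => cv_self_nonneg m hg s θ) s
  unfold Fq
  linarith

lemma Fq_nonneg (g : E n → ℝ) (s : ℝ) : 0 ≤ Fq m g s := Es_nonneg m (fun _ => sq_nonneg _) s

lemma Fset_bdd (hs : 0 ≤ s) : BddAbove (Fset m s) := by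
  refine ⟨1, ?_⟩
  rintro F ⟨g, hg, -, h1, rfl⟩
  exact (Fq_le m hg hs).trans h1

lemma Fset_zero : (0 : ℝ) ∈ Fset m s := by
  refine ⟨fun _ => 0, continuous_const, by simp, by simp, ?_⟩
  unfold Fq
  simp only [Q_const]
  rw [Es_const]; simp

lemma rho_nonneg (hs : 0 ≤ s) : 0 ≤ rho m s := le_csSup (Fset_bdd m hs) (Fset_zero m)

lemma rho_le_one (hs : 0 ≤ s) : rho m s ≤ 1 := by
  refine csSup_le ⟨0, Fset_zero m⟩ ?_
  rintro F ⟨g, hg, -, h1, rfl⟩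
  exact (Fq_le m hg hs).trans h1

lemma Fq_const_mul (c : ℝ) (g : E n → ℝ) (s : ℝ) : Fq m (fun x => c * g x) s = c ^ 2 * Fq m g s := by
  unfold Fq
  simp only [Q_const_mul, mul_pow]
  rw [Es_const_mul]

lemma Fq_le_rho (hg : Continuous g) (h0 : ∫ x, g x ∂m = 0) (hs : 0 ≤ s) :
    Fq m g s ≤ rho m s * ∫ x, g x ^ 2 ∂m := by
  set V := ∫ x, g x ^ 2 ∂m with hV
  have V0 : 0 ≤ V := integral_nonneg fun x => sq_nonneg _
  rcases V0.eq_or_lt with hz | hz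
  · have := Fq_le m hg hs
    rw [← hz, mul_zero]; linarith
  · have h1 : Fq m (fun x => (√V)⁻¹ * g x) s ∈ Fset m s := by
      refine ⟨_, by fun_prop, ?_, ?_, rfl⟩
      · rw [integral_const_mul, h0, mul_zero]
      · simp only [mul_pow]
        rw [integral_const_mul, inv_pow, Real.sq_sqrt V0, ← hV, inv_mul_cancel₀ hz.ne']
    have h2 := le_csSup (Fset_bdd m hs) h1
    rw [Fq_const_mul, inv_pow, Real.sq_sqrt V0, inv_mul_le_iff₀ hz] at h2
    rw [mul_comm]; exact h2

/-- A spectral gap for `m` from the norm of `Q_s`. -/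
lemma gap {t : ℝ} (ht : 0 ≤ t) (H : SLC m t) {G : E n → E n} (hT : Tst g G) (hs : 0 < s) :
    s * (1 - rho m s) * ((∫ x, g x ^ 2 ∂m) - (∫ x, g x ∂m) ^ 2) ≤ ∫ x, ‖G x‖ ^ 2 ∂m := by
  have hg := hT.cont
  set c := ∫ x, g x ∂m with hc
  have hT' : Tst (fun x => g x + -c) (fun x => G x + 0) := hT.add (Tst.const (-c))
  simp only [add_zero] at hT'
  have hg' : Continuous fun x => g x + -c := hT'.cont
  have h1 := var_decay m ht H hT' hs
  have h0 : ∫ x, (g x + -c) ∂m = 0 := by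
    rw [I_add m hg continuous_const, I_const]; simp [hc]
  have h2 := Fq_le_rho m hg' h0 hs.le
  have h3 : ∫ x, (g x + -c) ^ 2 ∂m = (∫ x, g x ^ 2 ∂m) - c ^ 2 := by
    have e : ∀ x, (g x + -c) ^ 2 = g x ^ 2 - (2 * c * g x - c ^ 2) := fun x => by ring
    simp only [e]
    rw [I_sub m (by fun_prop) (by fun_prop), I_sub m (by fun_prop) (by fun_prop), integral_const_mul, I_const,
      ← hc]
    ring
  have hD : 0 ≤ ∫ x, ‖G x‖ ^ 2 ∂m := integral_nonneg fun _ => by positivity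
  have h4 : (∫ x, ‖G x‖ ^ 2 ∂m) / (t + s) ≤ (∫ x, ‖G x‖ ^ 2 ∂m) / s := by
    gcongr; linarith
  rw [h3] at h1 h2
  have h5 : (1 - rho m s) * ((∫ x, g x ^ 2 ∂m) - c ^ 2) ≤ (∫ x, ‖G x‖ ^ 2 ∂m) / s := by
    unfold Fq at h2
    linarith
  rw [le_div_iff₀ hs] at h5
  linarith

lemma Pg_sub_const {φ : E n → ℝ} (h : BC φ) (c : ℝ) (x : E n) :
    Pg s (fun θ => φ θ - c) x = Pg s φ x - c := by
  unfold Pg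
  rw [integral_sub (Pg_int h s x) (integrable_const _)]
  simp

lemma Es_sub_const_sq {φ : E n → ℝ} (h : BC φ) (c : ℝ) (hc : Es m s φ = c) :
    Es m s (fun θ => (φ θ - c) ^ 2) = Es m s (fun θ => φ θ ^ 2) - c ^ 2 := by
  have e : ∀ x, (φ x - c) ^ 2 = φ x ^ 2 - (2 * c * φ x - c ^ 2) := fun x => by ring
  simp only [e]
  rw [Es_sub m (h.pow 2) ((h.const_mul _).sub (BC.const _)), Es_sub m (h.const_mul _) (BC.const _), Es_const_mul,
    Es_const, hc]
  ring

/-- The adjoint of `Q_s` has the same norm. -/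
lemma adj_le {φ : E n → ℝ} (h : BC φ) (hs : 0 ≤ s) (hρ : 0 < rho m s) :
    ∫ x, Pg s φ x ^ 2 ∂m ≤ rho m s * Es m s (fun θ => φ θ ^ 2) + (1 - rho m s) * Es m s φ ^ 2 := by
  set c := Es m s φ with hc
  have hψ : BC fun θ => φ θ - c := h.sub (BC.const c)
  set p := Pg s fun θ => φ θ - c with hp
  have bp : BC p := BC_Pg hψ s
  have e0 : ∀ x, p x = Pg s φ x - c := fun x => Pg_sub_const h c x
  have hP := BC_Pg h s
  have h0 : ∫ x, p x ∂m = 0 := by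
    simp only [e0]
    rw [I_sub m hP.1 continuous_const, I_const, ← Es_eq m h s, ← hc, sub_self]
  have h1 : ∫ x, p x ^ 2 ∂m = (∫ x, Pg s φ x ^ 2 ∂m) - c ^ 2 := by
    have e : ∀ x, p x ^ 2 = Pg s φ x ^ 2 - (2 * c * Pg s φ x - c ^ 2) := fun x => by rw [e0]; ring
    simp only [e]
    have := hP.1
    rw [I_sub m (by fun_prop) (by fun_prop), I_sub m (by fun_prop) (by fun_prop), integral_const_mul, I_const,
      ← Es_eq m h s, ← hc]
    ring
  set V := ∫ x, p x ^ 2 ∂m with hV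
  have h2 : V = Es m s (fun θ => Q m p s θ * (φ θ - c)) := by
    rw [← Es_QP m bp.1 hψ hs, hV]
    simp only [pow_two]
    rfl
  have h3 := Fq_le_rho m bp.1 h0 hs
  have h4 : 0 ≤ Es m s (fun θ => (Q m p s θ - rho m s * (φ θ - c)) ^ 2) := Es_nonneg m (fun _ => sq_nonneg _) s
  have e : ∀ θ, (Q m p s θ - rho m s * (φ θ - c)) ^ 2 = Q m p s θ ^ 2 -
      (2 * rho m s * (Q m p s θ * (φ θ - c)) - rho m s ^ 2 * (φ θ - c) ^ 2) := fun θ => by ring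
  simp only [e] at h4
  have bq := BC_Q m bp.1 s
  rw [Es_sub m (bq.pow 2) (((bq.mul hψ).const_mul _).sub ((hψ.pow 2).const_mul _)),
    Es_sub m ((bq.mul hψ).const_mul _) ((hψ.pow 2).const_mul _), Es_const_mul, Es_const_mul, ← h2,
    Es_sub_const_sq m h c hc.symm] at h4
  change 0 ≤ Fq m p s - _ at h4
  set W := Es m s fun θ => φ θ ^ 2
  have h5 : rho m s * V ≤ rho m s * (rho m s * (W - c ^ 2)) := by nlinarith
  have h6 := le_of_mul_le_mul_left h5 hρ
  linarith

end IsoGauge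

namespace IsoGauge
open scoped Topology
set_option linter.unusedSectionVars false
variable {n : ℕ}

lemma Pg_add {φ ψ : E n → ℝ} (h : BC φ) (h' : BC ψ) (s : ℝ) (x : E n) :
    Pg s (fun θ => φ θ + ψ θ) x = Pg s φ x + Pg s ψ x := integral_add (Pg_int h s x) (Pg_int h' s x)

variable (m : Measure (E n)) [CptMeas m]

/-! ### Near-extremal functions -/

lemma cv_const_mul_left (c : ℝ) {f g : E n → ℝ} (s : ℝ) (θ : E n) :
    cv m (fun x => c * f x) g s θ = c * cv m f g s θ := by
  unfold cv
  simp only [mul_assoc]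
  rw [Q_const_mul, Q_const_mul]; ring

/-- Poincaré-free bound of the gradient of `Q g` on a compactly supported measure. -/
lemma wv_sq_le {g : E n → ℝ} (hg : Continuous g) (s : ℝ) (θ : E n) :
    ‖wv m g s θ‖ ^ 2 ≤ rad m ^ 2 * Q m (fun x => g x ^ 2) s θ := by
  set w := wv m g s θ with hw
  have hi : Continuous fun x : E n => inner ℝ w x := continuous_inner_left w
  have h1 : cv m g (fun x => inner ℝ w x) s θ = ‖w‖ ^ 2 := by
    rw [cv_inner_wv m hg, ← hw, real_inner_self_eq_norm_sq]
  have h2 := cv_cs m hg hi s θ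
  have h3 := cv_self_le m hg 0 s θ
  have h4 := cv_self_le m hi 0 s θ
  simp only [sub_zero] at h3 h4
  have h5 : Q m (fun x => (inner ℝ w x) ^ 2) s θ ≤ rad m ^ 2 * ‖w‖ ^ 2 := by
    have := Q_mono m (f := fun x => (inner ℝ w x) ^ 2) (g := fun _ => rad m ^ 2 * ‖w‖ ^ 2) (by fun_prop)
      continuous_const (fun x hx => by
        have e := abs_real_inner_le_norm w x
        calc (inner ℝ w x) ^ 2 = |inner ℝ w x| ^ 2 := (sq_abs _).symm
          _ ≤ (‖w‖ * ‖x‖) ^ 2 := by gcongr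
          _ ≤ (‖w‖ * rad m) ^ 2 := by gcongr
          _ = _ := by ring) s θ
    rwa [Q_const] at this
  rw [h1] at h2
  rcases (norm_nonneg w).eq_or_lt with hz | hz
  · have : 0 ≤ Q m (fun x => g x ^ 2) s θ := Q_nonneg m (fun x => sq_nonneg _) s θ
    rw [← hz, zero_pow two_ne_zero]
    positivity
  · have h6 : ‖w‖ ^ 2 * ‖w‖ ^ 2 ≤ (rad m ^ 2 * Q m (fun x => g x ^ 2) s θ) * ‖w‖ ^ 2 := by
      calc ‖w‖ ^ 2 * ‖w‖ ^ 2 = (‖w‖ ^ 2) ^ 2 := by ring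
        _ ≤ _ := h2
        _ ≤ Q m (fun x => g x ^ 2) s θ * (rad m ^ 2 * ‖w‖ ^ 2) := by
          apply mul_le_mul h3 (h4.trans h5) (cv_self_nonneg m hi s θ)
          exact Q_nonneg m (fun x => sq_nonneg _) s θ
        _ = _ := by ring
    exact le_of_mul_le_mul_right h6 (by positivity)

lemma bc_wv {g : E n → ℝ} (hg : Continuous g) (s : ℝ) (i : Fin n) : BC fun θ => wv m g s θ i :=
  BC_cv m hg (continuous_coord i) s

lemma continuous_PgV {G : E n → E n} (h : ∀ i, BC fun θ => G θ i) (s : ℝ) : Continuous (PgV s G) := by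
  unfold PgV
  exact (PiLp.continuous_toLp 2 _).comp (continuous_pi fun i => (BC_Pg (h i) s).1)

lemma norm_aux {v w z : E n} {ρ η : ℝ} (h0 : 0 ≤ ρ) (h1 : ρ ≤ 1) (hη : 0 < η) (h : v = w + ρ • z) :
    ρ ^ 2 * ‖z‖ ^ 2 ≤ ‖v‖ ^ 2 + (η * ‖z‖ ^ 2 + η⁻¹ * ‖w‖ ^ 2) := by
  rw [h, norm_add_sq_real, inner_smul_right, norm_smul, norm_of_nonneg h0, mul_pow]
  have h3 := (abs_le.1 (abs_real_inner_le_norm w z)).1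
  have h4 : 2 * (‖w‖ * ‖z‖) ≤ η * ‖z‖ ^ 2 + η⁻¹ * ‖w‖ ^ 2 := by
    have := sq_nonneg (η * ‖z‖ - ‖w‖)
    refine le_of_mul_le_mul_right (a := η) ?_ hη
    have e5 : (η * ‖z‖ ^ 2 + η⁻¹ * ‖w‖ ^ 2) * η = η ^ 2 * ‖z‖ ^ 2 + ‖w‖ ^ 2 := by
      field_simp
    rw [e5]; linarith
  have h5 : ρ * (‖w‖ * ‖z‖) ≤ ‖w‖ * ‖z‖ := mul_le_of_le_one_left (by positivity) h1
  have h6 := mul_le_mul_of_nonneg_left h3 h0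
  nlinarith [sq_nonneg ‖w‖]

set_option maxHeartbeats 1000000 in
/-- Almost extremal functions for `rho`: applying the adjoint of `Q_s` to `Q_s f`, for an almost optimal `f`,
gives a smooth centred `g` which is almost an eigenfunction of the composition, with Dirichlet energy controlled
from both sides. -/
lemma near {s ε : ℝ} (hs : 0 < s) (hε : 0 < ε) (hρ : ε < rho m s) : ∃ (g : E n → ℝ) (G : E n → E n),
    Tst g G ∧ ∫ x, g x ∂m = 0 ∧ ∫ x, g x ^ 2 ∂m ≤ 1 ∧ (rho m s - ε) ^ 2 ≤ ∫ x, g x ^ 2 ∂m ∧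
    ∫ x, ‖G x‖ ^ 2 ∂m ≤ s * (rho m s - (rho m s - ε) ^ 2) ∧
    rho m s * (rho m s - ε) ^ 2 - √ε ≤ Fq m g s ∧
    rho m s ^ 2 * ∫ x, ‖G x‖ ^ 2 ∂m ≤ s ^ 2 * (∫ x, ‖PgV s (wv m g s) x‖ ^ 2 ∂m) +
      √ε * (s + s ^ 2 * rad m ^ 2) := by
  set ρ := rho m s with hρd
  have ρ0 : 0 < ρ := hε.trans hρ
  have ρ1 : ρ ≤ 1 := rho_le_one m hs.le
  obtain ⟨F, ⟨g0, cg0, m0, v0, rfl⟩, hF⟩ := exists_lt_of_lt_csSup ⟨0, Fset_zero m⟩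
    (show ρ - ε < sSup (Fset m s) by change ρ - ε < ρ; linarith)
  set F := Fq m g0 s with hFd
  have hF1 : F ≤ ρ := by
    have := Fq_le_rho m cg0 m0 hs.le
    rw [← hρd, ← hFd] at this
    nlinarith
  have bq := BC_Q m cg0 s
  set g := Pg s (Q m g0 s) with hg
  have bg : BC g := BC_Pg bq s
  have cg := bg.1
  set G : E n → E n := fun x => s • PgV s (wv m g0 s) x with hG
  have hT : Tst g G := Tst_Pg (TB_Q m cg0 s) hs.le
  have cG : Continuous G := hT.cont_grad
  have e1 : Es m s (Q m g0 s) = 0 := by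
    have := Es_Q_eq m cg0 hs.le; rw [m0] at this; exact this
  have mg : ∫ x, g x ∂m = 0 := by rw [← e1, Es_eq m bq s]
  have a1 : ∫ x, g x ^ 2 ∂m ≤ ρ * F := by
    have := adj_le m bq hs.le ρ0
    rw [e1] at this
    simpa [hFd, Fq] using this
  have gF : ∫ x, g0 x * g x ∂m = F := by
    have := Es_QP m cg0 bq hs.le
    rw [this, hFd]; unfold Fq; simp only [pow_two]
  set a := ∫ x, g x ^ 2 ∂m with ha
  have a2 : F ^ 2 ≤ a := by
    -- expand `0 ≤ E (g - F g₀)²`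
    have h1 : 0 ≤ ∫ x, (g x - F * g0 x) ^ 2 ∂m := integral_nonneg fun x => sq_nonneg _
    have e : ∀ x, (g x - F * g0 x) ^ 2 = g x ^ 2 - (2 * F * (g0 x * g x) - F ^ 2 * g0 x ^ 2) := fun x => by ring
    simp only [e] at h1
    rw [I_sub m (by fun_prop) (by fun_prop), I_sub m (by fun_prop) (by fun_prop), integral_const_mul,
      integral_const_mul, gF, ← ha] at h1
    nlinarith [sq_nonneg F]
  have a3 : (ρ - ε) ^ 2 ≤ a := by
    refine le_trans ?_ a2
    gcongr
  have a4 : a ≤ 1 := by nlinarith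
  set k : E n → ℝ := fun x => g x - ρ * g0 x with hk
  have ck : Continuous k := by fun_prop
  have k2 : ∫ x, k x ^ 2 ∂m ≤ ε := by
    have e : ∀ x, k x ^ 2 = g x ^ 2 - (2 * ρ * (g0 x * g x) - ρ ^ 2 * g0 x ^ 2) := fun x => by
      simp only [hk]; ring
    simp only [e]
    rw [I_sub m (by fun_prop) (by fun_prop), I_sub m (by fun_prop) (by fun_prop), integral_const_mul,
      integral_const_mul, gF, ← ha]
    nlinarith
  have hD : ∫ x, ‖G x‖ ^ 2 ∂m ≤ s * (F - a) := by
    have h1 : ∀ x, ‖G x‖ ^ 2 ≤ s * (Pg s (fun θ => Q m g0 s θ ^ 2) x - g x ^ 2) := fun x => by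
      have := Pg_rev (TB_Q m cg0 s) hs.le x
      simp only [hG]
      rw [norm_smul, norm_of_nonneg hs.le, mul_pow]
      calc s ^ 2 * ‖PgV s (wv m g0 s) x‖ ^ 2 = s * (s * ‖PgV s (wv m g0 s) x‖ ^ 2) := by ring
        _ ≤ _ := by gcongr
    have c1 : Continuous fun x => Pg s (fun θ => Q m g0 s θ ^ 2) x := (BC_Pg (bq.pow 2) s).1
    refine (I_mono m (by fun_prop) (by fun_prop) h1).trans_eq ?_
    rw [integral_const_mul, I_sub m c1 (by fun_prop), ← Es_eq m (bq.pow 2) s]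
    rfl
  have hk2 := BC_Q m ck s
  -- `Q g = Q k + ρ Q g₀`, since `g = k + ρ g₀`
  have eQ : ∀ θ, Q m g s θ = Q m k s θ + ρ * Q m g0 s θ := fun θ => by
    have c2 : Continuous fun x => ρ * g0 x := by fun_prop
    rw [← Q_const_mul, ← Q_add m ck c2]
    congr 1; ext x; simp only [hk]; ring
  have ew : ∀ θ i, wv m g s θ i = wv m k s θ i + ρ * wv m g0 s θ i := fun θ i => by
    have c2 : Continuous fun x => ρ * g0 x := by fun_prop
    change cv m g _ s θ = cv m k _ s θ + ρ * cv m g0 _ s θ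
    rw [← cv_const_mul_left, ← cv_add_left m ck c2 (continuous_coord i)]
    congr 1; ext x; simp only [hk]; ring
  have eV : ∀ x, s • PgV s (wv m g s) x = s • PgV s (wv m k s) x + ρ • G x := fun x => by
    have : PgV s (wv m g s) x = PgV s (wv m k s) x + ρ • PgV s (wv m g0 s) x := by
      ext i
      change Pg s (fun θ => wv m g s θ i) x = Pg s (fun θ => wv m k s θ i) x +
        ρ * Pg s (fun θ => wv m g0 s θ i) x
      simp only [ew]
      rw [← Pg_const_mul, Pg_add (bc_wv m ck s i) ((bc_wv m cg0 s i).const_mul ρ)]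
    rw [this, smul_add, smul_comm]
  have c3 : Continuous fun x => PgV s (wv m k s) x := continuous_PgV (bc_wv m ck s) s
  have c4 : Continuous fun x => PgV s (wv m g s) x := continuous_PgV (bc_wv m cg s) s
  have W : ∫ x, ‖PgV s (wv m k s) x‖ ^ 2 ∂m ≤ rad m ^ 2 * ε := by
    have h1 : ∫ x, ‖PgV s (wv m k s) x‖ ^ 2 ∂m ≤ ∫ x, Pg s (fun θ => ‖wv m k s θ‖ ^ 2) x ∂m :=
      I_mono m (by fun_prop) (BC_Pg (BC_wsq m ck s) s).1 fun x => norm_PgV_sq_le (bc_wv m ck s) s x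
    rw [← Es_eq m (BC_wsq m ck s)] at h1
    have ck2 : Continuous fun x => k x ^ 2 := by fun_prop
    have h2 := Es_mono m (BC_wsq m ck s) ((BC_Q m ck2 s).const_mul (rad m ^ 2)) (fun θ => wv_sq_le m ck s θ) s
    rw [Es_const_mul, Es_Q_eq m ck2 hs.le] at h2
    calc _ ≤ _ := h1.trans h2
      _ ≤ _ := by gcongr
  have sε : 0 < √ε := Real.sqrt_pos.2 hε
  have sε2 : √ε * √ε = ε := Real.mul_self_sqrt hε.le
  refine ⟨g, G, hT, mg, a4, a3, hD.trans ?_, ?_, ?_⟩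
  · gcongr
  -- `E g (Q-adjoint Q g) = ρ E g² + E g · (adjoint Q k)`
  · have h1 : Fq m g s = ρ * a + ∫ x, g x * Pg s (Q m k s) x ∂m := by
      have e2 := Es_QP m cg (BC_Q m cg s) hs.le
      have e3 : Fq m g s = Es m s (fun θ => Q m g s θ * Q m g s θ) := by unfold Fq; simp only [pow_two]
      rw [e3, ← e2, ha, ← integral_const_mul]
      have cP := (BC_Pg hk2 s).1
      rw [← I_add m (by fun_prop) (by fun_prop)]
      congr 1; ext x
      have : Pg s (fun θ => Q m g s θ) x = Pg s (Q m k s) x + ρ * g x := by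
        simp only [eQ]
        rw [Pg_add hk2 (bq.const_mul ρ), Pg_const_mul]
      rw [this]; ring
    have h2 : ∫ x, Pg s (Q m k s) x ^ 2 ∂m ≤ ε := by
      have e2 := I_mono m (f := fun x => Pg s (Q m k s) x ^ 2) (by have := (BC_Pg hk2 s).1; fun_prop)
        (BC_Pg (hk2.pow 2) s).1 fun x => Pg_sq_le hk2 s x
      rw [← Es_eq m (hk2.pow 2)] at e2
      exact e2.trans ((Fq_le m ck hs.le).trans k2)
    have h3 : 0 ≤ ∫ x, (√ε * g x + Pg s (Q m k s) x) ^ 2 ∂m := integral_nonneg fun x => sq_nonneg _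
    have e : ∀ x, (√ε * g x + Pg s (Q m k s) x) ^ 2 = √ε ^ 2 * g x ^ 2 +
      (2 * √ε * (g x * Pg s (Q m k s) x) + Pg s (Q m k s) x ^ 2) := fun x => by ring
    simp only [e] at h3
    have cP := (BC_Pg hk2 s).1
    rw [I_add m (by fun_prop) (by fun_prop), I_add m (by fun_prop) (by fun_prop), integral_const_mul,
      integral_const_mul, ← ha, Real.sq_sqrt hε.le] at h3
    have h4 : 0 ≤ √ε * (√ε + ∫ x, g x * Pg s (Q m k s) x ∂m) := by nlinarith
    have h5 := nonneg_of_mul_nonneg_right h4 sε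
    rw [h1]
    nlinarith
  · have hp : ∀ x, ρ ^ 2 * ‖G x‖ ^ 2 ≤ s ^ 2 * ‖PgV s (wv m g s) x‖ ^ 2 +
        (√ε * ‖G x‖ ^ 2 + (√ε)⁻¹ * (s ^ 2 * ‖PgV s (wv m k s) x‖ ^ 2)) := fun x => by
      have := norm_aux ρ0.le ρ1 sε (eV x)
      simpa only [norm_smul, mul_pow, norm_eq_abs, sq_abs] using this
    have h1 := I_mono m (by fun_prop) (by fun_prop) hp
    rw [integral_const_mul, I_add m (by fun_prop) (by fun_prop), integral_const_mul,
      I_add m (by fun_prop) (by fun_prop), integral_const_mul, integral_const_mul, integral_const_mul] at h1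
    refine h1.trans ?_
    rw [mul_add (√ε)]
    have h2 : ∫ x, ‖G x‖ ^ 2 ∂m ≤ s := by
      refine hD.trans ?_
      have : F - a ≤ 1 := by nlinarith [sq_nonneg F]
      nlinarith
    have h3 : (√ε)⁻¹ * (s ^ 2 * ∫ x, ‖PgV s (wv m k s) x‖ ^ 2 ∂m) ≤ √ε * (s ^ 2 * rad m ^ 2) := by
      calc _ ≤ (√ε)⁻¹ * (s ^ 2 * (rad m ^ 2 * (√ε * √ε))) := by rw [sε2]; gcongr
        _ = _ := by field_simp
    gcongr

end IsoGauge

namespace IsoGauge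
open scoped Topology
set_option linter.unusedSectionVars false
variable {n : ℕ}
variable (m : Measure (E n)) [CptMeas m]

/-! ### The improved Lichnerowicz inequality -/

lemma cv_zero (f g : E n → ℝ) : cv m f g 0 0 = (∫ x, f x * g x ∂m) - (∫ x, f x ∂m) * ∫ x, g x ∂m := by
  unfold cv; simp only [Q_zero]

lemma cv_zero_self (f : E n → ℝ) : cv m f f 0 0 = (∫ x, f x ^ 2 ∂m) - (∫ x, f x ∂m) ^ 2 := by
  rw [cv_zero]; simp only [pow_two]

/-- The measure `m` satisfies the Poincaré inequality with spectral gap `δ`. -/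
def Gap (δ : ℝ) : Prop := ∀ (g : E n → ℝ) (G : E n → E n), Tst g G → δ * cv m g g 0 0 ≤ ∫ x, ‖G x‖ ^ 2 ∂m

variable {m} in
/-- The law of `r X + √r Z` inherits a Poincaré inequality from `m` and the Gaussian. -/
lemma Gap.flow_poincare {δ r : ℝ} (h : Gap m δ) (hr : 0 ≤ r) {φ : E n → ℝ} {G : E n → E n} (hT : TB φ G) (hδ : 0 ≤ δ) :
    δ * (Es m r (fun θ => φ θ ^ 2) - Es m r φ ^ 2) ≤ (r ^ 2 + r * δ) * Es m r (fun θ => ‖G θ‖ ^ 2) := by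
  have b := hT.bc
  have b1 := (BC_Pg b r).1
  have b2 := (BC_Pg (b.pow 2) r).1
  have b3 := (BC_Pg hT.bc_sq r).1
  have b4 := continuous_PgV hT.bc_coord r
  have h1 := h _ _ (Tst_Pg hT hr)
  rw [cv_zero_self, ← Es_eq m b] at h1
  have h2 : ∫ x, ‖r • PgV r G x‖ ^ 2 ∂m ≤ r ^ 2 * Es m r (fun θ => ‖G θ‖ ^ 2) := by
    rw [Es_eq m hT.bc_sq, ← integral_const_mul]
    refine I_mono m (by fun_prop) (by fun_prop) fun x => ?_
    rw [norm_smul, mul_pow, norm_eq_abs, sq_abs]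
    gcongr
    exact norm_PgV_sq_le hT.bc_coord r x
  have h3 := I_mono m (by fun_prop) (by fun_prop) fun x => Pg_poincare hT hr x
  rw [I_sub m (by fun_prop) (by fun_prop), integral_const_mul, ← Es_eq m (b.pow 2), ← Es_eq m hT.bc_sq] at h3
  have h4 := mul_le_mul_of_nonneg_left h3 hδ
  linarith

lemma sq_le_of_quad {a b c : ℝ} (h : ∀ q : ℝ, 0 ≤ a + 2 * b * q + c * q ^ 2) : b ^ 2 ≤ a * c := by
  have := discrim_le_zero (a := c) (b := 2 * b) (c := a) fun x => by linarith [h x]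
  unfold discrim at this
  linarith

variable {m} in
/-- The mean of the gradient is controlled by the covariance, up to the defect in the Poincaré inequality. -/
lemma Gap.mean {δ α : ℝ} (h : Gap m δ) (hδ : 0 ≤ δ)
    (hα : ∀ v : E n, cv m (fun x => inner ℝ v x) (fun x => inner ℝ v x) 0 0 ≤ α * ‖v‖ ^ 2)
    {f : E n → ℝ} {G : E n → E n} (hT : Tst f G) (hV : cv m f f 0 0 ≤ 1) {e : E n}
    (he : ∀ v, ∫ x, inner ℝ (G x) v ∂m = inner ℝ e v) {A : ℝ}
    (hA : (∫ x, ‖G x‖ ^ 2 ∂m) - δ * cv m f f 0 0 ≤ A) (hα0 : 0 ≤ α) : ‖e‖ ≤ δ * √α + √A := by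
  have cf := hT.cont
  have cG := hT.cont_grad
  have ci : Continuous fun x : E n => inner ℝ e x := continuous_inner_left e
  set V := cv m f f 0 0
  set C := cv m f (fun x => inner ℝ e x) 0 0 with hC
  set Vl := cv m (fun x => inner ℝ e x) (fun x => inner ℝ e x) 0 0 with hVl
  set D := ∫ x, ‖G x‖ ^ 2 ∂m with hD
  have q : ∀ q : ℝ, 0 ≤ (D - δ * V) + 2 * (‖e‖ ^ 2 - δ * C) * q + (‖e‖ ^ 2 - δ * Vl) * q ^ 2 := fun q => by
    have h1 := h _ _ (hT.add ((Tst.linear e).const_mul q))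
    have c2 : Continuous fun x : E n => q * inner ℝ e x := by fun_prop
    have c3 : Continuous fun x : E n => f x + q * inner ℝ e x := by fun_prop
    rw [cv_add_left m cf c2 c3, cv_const_mul_left, cv_comm m f, cv_comm m (fun x => inner ℝ e x),
      cv_add_left m cf c2 cf, cv_add_left m cf c2 ci, cv_const_mul_left, cv_const_mul_left,
      cv_comm m (fun x => inner ℝ e x) f] at h1
    have h2 : ∫ x, ‖G x + q • e‖ ^ 2 ∂m = D + (2 * q * ‖e‖ ^ 2 + q ^ 2 * ‖e‖ ^ 2) := by
      have e1 : ∀ x, ‖G x + q • e‖ ^ 2 = ‖G x‖ ^ 2 + (2 * q * inner ℝ (G x) e + q ^ 2 * ‖e‖ ^ 2) := fun x => by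
        rw [norm_add_sq_real, inner_smul_right, norm_smul, mul_pow, norm_eq_abs, sq_abs]; ring
      simp only [e1]
      rw [I_add m (by fun_prop) (by fun_prop), I_add m (by fun_prop) (by fun_prop), integral_const_mul, he,
        I_const, real_inner_self_eq_norm_sq]
    rw [h2] at h1
    linarith
  have h1 := sq_le_of_quad q
  have Vl0 : 0 ≤ Vl := cv_self_nonneg m ci 0 0
  have D0 : 0 ≤ D - δ * V := by simpa using q 0
  have h2 : (‖e‖ ^ 2 - δ * C) ^ 2 ≤ (√A * ‖e‖) ^ 2 := by
    rw [mul_pow, Real.sq_sqrt (D0.trans hA)]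
    refine h1.trans ?_
    have : ‖e‖ ^ 2 - δ * Vl ≤ ‖e‖ ^ 2 := by nlinarith
    calc _ ≤ (D - δ * V) * ‖e‖ ^ 2 := by gcongr
      _ ≤ _ := by gcongr
  have h3 := (abs_le_of_sq_le_sq' h2 (by positivity)).2
  have h4 : C ^ 2 ≤ (√α * ‖e‖) ^ 2 := by
    rw [mul_pow, Real.sq_sqrt hα0]
    refine (cv_cs m cf ci 0 0).trans ?_
    calc _ ≤ 1 * (α * ‖e‖ ^ 2) := mul_le_mul hV (hα e) Vl0 zero_le_one
      _ = _ := one_mul _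
  have h5 := (abs_le_of_sq_le_sq' h4 (by positivity)).2
  have h6 : ‖e‖ * ‖e‖ ≤ (δ * √α + √A) * ‖e‖ := by nlinarith
  rcases (norm_nonneg e).eq_or_lt with hz | hz
  · rw [← hz]; positivity
  · exact le_of_mul_le_mul_right h6 hz

/-- `|E_r w_r|²`. -/
def mw (g : E n → ℝ) (r : ℝ) : ℝ := ∑ i, Es m r (fun θ => wv m g r θ i) ^ 2

lemma Fq_mono {g : E n → ℝ} (hg : Continuous g) {s r : ℝ} (hs : 0 < s) (hr : s ≤ r) : Fq m g s ≤ Fq m g r :=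
  monotoneOn_of_hasDerivAt (f := Fq m g) (fun _ h => hasDerivAt_F m hg h)
    (fun r _ => Es_nonneg m (fun _ => by positivity) r) hs (hs.trans_le hr) hr

/-- For an almost extremal `g` the mean of `∇Q_r g` is small, by `Gap.mean` and the monotonicity of the flow. -/
lemma mw_le {t s r δ α b : ℝ} (ht : 0 ≤ t) (H : SLC m t) (hs : 0 < s) (hr : s ≤ r) (hδ : 0 ≤ δ) (h : Gap m δ)
    (hα0 : 0 ≤ α) (hα : ∀ v : E n, cv m (fun x => inner ℝ v x) (fun x => inner ℝ v x) 0 0 ≤ α * ‖v‖ ^ 2)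
    {g : E n → ℝ} {G : E n → E n} (hT : Tst g G) (g0 : ∫ x, g x ∂m = 0) (g1 : ∫ x, g x ^ 2 ∂m ≤ 1)
    (hb : 0 ≤ b) (hb' : b ≤ Fq m g s) {D : ℝ} (hD : ∫ x, ‖G x‖ ^ 2 ∂m ≤ D) :
    r ^ 2 * mw m g r ≤ (δ * √α + √(D - δ * b ^ 2)) ^ 2 := by
  have hr0 : 0 < r := hs.trans_le hr
  have cg := hT.cont
  have bq := BC_Q m cg r
  set f := Pg r (Q m g r) with hf
  have cf : Continuous f := (BC_Pg bq r).1
  have hTf : Tst f (fun x => r • PgV r (wv m g r) x) := Tst_Pg (TB_Q m cg r) hr0.le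
  have f0 : ∫ x, f x ∂m = 0 := by
    rw [hf, ← Es_eq m bq, ← g0]; exact Es_Q_eq m cg hr0.le
  have hVf : cv m f f 0 0 = ∫ x, f x ^ 2 ∂m := by rw [cv_zero_self, f0]; ring
  have V1 : ∫ x, f x ^ 2 ∂m ≤ 1 := by
    refine (I_mono m (f := fun x => f x ^ 2) (by fun_prop) (BC_Pg (bq.pow 2) r).1 fun x => Pg_sq_le bq r x).trans ?_
    rw [← Es_eq m (bq.pow 2)]
    exact (Fq_le m cg hr0.le).trans g1
  have gf : ∫ x, g x * f x ∂m = Fq m g r := by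
    have := Es_QP m cg bq hr0.le
    rw [this]; unfold Fq; simp only [pow_two]
  have V2 : b ^ 2 ≤ ∫ x, f x ^ 2 ∂m := by
    have h1 : 0 ≤ ∫ x, (f x - b * g x) ^ 2 ∂m := integral_nonneg fun x => sq_nonneg _
    have e : ∀ x, (f x - b * g x) ^ 2 = f x ^ 2 - (2 * b * (g x * f x) - b ^ 2 * g x ^ 2) := fun x => by ring
    simp only [e] at h1
    rw [I_sub m (by fun_prop) (by fun_prop), I_sub m (by fun_prop) (by fun_prop), integral_const_mul,
      integral_const_mul, gf] at h1
    have := Fq_mono m cg hs hr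
    nlinarith [sq_nonneg b]
  have b4 : Continuous fun x => PgV r (wv m g r) x := continuous_PgV (bc_wv m cg r) r
  have hG : ∫ x, ‖r • PgV r (wv m g r) x‖ ^ 2 ∂m ≤ D := by
    refine le_trans ?_ ((yfl_le m ht H hT hr0).trans hD)
    have : ∫ x, ‖r • PgV r (wv m g r) x‖ ^ 2 ∂m ≤ r ^ 2 * Es m r (fun θ => ‖wv m g r θ‖ ^ 2) := by
      rw [Es_eq m (BC_wsq m cg r), ← integral_const_mul]
      have b3 := (BC_Pg (BC_wsq m cg r) r).1
      refine I_mono m (by fun_prop) (by fun_prop) fun x => ?_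
      rw [norm_smul, mul_pow, norm_eq_abs, sq_abs]
      gcongr
      exact norm_PgV_sq_le (bc_wv m cg r) r x
    refine this.trans ?_
    unfold yfl
    have e0 : 0 ≤ Es m r (fun θ => ‖wv m g r θ‖ ^ 2) := Es_nonneg m (fun _ => by positivity) r
    gcongr
    linarith
  set e : E n := r • WithLp.toLp 2 fun i => Es m r (fun θ => wv m g r θ i) with he
  have h1 := h.mean hδ hα hTf (hVf.trans_le V1) (e := e) (fun v => by
    have e1 : ∀ x, inner ℝ (r • PgV r (wv m g r) x) v = ∑ i, r * v i * Pg r (fun θ => wv m g r θ i) x := fun x => by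
      rw [inner_eq_sum]
      refine Finset.sum_congr rfl fun i _ => ?_
      change r * Pg r (fun θ => wv m g r θ i) x * v i = _
      ring
    simp only [e1]
    rw [I_sum m _ fun i _ => by have := (BC_Pg (bc_wv m cg r i) r).1; fun_prop, inner_eq_sum]
    refine Finset.sum_congr rfl fun i _ => ?_
    rw [integral_const_mul, ← Es_eq m (bc_wv m cg r i)]
    change _ = r * Es m r (fun θ => wv m g r θ i) * v i
    ring) (A := D - δ * b ^ 2) (by rw [hVf]; nlinarith) hα0
  have h2 : r ^ 2 * mw m g r = ‖e‖ ^ 2 := by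
    rw [he, norm_smul, mul_pow, norm_eq_abs, sq_abs, norm_sq_eq_sum]
    rfl
  rw [h2]
  gcongr

/-- Quantitative growth of the energy: the Hessian term in `hasDerivAt_y` is bounded below by the Poincaré
inequality for `∇Q_r g`, up to its mean. -/
lemma y_growth {t s δ es : ℝ} (ht : 0 ≤ t) (H : SLC m t) (hs : 0 < s) (hδ : 0 ≤ δ) (h : Gap m δ)
    {g : E n → ℝ} {G : E n → E n} (hT : Tst g G) (he : ∀ r, s ≤ r → r ^ 2 * mw m g r ≤ es) (hes : 0 ≤ es) :
    yfl m g t s * (s + 2 * δ) ≤ (∫ x, ‖G x‖ ^ 2 ∂m) * (s + δ) + δ * ((1 + t / s) ^ 2 * es) := by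
  have cg := hT.cont
  set D := ∫ x, ‖G x‖ ^ 2 ∂m
  set ess := (1 + t / s) ^ 2 * es with hess
  have hess0 : 0 ≤ ess := by positivity
  have hyD : yfl m g t s ≤ D := yfl_le m ht H hT hs
  rcases lt_or_ge (yfl m g t s) ess with hlt | hge
  · nlinarith
  set c := (yfl m g t s - ess) * (δ * s / (s + δ)) with hc
  have c0 : 0 ≤ c := mul_nonneg (by linarith) (by positivity)
  have hd := fun (r : ℝ) (hr : 0 < r) => hasDerivAt_y m ht H cg hr
  choose! y' hy1 hy2 using hd
  have hy'0 : ∀ r, 0 < r → 0 ≤ y' r := fun r hr => le_trans (mul_nonneg (by positivity)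
    (Es_nonneg m (fun θ => hess2_nonneg m g r θ) r)) (hy2 r hr)
  have ymono := y_mono m ht H cg
  have key : ∀ r, s ≤ r → c / r ^ 2 ≤ y' r := by
    intro r hr
    have hr0 : 0 < r := hs.trans_le hr
    refine le_trans ?_ (hy2 r hr0)
    have h1 : δ * (Es m r (fun θ => ‖wv m g r θ‖ ^ 2) - mw m g r) ≤
        (r ^ 2 + r * δ) * Es m r (fun θ => hess2 m g r θ) := by
      simp only [norm_wv_sq, hess2]
      rw [Es_sum m _ fun i _ => (BC_cv m cg (continuous_coord i) r).pow 2,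
        Es_sum m _ fun i _ => BC.sum _ fun j _ => (BC_c3 m cg (continuous_coord i) (continuous_coord j) r).pow 2]
      unfold mw
      rw [← Finset.sum_sub_distrib, Finset.mul_sum, Finset.mul_sum]
      refine Finset.sum_le_sum fun i _ => ?_
      have := h.flow_poincare hr0.le (TB_cv m cg (continuous_coord i) r) hδ
      simp only [norm_sq_eq_sum] at this
      exact this
    set Ew := Es m r (fun θ => ‖wv m g r θ‖ ^ 2) with hEw
    set Eh := Es m r (fun θ => hess2 m g r θ) with hEh
    have h2 : yfl m g t s ≤ (t + r) ^ 2 * Ew := ymono hs hr0 hr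
    have h3 : (t + r) ^ 2 * mw m g r ≤ ess := by
      have e1 : (t + r) ^ 2 * mw m g r = (1 + t / r) ^ 2 * (r ^ 2 * mw m g r) := by
        field_simp; ring
      rw [e1, hess]
      have mw0 : 0 ≤ mw m g r := Finset.sum_nonneg fun _ _ => sq_nonneg _
      gcongr
      exact he r hr
    have h4 : δ * (yfl m g t s - ess) ≤ (r ^ 2 + r * δ) * ((t + r) ^ 2 * Eh) := by
      have : 0 ≤ (t + r) ^ 2 := by positivity
      nlinarith [mul_le_mul_of_nonneg_left h1 this]
    have h5 : (r ^ 2 + r * δ) * s ≤ r ^ 2 * (s + δ) := by nlinarith [mul_nonneg hr0.le hδ]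
    have hEh0 : 0 ≤ (t + r) ^ 2 * Eh := mul_nonneg (by positivity)
      (Es_nonneg m (fun θ => hess2_nonneg m g r θ) r)
    rw [div_le_iff₀ (by positivity), hc, ← mul_div_assoc, div_le_iff₀ (by positivity)]
    have h6 := mul_le_mul_of_nonneg_right h5 hEh0
    have h7 := mul_le_mul_of_nonneg_left h4 hs.le
    linarith
  have mono2 : MonotoneOn (fun r => yfl m g t r + c / r) (Set.Ici s) := by
    have hder : ∀ r, s ≤ r → HasDerivAt (fun r => yfl m g t r + c / r) (y' r - c / r ^ 2) r := by
      intro r hr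
      have hr0 : 0 < r := hs.trans_le hr
      have e1 := (hy1 r hr0).add ((hasDerivAt_inv hr0.ne').const_mul c)
      convert! e1 using 1
      field_simp
      ring
    refine monotoneOn_of_deriv_nonneg (convex_Ici s) (fun r hr => (hder r hr).continuousAt.continuousWithinAt)
      (fun r hr => ?_) fun r hr => ?_
    · exact (hder r (interior_subset hr)).differentiableAt.differentiableWithinAt
    · rw [(hder r (interior_subset hr)).deriv]
      linarith [key r (interior_subset hr)]
  have lim : Filter.Tendsto (fun r : ℝ => D + c / r) Filter.atTop (𝓝 (D + 0)) :=
    tendsto_const_nhds.add (Filter.Tendsto.const_div_atTop Filter.tendsto_id c)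
  have h8 : yfl m g t s + c / s ≤ D + 0 := by
    refine ge_of_tendsto lim ?_
    filter_upwards [Filter.eventually_ge_atTop s] with r hr
    refine (mono2 (Set.self_mem_Ici) hr hr).trans ?_
    have := yfl_le m ht H hT (hs.trans_le hr)
    change yfl m g t r + c / r ≤ _
    linarith
  have h9 : c / s = (yfl m g t s - ess) * δ / (s + δ) := by rw [hc]; field_simp
  rw [h9, add_zero, ← le_sub_iff_add_le', div_le_iff₀ (by positivity)] at h8
  linarith

end IsoGauge

namespace IsoGauge
open scoped Topology
set_option linter.unusedSectionVars false
variable {n : ℕ}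
variable (m : Measure (E n)) [CptMeas m]

lemma gap_rho {t s : ℝ} (ht : 0 ≤ t) (H : SLC m t) (hs : 0 < s) : Gap m (s * (1 - rho m s)) := fun g G hT => by
  rw [cv_zero_self]; exact gap m ht H hT hs

/-- The classical Lichnerowicz inequality, expressed through `rho`. -/
lemma rho_gap_lower {t s : ℝ} (ht : 0 < t) (H : SLC m t) (hs : 0 < s) (hρ : 0 < rho m s) :
    t * rho m s ≤ s * (1 - rho m s) := by
  set ρ := rho m s with hρd
  have l1 : Filter.Tendsto (fun ε : ℝ => t * (ρ - ε) ^ 2) (𝓝[>] 0) (𝓝 (t * (ρ - 0) ^ 2)) :=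
    (Continuous.tendsto (by fun_prop) 0).mono_left nhdsWithin_le_nhds
  have l2 : Filter.Tendsto (fun ε : ℝ => s * (ρ - (ρ - ε) ^ 2)) (𝓝[>] 0) (𝓝 (s * (ρ - (ρ - 0) ^ 2))) :=
    (Continuous.tendsto (by fun_prop) 0).mono_left nhdsWithin_le_nhds
  have := le_of_tendsto_of_tendsto l1 l2 (by
    filter_upwards [Ioo_mem_nhdsGT hρ] with ε hε
    obtain ⟨g, G, hT, h0, h1, h2, h3, -⟩ := near m hs hε.1 hε.2
    have h4 := poincare m ht H hT
    rw [h0, le_div_iff₀ ht] at h4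
    nlinarith)
  rw [sub_zero] at this
  have : ρ * (t * ρ) ≤ ρ * (s * (1 - ρ)) := by linarith
  exact le_of_mul_le_mul_left this hρ

/-- The key inequality for the almost extremal functions of the gap, at a positive defect `ε`. -/
lemma lich_eps {t s α ε : ℝ} (ht : 0 < t) (H : SLC m t) (hs : 0 < s) (hα0 : 0 ≤ α)
    (hα : ∀ v : E n, cv m (fun x => inner ℝ v x) (fun x => inner ℝ v x) 0 0 ≤ α * ‖v‖ ^ 2)
    {ρ x δ c : ℝ} (hρd : ρ = rho m s) (hx : x = 1 - ρ) (hδ : δ = s * x)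
    (hc : c = ρ ^ 2 - ρ * (1 + x) / ((1 + t / s) ^ 2 * (1 + 2 * x))) (hc0 : 0 ≤ c)
    (hε : 0 < ε) (hε1 : ε < ρ) (hb : 0 ≤ ρ * (ρ - ε) ^ 2 - √ε) :
    δ * (ρ - ε) ^ 2 * c ≤
      (δ * √α + √(s * (ρ - (ρ - ε) ^ 2) - δ * (ρ * (ρ - ε) ^ 2 - √ε) ^ 2)) ^ 2 * (2 * x) +
        √ε * (s + s ^ 2 * rad m ^ 2) := by
  have ρ0 : 0 < ρ := hε.trans hε1
  have x0 : 0 ≤ x := by rw [hx, hρd]; linarith [rho_le_one m hs.le]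
  have x1 : x ≤ 1 := by linarith
  have δ0 : 0 ≤ δ := by rw [hδ]; positivity
  have hG : Gap m δ := by rw [hδ, hx, hρd]; exact gap_rho m ht.le H hs
  obtain ⟨g, G, hT, h0, h1, h2, h3, h4, h5⟩ := near m hs hε (hρd ▸ hε1)
  rw [← hρd] at h2 h3 h4 h5
  set es := (δ * √α + √(s * (ρ - (ρ - ε) ^ 2) - δ * (ρ * (ρ - ε) ^ 2 - √ε) ^ 2)) ^ 2 with hes
  set D := ∫ x, ‖G x‖ ^ 2 ∂m with hD
  have es0 : 0 ≤ es := sq_nonneg _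
  have hmw : ∀ r, s ≤ r → r ^ 2 * mw m g r ≤ es := fun r hr =>
    mw_le m ht.le H hs hr δ0 hG hα0 hα hT h0 h1 hb h4 h3
  have hy := y_growth m ht.le H hs δ0 hG hT hmw es0
  have cg := hT.cont
  set u := t / s with hu
  have u0 : 0 < u := by positivity
  have hN : s ^ 2 * (∫ x, ‖PgV s (wv m g s) x‖ ^ 2 ∂m) ≤ ρ * (yfl m g t s / (1 + u) ^ 2) + x * es := by
    have e1 : ∫ x, ‖PgV s (wv m g s) x‖ ^ 2 ∂m = ∑ i, ∫ x, Pg s (fun θ => wv m g s θ i) x ^ 2 ∂m := by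
      rw [← I_sum m _ fun i _ => by have := (BC_Pg (bc_wv m cg s i) s).1; fun_prop]
      congr 1; funext z
      exact norm_sq_eq_sum _
    have e2 : ∫ x, ‖PgV s (wv m g s) x‖ ^ 2 ∂m ≤ ρ * Es m s (fun θ => ‖wv m g s θ‖ ^ 2) + x * mw m g s := by
      rw [e1]
      simp only [norm_sq_eq_sum]
      rw [Es_sum m _ fun i _ => (bc_wv m cg s i).pow 2]
      unfold mw
      rw [Finset.mul_sum, Finset.mul_sum, ← Finset.sum_add_distrib]
      refine Finset.sum_le_sum fun i _ => ?_
      rw [hx, hρd]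
      exact adj_le m (bc_wv m cg s i) hs.le (hρd ▸ ρ0)
    have e3 : yfl m g t s / (1 + u) ^ 2 = s ^ 2 * Es m s (fun θ => ‖wv m g s θ‖ ^ 2) := by
      unfold yfl
      have : t + s = s * (1 + u) := by rw [hu]; field_simp; ring
      rw [this]; field_simp
    rw [e3]
    have e4 := hmw s le_rfl
    have e5 := mul_le_mul_of_nonneg_left e2 (sq_nonneg s)
    have e6 := mul_le_mul_of_nonneg_left e4 x0
    linarith
  have hy' : yfl m g t s / (1 + u) ^ 2 ≤ D * (1 + x) / ((1 + u) ^ 2 * (1 + 2 * x)) + x * es := by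
    have e1 : yfl m g t s * (1 + 2 * x) ≤ D * (1 + x) + x * ((1 + u) ^ 2 * es) := by
      rw [hδ] at hy
      have : s * (yfl m g t s * (1 + 2 * x)) ≤ s * (D * (1 + x) + x * ((1 + u) ^ 2 * es)) := by linarith
      exact le_of_mul_le_mul_left this hs
    have e2 : yfl m g t s ≤ D * (1 + x) / (1 + 2 * x) + x * ((1 + u) ^ 2 * es) := by
      have p : 0 ≤ x * ((1 + u) ^ 2 * es) * (2 * x) := by positivity
      rw [div_add' _ _ _ (by positivity), le_div_iff₀ (by positivity)]
      linarith
    rw [div_le_iff₀ (by positivity)]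
    refine e2.trans (le_of_eq ?_)
    field_simp
  have hD1 : δ * (ρ - ε) ^ 2 ≤ D := by
    have := hG g G hT
    rw [cv_zero_self, h0] at this
    nlinarith
  have h6 : D * c ≤ es * (2 * x) + √ε * (s + s ^ 2 * rad m ^ 2) := by
    have e1 : D * c = ρ ^ 2 * D - ρ * (D * (1 + x) / ((1 + u) ^ 2 * (1 + 2 * x))) := by rw [hc]; ring
    have e2 := mul_le_mul_of_nonneg_left hy' ρ0.le
    have e3 : ρ * (x * es) ≤ x * es := mul_le_of_le_one_left (by positivity) (by linarith)
    linarith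
  exact (mul_le_mul_of_nonneg_right hD1 hc0).trans h6

/-- The limit of `lich_eps` as `ε → 0`. -/
lemma lich_zero {t s α : ℝ} (ht : 0 < t) (H : SLC m t) (hs : 0 < s) (hα0 : 0 ≤ α)
    (hα : ∀ v : E n, cv m (fun x => inner ℝ v x) (fun x => inner ℝ v x) 0 0 ≤ α * ‖v‖ ^ 2)
    {ρ x δ c : ℝ} (hρd : ρ = rho m s) (hx : x = 1 - ρ) (hδ : δ = s * x)
    (hc : c = ρ ^ 2 - ρ * (1 + x) / ((1 + t / s) ^ 2 * (1 + 2 * x))) (hc0 : 0 ≤ c) (ρ0 : 0 < ρ) :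
    ρ ^ 2 * c ≤ 2 * δ ^ 2 / s * (√α + √(5 / s)) ^ 2 := by
  have hδρ := rho_gap_lower m ht H hs (hρd ▸ ρ0)
  rw [← hρd, ← hx, ← hδ] at hδρ
  have δ0 : 0 < δ := lt_of_lt_of_le (by positivity) hδρ
  have x0 : 0 < x := by by_contra! h; nlinarith
  have l1 : Filter.Tendsto (fun ε : ℝ => δ * (ρ - ε) ^ 2 * c) (𝓝[>] 0) (𝓝 (δ * (ρ - 0) ^ 2 * c)) :=
    (Continuous.tendsto (by fun_prop) 0).mono_left nhdsWithin_le_nhds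
  have l2 := ((Continuous.tendsto (f := fun ε : ℝ => (δ * √α + √(s * (ρ - (ρ - ε) ^ 2) -
    δ * (ρ * (ρ - ε) ^ 2 - √ε) ^ 2)) ^ 2 * (2 * x) +
        √ε * (s + s ^ 2 * rad m ^ 2)) (by fun_prop) 0).mono_left (nhdsWithin_le_nhds (s := Set.Ioi 0)))
  have hb : ∀ᶠ ε in 𝓝[>] (0 : ℝ), 0 < ρ * (ρ - ε) ^ 2 - √ε := by
    have := (Continuous.tendsto (f := fun ε : ℝ => ρ * (ρ - ε) ^ 2 - √ε) (by fun_prop) 0).mono_left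
      (nhdsWithin_le_nhds (s := Set.Ioi 0))
    refine this.eventually_const_lt ?_
    simp; positivity
  have h := le_of_tendsto_of_tendsto l1 l2 (by
    filter_upwards [Ioo_mem_nhdsGT ρ0, hb] with ε hε hε'
    exact lich_eps m ht H hs hα0 hα hρd hx hδ hc hc0 hε.1 hε.2 hε'.le)
  simp only [sub_zero, Real.sqrt_zero, zero_mul, add_zero] at h
  have h1 : √(s * (ρ - ρ ^ 2) - δ * (ρ * ρ ^ 2) ^ 2) ≤ δ * √(5 / s) := by
    refine Real.sqrt_le_iff.2 ⟨by positivity, ?_⟩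
    rw [mul_pow δ, Real.sq_sqrt (by positivity)]
    have e : s * (ρ - ρ ^ 2) - δ * (ρ * ρ ^ 2) ^ 2 = δ * (ρ * (1 - ρ ^ 5)) := by rw [hδ, hx]; ring
    have e2 : δ ^ 2 * (5 / s) = δ * (5 * x) := by rw [hδ]; field_simp
    rw [e, e2]
    have ρ1 : ρ ≤ 1 := by linarith
    have : 1 - ρ ^ 5 ≤ 5 * x := by
      have : 1 + (5 : ℕ) * (ρ - 1) ≤ ρ ^ 5 := one_add_mul_sub_le_pow (by linarith) 5
      push_cast at this
      linarith
    have p : 0 ≤ 1 - ρ ^ 5 := sub_nonneg.2 (pow_le_one₀ ρ0.le ρ1)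
    refine mul_le_mul_of_nonneg_left ?_ δ0.le
    calc ρ * (1 - ρ ^ 5) ≤ 1 * (1 - ρ ^ 5) := by gcongr
      _ ≤ _ := by linarith
  have h2 : δ * (ρ ^ 2 * c) ≤ δ * (2 * δ ^ 2 / s * (√α + √(5 / s)) ^ 2) := by
    calc _ = δ * ρ ^ 2 * c := by ring
      _ ≤ _ := h
      _ ≤ (δ * √α + δ * √(5 / s)) ^ 2 * (2 * x) := by gcongr
      _ = _ := by rw [hδ]; field_simp
  exact le_of_mul_le_mul_left h2 δ0

/-- The improved Lichnerowicz inequality: a `t`-uniformly log-concave measure whose covariance is at most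
`α` has spectral gap at least `√(t / (2 α))`. -/
theorem improved_lichnerowicz {t α : ℝ} (ht : 0 < t) (H : SLC m t) (hα0 : 0 < α)
    (hα : ∀ v : E n, cv m (fun x => inner ℝ v x) (fun x => inner ℝ v x) 0 0 ≤ α * ‖v‖ ^ 2) :
    Gap m √(t / (2 * α)) := by
  set q := √(t / (2 * α)) with hq
  have q0 : 0 < q := by positivity
  have hq2 : q ^ 2 = t / (2 * α) := Real.sq_sqrt (by positivity)
  -- For `h = 1 / s` small enough this inequality fails to be compatible with a gap below `q`.
  have l : ∀ᶠ h in 𝓝[>] (0 : ℝ), 0 < (1 - h * q) ^ 3 * (2 - h / α * (1 + t * h) ^ 2) -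
      (1 + √(5 * h / α)) ^ 2 * ((1 + t * h) ^ 2 * (1 + 2 * (h * q))) := by
    have := (Continuous.tendsto (f := fun h : ℝ => (1 - h * q) ^ 3 * (2 - h / α * (1 + t * h) ^ 2) -
      (1 + √(5 * h / α)) ^ 2 * ((1 + t * h) ^ 2 * (1 + 2 * (h * q)))) (by fun_prop) 0).mono_left
      (nhdsWithin_le_nhds (s := Set.Ioi 0))
    refine this.eventually_const_lt ?_
    norm_num
  have l2 : ∀ᶠ h in 𝓝[>] (0 : ℝ), 0 < 1 - h * q := by
    have := (Continuous.tendsto (f := fun h : ℝ => 1 - h * q) (by fun_prop) 0).mono_left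
      (nhdsWithin_le_nhds (s := Set.Ioi 0))
    refine this.eventually_const_lt ?_
    norm_num
  have l3 : ∀ᶠ h in 𝓝[>] (0 : ℝ), 0 < 2 - h / α * (1 + t * h) ^ 2 := by
    have := (Continuous.tendsto (f := fun h : ℝ => 2 - h / α * (1 + t * h) ^ 2) (by fun_prop) 0).mono_left
      (nhdsWithin_le_nhds (s := Set.Ioi 0))
    refine this.eventually_const_lt ?_
    norm_num
  obtain ⟨h, ⟨⟨h1, h2⟩, h3⟩, hh⟩ := ((l.and l2).and l3).and self_mem_nhdsWithin |>.exists
  have hh : 0 < h := hh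
  set s := 1 / h with hs
  have s0 : 0 < s := by positivity
  have hh' : h = 1 / s := by rw [hs]; field_simp
  set ρ := rho m s with hρ
  set x := 1 - ρ with hx
  have x0 : 0 ≤ x := by linarith [rho_le_one m s0.le]
  have key : q ≤ s * x := by
    by_contra! hlt
    have xq : x < h * q := by rw [hh']; rw [div_mul_eq_mul_div, one_mul, lt_div_iff₀ s0]; linarith
    have ρ0 : 0 < ρ := by linarith
    set u := t / s with hu
    have u0 : 0 < u := by positivity
    have hu' : u = t * h := by rw [hu, hs]; field_simp
    rw [← hu'] at h1 h3
    have x2 : x ^ 2 * (2 * α) ≤ u * h := by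
      have : x ^ 2 ≤ (h * q) ^ 2 := by gcongr
      rw [mul_pow, hq2] at this
      calc x ^ 2 * (2 * α) ≤ h ^ 2 * (t / (2 * α)) * (2 * α) := by gcongr
        _ = u * h := by rw [hu']; field_simp
    set W := 2 - h / α * (1 + u) ^ 2 with hW
    have hnum : u * W ≤ (1 + x - 2 * x ^ 2) * (1 + u) ^ 2 - (1 + x) := by
      have e1 : x ^ 2 * 2 ≤ u * (h / α) := by
        have : u * (h / α) = u * h / α := by ring
        rw [this, le_div_iff₀ hα0]; linarith
      have e2 := mul_le_mul_of_nonneg_right e1 (sq_nonneg (1 + u))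
      have e3 : 0 ≤ x * (2 * u + u ^ 2) := by positivity
      rw [hW]
      nlinarith
    set c := ρ ^ 2 - ρ * (1 + x) / ((1 + u) ^ 2 * (1 + 2 * x)) with hc
    have hc1 : c = ρ * ((1 + x - 2 * x ^ 2) * (1 + u) ^ 2 - (1 + x)) / ((1 + u) ^ 2 * (1 + 2 * x)) := by
      rw [hc]; field_simp; rw [hx]; ring
    have hc2 : ρ * (u * W) / ((1 + u) ^ 2 * (1 + 2 * x)) ≤ c := by rw [hc1]; gcongr
    have hc0 : 0 ≤ c := le_trans (by positivity) hc2
    have h4 := lich_zero m ht H s0 hα0.le hα hρ hx rfl hc hc0 ρ0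
    have h5 : 2 * (s * x) ^ 2 / s * (√α + √(5 / s)) ^ 2 ≤ u * (1 + √(5 * h / α)) ^ 2 := by
      have e1 : √(5 / s) = √α * √(5 * h / α) := by
        rw [← Real.sqrt_mul hα0.le]; congr 1; rw [hs]; field_simp
      have e2 : (√α + √α * √(5 * h / α)) ^ 2 = α * (1 + √(5 * h / α)) ^ 2 := by
        have := Real.sq_sqrt hα0.le
        calc _ = √α ^ 2 * (1 + √(5 * h / α)) ^ 2 := by ring
          _ = _ := by rw [this]
      rw [e1, e2]
      have e3 : 2 * (s * x) ^ 2 / s * α ≤ u := by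
        have : 2 * (s * x) ^ 2 / s * α = x ^ 2 * (2 * α) / h := by rw [hs]; field_simp
        rw [this, div_le_iff₀ hh]; exact x2
      calc _ = 2 * (s * x) ^ 2 / s * α * (1 + √(5 * h / α)) ^ 2 := by ring
        _ ≤ _ := by gcongr
    have h6 : ρ ^ 2 * (ρ * (u * W) / ((1 + u) ^ 2 * (1 + 2 * x))) ≤ u * (1 + √(5 * h / α)) ^ 2 :=
      (mul_le_mul_of_nonneg_left hc2 (sq_nonneg ρ)).trans (h4.trans h5)
    have h7 : ρ ^ 3 * W ≤ (1 + √(5 * h / α)) ^ 2 * ((1 + u) ^ 2 * (1 + 2 * x)) := by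
      rw [← mul_div_assoc, div_le_iff₀ (by positivity)] at h6
      have : u * (ρ ^ 3 * W) ≤ u * ((1 + √(5 * h / α)) ^ 2 * ((1 + u) ^ 2 * (1 + 2 * x))) := by linarith
      exact le_of_mul_le_mul_left this u0
    have h8 : (1 - h * q) ^ 3 * W ≤ ρ ^ 3 * W := by gcongr; linarith
    have h9 : (1 + √(5 * h / α)) ^ 2 * ((1 + u) ^ 2 * (1 + 2 * x)) ≤
      (1 + √(5 * h / α)) ^ 2 * ((1 + u) ^ 2 * (1 + 2 * (h * q))) := by gcongr
    linarith
  intro g G hT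
  refine le_trans ?_ (gap_rho m ht.le H s0 g G hT)
  exact mul_le_mul_of_nonneg_right key (cv_self_nonneg m hT.cont 0 0)

end IsoGauge

namespace IsoGauge
open scoped Topology
set_option linter.unusedSectionVars false
variable {n : ℕ}
variable (m : Measure (E n)) [CptMeas m]

/-! ### Third cumulants -/

lemma Tst_quad (L : E n →L[ℝ] E n) (hL : ∀ x y, inner ℝ (L x) y = inner ℝ x (L y)) (a : E n) :
    Tst (fun x => inner ℝ (L (x - a)) (x - a)) (fun x => (2 : ℝ) • L (x - a)) := by
  refine ⟨2 * ‖L‖, by positivity, fun x y => ?_, fun x y => ?_⟩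
  · have h := L.le_opNorm (x - y)
    have e : (2 : ℝ) • L (x - a) - (2 : ℝ) • L (y - a) = (2 : ℝ) • L (x - y) := by
      rw [← smul_sub, ← map_sub, sub_sub_sub_cancel_right]
    rw [e, norm_smul, mul_assoc, Real.norm_eq_abs, abs_two]
    linarith
  · have e : inner ℝ (L (y - a)) (y - a) - inner ℝ (L (x - a)) (x - a) - inner ℝ ((2 : ℝ) • L (x - a)) (y - x) =
        inner ℝ (L (y - x)) (y - x) := by
      have : y - a = (x - a) + (y - x) := by abel
      rw [this, map_add, inner_add_left, inner_add_right, inner_add_right, inner_smul_left,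
        hL (y - x) (x - a), real_inner_comm (L (x - a)) (y - x)]
      simp; ring
    rw [e]
    refine (abs_real_inner_le_norm _ _).trans ?_
    calc _ ≤ (‖L‖ * ‖y - x‖) * ‖y - x‖ := by gcongr; exact L.le_opNorm _
      _ ≤ _ := by nlinarith [mul_nonneg (norm_nonneg L) (sq_nonneg ‖y - x‖)]

lemma c3_comm (f g h : E n → ℝ) (s : ℝ) (θ : E n) : c3 m f g h s θ = c3 m g f h s θ := by
  unfold c3; simp only [mul_comm (f _)]; ring

lemma c3_swap (f g h : E n → ℝ) (s : ℝ) (θ : E n) : c3 m f g h s θ = c3 m f h g s θ := by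
  unfold c3 cv
  have e1 : (fun x => f x * g x * h x) = fun x => f x * h x * g x := by funext x; ring
  have e2 : (fun x => g x * h x) = fun x => h x * g x := by funext x; ring
  rw [e1, e2]; ring

lemma c3_tilt (f g h : E n → ℝ) (s : ℝ) (θ : E n) : c3 (tilt m s θ) f g h 0 0 = c3 m f g h s θ := by
  unfold c3; rw [cv_tilt, cv_tilt, cv_tilt, Q_tilt, Q_tilt, add_zero, add_zero]

lemma c3_eq {f g h : E n → ℝ} (hf : Continuous f) (hg : Continuous g) (hh : Continuous h) (s : ℝ) (θ : E n) :
    c3 m f g h s θ = cv m h (fun x => (f x - Q m f s θ) * (g x - Q m g s θ)) s θ := by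
  set a := Q m f s θ with ha
  set b := Q m g s θ with hb
  have e : (fun x => (f x - a) * (g x - b)) = fun x => (f x * g x + (-b) * f x) +
      ((-a) * g x + a * b) := by ext x; ring
  rw [cv_comm, e, cv_add_left m (f := fun x => f x * g x + -b * f x) (f' := fun x => -a * g x + a * b)
    (by fun_prop) (by fun_prop) hh, cv_add_left m (f := fun x => f x * g x) (f' := fun x => -b * f x)
    (by fun_prop) (by fun_prop) hh, cv_add_left m (f := fun x => -a * g x) (f' := fun x => a * b)
    (by fun_prop) (by fun_prop) hh, cv_const_left, cv_const_mul_left, cv_const_mul_left]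
  unfold c3
  rw [← ha, ← hb]; ring

/-- The Hilbert–Schmidt norm of the third cumulant tensor contracted with a vector is bounded
through the spectral gap, applied to a quadratic form. -/
lemma third_bound_zero {δ α : ℝ} (hδ : 0 < δ) (hG : Gap m δ) (hα0 : 0 ≤ α)
    (hα : ∀ v : E n, cv m (fun x => inner ℝ v x) (fun x => inner ℝ v x) 0 0 ≤ α * ‖v‖ ^ 2) (v : E n) :
    ∑ i, ∑ l, (∑ j, v j * c3 m (fun x => x i) (fun x => x l) (fun x => x j) 0 0) ^ 2 ≤
      4 * α ^ 2 / δ * ‖v‖ ^ 2 := by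
  set M : Matrix (Fin n) (Fin n) ℝ := Matrix.of fun i l =>
    ∑ j, v j * c3 m (fun x => x i) (fun x => x l) (fun x => x j) 0 0 with hM
  set F := ∑ i, ∑ l, M i l ^ 2 with hF
  have hx : ∀ i, Continuous fun x : E n => x i := continuous_coord
  have cl : Continuous fun x : E n => inner ℝ v x := continuous_inner_left v
  change F ≤ _
  set a := av m 0 0 with ha
  have haQ : ∀ i, Q m (fun x => x i) 0 0 = a i := fun i => rfl
  have hM2 : ∀ i l, M i l = cv m (fun x => inner ℝ v x) (fun x => (x i - a i) * (x l - a l)) 0 0 := by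
    intro i l
    rw [cv_comm, cv_inner m (by fun_prop)]
    change ∑ j, v j * c3 m (fun x => x i) (fun x => x l) (fun x => x j) 0 0 = _
    refine Finset.sum_congr rfl fun j _ => ?_
    rw [c3_eq m (hx i) (hx l) (hx j), cv_comm, haQ, haQ]
  have Msymm : ∀ i l, M i l = M l i := fun i l => by
    simp only [hM, Matrix.of_apply]
    exact Finset.sum_congr rfl fun j _ => by rw [c3_comm]
  set L : E n →L[ℝ] E n := (Matrix.toEuclideanLin M).toContinuousLinearMap with hL
  have hLa : ∀ x i, L x i = ∑ l, M i l * x l := fun x i => by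
    simp [hL, Matrix.toEuclideanLin, Matrix.mulVec, dotProduct]
  have Lsymm : ∀ x y, inner ℝ (L x) y = inner ℝ x (L y) := fun x y => by
    simp only [inner_eq_sum, hLa, Finset.sum_mul, Finset.mul_sum]
    rw [Finset.sum_comm]
    refine Finset.sum_congr rfl fun i _ => Finset.sum_congr rfl fun l _ => ?_
    rw [Msymm]; ring
  have hT := Tst_quad L Lsymm a
  have hq : (fun x => inner ℝ (L (x - a)) (x - a)) =
      fun x => ∑ p : Fin n × Fin n, M p.1 p.2 * ((x p.1 - a p.1) * (x p.2 - a p.2)) := by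
    funext x
    simp only [inner_eq_sum, hLa, Finset.sum_mul, Fintype.sum_prod_type]
    refine Finset.sum_congr rfl fun i _ => Finset.sum_congr rfl fun l _ => ?_
    simp; ring
  have h1 : cv m (fun x => inner ℝ v x) (fun x => inner ℝ (L (x - a)) (x - a)) 0 0 = F := by
    rw [hq, cv_sum_right m _ _ cl (fun p => by fun_prop), hF, Fintype.sum_prod_type]
    refine Finset.sum_congr rfl fun i _ => Finset.sum_congr rfl fun l _ => ?_
    rw [← hM2]; ring
  have h2 : ∫ x, ‖(2 : ℝ) • L (x - a)‖ ^ 2 ∂m ≤ 4 * α * F := by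
    have e1 : ∀ x, ‖(2 : ℝ) • L (x - a)‖ ^ 2 = ∑ i, 4 * (inner ℝ (WithLp.toLp 2 (M i)) x -
        Q m (fun x => inner ℝ (WithLp.toLp 2 (M i)) x) 0 0) ^ 2 := fun x => by
      rw [norm_smul, mul_pow, norm_sq_eq_sum, Finset.mul_sum]
      refine Finset.sum_congr rfl fun i _ => ?_
      rw [hLa, Q_inner, inner_eq_sum, inner_eq_sum, ← Finset.sum_sub_distrib]
      have e : ∑ l, M i l * (x - a) l = ∑ l, (M i l * x l - M i l * av m 0 0 l) :=
        Finset.sum_congr rfl fun l _ => by rw [PiLp.sub_apply, mul_sub]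
      rw [e, Real.norm_eq_abs, abs_two]
      norm_num
    simp only [e1]
    rw [I_sum m _ fun i _ => by fun_prop, hF, Finset.mul_sum]
    refine Finset.sum_le_sum fun i _ => ?_
    rw [integral_const_mul]
    have e2 := hα (WithLp.toLp 2 (M i))
    rw [cv_eq m (continuous_inner_left _) (continuous_inner_left _), Q_zero, norm_sq_eq_sum] at e2
    simp only [← pow_two] at e2
    calc _ ≤ 4 * (α * ∑ l, M i l ^ 2) := by gcongr
      _ = _ := by ring
  have h3 := hG _ _ hT
  have h4 := cv_cs m cl hT.cont 0 0
  rw [h1] at h4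
  have h5 := hα v
  have V0 := cv_self_nonneg m hT.cont 0 0
  set V := cv m (fun x => inner ℝ (L (x - a)) (x - a)) (fun x => inner ℝ (L (x - a)) (x - a)) 0 0
  have F0 : 0 ≤ F := by positivity
  have h6 : V ≤ 4 * α * F / δ := by rw [le_div_iff₀ hδ]; linarith
  have h7 : F * F ≤ F * (4 * α ^ 2 / δ * ‖v‖ ^ 2) := by
    calc F * F = F ^ 2 := by ring
      _ ≤ _ := h4
      _ ≤ (α * ‖v‖ ^ 2) * (4 * α * F / δ) := mul_le_mul h5 h6 V0 (by positivity)
      _ = _ := by ring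
  rcases F0.eq_or_lt with h | h
  · rw [← h]; positivity
  · exact le_of_mul_le_mul_left h7 h

/-- `third_bound_zero` at every tilt, with the spectral gap from the improved Lichnerowicz inequality. -/
lemma third_bound {s α : ℝ} (hs : 0 < s) (H : SLC m 0) (hα0 : 0 < α) (θ : E n)
    (hα : ∀ v : E n, cv m (fun x => inner ℝ v x) (fun x => inner ℝ v x) s θ ≤ α * ‖v‖ ^ 2) (v : E n) :
    ∑ l, ∑ i, (∑ j, c3 m (fun x => x i) (fun x => x j) (fun x => x l) s θ * v j) ^ 2 ≤
      4 * α ^ 2 / √(s / (2 * α)) * ‖v‖ ^ 2 := by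
  have H' := SLC_tilt m H hs.le θ
  rw [zero_add] at H'
  have hα' : ∀ v : E n, cv (tilt m s θ) (fun x => inner ℝ v x) (fun x => inner ℝ v x) 0 0 ≤ α * ‖v‖ ^ 2 := fun v => by
    rw [cv_tilt, add_zero, add_zero]; exact hα v
  have hG := improved_lichnerowicz (tilt m s θ) hs H' hα0 hα'
  refine le_of_eq_of_le ?_ (third_bound_zero (tilt m s θ) (by positivity) hG hα0.le hα' v)
  rw [Finset.sum_comm]
  refine Finset.sum_congr rfl fun i _ => Finset.sum_congr rfl fun l _ => ?_
  congr 1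
  refine Finset.sum_congr rfl fun j _ => ?_
  rw [c3_tilt, c3_swap]; ring

/-! ### Generators of functions and matrices -/

/-- `u` is of class `C^{1,2}` with gradient `D` and is mapped to `L` by the generator. -/
def SF (I : Set ℝ) (u : ℝ → E n → ℝ) (D : Fin n → ℝ → E n → ℝ) (L : ℝ → E n → ℝ) : Prop :=
  ∃ (ut : ℝ → E n → ℝ) (D2 : Fin n → ℝ → E n → ℝ), C12 I u ut D D2 ∧ ∀ s θ, Lop m ut D D2 s θ = L s θ

namespace SF
variable {m} {I : Set ℝ} {u v L M : ℝ → E n → ℝ} {D F : Fin n → ℝ → E n → ℝ}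

lemma add (h : SF m I u D L) (h' : SF m I v F M) : SF m I (fun s θ => u s θ + v s θ)
    (fun i s θ => D i s θ + F i s θ) (fun s θ => L s θ + M s θ) := by
  obtain ⟨ut, D2, h1, h2⟩ := h
  obtain ⟨vt, F2, h3, h4⟩ := h'
  exact ⟨_, _, h1.add h3, fun s θ => by rw [Lop_add, h2, h4]⟩

lemma mul (h : SF m I u D L) (h' : SF m I v F M) : SF m I (fun s θ => u s θ * v s θ)
    (fun i s θ => D i s θ * v s θ + u s θ * F i s θ)
    (fun s θ => L s θ * v s θ + u s θ * M s θ + ∑ i, D i s θ * F i s θ) := by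
  obtain ⟨ut, D2, h1, h2⟩ := h
  obtain ⟨vt, F2, h3, h4⟩ := h'
  exact ⟨_, _, h1.mul h3, fun s θ => by rw [Lop_mul, h2, h4]⟩

lemma const_mul (c : ℝ) (h : SF m I u D L) : SF m I (fun s θ => c * u s θ)
    (fun i s θ => c * D i s θ) (fun s θ => c * L s θ) := by
  obtain ⟨ut, D2, h1, h2⟩ := h
  exact ⟨_, _, h1.const_mul c, fun s θ => by rw [Lop_const_mul, h2]⟩

lemma sum {ι : Type*} [DecidableEq ι] (T : Finset ι) {u L : ι → ℝ → E n → ℝ} {D : ι → Fin n → ℝ → E n → ℝ}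
    (h : ∀ k, SF m I (u k) (D k) (L k)) : SF m I (fun s θ => ∑ k ∈ T, u k s θ)
    (fun i s θ => ∑ k ∈ T, D k i s θ) (fun s θ => ∑ k ∈ T, L k s θ) := by
  choose ut D2 h1 h2 using h
  exact ⟨_, _, C12.sum T fun k _ => h1 k, fun s θ => by simp only [Lop_sum, h2]⟩

lemma const (c : ℝ) : SF m I (fun _ _ => c) (fun _ _ _ => 0) (fun _ _ => 0) :=
  ⟨_, _, C12.const c, fun s θ => by unfold Lop; simp⟩

end SF
end IsoGauge

namespace IsoGauge
open scoped Topology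
set_option linter.unusedSectionVars false
variable {n : ℕ}

/-! ### Trace inequalities for symmetric matrices -/

section matrix
open Matrix
variable {B H : Matrix (Fin n) (Fin n) ℝ}

lemma exists_diag (hB : Bᵀ = B) : ∃ (U : Matrix (Fin n) (Fin n) ℝ) (μ : Fin n → ℝ), Uᵀ * U = 1 ∧ U * Uᵀ = 1 ∧
    ∀ k, B ^ k = U * diagonal (fun i => μ i ^ k) * Uᵀ := by
  have hH : B.IsHermitian := by rw [Matrix.IsHermitian, conjTranspose_eq_transpose_of_trivial, hB]
  set U : Matrix (Fin n) (Fin n) ℝ := (hH.eigenvectorUnitary).1 with hU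
  have e1 : star U * U = 1 := Unitary.coe_star_mul_self hH.eigenvectorUnitary
  have e2 : U * star U = 1 := Unitary.coe_mul_star_self hH.eigenvectorUnitary
  rw [star_eq_conjTranspose, conjTranspose_eq_transpose_of_trivial] at e1 e2
  refine ⟨U, hH.eigenvalues, e1, e2, fun k => ?_⟩
  have e3 : B = U * diagonal hH.eigenvalues * Uᵀ := by
    conv_lhs => rw [hH.spectral_theorem, Unitary.conjStarAlgAut_apply]
    rw [← conjTranspose_eq_transpose_of_trivial U]
    rfl
  induction k with
  | zero => simp [e2]
  | succ k ih =>
    rw [pow_succ, ih]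
    refine (congrArg (_ * ·) e3).trans ?_
    have : U * diagonal (fun i => hH.eigenvalues i ^ k) * Uᵀ * (U * diagonal hH.eigenvalues * Uᵀ) =
      U * diagonal (fun i => hH.eigenvalues i ^ k) * (Uᵀ * U) * diagonal hH.eigenvalues * Uᵀ := by
        simp only [Matrix.mul_assoc]
    refine this.trans ?_
    rw [e1, Matrix.mul_one, Matrix.mul_assoc U, diagonal_mul_diagonal]
    simp only [pow_succ]

lemma pow_mul_pow_add_le {x y : ℝ} {a b : ℕ} (h : Even (a + b)) :
    x ^ a * y ^ b + y ^ a * x ^ b ≤ x ^ (a + b) + y ^ (a + b) := by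
  have key : 0 ≤ (|x| ^ a - |y| ^ a) * (|x| ^ b - |y| ^ b) := by
    rcases le_total |x| |y| with h | h
    · exact mul_nonneg_of_nonpos_of_nonpos (sub_nonpos.2 (by gcongr)) (sub_nonpos.2 (by gcongr))
    · exact mul_nonneg (sub_nonneg.2 (by gcongr)) (sub_nonneg.2 (by gcongr))
  have h1 : x ^ (a + b) = |x| ^ a * |x| ^ b := by rw [← pow_add, h.pow_abs]
  have h2 : y ^ (a + b) = |y| ^ a * |y| ^ b := by rw [← pow_add, h.pow_abs]
  have h3 : x ^ a * y ^ b ≤ |x| ^ a * |y| ^ b := by rw [← abs_pow, ← abs_pow, ← abs_mul]; exact le_abs_self _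
  have h4 : y ^ a * x ^ b ≤ |y| ^ a * |x| ^ b := by rw [← abs_pow, ← abs_pow, ← abs_mul]; exact le_abs_self _
  rw [h1, h2]
  nlinarith

/-- In an eigenbasis of `B` this is the inequality `x^a y^b + x^b y^a ≤ x^{a+b} + y^{a+b}` for even `a + b`. -/
lemma trace_pow_mul_le (hB : Bᵀ = B) (hH : Hᵀ = H) {a b : ℕ} (h : Even (a + b)) :
    trace (B ^ a * H * B ^ b * H) ≤ trace (B ^ (a + b) * (H * H)) := by
  obtain ⟨U, μ, e1, e2, hd⟩ := exists_diag hB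
  set G := Uᵀ * H * U with hG
  have Gs : ∀ i j, G i j = G j i := fun i j => by
    have : Gᵀ = G := by rw [hG, transpose_mul, transpose_mul, hH, transpose_transpose, Matrix.mul_assoc]
    conv_lhs => rw [← this]
    rfl
  have f : ∀ a b, trace (B ^ a * H * B ^ b * H) = ∑ i, ∑ j, μ i ^ a * μ j ^ b * G i j ^ 2 := by
    intro a b
    have : B ^ a * H * B ^ b * H = U * (diagonal (fun i => μ i ^ a) * G * diagonal (fun i => μ i ^ b) * (Uᵀ * H)) := by
      rw [hd, hd, hG]; simp only [Matrix.mul_assoc]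
    rw [this, trace_mul_comm]
    have : diagonal (fun i => μ i ^ a) * G * diagonal (fun i => μ i ^ b) * (Uᵀ * H) * U =
        (diagonal (fun i => μ i ^ a) * G) * (diagonal (fun i => μ i ^ b) * G) := by
      rw [hG]; simp only [Matrix.mul_assoc]
    rw [this, trace]
    refine Finset.sum_congr rfl fun i _ => ?_
    rw [diag_apply, mul_apply]
    refine Finset.sum_congr rfl fun j _ => ?_
    rw [diagonal_mul, diagonal_mul, Gs j i]; ring
  have h1 := f a b
  have h2 := f (a + b) 0
  have e : B ^ (a + b) * (H * H) = B ^ (a + b) * H * B ^ 0 * H := by simp [Matrix.mul_assoc]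
  rw [e, h1, h2]
  have sw : ∀ a b, ∑ i, ∑ j, μ i ^ a * μ j ^ b * G i j ^ 2 = ∑ i, ∑ j, μ j ^ a * μ i ^ b * G i j ^ 2 := fun a b => by
    rw [Finset.sum_comm]
    exact Finset.sum_congr rfl fun i _ => Finset.sum_congr rfl fun j _ => by rw [Gs]
  have d : ∀ a b, 2 * ∑ i, ∑ j, μ i ^ a * μ j ^ b * G i j ^ 2 =
      ∑ i, ∑ j, (μ i ^ a * μ j ^ b + μ j ^ a * μ i ^ b) * G i j ^ 2 := fun a b => by
    simp only [add_mul, Finset.sum_add_distrib]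
    rw [← sw]; ring
  have : 2 * ∑ i, ∑ j, μ i ^ a * μ j ^ b * G i j ^ 2 ≤ 2 * ∑ i, ∑ j, μ i ^ (a + b) * μ j ^ 0 * G i j ^ 2 := by
    rw [d, d]
    refine Finset.sum_le_sum fun i _ => Finset.sum_le_sum fun j _ => ?_
    refine mul_le_mul_of_nonneg_right ?_ (sq_nonneg _)
    simpa using pow_mul_pow_add_le (x := μ i) (y := μ j) h
  linarith

/-- The derivative of the `k`-th power at `B` in the direction `H`. -/
def DP (B H : Matrix (Fin n) (Fin n) ℝ) : ℕ → Matrix (Fin n) (Fin n) ℝ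
  | 0 => 0
  | k + 1 => DP B H k * B + B ^ k * H

/-- The generator applied to the `k`-th power of `B`, where `H l` are the partial derivatives of `B` and
`L` is the generator applied to `B`. -/
def LP (B : Matrix (Fin n) (Fin n) ℝ) (H : Fin n → Matrix (Fin n) (Fin n) ℝ) (L : Matrix (Fin n) (Fin n) ℝ) :
    ℕ → Matrix (Fin n) (Fin n) ℝ
  | 0 => 0
  | k + 1 => LP B H L k * B + B ^ k * L + ∑ l, DP B (H l) k * H l

lemma trace_DP (hB : Bᵀ = B) (hH : Hᵀ = H) {N : ℕ} (hN : Even N) (p k : ℕ) : ∀ c, p + k + c = N + 1 →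
    trace (B ^ p * DP B H k * B ^ c * H) ≤ k * trace (B ^ N * (H * H)) := by
  induction k with
  | zero => intro c _; simp [DP]
  | succ k ih =>
    intro c hc
    have h1 := ih (c + 1) (by omega)
    have e1 : p + k + c = N := by omega
    have h2 := trace_pow_mul_le hB hH (a := p + k) (b := c) (by rw [e1]; exact hN)
    rw [e1] at h2
    have e : B ^ p * DP B H (k + 1) * B ^ c * H = B ^ p * DP B H k * B ^ (c + 1) * H + B ^ (p + k) * H * B ^ c * H := by
      rw [DP, pow_succ' B c, pow_add]
      simp only [Matrix.mul_add, Matrix.add_mul, Matrix.mul_assoc]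
    rw [e, trace_add]
    push_cast
    linarith

lemma trace_LP {H : Fin n → Matrix (Fin n) (Fin n) ℝ} {L : Matrix (Fin n) (Fin n) ℝ} (hB : Bᵀ = B)
    (hH : ∀ l, (H l)ᵀ = H l) {N : ℕ} (hN : Even N) (k : ℕ) : ∀ q, q + k = N + 2 →
    trace (B ^ q * LP B H L k) ≤ k * trace (B ^ (N + 1) * L) +
      k * (k - 1) / 2 * ∑ l, trace (B ^ N * (H l * H l)) := by
  induction k with
  | zero => intro q _; simp [LP]
  | succ k ih =>
    intro q hq
    have h1 := ih (q + 1) (by omega)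
    have e : B ^ q * LP B H L (k + 1) = B ^ q * LP B H L k * B + B ^ (N + 1) * L +
        ∑ l, B ^ q * DP B (H l) k * B ^ 0 * H l := by
      have : N + 1 = q + k := by omega
      rw [LP, this, pow_add, Matrix.mul_add, Matrix.mul_add, Matrix.mul_sum]
      simp only [Matrix.mul_assoc, pow_zero, Matrix.one_mul]
    have e2 : trace (B ^ q * LP B H L k * B) = trace (B ^ (q + 1) * LP B H L k) := by
      rw [trace_mul_comm, pow_succ', Matrix.mul_assoc]
    rw [e, trace_add, trace_add, e2, trace_sum]
    have h2 : ∑ l, trace (B ^ q * DP B (H l) k * B ^ 0 * H l) ≤ ∑ l, k * trace (B ^ N * (H l * H l)) :=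
      Finset.sum_le_sum fun l _ => trace_DP hB (hH l) hN q k 0 (by omega)
    rw [← Finset.mul_sum] at h2
    push_cast
    set X := ∑ l, trace (B ^ N * (H l * H l))
    have : ((k : ℝ) + 1) * (k + 1 - 1) / 2 * X = k * (k - 1) / 2 * X + k * X := by ring
    rw [this]
    linarith

lemma trace_pow_sq_le {H : Fin n → Matrix (Fin n) (Fin n) ℝ} (hB : Bᵀ = B) (hH : ∀ l, (H l)ᵀ = H l) {κ : ℝ}
    (hκ : ∀ v : Fin n → ℝ, ∑ l, ∑ i, (∑ j, H l i j * v j) ^ 2 ≤ κ * ∑ i, v i ^ 2) (k : ℕ) :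
    ∑ l, trace (B ^ (2 * k) * (H l * H l)) ≤ κ * trace (B ^ (2 * k)) := by
  have Bk : (B ^ k)ᵀ = B ^ k := by rw [transpose_pow, hB]
  have e0 : ∀ M : Matrix (Fin n) (Fin n) ℝ, trace (M * Mᵀ) = ∑ i, ∑ j, M j i ^ 2 := fun M => by
    rw [trace_mul_comm, trace]
    refine Finset.sum_congr rfl fun i _ => ?_
    rw [diag_apply, mul_apply]
    exact Finset.sum_congr rfl fun j _ => by rw [transpose_apply]; ring
  have e1 : ∀ l, trace (B ^ (2 * k) * (H l * H l)) = ∑ i, ∑ j, (H l * B ^ k) j i ^ 2 := fun l => by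
    rw [← e0, transpose_mul, hH, Bk, trace_mul_comm (B ^ (2 * k)), two_mul, pow_add]
    simp only [Matrix.mul_assoc]
    rw [trace_mul_comm (H l)]
    simp only [Matrix.mul_assoc]
  have e2 : trace (B ^ (2 * k)) = ∑ i, ∑ j, (B ^ k) j i ^ 2 := by
    rw [← e0, Bk, two_mul, pow_add]
  simp only [e1]
  rw [e2, Finset.sum_comm, Finset.mul_sum]
  refine Finset.sum_le_sum fun i _ => ?_
  have := hκ fun j => (B ^ k) j i
  simpa only [mul_apply] using this

lemma quad_diag {U : Matrix (Fin n) (Fin n) ℝ} {μ : Fin n → ℝ} (d : B = U * diagonal μ * Uᵀ) (v : Fin n → ℝ) :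
    v ⬝ᵥ B *ᵥ v = ∑ i, μ i * (Uᵀ *ᵥ v) i ^ 2 := by
  rw [d, Matrix.mul_assoc, ← mulVec_mulVec, ← mulVec_mulVec, dotProduct_mulVec, ← mulVec_transpose]
  refine Finset.sum_congr rfl fun i _ => ?_
  rw [mulVec_diagonal]; ring

lemma sum_sq_orth {U : Matrix (Fin n) (Fin n) ℝ} (e : U * Uᵀ = 1) (v : Fin n → ℝ) :
    ∑ i, (Uᵀ *ᵥ v) i ^ 2 = ∑ i, v i ^ 2 := by
  have h := quad_diag (B := 1) (U := U) (μ := fun _ => 1) (by simp [e]) v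
  simp only [one_mulVec, one_mul] at h
  rw [← h]; exact Finset.sum_congr rfl fun i _ => by ring

lemma trace_diag {U : Matrix (Fin n) (Fin n) ℝ} {μ : Fin n → ℝ} (e : Uᵀ * U = 1) (d : B = U * diagonal μ * Uᵀ) :
    trace B = ∑ i, μ i := by
  rw [d, trace_mul_comm, ← Matrix.mul_assoc, e, Matrix.one_mul, trace_diagonal]

end matrix
end IsoGauge

namespace IsoGauge
open scoped Topology
set_option linter.unusedSectionVars false
variable {n : ℕ}
variable (m : Measure (E n)) [CptMeas m]

/-! ### The covariance matrix stays close to the identity for a short time -/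

/-- Entrywise version of `SF` for matrix-valued functions. -/
def MF (U : ℝ → E n → Matrix (Fin n) (Fin n) ℝ) (D : Fin n → ℝ → E n → Matrix (Fin n) (Fin n) ℝ)
    (L : ℝ → E n → Matrix (Fin n) (Fin n) ℝ) : Prop :=
  ∀ i j, SF m Set.univ (fun s θ => U s θ i j) (fun l s θ => D l s θ i j) (fun s θ => L s θ i j)

variable {m} in
lemma MF.mul {U V L M : ℝ → E n → Matrix (Fin n) (Fin n) ℝ} {D F : Fin n → ℝ → E n → Matrix (Fin n) (Fin n) ℝ}
    (h : MF m U D L) (h' : MF m V F M) : MF m (fun s θ => U s θ * V s θ)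
      (fun l s θ => D l s θ * V s θ + U s θ * F l s θ)
      (fun s θ => L s θ * V s θ + U s θ * M s θ + ∑ l, D l s θ * F l s θ) := by
  intro i j
  have h1 := SF.sum Finset.univ fun k => (h i k).mul (h' k j)
  simp only [Matrix.add_apply, Matrix.mul_apply, Matrix.sum_apply]
  convert! h1 using 4
  · rw [Finset.sum_add_distrib]
  · rw [Finset.sum_add_distrib, Finset.sum_add_distrib]
    congr 1
    rw [Finset.sum_comm]

/-- The covariance matrix of the tilted measure. -/
def Am (s : ℝ) (θ : E n) : Matrix (Fin n) (Fin n) ℝ :=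
  Matrix.of fun i j => cv m (fun x => x i) (fun x => x j) s θ

/-- The deviation of the covariance matrix from the identity. -/
def Bm (s : ℝ) (θ : E n) : Matrix (Fin n) (Fin n) ℝ := Am m s θ - 1

/-- The partial derivatives of the covariance matrix: slices of the third cumulant tensor. -/
def Hm (l : Fin n) (s : ℝ) (θ : E n) : Matrix (Fin n) (Fin n) ℝ :=
  Matrix.of fun i j => c3 m (fun x => x i) (fun x => x j) (fun x => x l) s θ

lemma Am_symm (s : ℝ) (θ : E n) : (Am m s θ).transpose = Am m s θ := by
  ext i j; exact cv_comm m _ _ s θ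

lemma Bm_symm (s : ℝ) (θ : E n) : (Bm m s θ).transpose = Bm m s θ := by
  unfold Bm; rw [Matrix.transpose_sub, Am_symm, Matrix.transpose_one]

lemma Hm_symm (l : Fin n) (s : ℝ) (θ : E n) : (Hm m l s θ).transpose = Hm m l s θ := by
  ext i j; exact c3_comm m _ _ _ s θ

lemma MF_B : MF m (Bm m) (Hm m) (fun s θ => -(Am m s θ * Am m s θ)) := by
  intro i j
  obtain ⟨ut, D2, h1, h2⟩ := exists_C12_cv m (continuous_coord (n := n) i) (continuous_coord j)
  have h3 : SF m Set.univ _ _ _ := ⟨ut, D2, h1, h2⟩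
  convert! h3.add (SF.const (-((1 : Matrix (Fin n) (Fin n) ℝ) i j))) using 3
  · simp [Hm]
  · rw [add_zero]
    rename_i s θ
    change (-(Am m s θ * Am m s θ)) i j = _
    rw [Matrix.neg_apply, Matrix.mul_apply]
    congr 1
    refine Finset.sum_congr rfl fun k _ => ?_
    simp only [Am, Matrix.of_apply]
    rw [cv_comm m (fun x => x k) (fun x => x j)]

lemma MF_pow (k : ℕ) : MF m (fun s θ => Bm m s θ ^ k) (fun l s θ => DP (Bm m s θ) (Hm m l s θ) k)
    (fun s θ => LP (Bm m s θ) (fun l => Hm m l s θ) (-(Am m s θ * Am m s θ)) k) := by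
  induction k with
  | zero =>
    intro i j
    simpa [DP, LP] using SF.const (m := m) (I := Set.univ) ((1 : Matrix (Fin n) (Fin n) ℝ) i j)
  | succ k ih =>
    have := ih.mul (MF_B m)
    simpa only [pow_succ, DP, LP] using this

/-- `tr (A - 1)^{2(j+1)}`. -/
def St (j : ℕ) (s : ℝ) (θ : E n) : ℝ := Matrix.trace (Bm m s θ ^ (2 * j + 2))

/-- The generator applied to `St`. -/
def LSt (j : ℕ) (s : ℝ) (θ : E n) : ℝ :=
  Matrix.trace (LP (Bm m s θ) (fun l => Hm m l s θ) (-(Am m s θ * Am m s θ)) (2 * j + 2))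

lemma SF_St (j : ℕ) : ∃ D, SF m Set.univ (St m j) D (LSt m j) :=
  ⟨_, SF.sum Finset.univ fun i => MF_pow m (2 * j + 2) i i⟩

lemma Bm_quad (s : ℝ) (θ : E n) (v : E n) : v.ofLp ⬝ᵥ (Bm m s θ).mulVec v.ofLp =
    cv m (fun x => inner ℝ v x) (fun x => inner ℝ v x) s θ - ‖v‖ ^ 2 := by
  rw [Bm, Matrix.sub_mulVec, dotProduct_sub, Matrix.one_mulVec, norm_sq_eq_sum,
    cv_inner m (continuous_inner_left v)]
  congr 1
  · refine Finset.sum_congr rfl fun i _ => ?_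
    congr 1
    rw [cv_comm, cv_inner m (continuous_coord i)]
    change ∑ j, Am m s θ i j * v j = _
    exact Finset.sum_congr rfl fun j _ => by simp only [Am, Matrix.of_apply]; ring
  · exact Finset.sum_congr rfl fun j _ => by ring

/-- Spectral data of the covariance matrix. -/
lemma eig (s : ℝ) (θ : E n) : ∃ (U : Matrix (Fin n) (Fin n) ℝ) (μ : Fin n → ℝ), U.transpose * U = 1 ∧
    U * U.transpose = 1 ∧ (∀ k, Bm m s θ ^ k = U * Matrix.diagonal (fun i => μ i ^ k) * U.transpose) ∧
    (∀ i, -1 ≤ μ i) ∧ ∀ j, St m j s θ = ∑ i, μ i ^ (2 * j + 2) := by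
  obtain ⟨U, μ, e1, e2, d⟩ := exists_diag (Bm_symm m s θ)
  refine ⟨U, μ, e1, e2, d, fun i => ?_, fun j => trace_diag e1 (d _)⟩
  have d1 : Bm m s θ = U * Matrix.diagonal μ * U.transpose := by simpa using d 1
  set v : E n := WithLp.toLp 2 (U.mulVec (Pi.single i 1)) with hv
  have hw : U.transpose.mulVec v.ofLp = Pi.single i 1 := by rw [hv, Matrix.mulVec_mulVec, e1, Matrix.one_mulVec]
  have h1 := Bm_quad m s θ v
  rw [quad_diag d1, hw, norm_sq_eq_sum, ← sum_sq_orth e2, hw] at h1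
  have h2 := cv_self_nonneg m (continuous_inner_left v) s θ
  simp [Pi.single_apply] at h1
  linarith

lemma eig_quad {s : ℝ} {θ : E n} {U : Matrix (Fin n) (Fin n) ℝ} {μ : Fin n → ℝ}
    (e : U * U.transpose = 1) (d : ∀ k, Bm m s θ ^ k = U * Matrix.diagonal (fun i => μ i ^ k) * U.transpose)
    (v : E n) : cv m (fun x => inner ℝ v x) (fun x => inner ℝ v x) s θ =
      ∑ i, (1 + μ i) * (U.transpose.mulVec v.ofLp) i ^ 2 := by
  have d1 : Bm m s θ = U * Matrix.diagonal μ * U.transpose := by simpa using d 1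
  have h1 := Bm_quad m s θ v
  rw [quad_diag d1, norm_sq_eq_sum, ← sum_sq_orth e] at h1
  simp only [add_mul, one_mul, Finset.sum_add_distrib]
  linarith

lemma elem_ineq {x δ : ℝ} (hx : 0 ≤ x) (hδ : 0 < δ) (hδ1 : δ ≤ 1) (j : ℕ) :
    x ^ (2 * j + 1) ≤ (x ^ (2 * j + 2) + δ ^ (2 * j + 2)) / δ ^ 2 ∧
    x ^ (2 * j) ≤ (x ^ (2 * j + 2) + δ ^ (2 * j + 2)) / δ ^ 2 := by
  rw [le_div_iff₀ (by positivity), le_div_iff₀ (by positivity)]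
  have p1 : 0 ≤ x ^ (2 * j) := by positivity
  have p2 : 0 ≤ δ ^ (2 * j) := by positivity
  have e1 : x ^ (2 * j + 1) = x ^ (2 * j) * x := pow_succ _ _
  have e2 : x ^ (2 * j + 2) = x ^ (2 * j) * x ^ 2 := pow_add _ _ _
  have e3 : δ ^ (2 * j + 2) = δ ^ (2 * j) * δ ^ 2 := pow_add _ _ _
  rw [e1, e2, e3]
  rcases le_total δ x with h | h
  · have q : 0 ≤ δ ^ (2 * j) * δ ^ 2 := by positivity
    have h1 : x * δ ^ 2 ≤ x ^ 2 := by
      have : δ ^ 2 ≤ x := by nlinarith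
      nlinarith
    have h2 : δ ^ 2 ≤ x ^ 2 := by gcongr
    constructor
    · nlinarith [mul_le_mul_of_nonneg_left h1 p1]
    · nlinarith [mul_le_mul_of_nonneg_left h2 p1]
  · have q : 0 ≤ x ^ (2 * j) * x ^ 2 := by positivity
    have h0 : x ^ (2 * j) ≤ δ ^ (2 * j) := by gcongr
    have h1 : x ^ (2 * j) * x ≤ δ ^ (2 * j) * 1 := by gcongr; exact h.trans hδ1
    constructor
    · nlinarith [mul_le_mul_of_nonneg_right h1 (sq_nonneg δ)]
    · nlinarith [mul_le_mul_of_nonneg_right h0 (sq_nonneg δ)]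

set_option maxHeartbeats 1000000 in
/-- The differential inequality for `tr (A - 1)^{2(j+1)}`. The drift `-A²` and the third cumulants have size
depending on the norm of `A`, which is itself bounded by the trace. -/
lemma LSt_le (H : SLC m 0) {s δ : ℝ} (hs : 0 < s) (hs1 : s ≤ 1) (hδ : 0 < δ) (hδ1 : δ ≤ 1) {j : ℕ} (hj : 1 ≤ j)
    (θ : E n) : LSt m j s θ ≤ (1 + St m j s θ) * (64 * ((j : ℝ) + 1) ^ 2 / √s) *
      ((St m j s θ + n * δ ^ (2 * j + 2)) / δ ^ 2) := by
  obtain ⟨U, μ, e1, e2, d, hμ, hS⟩ := eig m s θ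
  have hS := hS j
  set S := St m j s θ with hSd
  have pe : ∀ i, 0 ≤ μ i ^ (2 * j + 2) := fun i => Even.pow_nonneg ⟨j + 1, by ring⟩ _
  have S0 : 0 ≤ S := by rw [hS]; exact Finset.sum_nonneg fun i _ => pe i
  set c := √√(1 + S) with hc
  have c4 : c ^ 4 = 1 + S := by
    rw [show c ^ 4 = (c ^ 2) ^ 2 by ring, hc, Real.sq_sqrt (by positivity), Real.sq_sqrt (by positivity)]
  have c1 : 1 ≤ c := by
    rw [hc, Real.one_le_sqrt, Real.one_le_sqrt]; linarith
  have hμc : ∀ i, μ i ≤ c := fun i => by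
    by_contra! h
    have h1 : μ i ^ (2 * j + 2) ≤ S := by
      rw [hS]; exact Finset.single_le_sum (fun i _ => pe i) (Finset.mem_univ i)
    have h2 : c ^ (2 * j + 2) ≤ μ i ^ (2 * j + 2) := by gcongr
    have h3 : c ^ 4 ≤ c ^ (2 * j + 2) := pow_le_pow_right₀ c1 (by omega)
    linarith
  have hα : ∀ v : E n, cv m (fun x => inner ℝ v x) (fun x => inner ℝ v x) s θ ≤ (2 * c) * ‖v‖ ^ 2 := fun v => by
    rw [eig_quad m e2 d, norm_sq_eq_sum, ← sum_sq_orth e2, Finset.mul_sum]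
    refine Finset.sum_le_sum fun i _ => ?_
    gcongr
    linarith [hμc i]
  set κ := 4 * (2 * c) ^ 2 / √(s / (2 * (2 * c))) with hκ
  have κ0 : 0 ≤ κ := by positivity
  have hκ1 : κ ≤ 32 * (1 + S) / √s := by
    have s1 : √(s / (2 * (2 * c))) = √s / (2 * √c) := by
      rw [Real.sqrt_div hs.le, show 2 * (2 * c) = 2 ^ 2 * c by ring, Real.sqrt_mul (by positivity),
        Real.sqrt_sq (by norm_num)]
    have s2 : √c ≤ c ^ 2 := Real.sqrt_le_iff.2 ⟨by positivity, by
      calc c = c ^ 1 := (pow_one c).symm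
        _ ≤ c ^ 4 := pow_le_pow_right₀ c1 (by norm_num)
        _ = _ := by ring⟩
    have hs' : 0 < √s := Real.sqrt_pos.2 hs
    have hc' : 0 < √c := Real.sqrt_pos.2 (by linarith)
    rw [hκ, s1, ← c4, div_div_eq_mul_div]
    refine div_le_div_of_nonneg_right ?_ hs'.le
    nlinarith [mul_le_mul_of_nonneg_left s2 (sq_nonneg c)]
  have hthird : ∀ v : Fin n → ℝ, ∑ l, ∑ i, (∑ j, Hm m l s θ i j * v j) ^ 2 ≤ κ * ∑ i, v i ^ 2 := fun v => by
    have := third_bound m hs H (α := 2 * c) (by linarith) θ hα (WithLp.toLp 2 v)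
    rw [norm_sq_eq_sum] at this
    exact this
  have hX := trace_pow_sq_le (Bm_symm m s θ) (fun l => Hm_symm m l s θ) hthird j
  have hL := trace_LP (L := -(Am m s θ * Am m s θ)) (Bm_symm m s θ) (fun l => Hm_symm m l s θ) (N := 2 * j)
    ⟨j, by ring⟩ (2 * j + 2) 0 (by omega)
  rw [pow_zero, Matrix.one_mul] at hL
  set P := (S + n * δ ^ (2 * j + 2)) / δ ^ 2 with hP
  have P0 : 0 ≤ P := by positivity
  have hP' : P = ∑ i, (|μ i| ^ (2 * j + 2) + δ ^ (2 * j + 2)) / δ ^ 2 := by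
    rw [← Finset.sum_div, Finset.sum_add_distrib, hP, hS]
    simp only [Finset.sum_const, Finset.card_univ, Fintype.card_fin, nsmul_eq_mul]
    congr 2
    exact Finset.sum_congr rfl fun i _ => (Even.pow_abs ⟨j + 1, by ring⟩ _).symm
  have t1 : Matrix.trace (Bm m s θ ^ (2 * j)) ≤ P := by
    rw [trace_diag e1 (d _), hP']
    refine Finset.sum_le_sum fun i _ => ?_
    rw [← Even.pow_abs (⟨j, by ring⟩ : Even (2 * j))]
    exact (elem_ineq (abs_nonneg _) hδ hδ1 j).2
  have t2 : Matrix.trace (Bm m s θ ^ (2 * j + 1) * -(Am m s θ * Am m s θ)) ≤ P := by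
    have eA : Bm m s θ ^ (2 * j + 1) * -(Am m s θ * Am m s θ) = -(Bm m s θ ^ (2 * j + 1) +
        2 • Bm m s θ ^ (2 * j + 2) + Bm m s θ ^ (2 * j + 3)) := by
      have : Am m s θ = 1 + Bm m s θ := by unfold Bm; abel
      rw [this, pow_succ _ (2 * j + 2), pow_succ _ (2 * j + 1)]
      noncomm_ring
    rw [eA, Matrix.trace_neg, Matrix.trace_add, Matrix.trace_add, Matrix.trace_smul, trace_diag e1 (d _),
      trace_diag e1 (d _), trace_diag e1 (d _), hP', nsmul_eq_mul, Finset.mul_sum, ← Finset.sum_add_distrib,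
      ← Finset.sum_add_distrib, ← Finset.sum_neg_distrib]
    refine Finset.sum_le_sum fun i _ => le_trans ?_ (elem_ineq (abs_nonneg _) hδ hδ1 j).1
    -- Only negative eigenvalues contribute, and for these the covariance is at most one.
    have h1 : -(μ i ^ (2 * j + 1) + (2 : ℕ) * μ i ^ (2 * j + 2) + μ i ^ (2 * j + 3)) =
        (-μ i) ^ (2 * j + 1) * (1 + μ i) ^ 2 := by
      rw [Odd.neg_pow ⟨j, by ring⟩]; push_cast; ring
    rw [h1]
    rcases le_total 0 (μ i) with h | h
    · have : (-μ i) ^ (2 * j + 1) ≤ 0 := by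
        rw [Odd.neg_pow ⟨j, by ring⟩]; have : 0 ≤ μ i ^ (2 * j + 1) := by positivity
        linarith
      exact (mul_nonpos_of_nonpos_of_nonneg this (sq_nonneg _)).trans (by positivity)
    · rw [abs_of_nonpos h]
      refine mul_le_of_le_one_right (pow_nonneg (by linarith) _) ?_
      have := hμ i
      nlinarith
  have hs' : 0 < √s := Real.sqrt_pos.2 hs
  have hs1' : √s ≤ 1 := Real.sqrt_le_one.2 hs1
  have hone : 1 ≤ (1 + S) / √s := by rw [le_div_iff₀ hs']; linarith
  set W := (1 + S) / √s with hW
  have hκ2 : κ ≤ 32 * W := by rw [hW]; calc κ ≤ _ := hκ1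
                                    _ = _ := by ring
  have hX' : ∑ l, Matrix.trace (Bm m s θ ^ (2 * j) * (Hm m l s θ * Hm m l s θ)) ≤ 32 * W * P :=
    hX.trans ((mul_le_mul_of_nonneg_left t1 κ0).trans (mul_le_mul_of_nonneg_right hκ2 P0))
  have hj0 : (0 : ℝ) ≤ j := Nat.cast_nonneg j
  push_cast at hL
  calc LSt m j s θ ≤ _ := hL
    _ ≤ (2 * j + 2) * P + (2 * j + 2) * (2 * j + 2 - 1) / 2 * (32 * W * P) := by
        have : (0 : ℝ) ≤ (2 * j + 2) * (2 * j + 2 - 1) / 2 := by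
          have : (0 : ℝ) ≤ 2 * j + 2 - 1 := by linarith
          positivity
        gcongr
    _ ≤ (2 * j + 2) * (W * P) + (2 * j + 2) * (2 * j + 2 - 1) / 2 * (32 * W * P) := by
        have : P ≤ W * P := le_mul_of_one_le_left P0 hone
        gcongr
    _ ≤ 64 * ((j : ℝ) + 1) ^ 2 * (W * P) := by
        have : 0 ≤ W * P := mul_nonneg (by linarith) P0
        nlinarith [mul_nonneg hj0 this]
    _ = _ := by rw [hW]; ring

end IsoGauge

namespace IsoGauge
open scoped Topology
set_option linter.unusedSectionVars false
variable {n : ℕ}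
variable (m : Measure (E n)) [CptMeas m]

variable {m} in
lemma SF.comp {I : Set ℝ} {u L : ℝ → E n → ℝ} {D : Fin n → ℝ → E n → ℝ} {φ φ' φ'' : ℝ → ℝ} {J : Set ℝ}
    (h : SF m I u D L) (hJ : IsCompact J) (huJ : ∀ s ∈ I, ∀ θ, u s θ ∈ J)
    (h1 : ∀ y ∈ J, HasDerivAt φ (φ' y) y) (h2 : ∀ y ∈ J, HasDerivAt φ' (φ'' y) y)
    (h3 : ContinuousOn φ'' J) :
    SF m I (fun s θ => φ (u s θ)) (fun i s θ => φ' (u s θ) * D i s θ)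
      (fun s θ => φ' (u s θ) * L s θ + φ'' (u s θ) / 2 * ∑ i, D i s θ ^ 2) := by
  obtain ⟨ut, D2, h4, h5⟩ := h
  exact ⟨_, _, h4.comp hJ huJ h1 h2 h3, fun s θ => by rw [Lop_comp, h5]⟩

variable {m} in
lemma SF.hasDerivAt {I : Set ℝ} {u L : ℝ → E n → ℝ} {D : Fin n → ℝ → E n → ℝ}
    (h : SF m I u D L) {s : ℝ} (hs : 0 < s) (hI : I ∈ 𝓝 s) :
    HasDerivAt (fun r => Es m r (u r)) (Es m s (L s)) s := by
  obtain ⟨ut, D2, h4, h5⟩ := h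
  have := flow m h4 hs hI
  rwa [show Lop m ut D D2 s = L s from funext fun θ => h5 s θ] at this

variable {m} in
lemma SF.BC_L {I : Set ℝ} {u L : ℝ → E n → ℝ} {D : Fin n → ℝ → E n → ℝ}
    (h : SF m I u D L) {s : ℝ} (hs : s ∈ I) : BC (L s) := by
  obtain ⟨ut, D2, h4, h5⟩ := h
  have := BC_Lop m h4 hs
  rwa [show Lop m ut D D2 s = L s from funext fun θ => h5 s θ] at this

variable {m} in
lemma SF.BC_u {I : Set ℝ} {u L : ℝ → E n → ℝ} {D : Fin n → ℝ → E n → ℝ}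
    (h : SF m I u D L) {s : ℝ} (hs : s ∈ I) : BC (u s) := by
  obtain ⟨ut, D2, h4, h5⟩ := h
  exact h4.BC_u hs

lemma St_nonneg (j : ℕ) (s : ℝ) (θ : E n) : 0 ≤ St m j s θ := by
  obtain ⟨U, μ, -, -, -, -, hS⟩ := eig m s θ
  rw [hS j]
  exact Finset.sum_nonneg fun i _ => Even.pow_nonneg ⟨j + 1, by ring⟩ _

lemma continuous_St (j : ℕ) : Continuous fun p : ℝ × E n => St m j p.1 p.2 := by
  have hA : Continuous fun p : ℝ × E n => Am m p.1 p.2 := by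
    refine continuous_matrix fun i k => ?_
    change Continuous fun p : ℝ × E n => cv m (fun x => x i) (fun x => x k) p.1 p.2
    unfold cv
    have h1 := continuous_Q m (g := fun x => x i * x k) ((continuous_coord i).mul (continuous_coord k))
    exact h1.sub ((continuous_Q m (continuous_coord i)).mul (continuous_Q m (continuous_coord k)))
  unfold St Bm
  exact ((hA.sub continuous_const).pow _).matrix_trace

/-- Bounded increasing function of `St`, the quantity to which the Grönwall argument is applied. -/
def hS (j : ℕ) (s : ℝ) (θ : E n) : ℝ := 1 - (1 + St m j s θ)⁻¹

lemma hS_nonneg (j : ℕ) (s : ℝ) (θ : E n) : 0 ≤ hS m j s θ := by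
  have := St_nonneg m j s θ
  have h : (1 + St m j s θ)⁻¹ ≤ 1 := inv_le_one_of_one_le₀ (by linarith)
  unfold hS; linarith

lemma hS_le_one (j : ℕ) (s : ℝ) (θ : E n) : hS m j s θ ≤ 1 := by
  have := St_nonneg m j s θ
  have h : 0 ≤ (1 + St m j s θ)⁻¹ := by positivity
  unfold hS; linarith

lemma SF_hS (j : ℕ) : ∃ D L, SF m Set.univ (hS m j) D L ∧
    ∀ s θ, L s θ ≤ (1 + St m j s θ)⁻¹ ^ 2 * LSt m j s θ := by
  obtain ⟨D, hD⟩ := SF_St m j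
  obtain ⟨ut, D2, h1, -⟩ := id hD
  obtain ⟨C, hC⟩ := h1.bound
  have := hD.comp (φ := fun y => 1 - (1 + y)⁻¹) (φ' := fun y => (1 + y)⁻¹ ^ 2)
    (φ'' := fun y => -2 * (1 + y)⁻¹ ^ 3) (J := Set.Icc 0 C) isCompact_Icc
    (fun s hs θ => ⟨St_nonneg m j s θ, (le_abs_self _).trans (hC s hs θ).1⟩) (fun y hy => ?_) (fun y hy => ?_) ?_
  · refine ⟨_, _, this, fun s θ => ?_⟩
    have h0 := St_nonneg m j s θ
    have h2 : 0 ≤ (1 + St m j s θ)⁻¹ ^ 3 := by positivity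
    have h3 : 0 ≤ ∑ i, D i s θ ^ 2 := Finset.sum_nonneg fun i _ => sq_nonneg _
    have := mul_nonneg h2 h3
    linarith
  · have h0 : (1 + y) ≠ 0 := by linarith [hy.1]
    have h2 : HasDerivAt (fun y : ℝ => 1 + y) 1 y := (hasDerivAt_id y).const_add 1
    convert! (h2.inv h0).const_sub 1 using 1
    field_simp
  · have h0 : (1 + y) ≠ 0 := by linarith [hy.1]
    have h2 : HasDerivAt (fun y : ℝ => 1 + y) 1 y := (hasDerivAt_id y).const_add 1
    convert! (h2.inv h0).pow 2 using 1
    simp only [Pi.inv_apply]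
    field_simp
    norm_num
    field_simp
  · refine ContinuousOn.mul continuousOn_const (ContinuousOn.pow (ContinuousOn.inv₀ (by fun_prop) fun y hy => ?_) 3)
    linarith [hy.1]

lemma antitone_of_deriv {f f' : ℝ → ℝ} {b : ℝ} (h : ∀ r, 0 < r → r ≤ b → HasDerivAt f (f' r) r)
    (h' : ∀ r, 0 < r → r ≤ b → f' r ≤ 0) : AntitoneOn f (Set.Ioc 0 b) := by
  refine antitoneOn_of_deriv_nonpos (convex_Ioc 0 b)
    (fun r hr => (h r hr.1 hr.2).continuousAt.continuousWithinAt)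
    (fun r hr => ?_) fun r hr => ?_
  · have hr := interior_subset hr
    exact (h r hr.1 hr.2).differentiableAt.differentiableWithinAt
  · have hr := interior_subset hr
    rw [(h r hr.1 hr.2).deriv]; exact h' r hr.1 hr.2

lemma le_at_zero {f f' : ℝ → ℝ} {b : ℝ} (hb : 0 < b) (h : ∀ r, 0 < r → r ≤ b → HasDerivAt f (f' r) r)
    (h' : ∀ r, 0 < r → r ≤ b → f' r ≤ 0) (hc : ContinuousAt f 0) : f b ≤ f 0 := by
  have h1 := antitone_of_deriv h h'
  refine ge_of_tendsto (hc.tendsto.mono_left (nhdsWithin_le_nhds (s := Set.Ioi 0))) ?_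
  filter_upwards [Ioo_mem_nhdsGT hb] with r hr
  exact h1 ⟨hr.1, hr.2.le⟩ ⟨hb, le_rfl⟩ hr.2.le

set_option maxHeartbeats 1000000 in
/-- Grönwall: for short times the covariance matrix remains close to the identity on average. -/
lemma Es_hS_le (H : SLC m 0) (h0 : Bm m 0 0 = 0) {s δ : ℝ} (hs : 0 < s) (hs1 : s ≤ 1) (hδ : 0 < δ) (hδ1 : δ ≤ 1)
    {j : ℕ} (hj : 1 ≤ j) : Es m s (hS m j s) ≤
      n * δ ^ (2 * j + 2) * exp (2 * (64 * ((j : ℝ) + 1) ^ 2 / δ ^ 2) * √s) := by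
  set a := 64 * ((j : ℝ) + 1) ^ 2 / δ ^ 2 with ha
  set η := n * δ ^ (2 * j + 2) with hη
  have a0 : 0 ≤ a := by positivity
  have η0 : 0 ≤ η := by positivity
  obtain ⟨D, L, hF, hL⟩ := SF_hS m j
  have key := le_at_zero (f := fun r => exp (-(2 * a * √r)) * (Es m r (hS m j r) + η))
    (f' := fun r => exp (-(2 * a * √r)) * (-(2 * a * (1 / (2 * √r)))) * (Es m r (hS m j r) + η) +
      exp (-(2 * a * √r)) * Es m r (L r)) hs ?_ ?_ ?_
  · have e0 : Es m 0 (hS m j 0) = 0 := by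
      rw [Es_zero, hS, St, h0]
      simp
    rw [e0, Real.sqrt_zero] at key
    simp only [mul_zero, neg_zero, exp_zero, one_mul, zero_add] at key
    have h2 : Es m s (hS m j s) + η ≤ exp (2 * a * √s) * η := by
      calc _ = exp (2 * a * √s) * (exp (-(2 * a * √s)) * (Es m s (hS m j s) + η)) := by
            rw [← mul_assoc, ← exp_add]; simp
        _ ≤ _ := mul_le_mul_of_nonneg_left key (exp_pos _).le
    linarith
  · intro r hr _
    have h1 : HasDerivAt (fun r => exp (-(2 * a * √r))) (exp (-(2 * a * √r)) * (-(2 * a * (1 / (2 * √r))))) r :=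
      (((Real.hasDerivAt_sqrt hr.ne').const_mul (2 * a)).neg).exp
    exact h1.mul ((hF.hasDerivAt hr Filter.univ_mem).add_const η)
  · intro r hr hrs
    have hr' : 0 < √r := Real.sqrt_pos.2 hr
    have h1 : Es m r (L r) ≤ a / √r * (Es m r (hS m j r) + η) := by
      have hb := hF.BC_u (Set.mem_univ r)
      calc Es m r (L r) ≤ Es m r (fun θ => a / √r * (hS m j r θ + η)) := by
            refine Es_mono m (hF.BC_L (Set.mem_univ r)) ((hb.add (BC.const η)).const_mul _) (fun θ => ?_) r
            have S0 := St_nonneg m j r θ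
            refine (hL r θ).trans ?_
            have h2 := LSt_le m H hr (hrs.trans hs1) hδ hδ1 hj θ
            set S := St m j r θ with hSd
            have p : 0 ≤ (1 + S)⁻¹ ^ 2 := by positivity
            refine (mul_le_mul_of_nonneg_left h2 p).trans ?_
            have h3 : hS m j r θ = S / (1 + S) := by
              unfold hS; rw [← hSd]; field_simp; ring
            have h4 : η / (1 + S) ≤ η := div_le_self η0 (by linarith)
            calc _ = a / √r * (S / (1 + S) + η / (1 + S)) := by
                  rw [ha, hη]; field_simp
              _ ≤ _ := by rw [h3]; gcongr
        _ = _ := by rw [Es_const_mul, Es_add m hb (BC.const η), Es_const]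
    have h2 : 2 * a * (1 / (2 * √r)) = a / √r := by field_simp
    rw [h2]
    have := mul_le_mul_of_nonneg_left h1 (exp_pos (-(2 * a * √r))).le
    linarith
  · have h1 : ContinuousAt (fun s => Es m s (hS m j s)) 0 := by
      have hc : Continuous fun p : ℝ × E n => hS m j p.1 p.2 := by
        unfold hS
        have h2 : Continuous fun p : ℝ × E n => 1 + St m j p.1 p.2 := continuous_const.add (continuous_St m j)
        exact continuous_const.sub (h2.inv₀ fun p => by linarith [St_nonneg m j p.1 p.2])
      refine continuousAt_Es m (C := 1) (.of_forall fun s => (hF.BC_u (Set.mem_univ s)).1)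
        (.of_forall fun s θ => ?_) fun θ => hc.continuousAt
      rw [abs_le]; exact ⟨by linarith [hS_nonneg m j s θ], hS_le_one m j s θ⟩
    have h2 : Continuous fun r => exp (-(2 * a * √r)) := by fun_prop
    exact h2.continuousAt.mul (h1.add continuousAt_const)

end IsoGauge

namespace IsoGauge
open scoped Topology
set_option linter.unusedSectionVars false
variable {n : ℕ}
variable (m : Measure (E n)) [CptMeas m]

/-- The covariance operator applied to `v`. -/
def cov (s : ℝ) (θ : E n) (v : E n) : E n := wv m (fun x => inner ℝ v x) s θ

lemma cov_eq (s : ℝ) (θ v : E n) : (cov m s θ v).ofLp = (Am m s θ).mulVec v.ofLp := by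
  ext i
  change cv m (fun x => inner ℝ v x) (fun x => x i) s θ = ∑ j, Am m s θ i j * v j
  rw [cv_comm, cv_inner m (continuous_coord i)]
  exact Finset.sum_congr rfl fun j _ => by simp only [Am, Matrix.of_apply]; ring

lemma cov_add (s : ℝ) (θ v w : E n) : cov m s θ (v + w) = cov m s θ v + cov m s θ w := by
  apply WithLp.ofLp_injective 2
  rw [cov_eq, WithLp.ofLp_add, WithLp.ofLp_add, cov_eq, cov_eq, Matrix.mulVec_add]

lemma cov_smul (s : ℝ) (θ : E n) (c : ℝ) (v : E n) : cov m s θ (c • v) = c • cov m s θ v := by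
  apply WithLp.ofLp_injective 2
  rw [cov_eq, WithLp.ofLp_smul, WithLp.ofLp_smul, cov_eq, Matrix.mulVec_smul]

lemma norm_cov_sq {s : ℝ} {θ : E n} {U : Matrix (Fin n) (Fin n) ℝ} {μ : Fin n → ℝ} (e1 : U.transpose * U = 1)
    (e : U * U.transpose = 1) (d : ∀ k, Bm m s θ ^ k = U * Matrix.diagonal (fun i => μ i ^ k) * U.transpose)
    (v : E n) : ‖cov m s θ v‖ ^ 2 = ∑ i, (1 + μ i) ^ 2 * (U.transpose.mulVec v.ofLp) i ^ 2 := by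
  rw [norm_sq_eq_sum, ← sum_sq_orth e, cov_eq]
  have d1 : Bm m s θ = U * Matrix.diagonal μ * U.transpose := by simpa using d 1
  have h1 : U.transpose.mulVec ((Am m s θ).mulVec v.ofLp) =
      fun i => (1 + μ i) * (U.transpose.mulVec v.ofLp) i := by
    have hA : Am m s θ = 1 + Bm m s θ := by unfold Bm; abel
    rw [hA, Matrix.add_mulVec, Matrix.one_mulVec, d1, ← Matrix.mulVec_mulVec, ← Matrix.mulVec_mulVec,
      Matrix.mulVec_add, Matrix.mulVec_mulVec _ U.transpose U, e1, Matrix.one_mulVec]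
    ext i
    simp only [Pi.add_apply, Matrix.mulVec_diagonal]; ring
  rw [h1]
  exact Finset.sum_congr rfl fun i _ => by ring

lemma norm_cov_le {s α : ℝ} {θ : E n} (hα : 0 ≤ α)
    (h : ∀ v : E n, cv m (fun x => inner ℝ v x) (fun x => inner ℝ v x) s θ ≤ α * ‖v‖ ^ 2) (v : E n) :
    ‖cov m s θ v‖ ^ 2 ≤ α ^ 2 * ‖v‖ ^ 2 := by
  set w := cov m s θ v with hw
  have h1 : cv m (fun x => inner ℝ v x) (fun x => inner ℝ w x) s θ = ‖w‖ ^ 2 := by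
    rw [cv_inner_wv m (continuous_inner_left v), ← real_inner_self_eq_norm_sq]; rfl
  have h2 := cv_cs m (continuous_inner_left v) (continuous_inner_left w) s θ
  rw [h1] at h2
  have h3 : (‖w‖ ^ 2) ^ 2 ≤ (α * ‖v‖ ^ 2) * (α * ‖w‖ ^ 2) :=
    h2.trans (mul_le_mul (h v) (h w) (cv_self_nonneg m (continuous_inner_left w) s θ) (by positivity))
  rcases eq_or_ne (‖w‖ ^ 2) 0 with h0 | h0
  · rw [h0]; positivity
  · have : 0 < ‖w‖ ^ 2 := lt_of_le_of_ne (sq_nonneg _) (Ne.symm h0)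
    nlinarith

lemma cv_le_of_supp {R : ℝ} (hR : ∀ᵐ x ∂m, ‖x‖ ≤ R) (s : ℝ) (θ v : E n) :
    cv m (fun x => inner ℝ v x) (fun x => inner ℝ v x) s θ ≤ R ^ 2 * ‖v‖ ^ 2 := by
  refine (cv_self_le m (continuous_inner_left v) 0 s θ).trans ?_
  rw [Q_eq_integral]
  have hR' : ∀ᵐ x ∂(tilt m s θ), ‖x‖ ≤ R := (tilted_absolutelyContinuous m _).ae_le hR
  have := integral_mono_ae (μ := tilt m s θ) (f := fun x => (inner ℝ v x - 0) ^ 2) (g := fun _ => R ^ 2 * ‖v‖ ^ 2)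
    (cpt_integrable _ (by fun_prop)) (integrable_const _) (hR'.mono fun x hx => by
      simp only [sub_zero]
      have h1 := abs_real_inner_le_norm v x
      rw [← sq_abs, ← mul_pow, mul_comm R]
      gcongr
      exact h1.trans (by gcongr))
  simpa using this

set_option maxHeartbeats 1000000 in
/-- The operator norm of the covariance is controlled by `hS`: if `hS` is small then all
eigenvalues lie in `[1/2, 3/2]`. -/
lemma norm_cov_bounds {R : ℝ} (hR : ∀ᵐ x ∂m, ‖x‖ ≤ R) (j : ℕ) (s : ℝ) (θ v : E n) :
    ‖cov m s θ v‖ ^ 2 ≤ (9 / 4 + R ^ 4 * 2 ^ (2 * j + 3) * hS m j s θ) * ‖v‖ ^ 2 ∧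
    (1 / 4 - 2 ^ (2 * j + 3) * hS m j s θ) * ‖v‖ ^ 2 ≤ ‖cov m s θ v‖ ^ 2 := by
  have hh := hS_nonneg m j s θ
  rcases le_or_gt (1 : ℝ) (2 ^ (2 * j + 3) * hS m j s θ) with h | h
  · constructor
    · refine (norm_cov_le m (sq_nonneg R) (cv_le_of_supp m hR s θ) v).trans ?_
      gcongr
      have : R ^ 4 * 1 ≤ R ^ 4 * (2 ^ (2 * j + 3) * hS m j s θ) := by gcongr
      nlinarith
    · have : (1 / 4 - 2 ^ (2 * j + 3) * hS m j s θ) * ‖v‖ ^ 2 ≤ 0 :=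
        mul_nonpos_of_nonpos_of_nonneg (by linarith) (sq_nonneg _)
      exact this.trans (sq_nonneg _)
  · obtain ⟨U, μ, e1, e2, d, hμ, hSt⟩ := eig m s θ
    have hSt := hSt j
    have S0 := St_nonneg m j s θ
    -- `hS` small forces `St ≤ 2^{-2(j+1)}`.
    have hs1 : St m j s θ ≤ (1 / 2) ^ (2 * j + 2) := by
      by_contra! hc
      set q : ℝ := (1 / 2) ^ (2 * j + 2) with hq
      have q0 : 0 < q := by positivity
      have q1 : q ≤ 1 := pow_le_one₀ (by norm_num) (by norm_num)
      have h2q : (2 : ℝ) ^ (2 * j + 3) * q = 2 := by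
        rw [hq, pow_succ, mul_right_comm, ← mul_pow]; norm_num
      have h3 : q / 2 ≤ hS m j s θ := by
        unfold hS
        have : (1 + St m j s θ)⁻¹ ≤ 1 - q / 2 := by
          rw [inv_le_iff_one_le_mul₀ (by linarith)]
          nlinarith
        linarith
      have : (2 : ℝ) ^ (2 * j + 3) * (q / 2) ≤ 2 ^ (2 * j + 3) * hS m j s θ := by gcongr
      linarith
    have hμ1 : ∀ i, |μ i| ≤ 1 / 2 := fun i => by
      have pe : ∀ i, 0 ≤ μ i ^ (2 * j + 2) := fun i => Even.pow_nonneg ⟨j + 1, by ring⟩ _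
      have h1 : μ i ^ (2 * j + 2) ≤ (1 / 2) ^ (2 * j + 2) := by
        refine le_trans ?_ hs1
        rw [hSt]; exact Finset.single_le_sum (fun i _ => pe i) (Finset.mem_univ i)
      rw [← Even.pow_abs ⟨j + 1, by ring⟩] at h1
      exact le_of_pow_le_pow_left₀ (by omega) (by norm_num) h1
    rw [norm_cov_sq m e1 e2 d, norm_sq_eq_sum, ← sum_sq_orth e2, Finset.mul_sum, Finset.mul_sum]
    constructor
    · refine Finset.sum_le_sum fun i _ => ?_
      gcongr
      have h1 : 0 ≤ R ^ 4 * 2 ^ (2 * j + 3) * hS m j s θ := by positivity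
      have := abs_le.1 (hμ1 i)
      nlinarith
    · refine Finset.sum_le_sum fun i _ => ?_
      gcongr
      have h1 : 0 ≤ 2 ^ (2 * j + 3) * hS m j s θ := by positivity
      have := abs_le.1 (hμ1 i)
      nlinarith

end IsoGauge

namespace IsoGauge
open scoped Topology
set_option linter.unusedSectionVars false
variable {n : ℕ}

/-! ### Log-sum-exp functions -/

section lse
variable {N : ℕ} [NeZero N] (y : Fin N → E n) (β : ℝ)

/-- The partition function of the log-sum-exp function. -/
def ze (x : E n) : ℝ := ∑ j, exp (β * inner ℝ (y j) x)

/-- The softmax weights. -/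
def pw (x : E n) (j : Fin N) : ℝ := exp (β * inner ℝ (y j) x) / ze y β x

/-- The normalised log-sum-exp function, a smooth substitute for `x ↦ max_j ⟨y_j, x⟩`. -/
def fN (x : E n) : ℝ := β⁻¹ * log ((N : ℝ)⁻¹ * ze y β x)

/-- The gradient of `fN`. -/
def ybar (x : E n) : E n := ∑ j, pw y β x j • y j

/-- The variance of the family `b` under the softmax weights. -/
def Vr (b : Fin N → E n) (x : E n) : ℝ := ∑ j, pw y β x j * ‖b j‖ ^ 2 - ‖∑ j, pw y β x j • b j‖ ^ 2

lemma ze_pos (x : E n) : 0 < ze y β x :=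
  Finset.sum_pos (fun _ _ => exp_pos _) Finset.univ_nonempty

lemma pw_nonneg (x : E n) (j : Fin N) : 0 ≤ pw y β x j := div_nonneg (exp_pos _).le (ze_pos y β x).le

lemma sum_pw (x : E n) : ∑ j, pw y β x j = 1 := by
  unfold pw; rw [← Finset.sum_div]; exact div_self (ze_pos y β x).ne'

lemma continuous_ze : Continuous (ze y β) := by
  unfold ze; fun_prop

lemma continuous_pw (j : Fin N) : Continuous fun x => pw y β x j := by
  unfold pw
  exact Continuous.div (by fun_prop) (continuous_ze y β) fun x => (ze_pos y β x).ne'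

lemma N_pos : (0 : ℝ) < N := by exact_mod_cast Nat.pos_of_ne_zero (NeZero.ne N)

lemma continuous_ybar : Continuous (ybar y β) := by
  unfold ybar
  exact continuous_finsetSum _ fun j _ => (continuous_pw y β j).smul continuous_const

lemma continuous_Vr (b : Fin N → E n) : Continuous (Vr y β b) := by
  unfold Vr
  refine (continuous_finsetSum _ fun j _ => (continuous_pw y β j).mul continuous_const).sub ?_
  exact (continuous_finsetSum _ fun j _ => (continuous_pw y β j).smul continuous_const).norm.pow 2

lemma fN_zero : fN y β 0 = 0 := by
  have := N_pos (N := N)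
  simp [fN, ze, this.ne']

variable {β}

lemma fN_sub_le (hβ : 0 < β) {L : ℝ} (hL : ∀ j, ‖y j‖ ≤ L) (x x' : E n) : fN y β x - fN y β x' ≤ L * ‖x - x'‖ := by
  have hN := N_pos (N := N)
  have h1 : ze y β x ≤ exp (β * (L * ‖x - x'‖)) * ze y β x' := by
    unfold ze; rw [Finset.mul_sum]
    refine Finset.sum_le_sum fun j _ => ?_
    rw [← exp_add, exp_le_exp, ← mul_add]
    have h2 : inner ℝ (y j) x = inner ℝ (y j) (x - x') + inner ℝ (y j) x' := by rw [inner_sub_right]; ring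
    have h3 := real_inner_le_norm (y j) (x - x')
    have h4 : ‖y j‖ * ‖x - x'‖ ≤ L * ‖x - x'‖ := mul_le_mul_of_nonneg_right (hL j) (norm_nonneg _)
    exact mul_le_mul_of_nonneg_left (by linarith) hβ.le
  have z1 := ze_pos y β x
  have z2 := ze_pos y β x'
  have h2 : log ((N : ℝ)⁻¹ * ze y β x) ≤ β * (L * ‖x - x'‖) + log ((N : ℝ)⁻¹ * ze y β x') := by
    rw [← log_exp (β * (L * ‖x - x'‖)), ← log_mul (exp_pos _).ne' (by positivity)]
    refine log_le_log (by positivity) ?_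
    calc (N : ℝ)⁻¹ * ze y β x ≤ (N : ℝ)⁻¹ * _ := mul_le_mul_of_nonneg_left h1 (by positivity)
      _ = _ := by ring
  unfold fN
  rw [← mul_sub, inv_mul_le_iff₀ hβ]
  linarith

lemma fN_lip (hβ : 0 < β) {L : ℝ} (hL : ∀ j, ‖y j‖ ≤ L) (x x' : E n) : |fN y β x - fN y β x'| ≤ L * ‖x - x'‖ := by
  rw [abs_le]
  have h1 := fN_sub_le y hβ hL x x'
  have h2 := fN_sub_le y hβ hL x' x
  rw [norm_sub_rev] at h2
  exact ⟨by linarith, h1⟩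

lemma abs_fN_le (hβ : 0 < β) {L : ℝ} (hL : ∀ j, ‖y j‖ ≤ L) (x : E n) : |fN y β x| ≤ L * ‖x‖ := by
  have := fN_lip y hβ hL x 0
  rwa [fN_zero, sub_zero, sub_zero] at this

lemma continuous_fN : Continuous (fN y β) := by
  unfold fN
  have hN := N_pos (N := N)
  refine continuous_const.mul (Continuous.log (continuous_const.mul (continuous_ze y β)) fun x => ?_)
  have := ze_pos y β x
  positivity

lemma fN_le (hβ : 0 < β) {x : E n} {q : ℝ} (h : ∀ j, inner ℝ (y j) x ≤ q) : fN y β x ≤ q := by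
  have hN := N_pos (N := N)
  have z1 := ze_pos y β x
  unfold fN
  rw [inv_mul_le_iff₀ hβ, ← log_exp (β * q)]
  refine log_le_log (by positivity) ?_
  rw [inv_mul_le_iff₀ hN]
  unfold ze
  refine (Finset.sum_le_sum fun j _ => exp_le_exp.2 (mul_le_mul_of_nonneg_left (h j) hβ.le)).trans ?_
  simp

lemma le_fN (hβ : 0 < β) (x : E n) (j : Fin N) : inner ℝ (y j) x ≤ fN y β x + β⁻¹ * log N := by
  have hN := N_pos (N := N)
  have z1 := ze_pos y β x
  unfold fN
  rw [log_mul (by positivity) z1.ne', log_inv]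
  have h1 : exp (β * inner ℝ (y j) x) ≤ ze y β x :=
    Finset.single_le_sum (f := fun j => exp (β * inner ℝ (y j) x)) (fun _ _ => (exp_pos _).le) (Finset.mem_univ j)
  have h2 : β * inner ℝ (y j) x ≤ log (ze y β x) := by
    rw [le_log_iff_exp_le z1]; exact h1
  calc inner ℝ (y j) x = β⁻¹ * (β * inner ℝ (y j) x) := by field_simp
    _ ≤ β⁻¹ * log (ze y β x) := mul_le_mul_of_nonneg_left h2 (by positivity)
    _ = _ := by ring

lemma Vr_eq (b : Fin N → E n) (x : E n) :
    Vr y β b x = ∑ j, pw y β x j * ‖b j - ∑ k, pw y β x k • b k‖ ^ 2 := by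
  set c := ∑ k, pw y β x k • b k with hc
  have h1 : ∑ j, pw y β x j * inner ℝ (b j) c = ‖c‖ ^ 2 := by
    rw [← real_inner_self_eq_norm_sq]
    conv_rhs => rw [hc, sum_inner]
    exact Finset.sum_congr rfl fun j _ => by rw [real_inner_smul_left]
  have h2 : ∀ j, pw y β x j * ‖b j - c‖ ^ 2 = pw y β x j * ‖b j‖ ^ 2 - 2 * (pw y β x j * inner ℝ (b j) c) +
      pw y β x j * ‖c‖ ^ 2 := fun j => by rw [norm_sub_sq_real]; ring
  simp only [h2, Finset.sum_add_distrib, Finset.sum_sub_distrib]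
  rw [← Finset.mul_sum, h1, ← Finset.sum_mul, sum_pw]
  unfold Vr; rw [← hc]; ring

lemma Vr_nonneg (b : Fin N → E n) (x : E n) : 0 ≤ Vr y β b x := by
  rw [Vr_eq]
  exact Finset.sum_nonneg fun j _ => mul_nonneg (pw_nonneg y β x j) (sq_nonneg _)

lemma Vr_le {b : Fin N → E n} {B : ℝ} (hB : ∀ j, ‖b j‖ ^ 2 ≤ B) (x : E n) : Vr y β b x ≤ B := by
  have h1 : ∑ j, pw y β x j * ‖b j‖ ^ 2 ≤ ∑ j, pw y β x j * B :=
    Finset.sum_le_sum fun j _ => mul_le_mul_of_nonneg_left (hB j) (pw_nonneg y β x j)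
  rw [← Finset.sum_mul, sum_pw, one_mul] at h1
  unfold Vr
  linarith [sq_nonneg ‖∑ j, pw y β x j • b j‖]

lemma norm_ybar_le {L : ℝ} (hL : ∀ j, ‖y j‖ ≤ L) (x : E n) : ‖ybar y β x‖ ≤ L := by
  unfold ybar
  refine (norm_sum_le _ _).trans ?_
  calc _ ≤ ∑ j, pw y β x j * L := Finset.sum_le_sum fun j _ => by
        rw [norm_smul, Real.norm_of_nonneg (pw_nonneg y β x j)]
        exact mul_le_mul_of_nonneg_left (hL j) (pw_nonneg y β x j)
    _ = L := by rw [← Finset.sum_mul, sum_pw, one_mul]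

lemma Vr_comp_sub {T : E n → E n} (ha : ∀ v w, T (v + w) = T v + T w) (hs : ∀ (c : ℝ) v, T (c • v) = c • T v)
    (x : E n) : Vr y β (fun j => T (y j)) x = ∑ j, pw y β x j * ‖T (y j - ybar y β x)‖ ^ 2 := by
  have h0 : T 0 = 0 := by simpa using hs 0 0
  have h1 : ∑ k, pw y β x k • T (y k) = T (ybar y β x) := by
    unfold ybar
    let A : E n →+ E n := ⟨⟨T, h0⟩, ha⟩
    have : ∀ v, T v = A v := fun v => rfl
    rw [this, map_sum]
    exact Finset.sum_congr rfl fun k _ => (hs _ _).symm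
  rw [Vr_eq, h1]
  refine Finset.sum_congr rfl fun j _ => ?_
  have h2 : T (y j - ybar y β x) = T (y j) - T (ybar y β x) := by
    rw [eq_sub_iff_add_eq, ← ha, sub_add_cancel]
  rw [h2]

lemma Vr_comp_le {T : E n → E n} (ha : ∀ v w, T (v + w) = T v + T w) (hs : ∀ (c : ℝ) v, T (c • v) = c • T v)
    {κ : ℝ} (h : ∀ v, ‖T v‖ ^ 2 ≤ κ * ‖v‖ ^ 2) (x : E n) :
    Vr y β (fun j => T (y j)) x ≤ κ * Vr y β y x := by
  rw [Vr_comp_sub y ha hs, Vr_eq, Finset.mul_sum]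
  refine Finset.sum_le_sum fun j _ => ?_
  rw [mul_left_comm]
  exact mul_le_mul_of_nonneg_left (h _) (pw_nonneg y β x j)

lemma le_Vr_comp {T : E n → E n} (ha : ∀ v w, T (v + w) = T v + T w) (hs : ∀ (c : ℝ) v, T (c • v) = c • T v)
    {κ : ℝ} (h : ∀ v, κ * ‖v‖ ^ 2 ≤ ‖T v‖ ^ 2) (x : E n) :
    κ * Vr y β y x ≤ Vr y β (fun j => T (y j)) x := by
  rw [Vr_comp_sub y ha hs, Vr_eq, Finset.mul_sum]
  refine Finset.sum_le_sum fun j _ => ?_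
  rw [mul_left_comm]
  exact mul_le_mul_of_nonneg_left (h _) (pw_nonneg y β x j)

lemma hasDerivAt_pw (x v : E n) (ρ : ℝ) (j : Fin N) :
    HasDerivAt (fun t : ℝ => pw y β (x + (ρ * t) • v) j)
      (β * ρ * pw y β x j * (inner ℝ (y j) v - inner ℝ (ybar y β x) v)) 0 := by
  have h1 : ∀ k, HasDerivAt (fun t : ℝ => exp (β * inner ℝ (y k) (x + (ρ * t) • v)))
      (exp (β * inner ℝ (y k) x) * (β * (ρ * inner ℝ (y k) v))) 0 := fun k => by
    have h2 : HasDerivAt (fun t : ℝ => β * (inner ℝ (y k) x + ρ * t * inner ℝ (y k) v))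
        (β * (ρ * inner ℝ (y k) v)) 0 := by
      have := ((((hasDerivAt_id (0 : ℝ)).const_mul ρ).mul_const (inner ℝ (y k) v)).const_add
        (inner ℝ (y k) x)).const_mul β
      convert! this using 1; simp
    convert! h2.exp using 1
    · ext t; rw [inner_add_right, real_inner_smul_right]
    · simp
  have h3 : HasDerivAt (fun t : ℝ => ze y β (x + (ρ * t) • v))
      (∑ k, exp (β * inner ℝ (y k) x) * (β * (ρ * inner ℝ (y k) v))) 0 := by
    unfold ze; exact HasDerivAt.fun_sum fun k _ => h1 k
  have z0 := ze_pos y β x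
  have h4 := (h1 j).div h3 (by simpa using z0.ne')
  convert! h4 using 1
  simp only [mul_zero, zero_smul, add_zero]
  have h5 : inner ℝ (ybar y β x) v = (∑ k, exp (β * inner ℝ (y k) x) * inner ℝ (y k) v) / ze y β x := by
    unfold ybar pw
    rw [sum_inner, Finset.sum_div]
    exact Finset.sum_congr rfl fun k _ => by rw [real_inner_smul_left]; ring
  have h6 : ∑ k, exp (β * inner ℝ (y k) x) * (β * (ρ * inner ℝ (y k) v)) =
      β * ρ * ∑ k, exp (β * inner ℝ (y k) x) * inner ℝ (y k) v := by
    rw [Finset.mul_sum]; exact Finset.sum_congr rfl fun k _ => by ring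
  rw [h5, h6]
  unfold pw
  field_simp

set_option maxHeartbeats 1000000 in
/-- Gaussian integration by parts for the gradient of the log-sum-exp function. -/
lemma ibp_ybar {L : ℝ} (hL : ∀ j, ‖y j‖ ≤ L) (x : E n) (ρ : ℝ) :
    ∫ z, inner ℝ (ybar y β (x + ρ • z)) z ∂(γ n) = β * ρ * ∫ z, Vr y β y (x + ρ • z) ∂(γ n) := by
  have L0 : 0 ≤ L := (norm_nonneg _).trans (hL 0)
  -- The `i`-th coordinate of the gradient and its `i`-th partial derivative.
  have co : ∀ i, Continuous fun z : E n => (ybar y β (x + ρ • z)) i := fun i =>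
    (continuous_coord i).comp ((continuous_ybar y β).comp (by fun_prop))
  have cb : ∀ (w : E n) i, |w i| ≤ ‖w‖ := fun w i => by
    simpa using PiLp.norm_apply_le w i
  set F' : Fin n → E n → ℝ := fun i z => β * ρ * (∑ j, pw y β (x + ρ • z) j * (y j i) ^ 2 -
    (ybar y β (x + ρ • z)) i ^ 2) with hF'
  have c1 : ∀ i, Continuous (F' i) := fun i => by
    refine continuous_const.mul (Continuous.sub (continuous_finsetSum _ fun j _ => ?_) ((co i).pow 2))
    exact Continuous.mul ((continuous_pw y β j).comp (by fun_prop)) continuous_const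
  have b1 : ∀ i z, |F' i z| ≤ |β * ρ| * (2 * L ^ 2) := fun i z => by
    rw [hF']; simp only
    rw [abs_mul]
    gcongr
    have e1 : 0 ≤ ∑ j, pw y β (x + ρ • z) j * (y j i) ^ 2 :=
      Finset.sum_nonneg fun j _ => mul_nonneg (pw_nonneg y β _ j) (sq_nonneg _)
    have e2 : ∑ j, pw y β (x + ρ • z) j * (y j i) ^ 2 ≤ L ^ 2 := by
      calc _ ≤ ∑ j, pw y β (x + ρ • z) j * L ^ 2 := Finset.sum_le_sum fun j _ =>
            mul_le_mul_of_nonneg_left (by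
              rw [← sq_abs]; gcongr; exact (cb _ i).trans (hL j)) (pw_nonneg y β _ j)
        _ = _ := by rw [← Finset.sum_mul, sum_pw, one_mul]
    have e3 : (ybar y β (x + ρ • z)) i ^ 2 ≤ L ^ 2 := by
      rw [← sq_abs]; gcongr; exact (cb _ i).trans (norm_ybar_le y hL _)
    rw [abs_le]; constructor <;> nlinarith [sq_nonneg ((ybar y β (x + ρ • z)) i)]
  have key : ∀ i : Fin n, ∫ z, inner ℝ (EuclideanSpace.single i (1 : ℝ)) z * (ybar y β (x + ρ • z)) i ∂(γ n) =
      ∫ z, F' i z ∂(γ n) := fun i => by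
    refine gauss_ibp (EuclideanSpace.single i (1 : ℝ)) (co i) (c1 i) (L + |β * ρ| * (2 * L ^ 2)) 0
      (fun z => ?_) (fun z => ?_) fun z => ?_
    · have := (cb _ i).trans (norm_ybar_le y (β := β) hL (x + ρ • z))
      simp only [zero_mul, exp_zero, mul_one]
      have : 0 ≤ |β * ρ| * (2 * L ^ 2) := by positivity
      linarith
    · have := b1 i z
      simp only [zero_mul, exp_zero, mul_one]
      linarith
    · unfold HasLineDerivAt
      have h1 : ∀ j, HasDerivAt (fun t : ℝ => pw y β (x + ρ • (z + t • EuclideanSpace.single i (1 : ℝ))) j * y j i)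
          (β * ρ * pw y β (x + ρ • z) j * (y j i - (ybar y β (x + ρ • z)) i) * y j i) 0 := fun j => by
        have := (hasDerivAt_pw y (β := β) (x + ρ • z) (EuclideanSpace.single i (1 : ℝ)) ρ j).mul_const (y j i)
        convert! this using 1
        · ext t; rw [smul_add, smul_smul, add_assoc]
        · simp [EuclideanSpace.inner_single_right]
      have h2 := HasDerivAt.fun_sum (u := Finset.univ) fun j _ => h1 j
      convert! h2 using 1
      · ext t
        simp [ybar]
      · rw [hF']; simp only
        have e : (ybar y β (x + ρ • z)) i = ∑ j, pw y β (x + ρ • z) j * y j i := by simp [ybar]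
        have e2 : (ybar y β (x + ρ • z)) i ^ 2 = ∑ j, pw y β (x + ρ • z) j * y j i * (ybar y β (x + ρ • z)) i := by
          rw [← Finset.sum_mul, ← e, pow_two]
        rw [e2, ← Finset.sum_sub_distrib, Finset.mul_sum]
        exact Finset.sum_congr rfl fun j _ => by ring
  have s1 : ∀ z, inner ℝ (ybar y β (x + ρ • z)) z =
      ∑ i, inner ℝ (EuclideanSpace.single i (1 : ℝ)) z * (ybar y β (x + ρ • z)) i := fun z => by
    rw [inner_eq_sum]
    refine Finset.sum_congr rfl fun i _ => ?_
    simp [EuclideanSpace.inner_single_left]; ring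
  have s2 : ∀ z, β * ρ * Vr y β y (x + ρ • z) = ∑ i, F' i z := fun z => by
    rw [hF']; simp only
    rw [← Finset.mul_sum, Finset.sum_sub_distrib, Vr, ← ybar, norm_sq_eq_sum]
    congr 2
    rw [Finset.sum_comm]
    exact Finset.sum_congr rfl fun j _ => by rw [norm_sq_eq_sum, Finset.mul_sum]
  rw [← integral_const_mul]
  simp only [s1, s2]
  rw [integral_finsetSum, integral_finsetSum]
  · exact Finset.sum_congr rfl fun i _ => key i
  · intro i _
    refine integrable_γ_of_bound (c1 i) (|β * ρ| * (2 * L ^ 2)) 0 fun z => ?_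
    simpa using b1 i z
  · intro i _
    refine (integrable_norm_γ (n := n)).const_mul L |>.mono'
      (Continuous.aestronglyMeasurable (Continuous.mul (by fun_prop) (co i))) (.of_forall fun z => ?_)
    rw [Real.norm_eq_abs, abs_mul, mul_comm]
    refine mul_le_mul ((cb _ i).trans (norm_ybar_le y hL _)) ?_ (abs_nonneg _) L0
    simpa [EuclideanSpace.inner_single_left] using cb z i

/-- The smoothed Laplacian of the log-sum-exp function is bounded independently of `β`. -/
lemma smoothed_Vr_le {L : ℝ} (hL : ∀ j, ‖y j‖ ≤ L) (x : E n) {ρ : ℝ} (hρ : 0 < ρ) :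
    β * ∫ z, Vr y β y (x + ρ • z) ∂(γ n) ≤ L * √n / ρ := by
  have L0 : 0 ≤ L := (norm_nonneg _).trans (hL 0)
  rw [le_div_iff₀ hρ]
  have h1 := ibp_ybar y (β := β) hL x ρ
  have h2 : ∫ z, inner ℝ (ybar y β (x + ρ • z)) z ∂(γ n) ≤ ∫ z, L * ‖z‖ ∂(γ n) := by
    have hb : ∀ z, |inner ℝ (ybar y β (x + ρ • z)) z| ≤ L * ‖z‖ := fun z =>
      (abs_real_inner_le_norm _ _).trans (mul_le_mul_of_nonneg_right (norm_ybar_le y hL _) (norm_nonneg _))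
    have hi : Integrable (fun z => L * ‖z‖) (γ n) := integrable_norm_γ.const_mul L
    have hc : Continuous fun z => inner ℝ (ybar y β (x + ρ • z)) z :=
      ((continuous_ybar y β).comp (by fun_prop)).inner continuous_id
    exact integral_mono (hi.mono' hc.aestronglyMeasurable (.of_forall hb)) hi fun z => (le_abs_self _).trans (hb z)
  rw [integral_const_mul] at h2
  have h3 := mul_le_mul_of_nonneg_left (integral_norm_γ_le (n := n)) L0
  linarith

end lse
end IsoGauge

namespace IsoGauge
open scoped Topology
set_option linter.unusedSectionVars false
variable {n : ℕ}
variable (m : Measure (E n)) [CptMeas m]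

/-! ### The derivative of the smoothed log-sum-exp function along the flow -/

variable {m} in
set_option maxHeartbeats 1000000 in
/-- The generator applied to the log-sum-exp of functions `v j`. -/
lemma SF.lse {N : ℕ} [NeZero N] {I : Set ℝ} {v Lv : Fin N → ℝ → E n → ℝ} {D : Fin N → Fin n → ℝ → E n → ℝ}
    (h : ∀ j, SF m I (v j) (D j) (Lv j)) {β C : ℝ} (hβ : 0 < β) (hC : ∀ j, ∀ s ∈ I, ∀ θ, |v j s θ| ≤ C) :
    ∃ D' L', SF m I (fun s θ => β⁻¹ * log ((N : ℝ)⁻¹ * ∑ j, exp (β * v j s θ))) D' L' ∧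
      ∀ s θ, L' s θ = ∑ j, exp (β * v j s θ) / (∑ k, exp (β * v k s θ)) * Lv j s θ +
        β / 2 * (∑ j, exp (β * v j s θ) / (∑ k, exp (β * v k s θ)) * ∑ i, D j i s θ ^ 2 -
          ∑ i, (∑ j, exp (β * v j s θ) / (∑ k, exp (β * v k s θ)) * D j i s θ) ^ 2) := by
  have hN := N_pos (N := N)
  have h1 : ∀ j, SF m I (fun s θ => exp (β * v j s θ)) (fun i s θ => β * exp (β * v j s θ) * D j i s θ)
      (fun s θ => β * exp (β * v j s θ) * Lv j s θ + β ^ 2 * exp (β * v j s θ) / 2 * ∑ i, D j i s θ ^ 2) := fun j => by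
    refine (h j).comp (φ := fun w => exp (β * w)) (φ' := fun w => β * exp (β * w))
      (φ'' := fun w => β ^ 2 * exp (β * w)) (J := Set.Icc (-C) C) isCompact_Icc
      (fun s hs θ => abs_le.1 (hC j s hs θ)) (fun w _ => ?_) (fun w _ => ?_) (by fun_prop)
    · have := ((hasDerivAt_id w).const_mul β).exp
      convert! this using 1; simp; ring
    · have := (((hasDerivAt_id w).const_mul β).exp).const_mul β
      convert! this using 1; simp; ring
  have h2 := (SF.sum Finset.univ h1).const_mul ((N : ℝ)⁻¹)
  have h3 := h2.comp (φ := fun w => β⁻¹ * log w) (φ' := fun w => β⁻¹ * w⁻¹)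
    (φ'' := fun w => -(β⁻¹ * (w ^ 2)⁻¹)) (J := Set.Icc (exp (-(β * C))) (exp (β * C))) isCompact_Icc
    (fun s hs θ => ?_) (fun w hw => ?_) (fun w hw => ?_) ?_
  · refine ⟨_, _, h3, fun s θ => ?_⟩
    set Z := ∑ k, exp (β * v k s θ) with hZ
    have Z0 : 0 < Z := Finset.sum_pos (fun _ _ => exp_pos _) Finset.univ_nonempty
    simp only [Finset.sum_add_distrib]
    set A := ∑ j, exp (β * v j s θ) * Lv j s θ with hA
    set B := ∑ j, exp (β * v j s θ) * ∑ i, D j i s θ ^ 2 with hB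
    set W := ∑ i, (∑ j, exp (β * v j s θ) * D j i s θ) ^ 2 with hW
    have a1 : ∑ j, β * exp (β * v j s θ) * Lv j s θ = β * A := by
      rw [hA, Finset.mul_sum]; exact Finset.sum_congr rfl fun j _ => by ring
    have a2 : ∑ j, β ^ 2 * exp (β * v j s θ) / 2 * ∑ i, D j i s θ ^ 2 = β ^ 2 / 2 * B := by
      rw [hB, Finset.mul_sum]; exact Finset.sum_congr rfl fun j _ => by ring
    have a3 : ∑ i, ((N : ℝ)⁻¹ * ∑ j, β * exp (β * v j s θ) * D j i s θ) ^ 2 = (N : ℝ)⁻¹ ^ 2 * β ^ 2 * W := by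
      rw [hW, Finset.mul_sum]
      refine Finset.sum_congr rfl fun i _ => ?_
      rw [show ∑ j, β * exp (β * v j s θ) * D j i s θ = β * ∑ j, exp (β * v j s θ) * D j i s θ by
        rw [Finset.mul_sum]; exact Finset.sum_congr rfl fun j _ => by ring]
      ring
    have b1 : ∑ j, exp (β * v j s θ) / Z * Lv j s θ = A / Z := by
      rw [hA, Finset.sum_div]; exact Finset.sum_congr rfl fun j _ => by ring
    have b2 : ∑ j, exp (β * v j s θ) / Z * ∑ i, D j i s θ ^ 2 = B / Z := by
      rw [hB, Finset.sum_div]; exact Finset.sum_congr rfl fun j _ => by ring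
    have b3 : ∑ i, (∑ j, exp (β * v j s θ) / Z * D j i s θ) ^ 2 = W / Z ^ 2 := by
      rw [hW, Finset.sum_div]
      refine Finset.sum_congr rfl fun i _ => ?_
      rw [show ∑ j, exp (β * v j s θ) / Z * D j i s θ = (∑ j, exp (β * v j s θ) * D j i s θ) / Z by
        rw [Finset.sum_div]; exact Finset.sum_congr rfl fun j _ => by ring]
      ring
    rw [a1, a2, a3, b1, b2, b3]
    field_simp
    ring
  · have l1 : ∀ j, exp (-(β * C)) ≤ exp (β * v j s θ) := fun j => exp_le_exp.2 (by
      have := (abs_le.1 (hC j s hs θ)).1; nlinarith)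
    have l2 : ∀ j, exp (β * v j s θ) ≤ exp (β * C) := fun j => exp_le_exp.2 (by
      have := (abs_le.1 (hC j s hs θ)).2; nlinarith)
    have l3 := Finset.sum_le_sum fun j (_ : j ∈ Finset.univ) => l1 j
    have l4 := Finset.sum_le_sum fun j (_ : j ∈ Finset.univ) => l2 j
    simp only [Finset.sum_const, Finset.card_univ, Fintype.card_fin, nsmul_eq_mul] at l3 l4
    exact ⟨(le_inv_mul_iff₀ hN).2 l3, (inv_mul_le_iff₀ hN).2 l4⟩
  · have w0 : w ≠ 0 := ((exp_pos _).trans_le hw.1).ne'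
    exact (hasDerivAt_log w0).const_mul _
  · have w0 : w ≠ 0 := ((exp_pos _).trans_le hw.1).ne'
    convert! (hasDerivAt_inv w0).const_mul β⁻¹ using 1
    ring
  · refine ContinuousOn.neg (ContinuousOn.mul continuousOn_const (ContinuousOn.inv₀ (by fun_prop) fun w hw => ?_))
    have w0 : 0 < w := (exp_pos _).trans_le hw.1
    positivity

lemma continuous_av : Continuous fun p : ℝ × E n => av m p.1 p.2 := by
  unfold av
  exact (PiLp.continuous_toLp 2 _).comp (continuous_pi fun i => continuous_Q m (continuous_coord i))

lemma continuous_cov (s : ℝ) (v : E n) : Continuous fun θ => cov m s θ v := by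
  unfold cov wv
  exact (PiLp.continuous_toLp 2 _).comp (continuous_pi fun i =>
    continuous_cv m (continuous_inner_left v) (continuous_coord i) s)

lemma norm_cov_sq_le_rad (s : ℝ) (θ v : E n) : ‖cov m s θ v‖ ^ 2 ≤ (rad m ^ 2) ^ 2 * ‖v‖ ^ 2 :=
  norm_cov_le m (sq_nonneg _) (cv_le_of_supp m (ae_norm_le_rad m) s θ) v

section G
variable {N : ℕ} [NeZero N] (y : Fin N → E n) {β : ℝ}

lemma SF_u {L : ℝ} (hβ : 0 < β) (hL : ∀ j, ‖y j‖ ≤ L) {I : Set ℝ} {ρ ρ' : ℝ → ℝ} {C : ℝ}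
    (hρ : ∀ s ∈ I, HasDerivAt ρ (ρ' s) s) (hC : ∀ s ∈ I, |ρ s| ≤ C) (hC' : ∀ s ∈ I, |ρ' s| ≤ C) (z : E n) :
    ∃ D' L', SF m I (fun s θ => fN y β (av m s θ + ρ s • z)) D' L' ∧
      ∀ s θ, L' s θ = ρ' s * inner ℝ (ybar y β (av m s θ + ρ s • z)) z +
        β / 2 * Vr y β (fun j => cov m s θ (y j)) (av m s θ + ρ s • z) := by
  have L0 : 0 ≤ L := (norm_nonneg _).trans (hL 0)
  have hv : ∀ j s θ, inner ℝ (y j) (av m s θ + ρ s • z) =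
      Q m (fun x => inner ℝ (y j) x) s θ + inner ℝ (y j) z * ρ s := fun j s θ => by
    rw [inner_add_right, real_inner_smul_right, Q_inner]; ring
  have h1 : ∀ j, SF m I (fun s θ => inner ℝ (y j) (av m s θ + ρ s • z))
      (fun i s θ => cv m (fun x => inner ℝ (y j) x) (fun x => x i) s θ) (fun s _ => inner ℝ (y j) z * ρ' s) := fun j => by
    have a : SF m I (fun s θ => Q m (fun x => inner ℝ (y j) x) s θ)
        (fun i s θ => cv m (fun x => inner ℝ (y j) x) (fun x => x i) s θ) (fun _ _ => 0) :=
      ⟨_, _, (C12_Q m (continuous_inner_left (y j))).mono (Set.subset_univ _),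
        Lop_Q m (continuous_inner_left (y j))⟩
    have b : SF m I (fun s _ => ρ s) (fun _ _ _ => 0) (fun s _ => ρ' s) :=
      ⟨_, _, C12.time hρ hC hC', fun s θ => by simp [Lop]⟩
    have c := a.add (b.const_mul (inner ℝ (y j) z))
    simp only [mul_zero, add_zero, zero_add] at c
    simpa only [hv] using c
  obtain ⟨D', L', h2, h3⟩ := SF.lse h1 hβ (C := L * (rad m + C * ‖z‖)) fun j s hs θ => by
    refine (abs_real_inner_le_norm _ _).trans (mul_le_mul (hL j) ((norm_add_le _ _).trans ?_) (norm_nonneg _) L0)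
    rw [norm_smul, Real.norm_eq_abs]
    gcongr
    · exact norm_av_le m s θ
    · exact hC s hs
  refine ⟨D', L', h2, fun s θ => ?_⟩
  rw [h3]
  set x := av m s θ + ρ s • z
  change ∑ j, pw y β x j * _ + β / 2 * (∑ j, pw y β x j * _ - ∑ i, (∑ j, pw y β x j * _) ^ 2) = _
  congr 1
  · unfold ybar
    rw [sum_inner, Finset.mul_sum]
    exact Finset.sum_congr rfl fun j _ => by rw [real_inner_smul_left]; ring
  · congr 1
    unfold Vr
    congr 1
    · exact Finset.sum_congr rfl fun j _ => by
        rw [show ‖cov m s θ (y j)‖ ^ 2 = _ from norm_wv_sq m (fun x => inner ℝ (y j) x) s θ]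
    · rw [norm_sq_eq_sum]
      refine Finset.sum_congr rfl fun i _ => ?_
      simp [cov, wv]

lemma meas_Es {φ : E n → E n → ℝ} (h : Continuous fun p : E n × E n => φ p.1 p.2) (s : ℝ) :
    AEStronglyMeasurable (fun z => Es m s (φ z)) (γ n) := by
  unfold Es
  have : Continuous fun p : E n × (E n × E n) => φ p.1 (s • p.2.1 + √s • p.2.2) :=
    h.comp (by fun_prop : Continuous fun p : E n × (E n × E n) => (p.1, s • p.2.1 + √s • p.2.2))
  exact this.stronglyMeasurable.integral_prod_right.aestronglyMeasurable

lemma swap_Es {φ : E n → E n → ℝ} (h : Continuous fun p : E n × E n => φ p.1 p.2) {C : ℝ}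
    (hC : ∀ z θ, |φ z θ| ≤ C * (1 + ‖z‖)) (s : ℝ) :
    ∫ z, Es m s (φ z) ∂(γ n) = Es m s (fun θ => ∫ z, φ z θ ∂(γ n)) := by
  unfold Es
  have hc : Continuous fun p : E n × (E n × E n) => φ p.1 (s • p.2.1 + √s • p.2.2) :=
    h.comp (by fun_prop : Continuous fun p : E n × (E n × E n) => (p.1, s • p.2.1 + √s • p.2.2))
  refine integral_integral_swap (f := fun z (p : E n × E n) => φ z (s • p.1 + √s • p.2)) ?_
  have h1 : Integrable (fun z : E n => C * (1 + ‖z‖)) (γ n) :=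
    ((integrable_const (1 : ℝ)).add integrable_norm_γ).const_mul C
  have h2 := h1.comp_fst (m.prod (γ n))
  exact h2.mono' hc.aestronglyMeasurable (.of_forall fun p => hC p.1 _)

/-- The expectation of the log-sum-exp function at the barycentre perturbed by an independent
Gaussian of standard deviation `r`. -/
def Gs (y : Fin N → E n) (β r s : ℝ) : ℝ := ∫ z, Es m s (fun θ => fN y β (av m s θ + r • z)) ∂(γ n)

lemma continuous_arg (r s : ℝ) : Continuous fun p : E n × E n => av m s p.2 + r • p.1 := by
  have h1 : Continuous fun p : E n × E n => av m s p.2 :=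
    Continuous.comp' (g := fun p : ℝ × E n => av m p.1 p.2) (f := fun p : E n × E n => (s, p.2))
      (continuous_av m) (continuous_const.prodMk continuous_snd)
  have h2 : Continuous fun p : E n × E n => r • p.1 := continuous_fst.const_smul r
  exact h1.add h2

lemma abs_u_le {L : ℝ} (hβ : 0 < β) (hL : ∀ j, ‖y j‖ ≤ L) (r s : ℝ) (z θ : E n) :
    |fN y β (av m s θ + r • z)| ≤ L * (rad m + |r| * ‖z‖) := by
  have L0 : 0 ≤ L := (norm_nonneg _).trans (hL 0)
  refine (abs_fN_le y hβ hL _).trans (mul_le_mul_of_nonneg_left ((norm_add_le _ _).trans ?_) L0)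
  rw [norm_smul, Real.norm_eq_abs]
  gcongr
  exact norm_av_le m s θ

lemma BC_fN {L : ℝ} (hβ : 0 < β) (hL : ∀ j, ‖y j‖ ≤ L) (r s : ℝ) (z : E n) :
    BC fun θ => fN y β (av m s θ + r • z) := by
  refine ⟨?_, _, abs_u_le m y hβ hL r s z⟩
  have h1 := (continuous_fN (β := β) y).comp (continuous_arg m r s)
  have h2 : Continuous fun θ : E n => (z, θ) := continuous_const.prodMk continuous_id
  exact Continuous.comp' (g := fun p : E n × E n => fN y β (av m s p.2 + r • p.1)) (f := fun θ : E n => (z, θ)) h1 h2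

lemma integrable_Gs {L : ℝ} (hβ : 0 < β) (hL : ∀ j, ‖y j‖ ≤ L) (r s : ℝ) :
    Integrable (fun z => Es m s (fun θ => fN y β (av m s θ + r • z))) (γ n) := by
  have h1 : Integrable (fun z : E n => L * (rad m + |r| * ‖z‖)) (γ n) :=
    ((integrable_const (rad m)).add (integrable_norm_γ.const_mul _)).const_mul L
  exact h1.mono' (meas_Es m ((continuous_fN y).comp (continuous_arg m r s)) s) (.of_forall fun z =>
    abs_Es_le m (BC_fN m y hβ hL r s z) (abs_u_le m y hβ hL r s z) s)

lemma continuous_Vr_cov (r s : ℝ) : Continuous fun p : E n × E n =>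
    Vr y β (fun j => cov m s p.2 (y j)) (av m s p.2 + r • p.1) := by
  unfold Vr
  have c1 : ∀ j, Continuous fun p : E n × E n => pw y β (av m s p.2 + r • p.1) j := fun j =>
    (continuous_pw y β j).comp (continuous_arg m r s)
  have c2 : ∀ j, Continuous fun p : E n × E n => cov m s p.2 (y j) := fun j =>
    (continuous_cov m s (y j)).comp continuous_snd
  refine (continuous_finsetSum _ fun j _ => (c1 j).mul ((c2 j).norm.pow 2)).sub ?_
  exact (continuous_finsetSum _ fun j _ => (c1 j).smul (c2 j)).norm.pow 2

/-- The generator applied to `fN y β (a + ρ z)`, as a function of `z` and `θ`. -/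
def LG (y : Fin N → E n) (β r r' s : ℝ) (z θ : E n) : ℝ :=
  r' * inner ℝ (ybar y β (av m s θ + r • z)) z +
    β / 2 * Vr y β (fun j => cov m s θ (y j)) (av m s θ + r • z)

lemma continuous_LG (r r' s : ℝ) : Continuous fun p : E n × E n => LG m y β r r' s p.1 p.2 := by
  unfold LG
  refine Continuous.add (continuous_const.mul ?_) (continuous_const.mul (continuous_Vr_cov m y r s))
  exact ((continuous_ybar y β).comp (continuous_arg m r s)).inner continuous_fst

lemma abs_LG_le {L : ℝ} (hβ : 0 < β) (hL : ∀ j, ‖y j‖ ≤ L) (r r' s : ℝ) (z θ : E n) :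
    |LG m y β r r' s z θ| ≤ |r'| * (L * ‖z‖) + β / 2 * ((rad m ^ 2) ^ 2 * L ^ 2) := by
  unfold LG
  refine (abs_add_le _ _).trans (add_le_add ?_ ?_)
  · rw [abs_mul]
    gcongr
    exact (abs_real_inner_le_norm _ _).trans (mul_le_mul_of_nonneg_right (norm_ybar_le y hL _) (norm_nonneg _))
  · rw [abs_of_nonneg (mul_nonneg (by positivity) (Vr_nonneg y _ _))]
    gcongr
    refine Vr_le y (fun j => (norm_cov_sq_le_rad m s θ (y j)).trans ?_) _
    gcongr
    exact hL j

lemma BC_LG {L : ℝ} (hβ : 0 < β) (hL : ∀ j, ‖y j‖ ≤ L) (r r' s : ℝ) (z : E n) : BC (LG m y β r r' s z) := by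
  have h1 := continuous_LG (β := β) m y r r' s
  have h2 : Continuous fun θ : E n => (z, θ) := continuous_const.prodMk continuous_id
  exact ⟨Continuous.comp' (g := fun p : E n × E n => LG m y β r r' s p.1 p.2) (f := fun θ : E n => (z, θ)) h1 h2, _, abs_LG_le m y hβ hL r r' s z⟩

lemma hasDerivAt_Gs {L : ℝ} (hβ : 0 < β) (hL : ∀ j, ‖y j‖ ≤ L) {I : Set ℝ} {ρ ρ' : ℝ → ℝ} {C : ℝ}
    (hIo : IsOpen I) (hI0 : ∀ s ∈ I, 0 < s)
    (hρ : ∀ s ∈ I, HasDerivAt ρ (ρ' s) s) (hC : ∀ s ∈ I, |ρ s| ≤ C) (hC' : ∀ s ∈ I, |ρ' s| ≤ C) {s : ℝ} (hs : s ∈ I) :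
    HasDerivAt (fun s => Gs m y β (ρ s) s) (∫ z, Es m s (LG m y β (ρ s) (ρ' s) s z) ∂(γ n)) s := by
  have L0 : 0 ≤ L := (norm_nonneg _).trans (hL 0)
  unfold Gs
  have hb : Integrable (fun z : E n => C * (L * ‖z‖) + β / 2 * ((rad m ^ 2) ^ 2 * L ^ 2)) (γ n) :=
    ((integrable_norm_γ.const_mul L).const_mul C).add (integrable_const _)
  refine (hasDerivAt_integral_of_dominated_loc_of_deriv_le (F := fun s z => Es m s (fun θ => fN y β (av m s θ + ρ s • z)))
    (F' := fun s z => Es m s (LG m y β (ρ s) (ρ' s) s z)) (hIo.mem_nhds hs) (.of_forall fun r => ?_) ?_ ?_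
    (.of_forall fun z r hr => ?_) hb (.of_forall fun z r hr => ?_)).2
  · exact (integrable_Gs m y hβ hL (ρ r) r).aestronglyMeasurable
  · exact integrable_Gs m y hβ hL (ρ s) s
  · exact meas_Es m (continuous_LG m y _ _ s) s
  · refine abs_Es_le m (BC_LG m y hβ hL _ _ r z) (fun θ => (abs_LG_le m y hβ hL _ _ r z θ).trans ?_) r
    gcongr
    exact hC' r hr
  · obtain ⟨D', L', h1, h2⟩ := SF_u m y hβ hL hρ hC hC' z
    have := h1.hasDerivAt (hI0 r hr) (hIo.mem_nhds hr)
    convert! this using 2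
    ext θ
    rw [h2]; rfl

end G
end IsoGauge

namespace IsoGauge
open scoped Topology
set_option linter.unusedSectionVars false
variable {n : ℕ}
variable (m : Measure (E n)) [CptMeas m]

/-! ### Comparing the flow with Gaussian smoothing -/

section G2
variable {N : ℕ} [NeZero N] (y : Fin N → E n) {β : ℝ}

lemma integrable_of_growth {φ : E n → ℝ} (h : Continuous φ) {C : ℝ} (hC : ∀ z, |φ z| ≤ C * (1 + ‖z‖)) :
    Integrable φ (γ n) := by
  have h1 : Integrable (fun z : E n => C * (1 + ‖z‖)) (γ n) :=
    ((integrable_const (1 : ℝ)).add integrable_norm_γ).const_mul C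
  exact h1.mono' h.aestronglyMeasurable (.of_forall hC)

lemma BC_int {φ : E n → E n → ℝ} (h : Continuous fun p : E n × E n => φ p.1 p.2) {C : ℝ}
    (hC : ∀ z θ, |φ z θ| ≤ C * (1 + ‖z‖)) : BC (fun θ => ∫ z, φ z θ ∂(γ n)) := by
  have h1 : Integrable (fun z : E n => C * (1 + ‖z‖)) (γ n) :=
    ((integrable_const (1 : ℝ)).add integrable_norm_γ).const_mul C
  have c1 : ∀ θ, Continuous fun z => φ z θ := fun θ =>
    Continuous.comp' (g := fun p : E n × E n => φ p.1 p.2) (f := fun z : E n => (z, θ)) h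
      (continuous_id.prodMk continuous_const)
  have c2 : ∀ z, Continuous fun θ => φ z θ := fun z =>
    Continuous.comp' (g := fun p : E n × E n => φ p.1 p.2) (f := fun θ : E n => (z, θ)) h
      (continuous_const.prodMk continuous_id)
  refine ⟨continuous_of_dominated (bound := fun z => C * (1 + ‖z‖)) (fun θ => (c1 θ).aestronglyMeasurable)
    (fun θ => .of_forall fun z => hC z θ) h1 (.of_forall c2), ∫ z, C * (1 + ‖z‖) ∂(γ n), fun θ => ?_⟩
  rw [← Real.norm_eq_abs]
  exact norm_integral_le_of_norm_le h1 (.of_forall fun z => hC z θ)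

lemma abs_LG_le' {L : ℝ} (hβ : 0 < β) (hL : ∀ j, ‖y j‖ ≤ L) (r r' s : ℝ) (z θ : E n) :
    |LG m y β r r' s z θ| ≤ (|r'| * L + β / 2 * ((rad m ^ 2) ^ 2 * L ^ 2)) * (1 + ‖z‖) := by
  refine (abs_LG_le m y hβ hL r r' s z θ).trans ?_
  have L0 : 0 ≤ L := (norm_nonneg _).trans (hL 0)
  have h1 : 0 ≤ |r'| * L := by positivity
  have h2 : 0 ≤ β / 2 * ((rad m ^ 2) ^ 2 * L ^ 2) := by positivity
  nlinarith [norm_nonneg z, mul_nonneg h2 (norm_nonneg z)]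

lemma integrable_Vr {b : Fin N → E n} (r : ℝ) (x : E n) :
    Integrable (fun z => Vr y β b (x + r • z)) (γ n) := by
  have ca : Continuous fun z : E n => x + r • z := by fun_prop
  refine integrable_of_growth ((continuous_Vr y β _).comp ca) (C := ∑ j, ‖b j‖ ^ 2) fun z => ?_
  rw [abs_of_nonneg (Vr_nonneg y _ _)]
  have h0 : 0 ≤ ∑ j, ‖b j‖ ^ 2 := by positivity
  have h1 : Vr y β b (x + r • z) ≤ ∑ j, ‖b j‖ ^ 2 :=
    Vr_le y (fun j => Finset.single_le_sum (f := fun j => ‖b j‖ ^ 2) (fun _ _ => by positivity) (Finset.mem_univ j)) _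
  nlinarith [mul_nonneg h0 (norm_nonneg z)]

/-- Gaussian integration by parts in `z` turns the derivative of the smoothing radius into a softmax variance. -/
lemma integral_LG {L : ℝ} (hL : ∀ j, ‖y j‖ ≤ L) (r r' s : ℝ) (θ : E n) :
    ∫ z, LG m y β r r' s z θ ∂(γ n) = r' * (β * r * ∫ z, Vr y β y (av m s θ + r • z) ∂(γ n)) +
      β / 2 * ∫ z, Vr y β (fun j => cov m s θ (y j)) (av m s θ + r • z) ∂(γ n) := by
  have L0 : 0 ≤ L := (norm_nonneg _).trans (hL 0)
  have ca : Continuous fun z : E n => av m s θ + r • z := by fun_prop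
  have i1 : Integrable (fun z => inner ℝ (ybar y β (av m s θ + r • z)) z) (γ n) := by
    refine integrable_of_growth (((continuous_ybar y β).comp ca).inner continuous_id) (C := L) fun z => ?_
    refine (abs_real_inner_le_norm _ _).trans ?_
    have := mul_le_mul_of_nonneg_right (norm_ybar_le y (β := β) hL (av m s θ + r • z)) (norm_nonneg z)
    linarith
  have i2 : Integrable (fun z => Vr y β (fun j => cov m s θ (y j)) (av m s θ + r • z)) (γ n) :=
    integrable_Vr y r _
  rw [← ibp_ybar y hL, ← integral_const_mul, ← integral_const_mul]
  exact integral_add (i1.const_mul r') (i2.const_mul (β / 2))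

/-- If the covariance has square at most `c + A h` and the smoothing radius decreases at the matching
rate, the flow increases only through the exceptional part `h`. -/
lemma deriv_Gs_le {L : ℝ} (hβ : 0 < β) (hL : ∀ j, ‖y j‖ ≤ L) {r r' s c A : ℝ} {h : E n → ℝ} (hr : 0 < r)
    (hrr : 2 * (r * r') = -c) (hA : 0 ≤ A) (hh : BC h) (h0 : ∀ θ, 0 ≤ h θ)
    (H : ∀ θ v, ‖cov m s θ v‖ ^ 2 ≤ (c + A * h θ) * ‖v‖ ^ 2) :
    ∫ z, Es m s (LG m y β r r' s z) ∂(γ n) ≤ A / 2 * (L * √n / r) * Es m s h := by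
  rw [swap_Es m (continuous_LG m y r r' s) (abs_LG_le' m y hβ hL r r' s), ← Es_const_mul]
  refine Es_mono m (BC_int (continuous_LG m y r r' s) (abs_LG_le' m y hβ hL r r' s))
    (BC.const_mul _ hh) (fun θ => ?_) s
  rw [integral_LG m y hL]
  have h1 := smoothed_Vr_le y (β := β) hL (av m s θ) hr
  have h2 : ∫ z, Vr y β (fun j => cov m s θ (y j)) (av m s θ + r • z) ∂(γ n) ≤
      (c + A * h θ) * ∫ z, Vr y β y (av m s θ + r • z) ∂(γ n) := by
    rw [← integral_const_mul]
    exact integral_mono (integrable_Vr y r _) ((integrable_Vr y r _).const_mul _)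
      fun z => Vr_comp_le y (cov_add m s θ) (cov_smul m s θ) (H θ) _
  set J := ∫ z, Vr y β y (av m s θ + r • z) ∂(γ n)
  have h3 := mul_le_mul_of_nonneg_left h2 (by positivity : 0 ≤ β / 2)
  have h4 := mul_le_mul_of_nonneg_left h1 (mul_nonneg (by positivity : 0 ≤ A / 2) (h0 θ))
  have h5 : r' * (β * r * J) = -c / 2 * (β * J) := by rw [← hrr]; ring
  rw [h5]
  linarith

/-- The lower counterpart of `deriv_Gs_le`. -/
lemma le_deriv_Gs {L : ℝ} (hβ : 0 < β) (hL : ∀ j, ‖y j‖ ≤ L) {r r' s c A : ℝ} {h : E n → ℝ} (hr : 0 < r)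
    (hrr : 2 * (r * r') = -c) (hA : 0 ≤ A) (hh : BC h) (h0 : ∀ θ, 0 ≤ h θ)
    (H : ∀ θ v, (c - A * h θ) * ‖v‖ ^ 2 ≤ ‖cov m s θ v‖ ^ 2) :
    -(A / 2 * (L * √n / r) * Es m s h) ≤ ∫ z, Es m s (LG m y β r r' s z) ∂(γ n) := by
  rw [swap_Es m (continuous_LG m y r r' s) (abs_LG_le' m y hβ hL r r' s), ← neg_mul, ← Es_const_mul]
  refine Es_mono m (BC.const_mul _ hh)
    (BC_int (continuous_LG m y r r' s) (abs_LG_le' m y hβ hL r r' s)) (fun θ => ?_) s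
  rw [integral_LG m y hL]
  have h1 := smoothed_Vr_le y (β := β) hL (av m s θ) hr
  have h2 : (c - A * h θ) * ∫ z, Vr y β y (av m s θ + r • z) ∂(γ n) ≤
      ∫ z, Vr y β (fun j => cov m s θ (y j)) (av m s θ + r • z) ∂(γ n) := by
    rw [← integral_const_mul]
    exact integral_mono ((integrable_Vr y r _).const_mul _) (integrable_Vr y r _)
      fun z => le_Vr_comp y (cov_add m s θ) (cov_smul m s θ) (H θ) _
  set J := ∫ z, Vr y β y (av m s θ + r • z) ∂(γ n)
  have h3 := mul_le_mul_of_nonneg_left h2 (by positivity : 0 ≤ β / 2)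
  have h4 := mul_le_mul_of_nonneg_left h1 (mul_nonneg (by positivity : 0 ≤ A / 2) (h0 θ))
  have h5 : r' * (β * r * J) = -c / 2 * (β * J) := by rw [← hrr]; ring
  rw [h5]
  linarith

lemma continuousAt_Gs {L : ℝ} (hβ : 0 < β) (hL : ∀ j, ‖y j‖ ≤ L) {ρ : ℝ → ℝ} {s₀ : ℝ} (hρ : ContinuousAt ρ s₀) :
    ContinuousAt (fun s => Gs m y β (ρ s) s) s₀ := by
  have L0 : 0 ≤ L := (norm_nonneg _).trans (hL 0)
  unfold Gs
  have hev : ∀ᶠ s in 𝓝 s₀, |ρ s| < |ρ s₀| + 1 := hρ.abs.eventually_lt continuousAt_const (by linarith)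
  have hb : ∀ s, |ρ s| < |ρ s₀| + 1 → ∀ z θ, |fN y β (av m s θ + ρ s • z)| ≤
      L * (rad m + (|ρ s₀| + 1) * ‖z‖) := fun s hs z θ =>
    (abs_u_le m y hβ hL (ρ s) s z θ).trans (by gcongr)
  have h1 : Integrable (fun z : E n => L * (rad m + (|ρ s₀| + 1) * ‖z‖)) (γ n) :=
    ((integrable_const (rad m)).add (integrable_norm_γ.const_mul _)).const_mul L
  refine tendsto_integral_filter_of_dominated_convergence (fun z => L * (rad m + (|ρ s₀| + 1) * ‖z‖))
    (.of_forall fun s => (integrable_Gs m y hβ hL (ρ s) s).aestronglyMeasurable) ?_ h1 (.of_forall fun z => ?_)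
  · filter_upwards [hev] with s hs
    exact .of_forall fun z => abs_Es_le m (BC_fN m y hβ hL _ s z) (hb s hs z) s
  · refine continuousAt_Es m (u := fun s θ => fN y β (av m s θ + ρ s • z))
      (.of_forall fun s => (BC_fN m y hβ hL _ s z).1) (hev.mono fun s hs => hb s hs z) fun θ => ?_
    have c1 : ContinuousAt (fun p : ℝ × E n => ρ p.1) (s₀, θ) :=
      ContinuousAt.comp (g := ρ) (f := fun p : ℝ × E n => p.1) hρ continuousAt_fst
    have c2 : ContinuousAt (fun p : ℝ × E n => av m p.1 p.2 + ρ p.1 • z) (s₀, θ) :=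
      (continuous_av m).continuousAt.add (c1.smul continuousAt_const)
    exact ContinuousAt.comp (g := fN y β) (f := fun p : ℝ × E n => av m p.1 p.2 + ρ p.1 • z)
      (continuous_fN y).continuousAt c2

lemma Gs_zero (h0 : av m 0 0 = 0) (r : ℝ) : Gs m y β r 0 = ∫ z, fN y β (r • z) ∂(γ n) := by
  unfold Gs
  simp only [Es_zero, h0, zero_add]

end G2
end IsoGauge

namespace IsoGauge
open scoped Topology
set_option linter.unusedSectionVars false
variable {n : ℕ}
variable (m : Measure (E n)) [CptMeas m]

/-- The mean distance to the barycentre under a tilted measure, from the covariance bound `1/s`. -/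
lemma Q_norm_sub_av_le (H : SLC m 0) {s : ℝ} (hs : 0 < s) (θ : E n) :
    Q m (fun x => ‖x - av m s θ‖) s θ ≤ √n * √(1 / s) := by
  set a := av m s θ with ha
  have c1 : Continuous fun x : E n => ‖x - a‖ := by fun_prop
  have h1 := Q_sq_le m c1 s θ
  have h2 : Q m (fun x => ‖x - a‖ ^ 2) s θ ≤ n * (1 / s) := by
    have e : (fun x : E n => ‖x - a‖ ^ 2) = fun x => ∑ i, (x i * x i - (2 * a i * x i - a i ^ 2)) := by
      ext x
      rw [norm_sq_eq_sum]
      exact Finset.sum_congr rfl fun i _ => by simp; ring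
    rw [e, Q_sum m _ (fun i => by fun_prop)]
    have h3 : ∀ i : Fin n, Q m (fun x => x i * x i - (2 * a i * x i - a i ^ 2)) s θ ≤ 1 / s := fun i => by
      rw [Q_sub m (by fun_prop) (by fun_prop), Q_sub m (by fun_prop) (by fun_prop), Q_const, Q_const_mul]
      have h4 := H s hs θ (EuclideanSpace.single i (1 : ℝ))
      simp only [EuclideanSpace.inner_single_left, map_one, one_mul, PiLp.norm_single, norm_one, one_pow,
        zero_add] at h4
      have h5 : Q m (fun x => x i) s θ = a i := rfl
      unfold cv at h4
      rw [h5] at h4 ⊢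
      nlinarith
    calc _ ≤ ∑ _i : Fin n, 1 / s := Finset.sum_le_sum fun i _ => h3 i
      _ = _ := by simp
  rw [← Real.sqrt_mul (Nat.cast_nonneg n)]
  exact Real.le_sqrt_of_sq_le (h1.trans h2)

section G3
variable {N : ℕ} [NeZero N] (y : Fin N → E n) {β : ℝ}

lemma hasDerivAt_Gs' {L : ℝ} (hβ : 0 < β) (hL : ∀ j, ‖y j‖ ≤ L) {ρ ρ' : ℝ → ℝ} {s : ℝ} (hs : 0 < s)
    (hρ : ∀ᶠ r in 𝓝 s, HasDerivAt ρ (ρ' r) r) (hc : ContinuousAt ρ' s) :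
    HasDerivAt (fun s => Gs m y β (ρ s) s) (∫ z, Es m s (LG m y β (ρ s) (ρ' s) s z) ∂(γ n)) s := by
  have hc0 := hρ.self_of_nhds.continuousAt
  have e1 : ∀ᶠ r in 𝓝 s, |ρ r| < |ρ s| + |ρ' s| + 1 :=
    hc0.abs.eventually_lt continuousAt_const (by have := abs_nonneg (ρ' s); linarith)
  have e2 : ∀ᶠ r in 𝓝 s, |ρ' r| < |ρ s| + |ρ' s| + 1 :=
    hc.abs.eventually_lt continuousAt_const (by have := abs_nonneg (ρ s); linarith)
  obtain ⟨I, hI, hIo, hsI⟩ := eventually_nhds_iff.1 (((hρ.and e1).and e2).and (lt_mem_nhds hs))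
  exact hasDerivAt_Gs m y hβ hL hIo (fun r hr => (hI r hr).2) (fun r hr => (hI r hr).1.1.1)
    (fun r hr => (hI r hr).1.1.2.le) (fun r hr => (hI r hr).1.2.le) hsI

lemma hasDerivAt_Gs_sqrt {L : ℝ} (hβ : 0 < β) (hL : ∀ j, ‖y j‖ ≤ L) {g g' : ℝ → ℝ} {s : ℝ} (hs : 0 < s)
    (hg : ∀ᶠ r in 𝓝 s, HasDerivAt g (g' r) r) (hc : ContinuousAt g' s) (hp : 0 < g s) :
    HasDerivAt (fun s => Gs m y β (√(g s)) s)
      (∫ z, Es m s (LG m y β (√(g s)) (g' s / (2 * √(g s))) s z) ∂(γ n)) s := by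
  have hc0 := hg.self_of_nhds.continuousAt
  have e1 : ∀ᶠ r in 𝓝 s, 0 < g r := continuousAt_const.eventually_lt hc0 hp
  refine hasDerivAt_Gs' m y hβ hL (ρ := fun s => √(g s)) (ρ' := fun s => g' s / (2 * √(g s))) hs ?_ ?_
  · filter_upwards [hg, e1] with r h1 h2
    exact h1.sqrt h2.ne'
  · have h1 : ContinuousAt (fun s => √(g s)) s := hc0.sqrt
    have h2 : ContinuousAt (fun s => 2 * √(g s)) s := continuousAt_const.mul h1
    exact hc.div h2 (by positivity)

lemma BC_hS (j : ℕ) (s : ℝ) : BC (hS m j s) := by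
  obtain ⟨D, L, h, -⟩ := SF_hS m j
  exact h.BC_u (Set.mem_univ s)

/-- During the initial phase the flow is controlled above by a Gaussian of covariance growing at
rate `9/4`. -/
lemma phaseA {R L T e : ℝ} {j : ℕ} (hR : ∀ᵐ x ∂m, ‖x‖ ≤ R) (hβ : 0 < β) (hL : ∀ j, ‖y j‖ ≤ L)
    (hT : 0 < T) (hT1 : T ≤ 1) (he : ∀ s, 0 < s → s ≤ T → Es m s (hS m j s) ≤ e) :
    Gs m y β (√(1 / T)) T ≤ Gs m y β (√(1 / T + 9 / 4 * T)) 0 +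
      R ^ 4 * 2 ^ (2 * j + 3) / 2 * (L * √n) * e := by
  have L0 : 0 ≤ L := (norm_nonneg _).trans (hL 0)
  set A : ℝ := R ^ 4 * 2 ^ (2 * j + 3)
  have hA : 0 ≤ A := by positivity
  set B : ℝ := A / 2 * (L * √n) * e
  have he0 : 0 ≤ e := (Es_nonneg m (hS_nonneg m j T) T).trans (he T hT le_rfl)
  have hB : 0 ≤ B := by positivity
  set g : ℝ → ℝ := fun s => 1 / T + 9 / 4 * (T - s)
  have hT' : 1 ≤ 1 / T := by rw [le_div_iff₀ hT]; linarith
  have hg1 : ∀ s, s ≤ T → 1 ≤ g s := fun s hs => by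
    change 1 ≤ 1 / T + 9 / 4 * (T - s)
    linarith
  have hg : ∀ s, HasDerivAt g (-9 / 4) s := fun s => by
    have := (((hasDerivAt_id s).const_sub T).const_mul (9 / 4 : ℝ)).const_add (1 / T)
    convert! this using 1
    norm_num
  have key := le_at_zero (f := fun s => Gs m y β (√(g s)) s - B * s)
    (f' := fun s => (∫ z, Es m s (LG m y β (√(g s)) ((-9 / 4) / (2 * √(g s))) s z) ∂(γ n)) - B) hT
    (fun s h0 h1 => by
      have h2 := hasDerivAt_Gs_sqrt m y hβ hL (g := g) (g' := fun _ => -9 / 4) h0 (.of_forall hg)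
        continuousAt_const (zero_lt_one.trans_le (hg1 s h1))
      have h3 : HasDerivAt (fun s => B * s) B s := by simpa using (hasDerivAt_id s).const_mul B
      exact h2.sub h3)
    (fun s h0 h1 => by
      have hs1 : 1 ≤ √(g s) := Real.one_le_sqrt.2 (hg1 s h1)
      have h2 := deriv_Gs_le m y hβ hL (r := √(g s)) (r' := (-9 / 4) / (2 * √(g s))) (s := s) (c := 9 / 4) (A := A)
        (by positivity) (by field_simp) hA (BC_hS m j s) (hS_nonneg m j s)
        (fun θ v => (norm_cov_bounds m hR j s θ v).1)
      have h3 : L * √n / √(g s) ≤ L * √n := div_le_self (by positivity) hs1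
      have h4 : A / 2 * (L * √n / √(g s)) * Es m s (hS m j s) ≤ B := by
        refine mul_le_mul (mul_le_mul_of_nonneg_left h3 (by positivity)) (he s h0 h1)
          (Es_nonneg m (hS_nonneg m j s) s) (by positivity)
      linarith)
    (by
      have h2 : ContinuousAt (fun s => √(g s)) 0 := (hg 0).continuousAt.sqrt
      have h3 : ContinuousAt (fun s : ℝ => B * s) 0 := by fun_prop
      exact (continuousAt_Gs m y hβ hL h2).sub h3)
  have g0 : g 0 = 1 / T + 9 / 4 * T := by simp [g]
  have gT : g T = 1 / T := by simp [g]
  simp only [g0, gT, mul_zero, sub_zero] at key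
  have : B * T ≤ B := mul_le_of_le_one_right hB hT1
  linarith

/-- After the initial phase the log-concavity bound on the covariance makes the flow decrease. -/
lemma phaseB (H : SLC m 0) {L T M : ℝ} (hβ : 0 < β) (hL : ∀ j, ‖y j‖ ≤ L) (hT : 0 < T) (hM : T ≤ M) :
    Gs m y β (√(1 / M)) M ≤ Gs m y β (√(1 / T)) T := by
  have key := antitone_of_deriv (f := fun s => Gs m y β (√(1 / s)) s) (b := M)
    (f' := fun s => (∫ z, Es m s (LG m y β (√(1 / s)) ((-(1 / s ^ 2)) / (2 * √(1 / s))) s z) ∂(γ n)))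
    (fun s h0 h1 => by
      refine hasDerivAt_Gs_sqrt m y hβ hL (g := fun s => 1 / s) (g' := fun s => -(1 / s ^ 2)) h0 ?_ ?_ (by positivity)
      · filter_upwards [lt_mem_nhds h0] with r hr
        have := hasDerivAt_inv hr.ne'
        simpa [one_div] using this
      · have : ContinuousAt (fun s : ℝ => s ^ 2) s := by fun_prop
        exact (continuousAt_const.div this (by positivity)).neg)
    (fun s h0 h1 => by
      have h2 := deriv_Gs_le m y hβ hL (r := √(1 / s)) (r' := (-(1 / s ^ 2)) / (2 * √(1 / s))) (s := s)
        (c := 1 / s ^ 2) (A := 0) (h := fun _ => 0) (by positivity)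
        (by have : 0 < √(1 / s) := by positivity
            field_simp) le_rfl (BC.const 0) (fun _ => le_rfl) (fun θ v => by
          have h3 := norm_cov_le m (s := s) (θ := θ) (α := 1 / s) (by positivity)
            (fun v => (H s h0 θ v).trans (le_of_eq (by rw [zero_add]; ring))) v
          rw [div_pow, one_pow] at h3
          simpa using h3)
      simpa using h2)
  exact key ⟨hT, hM⟩ ⟨hT.trans_le hM, le_rfl⟩ hM

lemma u_growth {L : ℝ} (hβ : 0 < β) (hL : ∀ j, ‖y j‖ ≤ L) (r s : ℝ) (z θ : E n) :
    |fN y β (av m s θ + r • z)| ≤ (L * (rad m + |r|)) * (1 + ‖z‖) := by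
  have L0 : 0 ≤ L := (norm_nonneg _).trans (hL 0)
  refine (abs_u_le m y hβ hL r s z θ).trans ?_
  rw [mul_assoc]
  refine mul_le_mul_of_nonneg_left ?_ L0
  nlinarith [mul_nonneg (rad_pos m).le (norm_nonneg z), abs_nonneg r]

lemma Gs_swap {L : ℝ} (hβ : 0 < β) (hL : ∀ j, ‖y j‖ ≤ L) (r s : ℝ) :
    Gs m y β r s = Es m s (fun θ => ∫ z, fN y β (av m s θ + r • z) ∂(γ n)) :=
  swap_Es m (φ := fun z θ => fN y β (av m s θ + r • z)) ((continuous_fN y).comp (continuous_arg m r s))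
    (u_growth m y hβ hL r s) s

lemma BC_fN_int {L : ℝ} (hβ : 0 < β) (hL : ∀ j, ‖y j‖ ≤ L) (r s : ℝ) :
    BC (fun θ => ∫ z, fN y β (av m s θ + r • z) ∂(γ n)) :=
  BC_int (φ := fun z θ => fN y β (av m s θ + r • z)) ((continuous_fN y).comp (continuous_arg m r s))
    (u_growth m y hβ hL r s)

lemma integrable_fN {L : ℝ} (hβ : 0 < β) (hL : ∀ j, ‖y j‖ ≤ L) (r : ℝ) (x : E n) :
    Integrable (fun z => fN y β (x + r • z)) (γ n) := by
  have L0 : 0 ≤ L := (norm_nonneg _).trans (hL 0)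
  have ca : Continuous fun z : E n => x + r • z := by fun_prop
  refine integrable_of_growth ((continuous_fN y).comp ca) (C := L * (‖x‖ + |r|)) fun z => ?_
  refine (abs_fN_le y hβ hL _).trans ?_
  rw [mul_assoc]
  refine mul_le_mul_of_nonneg_left ((norm_add_le _ _).trans ?_) L0
  rw [norm_smul, Real.norm_eq_abs]
  nlinarith [mul_nonneg (norm_nonneg x) (norm_nonneg z), abs_nonneg r]

/-- For large times the tilted measure is close to a point mass at its barycentre, so the flow recovers the
mean of `fN` under `m`. -/
lemma phaseEnd (H : SLC m 0) {L M : ℝ} (hβ : 0 < β) (hL : ∀ j, ‖y j‖ ≤ L) (hM : 0 < M) :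
    ∫ x, fN y β x ∂m ≤ Gs m y β (√(1 / M)) M + 2 * (L * √n) * √(1 / M) := by
  have L0 : 0 ≤ L := (norm_nonneg _).trans (hL 0)
  set r := √(1 / M) with hr
  have r0 : 0 ≤ r := Real.sqrt_nonneg _
  rw [← Es_Q_eq m (continuous_fN (β := β) y) hM.le, Gs_swap m y hβ hL]
  have e : 2 * (L * √n) * r = Es m M (fun _ => 2 * (L * √n) * r) := (Es_const m _ M).symm
  rw [e, ← Es_add m (BC_fN_int m y hβ hL r M) (BC.const _)]
  refine Es_mono m (BC_Q m (continuous_fN y) M) ((BC_fN_int m y hβ hL r M).add (BC.const _)) (fun θ => ?_) M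
  set a := av m M θ
  have h1 : Q m (fN y β) M θ ≤ fN y β a + L * (√n * r) := by
    have c1 : Continuous fun x : E n => ‖x - a‖ := by fun_prop
    have c2 : Continuous fun x : E n => L * ‖x - a‖ := by fun_prop
    calc Q m (fN y β) M θ ≤ Q m (fun x => fN y β a + L * ‖x - a‖) M θ :=
          Q_mono m (continuous_fN y) (by fun_prop) (fun x _ => by
            have := (le_abs_self _).trans (fN_lip y hβ hL x a)
            linarith) M θ
      _ = fN y β a + L * Q m (fun x => ‖x - a‖) M θ := by
          rw [Q_add m continuous_const c2, Q_const, Q_const_mul]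
      _ ≤ _ := by
          have := mul_le_mul_of_nonneg_left (Q_norm_sub_av_le m H hM θ) L0
          linarith
  have h2 : fN y β a - L * r * √n ≤ ∫ z, fN y β (a + r • z) ∂(γ n) := by
    have i1 : Integrable (fun z : E n => L * r * ‖z‖) (γ n) := integrable_norm_γ.const_mul _
    have i2 : Integrable (fun z : E n => fN y β a - L * r * ‖z‖) (γ n) := (integrable_const _).sub i1
    have h3 : ∫ z : E n, (fN y β a - L * r * ‖z‖) ∂(γ n) ≤ ∫ z, fN y β (a + r • z) ∂(γ n) := by
      refine integral_mono i2 (integrable_fN y hβ hL r a) fun z => ?_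
      have h4 := (le_abs_self _).trans (fN_lip y hβ hL a (a + r • z))
      rw [sub_add_cancel_left, norm_neg, norm_smul, Real.norm_eq_abs, abs_of_nonneg r0] at h4
      simp only
      linarith
    rw [integral_sub (integrable_const _) i1, integral_const_mul] at h3
    simp only [integral_const, probReal_univ, one_smul] at h3
    have h5 := mul_le_mul_of_nonneg_left (integral_norm_γ_le (n := n)) (mul_nonneg L0 r0)
    linarith
  linarith

/-- The mean of a log-sum-exp function is bounded by a Gaussian mean. -/
lemma upper_fN (H : SLC m 0) (hav : av m 0 0 = 0) {R L T e : ℝ} {j : ℕ} (hR : ∀ᵐ x ∂m, ‖x‖ ≤ R) (hβ : 0 < β)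
    (hL : ∀ j, ‖y j‖ ≤ L)
    (hT : 0 < T) (hT1 : T ≤ 1) (he : ∀ s, 0 < s → s ≤ T → Es m s (hS m j s) ≤ e) :
    ∫ x, fN y β x ∂m ≤ ∫ z, fN y β (√(1 / T + 9 / 4 * T) • z) ∂(γ n) +
      R ^ 4 * 2 ^ (2 * j + 3) / 2 * (L * √n) * e := by
  rw [← Gs_zero m y hav]
  have h1 := phaseA m y hR hβ hL hT hT1 he
  refine h1.trans' ?_
  have h2 : Filter.Tendsto (fun M : ℝ => Gs m y β (√(1 / T)) T + 2 * (L * √n) * √(1 / M)) Filter.atTop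
      (𝓝 (Gs m y β (√(1 / T)) T + 2 * (L * √n) * √0)) := by
    have a : Filter.Tendsto (fun M : ℝ => 1 / M) Filter.atTop (𝓝 0) := by
      simpa [one_div] using tendsto_inv_atTop_zero (𝕜 := ℝ)
    exact (((Real.continuous_sqrt.tendsto 0).comp a).const_mul _).const_add _
  rw [Real.sqrt_zero, mul_zero, add_zero] at h2
  refine ge_of_tendsto h2 ?_
  filter_upwards [Filter.eventually_ge_atTop T] with M hM
  have h3 := phaseEnd m y H hβ hL (hT.trans_le hM)
  have h4 := phaseB m y H hβ hL hT hM
  linarith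

end G3
end IsoGauge

namespace IsoGauge
open scoped Topology
set_option linter.unusedSectionVars false
variable {n : ℕ}

/-- A nonnegative sublinear functional whose supporting linear functionals have norm at most `L`. -/
structure SubL (q : E n → ℝ) (L : ℝ) : Prop where
  cont : Continuous q
  nonneg : ∀ x, 0 ≤ q x
  add_le : ∀ x x', q (x + x') ≤ q x + q x'
  smul : ∀ c : ℝ, 0 ≤ c → ∀ x, q (c • x) = c * q x
  supp : ∀ a, ∃ y : E n, ‖y‖ ≤ L ∧ inner ℝ y a = q a ∧ ∀ x, inner ℝ y x ≤ q x

namespace SubL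
variable {q : E n → ℝ} {L : ℝ} (hq : SubL q L)
include hq

lemma L_nonneg : 0 ≤ L := by
  obtain ⟨y, h, -⟩ := hq.supp 0
  exact (norm_nonneg _).trans h

lemma le_norm (x : E n) : q x ≤ L * ‖x‖ := by
  obtain ⟨y, h1, h2, -⟩ := hq.supp x
  rw [← h2]
  exact (real_inner_le_norm _ _).trans (mul_le_mul_of_nonneg_right h1 (norm_nonneg _))

lemma integrable_γ : Integrable q (γ n) :=
  integrable_of_growth hq.cont (C := L) fun z => by
    rw [abs_of_nonneg (hq.nonneg z)]
    have := hq.le_norm z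
    have := hq.L_nonneg
    linarith

lemma lip (x x' : E n) : q x ≤ q x' + L * ‖x - x'‖ := by
  have h1 := hq.add_le x' (x - x')
  rw [add_sub_cancel] at h1
  have h2 := hq.le_norm (x - x')
  linarith

/-- Finitely many supporting functionals, combined by log-sum-exp, approximate a sublinear
functional from below. -/
lemma exists_fN {ε : ℝ} (hε : 0 < ε) : ∃ (N : ℕ) (_ : NeZero N) (y : Fin N → E n) (β : ℝ), 0 < β ∧
    (∀ j, ‖y j‖ ≤ L) ∧ (∀ x, fN y β x ≤ q x) ∧ ∀ x, q x ≤ fN y β x + ε * (1 + ‖x‖) := by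
  have L0 := hq.L_nonneg
  set δ := ε / (2 * L + 1)
  have hδ : 0 < δ := by positivity
  have hcpt : IsCompact (Metric.closedBall (0 : E n) 1) := isCompact_closedBall 0 1
  obtain ⟨t, -, htf, hcov⟩ := hcpt.finite_cover_balls hδ
  choose Y hY1 hY2 hY3 using hq.supp
  set t' : Finset (E n) := insert 0 htf.toFinset
  have hne : t'.Nonempty := ⟨0, Finset.mem_insert_self _ _⟩
  have : NeZero t'.card := ⟨Finset.card_ne_zero.2 hne⟩
  set β : ℝ := (log t'.card + 1) / ε
  have hN : 0 ≤ log (t'.card : ℝ) := log_natCast_nonneg _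
  have hβ : 0 < β := by positivity
  refine ⟨t'.card, this, fun j => Y (t'.equivFin.symm j), β, hβ, fun j => hY1 _, fun x => ?_, fun x => ?_⟩
  · exact fN_le _ hβ fun j => hY3 _ x
  · have h1 : β⁻¹ * log (t'.card : ℝ) ≤ ε := by
      rw [inv_mul_le_iff₀ hβ]
      have : β * ε = log (t'.card : ℝ) + 1 := by simp only [β]; field_simp
      linarith
    -- every direction is close to a point of the net
    obtain ⟨c, hc, hcn⟩ : ∃ c ∈ t', ‖x - ‖x‖ • c‖ ≤ δ * ‖x‖ := by
      rcases eq_or_ne x 0 with rfl | hx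
      · exact ⟨0, Finset.mem_insert_self _ _, by simp⟩
      have hx' : 0 < ‖x‖ := norm_pos_iff.2 hx
      have h2 : ‖x‖⁻¹ • x ∈ Metric.closedBall (0 : E n) 1 := by
        simp [norm_smul, hx'.ne']
      obtain ⟨c, hc, hd⟩ := Set.mem_iUnion₂.1 (hcov h2)
      refine ⟨c, Finset.mem_insert_of_mem (htf.mem_toFinset.2 hc), ?_⟩
      have h3 : x - ‖x‖ • c = ‖x‖ • (‖x‖⁻¹ • x - c) := by
        rw [smul_sub, smul_smul, mul_inv_cancel₀ hx'.ne', one_smul]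
      rw [h3, norm_smul, norm_norm, mul_comm]
      rw [Metric.mem_ball, dist_eq_norm] at hd
      exact mul_le_mul_of_nonneg_right hd.le hx'.le
    have h4 := le_fN (fun j => Y (t'.equivFin.symm j)) hβ x (t'.equivFin ⟨c, hc⟩)
    simp only [Equiv.symm_apply_apply] at h4
    have h5 : inner ℝ (Y c) x = ‖x‖ * q c + inner ℝ (Y c) (x - ‖x‖ • c) := by
      rw [inner_sub_right, real_inner_smul_right, hY2]; ring
    have h6 : -(L * (δ * ‖x‖)) ≤ inner ℝ (Y c) (x - ‖x‖ • c) := by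
      have := (abs_le.1 (abs_real_inner_le_norm (Y c) (x - ‖x‖ • c))).1
      have h7 : ‖Y c‖ * ‖x - ‖x‖ • c‖ ≤ L * (δ * ‖x‖) := mul_le_mul (hY1 c) hcn (norm_nonneg _) L0
      linarith
    have h8 := hq.lip x (‖x‖ • c)
    rw [hq.smul _ (norm_nonneg x)] at h8
    have h9 : L * ‖x - ‖x‖ • c‖ ≤ L * (δ * ‖x‖) := mul_le_mul_of_nonneg_left hcn L0
    have h10 : 2 * L * δ ≤ ε := by
      simp only [δ]
      rw [← mul_div_assoc, div_le_iff₀ (by positivity)]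
      nlinarith
    nlinarith [mul_le_mul_of_nonneg_right h10 (norm_nonneg x)]

lemma integrable_smul_γ (r : ℝ) : Integrable (fun z => q (r • z)) (γ n) :=
  integrable_of_growth (hq.cont.comp (by fun_prop)) (C := L * |r|) fun z => by
    rw [abs_of_nonneg (hq.nonneg _)]
    have h := hq.le_norm (r • z)
    rw [norm_smul, Real.norm_eq_abs] at h
    have := mul_nonneg hq.L_nonneg (abs_nonneg r)
    linarith

variable (m : Measure (E n)) [CptMeas m]

/-- The mean of a sublinear functional is bounded by a Gaussian mean. -/
lemma upper (H : SLC m 0) (hav : av m 0 0 = 0) {R T e : ℝ} {j : ℕ} (hR : ∀ᵐ x ∂m, ‖x‖ ≤ R)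
    (hT : 0 < T) (hT1 : T ≤ 1) (he : ∀ s, 0 < s → s ≤ T → Es m s (hS m j s) ≤ e) :
    ∫ x, q x ∂m ≤ √(1 / T + 9 / 4 * T) * (∫ z, q z ∂(γ n)) + R ^ 4 * 2 ^ (2 * j + 3) / 2 * (L * √n) * e := by
  have hb : Integrable (fun x : E n => 1 + ‖x‖) m := cpt_integrable m (by fun_prop)
  have hb0 : 0 ≤ ∫ x : E n, (1 + ‖x‖) ∂m := integral_nonneg fun x => by positivity
  set K := ∫ x : E n, (1 + ‖x‖) ∂m
  refine le_of_forall_pos_le_add fun ε hε => ?_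
  obtain ⟨N, hN, y, β, hβ, hL, h1, h2⟩ := hq.exists_fN (ε := ε / (K + 1)) (by positivity)
  have h3 := upper_fN m y H hav hR hβ hL hT hT1 he
  have h4 : ∫ x, q x ∂m ≤ ∫ x, fN y β x ∂m + ε / (K + 1) * K := by
    rw [← integral_const_mul, ← integral_add (cpt_integrable m (continuous_fN y)) (hb.const_mul _)]
    exact integral_mono (cpt_integrable m hq.cont) ((cpt_integrable m (continuous_fN y)).add (hb.const_mul _)) h2
  set r := √(1 / T + 9 / 4 * T)
  have h5 : ∫ z, fN y β (r • z) ∂(γ n) ≤ r * ∫ z, q z ∂(γ n) := by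
    rw [← integral_const_mul]
    have i1 := integrable_fN y hβ hL r 0
    simp only [zero_add] at i1
    refine integral_mono i1 (hq.integrable_γ.const_mul r) fun z => ?_
    exact (h1 _).trans_eq (hq.smul _ (Real.sqrt_nonneg _) z)
  have h6 : ε / (K + 1) * K ≤ ε := by
    rw [div_mul_eq_mul_div, div_le_iff₀ (by positivity)]
    nlinarith
  linarith

/-- Jensen's inequality at the barycentre, together with sublinearity. -/
lemma Gs_le {N : ℕ} [NeZero N] {y : Fin N → E n} {β : ℝ} (hβ : 0 < β) (hL : ∀ j, ‖y j‖ ≤ L)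
    (h1 : ∀ x, fN y β x ≤ q x) {r s : ℝ} (hr : 0 ≤ r) (hs : 0 ≤ s) :
    Gs m y β r s ≤ ∫ x, q x ∂m + r * ∫ z, q z ∂(γ n) := by
  rw [Gs_swap m y hβ hL, ← Es_Q_eq m hq.cont hs]
  have e : r * ∫ z, q z ∂(γ n) = Es m s (fun _ => r * ∫ z, q z ∂(γ n)) := (Es_const m _ s).symm
  rw [e, ← Es_add m (BC_Q m hq.cont s) (BC.const _)]
  refine Es_mono m (BC_fN_int m y hβ hL r s) ((BC_Q m hq.cont s).add (BC.const _)) (fun θ => ?_) s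
  set a := av m s θ
  have h2 : q a ≤ Q m q s θ := by
    obtain ⟨w, -, h3, h4⟩ := hq.supp a
    rw [← h3, ← Q_inner]
    exact Q_mono m (continuous_inner_left w) hq.cont (fun x _ => h4 x) s θ
  have h5 : ∫ z, fN y β (a + r • z) ∂(γ n) ≤ ∫ z, (q a + r * q z) ∂(γ n) := by
    refine integral_mono (integrable_fN y hβ hL r a) ((integrable_const _).add (hq.integrable_γ.const_mul r))
      fun z => ?_
    refine (h1 _).trans ((hq.add_le _ _).trans_eq ?_)
    rw [hq.smul r hr]
  rw [integral_add (integrable_const _) (hq.integrable_γ.const_mul r), integral_const_mul] at h5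
  simp only [integral_const, probReal_univ, one_smul] at h5
  linarith

end SubL

section G4
variable (m : Measure (E n)) [CptMeas m]
variable {N : ℕ} [NeZero N] (y : Fin N → E n) {β : ℝ}

/-- During the initial phase the flow is controlled below by a Gaussian of covariance growing at
rate `1/4`. -/
lemma phaseC {R L T e : ℝ} {j : ℕ} (hR : ∀ᵐ x ∂m, ‖x‖ ≤ R) (hβ : 0 < β) (hL : ∀ j, ‖y j‖ ≤ L)
    (hT : 0 < T) (hT1 : T ≤ 1) (he : ∀ s, 0 < s → s ≤ T → Es m s (hS m j s) ≤ e) :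
    Gs m y β (√(T / 2)) 0 ≤ Gs m y β (√T / 2) T + 2 ^ (2 * j + 3) * (L * √n) * e := by
  have L0 : 0 ≤ L := (norm_nonneg _).trans (hL 0)
  set A : ℝ := 2 ^ (2 * j + 3)
  have hA : 0 ≤ A := by positivity
  have hsT : 0 < √T := Real.sqrt_pos.2 hT
  set B : ℝ := A / 2 * (L * √n / (√T / 2)) * e
  have he0 : 0 ≤ e := (Es_nonneg m (hS_nonneg m j T) T).trans (he T hT le_rfl)
  have hB : 0 ≤ B := by positivity
  set g : ℝ → ℝ := fun s => T / 4 + 1 / 4 * (T - s)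
  have hq : √(T / 4) = √T / 2 := by
    rw [Real.sqrt_div hT.le, show (4 : ℝ) = 2 ^ 2 by norm_num, Real.sqrt_sq (by norm_num)]
  have hg1 : ∀ s, s ≤ T → T / 4 ≤ g s := fun s hs => by
    change T / 4 ≤ T / 4 + 1 / 4 * (T - s)
    linarith
  have hg : ∀ s, HasDerivAt g (-1 / 4) s := fun s => by
    have := (((hasDerivAt_id s).const_sub T).const_mul (1 / 4 : ℝ)).const_add (T / 4)
    convert! this using 1
    norm_num
  have key := le_at_zero (f := fun s => -Gs m y β (√(g s)) s - B * s)
    (f' := fun s => -(∫ z, Es m s (LG m y β (√(g s)) ((-1 / 4) / (2 * √(g s))) s z) ∂(γ n)) - B) hT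
    (fun s h0 h1 => by
      have h2 := hasDerivAt_Gs_sqrt m y hβ hL (g := g) (g' := fun _ => -1 / 4) h0 (.of_forall hg)
        continuousAt_const ((by positivity : 0 < T / 4).trans_le (hg1 s h1))
      have h3 : HasDerivAt (fun s => B * s) B s := by simpa using (hasDerivAt_id s).const_mul B
      exact h2.neg.sub h3)
    (fun s h0 h1 => by
      have hs1 : √T / 2 ≤ √(g s) := hq ▸ Real.sqrt_le_sqrt (hg1 s h1)
      have hs2 : 0 < √(g s) := (by positivity : 0 < √T / 2).trans_le hs1
      have h2 := le_deriv_Gs m y hβ hL (r := √(g s)) (r' := (-1 / 4) / (2 * √(g s))) (s := s) (c := 1 / 4) (A := A)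
        hs2 (by field_simp) hA (BC_hS m j s) (hS_nonneg m j s)
        (fun θ v => (norm_cov_bounds m hR j s θ v).2)
      have h3 : L * √n / √(g s) ≤ L * √n / (√T / 2) :=
        div_le_div_of_nonneg_left (by positivity) (by positivity) hs1
      have h4 : A / 2 * (L * √n / √(g s)) * Es m s (hS m j s) ≤ B := by
        refine mul_le_mul (mul_le_mul_of_nonneg_left h3 (by positivity)) (he s h0 h1)
          (Es_nonneg m (hS_nonneg m j s) s) (by positivity)
      linarith)
    (by
      have h2 : ContinuousAt (fun s => √(g s)) 0 := (hg 0).continuousAt.sqrt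
      have h3 : ContinuousAt (fun s : ℝ => B * s) 0 := by fun_prop
      exact (continuousAt_Gs m y hβ hL h2).neg.sub h3)
  have g0 : g 0 = T / 2 := by simp only [g]; ring
  have gT : √(g T) = √T / 2 := by rw [← hq]; simp [g]
  simp only [g0, gT, mul_zero, sub_zero] at key
  have : B * T ≤ A * (L * √n) * e := by
    have h5 : B * T = A * (L * √n) * e * √T := by
      simp only [B]
      nth_rewrite 2 [← Real.sq_sqrt hT.le]
      field_simp
    rw [h5]
    exact mul_le_of_le_one_right (by positivity) (Real.sqrt_le_one.2 hT1)
  linarith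

end G4

namespace SubL
variable {q : E n → ℝ} {L : ℝ} (hq : SubL q L) (m : Measure (E n)) [CptMeas m]
include hq

/-- The Gaussian mean of a sublinear functional is bounded by its mean under `m`. -/
lemma lower (hav : av m 0 0 = 0) {R T e : ℝ} {j : ℕ} (hR : ∀ᵐ x ∂m, ‖x‖ ≤ R)
    (hT : 0 < T) (hT1 : T ≤ 1) (he : ∀ s, 0 < s → s ≤ T → Es m s (hS m j s) ≤ e) :
    (√(T / 2) - √T / 2) * (∫ z, q z ∂(γ n)) ≤ ∫ x, q x ∂m + 2 ^ (2 * j + 3) * (L * √n) * e := by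
  have hb : Integrable (fun x : E n => 1 + ‖√(T / 2) • x‖) (γ n) := by
    refine integrable_of_growth (by fun_prop) (C := 1 + √(T / 2)) fun z => ?_
    rw [abs_of_nonneg (by positivity), norm_smul, Real.norm_eq_abs, abs_of_nonneg (Real.sqrt_nonneg _)]
    nlinarith [norm_nonneg z, Real.sqrt_nonneg (T / 2)]
  have hb0 : 0 ≤ ∫ x : E n, (1 + ‖√(T / 2) • x‖) ∂(γ n) := integral_nonneg fun x => by positivity
  set K := ∫ x : E n, (1 + ‖√(T / 2) • x‖) ∂(γ n)
  refine le_of_forall_pos_le_add fun ε hε => ?_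
  obtain ⟨N, hN, y, β, hβ, hL, h1, h2⟩ := hq.exists_fN (ε := ε / (K + 1)) (by positivity)
  have h3 := phaseC m y hR hβ hL hT hT1 he
  rw [Gs_zero m y hav] at h3
  have h7 := hq.Gs_le m hβ hL h1 (r := √T / 2) (by positivity) hT.le
  set r := √(T / 2)
  have i1 := integrable_fN y hβ hL r 0
  simp only [zero_add] at i1
  have h5 : r * ∫ z, q z ∂(γ n) ≤ ∫ z, fN y β (r • z) ∂(γ n) + ε / (K + 1) * K := by
    rw [← integral_const_mul, ← integral_const_mul, ← integral_add i1 (hb.const_mul _)]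
    refine integral_mono (hq.integrable_γ.const_mul r) (i1.add (hb.const_mul _)) fun z => ?_
    exact (hq.smul _ (Real.sqrt_nonneg _) z).symm.trans_le (h2 _)
  have h6 : ε / (K + 1) * K ≤ ε := by
    rw [div_mul_eq_mul_div, div_le_iff₀ (by positivity)]
    nlinarith
  linarith

end SubL
end IsoGauge

namespace IsoGauge
open scoped Topology
set_option linter.unusedSectionVars false
variable {n : ℕ}

/-! ### Geometry of isotropic bodies -/

section iso
variable (m : Measure (E n)) [CptMeas m]

lemma av_iso (h : IsIsotropicMeasure m) : av m 0 0 = 0 := by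
  ext i
  change Q m (fun x => x i) 0 0 = 0
  rw [Q_zero, h.1 i]

lemma Bm_iso (h : IsIsotropicMeasure m) : Bm m 0 0 = 0 := by
  ext i j
  change cv m (fun x => x i) (fun x => x j) 0 0 - (1 : Matrix (Fin n) (Fin n) ℝ) i j = 0
  rw [cv_zero, h.2 i j, h.1 i, zero_mul, Matrix.one_apply]
  simp

lemma integral_inner_iso (h : IsIsotropicMeasure m) (v : E n) : ∫ x, inner ℝ v x ∂m = 0 := by
  have h1 := Q_inner m v 0 0
  rwa [Q_zero, av_iso m h, inner_zero_right] at h1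

lemma integral_inner_sq_iso (h : IsIsotropicMeasure m) (v : E n) : ∫ x, inner ℝ v x ^ 2 ∂m = ‖v‖ ^ 2 := by
  have e : ∀ x : E n, inner ℝ v x ^ 2 = ∑ i, ∑ j, v i * v j * (x i * x j) := fun x => by
    rw [inner_eq_sum, pow_two, Finset.sum_mul_sum]
    exact Finset.sum_congr rfl fun i _ => Finset.sum_congr rfl fun j _ => by ring
  simp only [e]
  rw [integral_finsetSum _ fun i _ => cpt_integrable m (by fun_prop), norm_sq_eq_sum]
  refine Finset.sum_congr rfl fun i _ => ?_
  rw [integral_finsetSum _ fun j _ => cpt_integrable m (by fun_prop)]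
  simp only [integral_const_mul, h.2]
  simp [pow_two]

/-- If a linear functional takes values in `[-b, a]` almost surely, its variance is at most `ab`. -/
lemma norm_sq_le_of_range (h : IsIsotropicMeasure m) {v : E n} {a b : ℝ}
    (h1 : ∀ᵐ x ∂m, inner ℝ v x ≤ a) (h2 : ∀ᵐ x ∂m, -b ≤ inner ℝ v x) : ‖v‖ ^ 2 ≤ a * b := by
  have h3 : 0 ≤ ∫ x, (a - inner ℝ v x) * (inner ℝ v x + b) ∂m := by
    refine integral_nonneg_of_ae ?_
    filter_upwards [h1, h2] with x h1 h2
    exact mul_nonneg (by linarith) (by linarith)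
  have e : ∀ x : E n, (a - inner ℝ v x) * (inner ℝ v x + b) = a * b + (a - b) * inner ℝ v x - inner ℝ v x ^ 2 :=
    fun x => by ring
  have c := continuous_inner_left v
  have i1 : Integrable (fun x => (a - b) * inner ℝ v x) m := cpt_integrable m (by fun_prop)
  have i2 : Integrable (fun x => inner ℝ v x ^ 2) m := cpt_integrable m (by fun_prop)
  have i3 : Integrable (fun x => a * b + (a - b) * inner ℝ v x) m := cpt_integrable m (by fun_prop)
  simp only [e] at h3
  rw [integral_sub i3 i2, integral_add (integrable_const _) i1, integral_const_mul (a - b), integral_inner_iso m h,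
    integral_inner_sq_iso m h, integral_const, probReal_univ, one_smul] at h3
  linarith

end iso

section body
variable {K : Set (E n)} (hK : IsConvexBody K)
include hK

lemma ae_mem_unifOn : ∀ᵐ x ∂(unifOn K), x ∈ K := by
  have h1 : ∀ᵐ x ∂(volume.restrict K), x ∈ K := ae_restrict_mem hK.1.measurableSet
  exact Measure.ae_smul_measure h1 _

/-- Shrinking a body towards one of its points. -/
lemma shrink_le {f : E n → ℝ} (hf : Continuous f) (h0 : ∀ x, 0 ≤ f x) {x₀ : E n} (hx : x₀ ∈ K) {c : ℝ}
    (hc : 0 < c) (hc1 : c ≤ 1) :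
    c ^ n * ∫ x, f (c • x + (1 - c) • x₀) ∂(unifOn K) ≤ ∫ x, f x ∂(unifOn K) := by
  have hm := hK.1.measurableSet
  rw [integral_unifOn, integral_unifOn, mul_left_comm]
  refine mul_le_mul_of_nonneg_left ?_ (by positivity)
  have e1 : ∫ x in K, f x = c ^ n * ∫ x, K.indicator f (c • x + (1 - c) • x₀) := by
    have h1 := Measure.integral_comp_smul (volume : Measure (E n)) (fun x => K.indicator f (x + (1 - c) • x₀)) c
    rw [h1, integral_add_right_eq_self, integral_indicator hm, finrank_euclideanSpace_fin,
      abs_of_pos (by positivity), smul_eq_mul, ← mul_assoc, mul_inv_cancel₀ (by positivity), one_mul]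
  rw [e1, ← integral_indicator hm]
  refine mul_le_mul_of_nonneg_left ?_ (by positivity)
  have ca : Continuous fun x : E n => c • x + (1 - c) • x₀ := by fun_prop
  have i1 : Integrable (K.indicator fun x => f (c • x + (1 - c) • x₀)) :=
    (integrable_indicator_iff hm).2 ((hf.comp ca).continuousOn.integrableOn_compact hK.1)
  have i2 : Integrable (fun x => K.indicator f (c • x + (1 - c) • x₀)) := by
    have i3 : Integrable (K.indicator f) :=
      (integrable_indicator_iff hm).2 (hf.continuousOn.integrableOn_compact hK.1)
    exact (i3.comp_add_right ((1 - c) • x₀)).comp_smul hc.ne'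
  refine integral_mono i1 i2 fun x => ?_
  by_cases hxK : x ∈ K
  · have h2 : c • x + (1 - c) • x₀ ∈ K := hK.2.1 hxK hx hc.le (by linarith) (by ring)
    simp only [Set.indicator_of_mem hxK, Set.indicator_of_mem h2, le_refl]
  · simp only [Set.indicator_of_notMem hxK]
    exact Set.indicator_nonneg (fun x _ => h0 x) _

/-- The copy of `K` shrunk towards `x₀` by the factor `1 - 1/n` fills a fixed share of `K`, on which `⟨x₀, x⟩²` is large
if `x₀` is far away; isotropy bounds its mean. -/
lemma norm_le_of_iso (hn : 2 ≤ n) (hI : IsIsotropicBody K) {x₀ : E n} (hx : x₀ ∈ K) : ‖x₀‖ ≤ 2 * n := by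
  have := cptMeas_unifOn hK
  have hn' : (2 : ℝ) ≤ n := by exact_mod_cast hn
  have hi : (1 : ℝ) / n ≤ 1 / 2 := one_div_le_one_div_of_le (by norm_num) hn'
  have hi0 : (0 : ℝ) < 1 / n := by positivity
  set c : ℝ := 1 - 1 / n with hc
  have hc0 : 0 < c := by linarith
  -- Bernoulli's inequality with exponent `n / 2` gives `c ^ n ≥ 1 / 4`.
  have hcn : 1 / 4 ≤ c ^ n := by
    have h1 := one_add_mul_self_le_rpow_one_add (s := -(1 / (n : ℝ))) (by linarith) (p := n / 2) (by linarith)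
    have h2 : 1 + (n : ℝ) / 2 * -(1 / n) = 1 / 2 := by field_simp; norm_num
    rw [h2, ← sub_eq_add_neg, ← hc] at h1
    have h3 : c ^ n = (c ^ ((n : ℝ) / 2)) ^ 2 := by
      rw [← Real.rpow_natCast, ← Real.rpow_natCast, ← Real.rpow_mul hc0.le]
      congr 1; push_cast; ring
    rw [h3]
    nlinarith
  have h4 := shrink_le hK (f := fun x => inner ℝ x₀ x ^ 2) (by fun_prop) (fun x => sq_nonneg _) hx hc0 (by linarith)
  rw [integral_inner_sq_iso _ hI] at h4
  have e : ∀ x : E n, inner ℝ x₀ (c • x + (1 - c) • x₀) ^ 2 =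
      c ^ 2 * inner ℝ x₀ x ^ 2 + (2 * c * (‖x₀‖ ^ 2 / n) * inner ℝ x₀ x + (‖x₀‖ ^ 2 / n) ^ 2) := fun x => by
    rw [inner_add_right, real_inner_smul_right, real_inner_smul_right, real_inner_self_eq_norm_sq, hc]
    ring
  simp only [e] at h4
  have i1 : Integrable (fun x => c ^ 2 * inner ℝ x₀ x ^ 2) (unifOn K) := cpt_integrable _ (by fun_prop)
  have i2 : Integrable (fun x => 2 * c * (‖x₀‖ ^ 2 / n) * inner ℝ x₀ x) (unifOn K) := cpt_integrable _ (by fun_prop)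
  have i3 : Integrable (fun x => 2 * c * (‖x₀‖ ^ 2 / n) * inner ℝ x₀ x + (‖x₀‖ ^ 2 / n) ^ 2) (unifOn K) :=
    cpt_integrable _ (by fun_prop)
  rw [integral_add i1 i3, integral_add i2 (integrable_const _), integral_const_mul, integral_const_mul,
    integral_inner_iso _ hI, integral_inner_sq_iso _ hI, integral_const, probReal_univ, one_smul, mul_zero,
    zero_add] at h4
  by_contra! hlt
  have p0 : 0 < ‖x₀‖ := lt_of_le_of_lt (by positivity) hlt
  have h5 : 1 / 4 * (‖x₀‖ ^ 2 / n) ^ 2 ≤ ‖x₀‖ ^ 2 := by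
    have h6 := mul_le_mul_of_nonneg_right hcn (by positivity : 0 ≤ (‖x₀‖ ^ 2 / (n : ℝ)) ^ 2)
    have h7 : 0 ≤ c ^ n * (c ^ 2 * ‖x₀‖ ^ 2) := by positivity
    linarith
  have h8 : 2 < ‖x₀‖ / n := by rw [lt_div_iff₀ (by positivity)]; exact hlt
  have h9 : (‖x₀‖ ^ 2 / n) ^ 2 = ‖x₀‖ ^ 2 * (‖x₀‖ / n) ^ 2 := by ring
  rw [h9] at h5
  have h10 : 4 < (‖x₀‖ / n) ^ 2 := by nlinarith
  nlinarith [mul_lt_mul_of_pos_left h10 (by positivity : 0 < ‖x₀‖ ^ 2)]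

/-- Otherwise a supporting functional at the barycentre would have one sign on the body. -/
lemma zero_mem_interior (hI : IsIsotropicBody K) : (0 : E n) ∈ interior K := by
  have := cptMeas_unifOn hK
  by_contra h
  obtain ⟨f, hf⟩ := geometric_hahn_banach_open_point hK.2.1.interior isOpen_interior h
  rw [map_zero] at hf
  set v := (InnerProductSpace.toDual ℝ (E n)).symm f
  have hv : ∀ x, inner ℝ v x = f x := fun x => InnerProductSpace.toDual_symm_apply
  obtain ⟨x₁, hx₁⟩ := hK.2.2
  have hle : ∀ x ∈ K, f x ≤ 0 := fun x hx => by
    have h1 : x ∈ closure (interior K) := by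
      rw [hK.2.1.closure_interior_eq_closure_of_nonempty_interior hK.2.2]
      exact subset_closure hx
    exact closure_minimal (fun z hz => (hf z hz).le) (isClosed_le f.continuous continuous_const) h1
  obtain ⟨R, -, hR⟩ := hK.1.isBounded.exists_pos_norm_le
  have h2 := norm_sq_le_of_range (unifOn K) hI (v := v) (a := 0) (b := ‖v‖ * R)
    ((ae_mem_unifOn hK).mono fun x hx => (hv x).trans_le (hle x hx))
    ((ae_mem_unifOn hK).mono fun x hx => (neg_le_neg (mul_le_mul_of_nonneg_left (hR x hx) (norm_nonneg v))).trans
      (abs_le.1 (abs_real_inner_le_norm v x)).1)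
  rw [zero_mul] at h2
  have h3 : v = 0 := by
    rw [← norm_eq_zero]
    nlinarith [norm_nonneg v]
  have h4 := hf x₁ hx₁
  rw [← hv, h3, inner_zero_left] at h4
  exact lt_irrefl _ h4

/-- The gauge of an isotropic body is sublinear, with supporting functionals (Hahn–Banach) of norm at most `2 n`. -/
lemma SubL_gauge (hn : 2 ≤ n) (hI : IsIsotropicBody K) : SubL (gauge K) (2 * n) := by
  have := cptMeas_unifOn hK
  have h0 := zero_mem_interior hK hI
  have hnh : K ∈ 𝓝 (0 : E n) := mem_interior_iff_mem_nhds.1 h0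
  have habs : Absorbent ℝ K := absorbent_nhds_zero hnh
  have hsm : ∀ c : ℝ, 0 ≤ c → ∀ x : E n, gauge K (c • x) = c * gauge K x := fun c hc x => by
    rw [gauge_smul_of_nonneg hc, smul_eq_mul]
  refine ⟨continuous_gauge hK.2.1 hnh, gauge_nonneg, gauge_add_le hK.2.1 habs, hsm, fun a => ?_⟩
  -- The norm bound follows from the variance bound, as the functional is at most `1` on `K`.
  suffices ∃ y : E n, inner ℝ y a = gauge K a ∧ ∀ x, inner ℝ y x ≤ gauge K x by
    obtain ⟨y, h1, h2⟩ := this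
    refine ⟨y, ?_, h1, h2⟩
    have h3 := norm_sq_le_of_range (unifOn K) hI (v := y) (a := 1) (b := ‖y‖ * (2 * n))
      ((ae_mem_unifOn hK).mono fun x hx => (h2 x).trans (gauge_le_one_of_mem hx))
      ((ae_mem_unifOn hK).mono fun x hx =>
        (neg_le_neg (mul_le_mul_of_nonneg_left (norm_le_of_iso hK hn hI hx) (norm_nonneg y))).trans
        (abs_le.1 (abs_real_inner_le_norm y x)).1)
    by_contra! hlt
    have p0 : 0 < ‖y‖ := lt_of_le_of_lt (by positivity) hlt
    nlinarith [mul_lt_mul_of_pos_left hlt p0]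
  rcases eq_or_ne a 0 with rfl | ha
  · exact ⟨0, by simp, fun x => by simpa using gauge_nonneg x⟩
  obtain ⟨g, hg1, hg2⟩ := exists_extension_of_le_sublinear
    (LinearPMap.mkSpanSingleton a (gauge K a) ha) (gauge K) (fun c hc x => hsm c hc.le x)
    (gauge_add_le hK.2.1 habs) (by
      rintro ⟨x, hx⟩
      obtain ⟨c, rfl⟩ := Submodule.mem_span_singleton.1 hx
      refine (LinearPMap.mkSpanSingleton'_apply a (gauge K a) _ c hx).trans_le ?_
      simp only [RingHom.id_apply, smul_eq_mul]
      rcases le_total 0 c with hc | hc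
      · exact (hsm c hc a).ge
      · exact (mul_nonpos_of_nonpos_of_nonneg hc (gauge_nonneg a)).trans (gauge_nonneg _))
  set v := (InnerProductSpace.toDual ℝ (E n)).symm (LinearMap.toContinuousLinearMap g)
  have hv : ∀ x, inner ℝ v x = g x := fun x => InnerProductSpace.toDual_symm_apply
  refine ⟨v, ?_, fun x => (hv x).trans_le (hg2 x)⟩
  rw [hv]
  have h1 := hg1 ⟨a, Submodule.mem_span_singleton_self a⟩
  have h2 := LinearPMap.mkSpanSingleton_apply ℝ ℝ (σ := RingHom.id ℝ) ha (gauge K a)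
  exact h1.trans h2

lemma integral_gauge_self_le (hn : 2 ≤ n) (hI : IsIsotropicBody K) : ∫ x, gauge K x ∂(unifOn K) ≤ 1 := by
  have := cptMeas_unifOn hK
  have h1 : ∫ x, gauge K x ∂(unifOn K) ≤ ∫ _x : E n, (1 : ℝ) ∂(unifOn K) :=
    integral_mono_ae (cpt_integrable _ (SubL_gauge hK hn hI).cont) (integrable_const _)
      ((ae_mem_unifOn hK).mono fun x hx => gauge_le_one_of_mem hx)
  simpa using h1

/-- The covariance stays close to the identity up to time `(d / (128 k))²`. -/
lemma Es_hS_body (hI : IsIsotropicBody K) {d s : ℝ} (hd : 0 < d) (hd1 : d ≤ 1) {j : ℕ} (hj : 1 ≤ j) (hs : 0 < s)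
    (hs1 : s ≤ (d / (128 * ((j : ℝ) + 1))) ^ 2) :
    Es (unifOn K) s (hS (unifOn K) j s) ≤ n * (d * exp 1) ^ (j + 1) := by
  have := cptMeas_unifOn hK
  have hr : 0 ≤ d / (128 * ((j : ℝ) + 1)) := by positivity
  have hr1 : d / (128 * ((j : ℝ) + 1)) ≤ 1 := by
    rw [div_le_one (by positivity)]
    have : (0 : ℝ) ≤ j := Nat.cast_nonneg j
    linarith
  have h1 := Es_hS_le (unifOn K) (SLC_body hK) (Bm_iso _ hI) hs (hs1.trans (pow_le_one₀ hr hr1))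
    (δ := √d) (Real.sqrt_pos.2 hd) (Real.sqrt_le_one.2 hd1) hj
  refine h1.trans ?_
  have e1 : √d ^ (2 * j + 2) = d ^ (j + 1) := by
    rw [show 2 * j + 2 = 2 * (j + 1) by ring, pow_mul, Real.sq_sqrt hd.le]
  rw [e1, mul_pow, ← Real.exp_nat_mul, Real.sq_sqrt hd.le, ← mul_assoc]
  refine mul_le_mul_of_nonneg_left (Real.exp_le_exp.2 ?_) (by positivity)
  have h2 : √s ≤ d / (128 * ((j : ℝ) + 1)) := Real.sqrt_le_iff.2 ⟨hr, hs1⟩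
  have h3 := mul_le_mul_of_nonneg_left h2 (by positivity : 0 ≤ 2 * (64 * ((j : ℝ) + 1) ^ 2 / d))
  refine h3.trans_eq ?_
  push_cast
  field_simp
  norm_num

end body

/-- The exceptional terms are bounded, since `k = j + 1 ≥ log n`. -/
lemma err_bound (hn : 2 ≤ n) {j : ℕ} (hj : log n ≤ (j : ℝ) + 1) :
    (n : ℝ) ^ 7 * (4 * (exp (-9) / 4 * exp 1)) ^ (j + 1) ≤ 1 := by
  have hn' : (0 : ℝ) < n := by positivity
  have e1 : 4 * (exp (-9) / 4 * exp 1) = exp (-8) := by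
    rw [show (-8 : ℝ) = -9 + 1 by norm_num, Real.exp_add]; ring
  have h1 : 0 ≤ log (n : ℝ) := log_natCast_nonneg n
  nth_rewrite 1 [← Real.exp_log hn']
  rw [e1, ← Real.exp_nat_mul, ← Real.exp_nat_mul, ← Real.exp_add, Real.exp_le_one_iff]
  push_cast
  linarith

set_option maxHeartbeats 1000000 in
/-- The two Gaussian comparisons at time `t²`, `t = d/(128 k)`, where `k - 1 = j = ⌈log (n + 1)⌉`; the number `d` is
small enough for the exceptional terms to be bounded. -/
lemma final_bound (hn : 2 ≤ n) {K T : Set (E n)} (hK : IsConvexBody K) (hT : IsConvexBody T)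
    (hIK : IsIsotropicBody K) (hIT : IsIsotropicBody T) :
    ∫ x, gauge K x ∂(unifOn T) ≤ 9 * 362 * (128 / (exp (-9) / 4)) ^ 2 * log (n + 1) ^ 2 := by
  have := cptMeas_unifOn hK
  have := cptMeas_unifOn hT
  have hn' : (2 : ℝ) ≤ n := by exact_mod_cast hn
  have hl1 : 1 ≤ log ((n : ℝ) + 1) := by
    rw [Real.le_log_iff_exp_le (by positivity)]
    linarith [Real.exp_one_lt_d9]
  set j := ⌈log ((n : ℝ) + 1)⌉₊ with hjdef
  have hj1 : log ((n : ℝ) + 1) ≤ j := Nat.le_ceil _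
  have hj2 : (j : ℝ) < log ((n : ℝ) + 1) + 1 := Nat.ceil_lt_add_one (by linarith)
  have hj : 1 ≤ j := by
    have : (1 : ℝ) ≤ j := hl1.trans hj1
    exact_mod_cast this
  have hjn : log (n : ℝ) ≤ (j : ℝ) + 1 := by
    have := Real.log_le_log (by positivity) (by linarith : (n : ℝ) ≤ n + 1)
    linarith
  set d := exp (-9) / 4 with hd
  have hd0 : 0 < d := by positivity
  have hd1 : d ≤ 1 := by
    have : exp (-9) ≤ 1 := Real.exp_le_one_iff.2 (by norm_num)
    rw [hd]; linarith
  set k : ℝ := (j : ℝ) + 1 with hk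
  have hk0 : 1 ≤ k := by have : (0 : ℝ) ≤ j := Nat.cast_nonneg j; linarith
  have hk3 : k ≤ 3 * log ((n : ℝ) + 1) := by linarith
  set t := d / (128 * k) with ht
  have t0 : 0 < t := by positivity
  have t1 : t ≤ 1 := by rw [ht, div_le_one (by positivity)]; linarith
  set e := (n : ℝ) * (d * exp 1) ^ (j + 1) with he
  have e0 : 0 ≤ e := by positivity
  have T1 : t ^ 2 ≤ 1 := pow_le_one₀ t0.le t1
  have hq := SubL_gauge hK hn hIK
  have hgK := integral_gauge_self_le hK hn hIK
  have hlow := hq.lower (unifOn K) (av_iso _ hIK) (R := 2 * n) (T := t ^ 2) (e := e) (j := j)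
    ((ae_mem_unifOn hK).mono fun x hx => norm_le_of_iso hK hn hIK hx) (by positivity) T1
    (fun s h0 h1 => Es_hS_body hK hIK hd0 hd1 hj h0 h1)
  have hup := hq.upper (unifOn T) (SLC_body hT) (av_iso _ hIT) (R := 2 * n) (T := t ^ 2) (e := e) (j := j)
    ((ae_mem_unifOn hT).mono fun x hx => norm_le_of_iso hT hn hIT hx) (by positivity) T1
    (fun s h0 h1 => Es_hS_body hT hIT hd0 hd1 hj h0 h1)
  have hg0 : 0 ≤ ∫ z, gauge K z ∂(γ n) := integral_nonneg hq.nonneg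
  set g := ∫ z, gauge K z ∂(γ n)
  have herr := err_bound hn hjn
  rw [← hd, mul_pow] at herr
  have hsq : √(n : ℝ) ≤ n := Real.sqrt_le_iff.2 ⟨by positivity, by nlinarith⟩
  have hp : (2 : ℝ) ^ (2 * j + 3) = 2 * 4 ^ (j + 1) := by
    rw [show 2 * j + 3 = 2 * (j + 1) + 1 by ring, pow_succ, pow_mul]; norm_num; ring
  have hup' : (2 * (n : ℝ)) ^ 4 * 2 ^ (2 * j + 3) / 2 * (2 * n * √n) * e ≤ 32 := by
    calc (2 * (n : ℝ)) ^ 4 * 2 ^ (2 * j + 3) / 2 * (2 * n * √n) * e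
        ≤ (2 * (n : ℝ)) ^ 4 * 2 ^ (2 * j + 3) / 2 * (2 * n * n) * e := by gcongr
      _ = 32 * ((n : ℝ) ^ 7 * (4 ^ (j + 1) * (d * exp 1) ^ (j + 1))) := by rw [hp, he]; ring
      _ ≤ 32 := by linarith
  have hlow' : (2 : ℝ) ^ (2 * j + 3) * (2 * n * √n) * e ≤ 32 := by
    refine hup'.trans' ?_
    have h1 : (2 : ℝ) ^ (2 * j + 3) ≤ (2 * (n : ℝ)) ^ 4 * 2 ^ (2 * j + 3) / 2 := by
      have h2 : (4 : ℝ) ^ 4 ≤ (2 * (n : ℝ)) ^ 4 := by gcongr; linarith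
      have h3 : (0 : ℝ) < 2 ^ (2 * j + 3) := by positivity
      nlinarith
    gcongr
  have s1 : √(t ^ 2) = t := Real.sqrt_sq t0.le
  have s2 : 7 / 10 * t ≤ √(t ^ 2 / 2) := Real.le_sqrt_of_sq_le (by nlinarith [sq_nonneg t])
  have s3 : √(1 / t ^ 2 + 9 / 4 * t ^ 2) ≤ 2 / t := by
    rw [Real.sqrt_le_left (by positivity)]
    have h1 : 1 ≤ 1 / t ^ 2 := by rw [le_div_iff₀ (by positivity)]; linarith
    have h2 : (2 / t) ^ 2 = 4 * (1 / t ^ 2) := by ring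
    rw [h2]; linarith
  rw [s1] at hlow
  have h1 : 1 / 5 * t * g ≤ 33 := by
    have : 1 / 5 * t * g ≤ (√(t ^ 2 / 2) - t / 2) * g := mul_le_mul_of_nonneg_right (by linarith) hg0
    linarith
  have h2 : g ≤ 165 / t := by rw [le_div_iff₀ t0]; linarith
  have h3 : √(1 / t ^ 2 + 9 / 4 * t ^ 2) * g ≤ 2 / t * (165 / t) := mul_le_mul s3 h2 hg0 (by positivity)
  have h4 : 1 ≤ (1 / t) ^ 2 := by
    rw [div_pow, one_pow, le_div_iff₀ (by positivity)]; linarith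
  have h5 : 2 / t * (165 / t) = 330 * (1 / t) ^ 2 := by ring
  have h6 : (1 / t) ^ 2 = (128 / d) ^ 2 * k ^ 2 := by rw [ht]; field_simp
  have h7 : k ^ 2 ≤ 9 * log ((n : ℝ) + 1) ^ 2 := by nlinarith
  have h8 := mul_le_mul_of_nonneg_left h7 (by positivity : 0 ≤ 362 * (128 / d) ^ 2)
  have h9 : 362 * (1 / t) ^ 2 ≤ 9 * 362 * (128 / d) ^ 2 * log ((n : ℝ) + 1) ^ 2 := by
    rw [h6]
    linarith
  linarith

end IsoGauge

/-- For convex bodies `K, T` in isotropic position, if `X` is uniform on `T` then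
`E ‖X‖_K ≤ C log²(n+1)`. -/
theorem expected_minkowski_functional_bound :
    ∃ C : ℝ, 0 < C ∧
      ∀ n : ℕ, 2 ≤ n → ∀ K T : Set (EuclideanSpace ℝ (Fin n)),
        IsConvexBody K → IsConvexBody T → IsIsotropicBody K → IsIsotropicBody T →
        ∫ x, gauge K x ∂(unifOn T) ≤ C * Real.log (n + 1) ^ 2 := by
  exact ⟨9 * 362 * (128 / (Real.exp (-9) / 4)) ^ 2, by positivity,
    fun _ hn _ _ hK hT hIK hIT => IsoGauge.final_bound hn hK hT hIK hIT⟩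

end
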